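/- Let γ > 1. Then there exist r with 1 < r < r*(γ) and 3 < k(r) < 4, and a smooth function 𝒲 : ℝ → ℝ satisfying the self-similar profile equation at every ζ ≠ 0, such that 𝒲(1) = W₀, 𝒲(−1) = −Z₀, and 𝒲(ζ)/ζ → 0 and 𝒲(−ζ)/ζ → 0 as ζ → +∞. Consequently W(ξ) = e^{−ξ}·𝒲(e^{ξ}), Z(ξ) = −e^{−ξ}·𝒲(−e^{ξ}) is a smooth solution of the autonomous ODE system on all of ℝ which passes through the sonic point P_s at ξ = 0 and converges to P_∞ = (0,0) as ξ → +∞ (a smooth, radially symmetric, self-similar imploding profile for the isentropic compressible Euler equations). -/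

import Mathlib

/-!
The exponent is parametrized by `q > 0` through `r = rQ α q`, where `γ = 1 + 2α`. This makes `ℛ₁`
rational in `q`: the sonic point becomes `W₀ = (1 - q)/(α + q)`, `Z₀ = -(1 + q)/(α + q)`, and `k`
becomes the quotient `kapQ / lamQ` of the eigenvalues of a planar polynomial system.

**Reduction to a planar system.** Split the profile into its odd and even parts,
`𝒲(ζ) = ζ U(ζ²) + S(ζ²)`. A solution is sought with `U = -q (1 + x)/(α + q)` and
`S² = y / (T (α + q)²)`, `y = ζ²`, where `(T, x)` moves along a trajectory of
`2 T M(T, x) x' = -N(T, x)` for explicit polynomials `M`, `N` (`Mf`, `Nf`, with `m = q/α`). The speed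
along the trajectory is governed by `g = M / D`. The point `ζ = 0` is `T = 0`, the sonic point is
`(T, x) = (1, 0)`, where `M`, `N`, `D` all vanish, and `ζ = ∞` is `T = ∞`, where `x = -1`. It is enough
to find a `q` with `3 < k < 4` and a smooth solution `x = X(T)` on `(-ε, ∞)` through the sonic point,
with `M / D > 0` and `X → -1` (`Glob`, `glob_exists`). Then `g` extends smoothly through `T = 1`, the
relation `y = T exp (E(T))` with `T E' = 1/g - 1` inverts to a smooth `T = B(y)` on `y ≥ 0`
(`exists_time`), and the even and odd components of the profile equation are two polynomial
identities (`Glob.profile`). Passing to `W`, `Z` is the substitution `ζ = ± exp ξ`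
(`ode_of_profile`).

**To the left of the sonic point.** At `T = 0` the system has a singularity of Briot–Bouquet type.
The integral equation `w(x) = x ∫₀¹ s^μ F(x s, w(x s)) ds` is a contraction in a weighted norm
(`bb_exists`), so a unique smooth branch starts there and depends continuously on the
parameter. With `ω = 1 - T` and `u = -ω/x`, the lines `u = t + 3ω` and `u = t (1 - ω/4)`, where `t` is
the slope of `T(x)` at the sonic point, are barriers (`Par.upper`, `Par.lower`); they lead the branch into
the sonic point (`left_exists`).

**Shooting.** Put `z = -x` and `T = 1 - t z + b z² - z y` near the sonic point. Then
`z dy/dz = κ y + a₂ z² + a₁₁ z y + a₃ z³ + R` with `κ = k - 1 ∈ [2, 3]`, and a solution contains a multiple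
of the nonsmooth term `z^κ`. The coefficient, multiplied by `(κ - 2)(3 - κ)` and thus freed of its
resonant poles, is a limit `l(q)` continuous in `q` (`Traj.Q_lim`). At `k = 3` it equals `a₂ < 0`
and at `k = 4` it equals `-(a₃ - a₁₁ a₂) > 0`. Both values of `k` occur as endpoints of an interval of
parameters on which `3 ≤ k ≤ 4` (`exists_window`), so `l` vanishes at some interior `q`
(`shoot`, `shooting`). For this `q` the trajectory agrees with the cubic Taylor polynomial of the
smooth branch up to a weakly damped remainder, and hence lies on that branch
(`node_exists`, `node_left`).

**To the right of the sonic point.** The cubic Taylor polynomial of `T(x)` is a strict barrier for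
`0 < x ≤ 3/5` (`Par.barrier`). Together with the line `x = 3/5` and the lower edge
`x = -1 - (1 + 3/m)` it encloses a region in which `M < 0`, `D < 0`, and which is invariant. In the compactified
variable `τ = 1/T` a Lyapunov function gives `x → -1` (`Par.right_exists`, `Par.right_lim`).

**Sign conditions.** The barriers and the signs of `a₂` and `a₃ - a₁₁ a₂` are polynomial inequalities
in `(q, t)`, because the relation defining the slope is linear in `m`, and `b` is then rational in
`(q, t)`. On the compact box which contains the whole window, for every `γ`, they are checked by affine
arithmetic in integers and bisection, evaluated by the kernel (`check`, `check_sound`).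
-/

noncomputable section

open Real Filter Set Topology

namespace SelfSimilarImplosion

/-- `α = (γ−1)/2`. -/
def alphaF (γ : ℝ) : ℝ := (γ - 1) / 2

/-- `D_W(W,Z) = 1 + (1/2)(W + Z + α(W − Z))`. -/
def DW (γ W Z : ℝ) : ℝ := 1 + (1 / 2) * (W + Z + alphaF γ * (W - Z))

/-- `D_Z(W,Z) = 1 + (1/2)(W + Z − α(W − Z))`. -/
def DZ (γ W Z : ℝ) : ℝ := 1 + (1 / 2) * (W + Z - alphaF γ * (W - Z))

/-- `N_W(W,Z) = −(r + (1/2)((1+2α)W + (1−α)Z))·W + (α/2)Z²`. -/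
def NW (γ r W Z : ℝ) : ℝ :=
  -(r + (1 / 2) * ((1 + 2 * alphaF γ) * W + (1 - alphaF γ) * Z)) * W + (alphaF γ / 2) * Z ^ 2

/-- `N_Z(W,Z) = −(r + (1/2)((1−α)W + (1+2α)Z))·Z + (α/2)W²`. -/
def NZ (γ r W Z : ℝ) : ℝ :=
  -(r + (1 / 2) * ((1 - alphaF γ) * W + (1 + 2 * alphaF γ) * Z)) * Z + (alphaF γ / 2) * W ^ 2

/-- The critical self-similar exponent `r*(γ)`. -/
def rStar (γ : ℝ) : ℝ :=
  if γ < 5 / 3 then 1 + 2 / (Real.sqrt (2 / (γ - 1)) + 1) ^ 2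
  else (3 * γ - 1) / (2 + Real.sqrt 3 * (γ - 1))

/-- `ℛ₁`. -/
def R1 (γ r : ℝ) : ℝ :=
  Real.sqrt (γ ^ 2 * (r - 3) ^ 2 - 2 * γ * (3 * r ^ 2 - 6 * r + 7) + 9 * r ^ 2 - 14 * r + 9)

/-- First coordinate `W₀` of the sonic point `P_s`. -/
def W₀ (γ r : ℝ) : ℝ :=
  (γ ^ 2 * r + (γ + 1) * R1 γ r - 3 * γ ^ 2 - 2 * γ * r + 10 * γ - 3 * r - 3) / (4 * (γ - 1) ^ 2)

/-- Second coordinate `Z₀` of the sonic point `P_s`. -/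
def Z₀ (γ r : ℝ) : ℝ :=
  (γ ^ 2 * r + (γ - 3) * R1 γ r - 3 * γ ^ 2 - 6 * γ * r + 6 * γ + 9 * r - 7) / (4 * (γ - 1) ^ 2)

/-- `ℛ₂`. -/
def R2 (γ r : ℝ) : ℝ :=
  (1 / (γ - 1)) *
    Real.sqrt (γ * ((76 - 27 * γ) * γ - 71) - (3 * γ - 5) * ((γ - 5) * γ + 2) * r ^ 2
      + (γ * (γ * (18 * γ - 52) + 50) - 8) * r
      + R1 γ r * (9 * (γ - 2) * γ + ((2 - 3 * γ) * γ + 5) * r + 5) + 18)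

/-- The first Taylor coefficient `W₁`. -/
def W₁ (γ r : ℝ) : ℝ :=
  (γ * (-3 * (R1 γ r + 6) - 3 * γ * (r - 3) + 2 * r) + R1 γ r + 5 * r + 5) / (4 * (γ - 1) ^ 2)

/-- The first Taylor coefficient `Z₁`. -/
def Z₁ (γ r : ℝ) : ℝ :=
  (-(3 * γ ^ 3 - 7 * γ ^ 2 + γ + 11) * r
      + γ * (γ * (9 * γ - 3 * R1 γ r - 25) + 10 * R1 γ r - 4 * (γ - 1) * R2 γ r + 27)
      - 3 * R1 γ r + 4 * (γ - 1) * R2 γ r - 3)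
    / (4 * (γ - 1) ^ 2 * (γ + 1))

/-- The eigenvalue-ratio function `k(r)`. -/
def kFun (γ r : ℝ) : ℝ :=
  (-4 + (1 + γ) * (r - 1) / (γ - 1) - R2 γ r) / (-4 + (1 + γ) * (r - 1) / (γ - 1) + R2 γ r)


/-- The self-similar profile equation for a function `𝒲` of `ζ`. -/
def ProfileEqn (γ r : ℝ) (Wc : ℝ → ℝ) (ζ : ℝ) : Prop :=
  (r - 1) * Wc ζ
      + (ζ + (1 / 2) * (Wc ζ - Wc (-ζ) + alphaF γ * (Wc ζ + Wc (-ζ)))) * deriv Wc ζ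
      + (alphaF γ / (2 * ζ)) * ((Wc ζ) ^ 2 - (Wc (-ζ)) ^ 2) = 0

/-- `(W, Z)` solves the autonomous ODE system on the set `s`. -/
def IsOdeSolutionOn (γ r : ℝ) (W Z : ℝ → ℝ) (s : Set ℝ) : Prop :=
  ∀ ξ ∈ s,
    DW γ (W ξ) (Z ξ) * deriv W ξ = NW γ r (W ξ) (Z ξ) ∧
    DZ γ (W ξ) (Z ξ) * deriv Z ξ = NZ γ r (W ξ) (Z ξ)

/-! ### Affine arithmetic with error bounds -/

section

/-- An affine form `c + g s + h t` with error radius `e`, for `|s|, |t| ≤ 1`, in units of `2⁻²⁴`.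
A signed coefficient is stored as a difference of two naturals (`c = cp - cm` and so on), so that
the kernel evaluates everything with its built-in natural-number arithmetic. -/
structure Af where
  cp : ℕ
  cm : ℕ
  gp : ℕ
  gm : ℕ
  hp : ℕ
  hm : ℕ
  e : ℕ

namespace Af

/-- A bound for the part of the form that is not constant. -/
def rad (a : Af) : ℕ :=
  Nat.add (Nat.add (Nat.add a.gp a.gm) (Nat.add a.hp a.hm)) a.e

/-- The exact constant `n`; `16777216 = 2²⁴`. -/
def con (n : ℕ) : Af := ⟨Nat.mul n 16777216, 0, 0, 0, 0, 0, 0⟩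

def add (a b : Af) : Af :=
  ⟨Nat.sub (Nat.add a.cp b.cp) (Nat.add a.cm b.cm), Nat.sub (Nat.add a.cm b.cm) (Nat.add a.cp b.cp),
    Nat.sub (Nat.add a.gp b.gp) (Nat.add a.gm b.gm), Nat.sub (Nat.add a.gm b.gm) (Nat.add a.gp b.gp),
    Nat.sub (Nat.add a.hp b.hp) (Nat.add a.hm b.hm), Nat.sub (Nat.add a.hm b.hm) (Nat.add a.hp b.hp),
    Nat.add a.e b.e⟩

def sub (a b : Af) : Af :=
  ⟨Nat.sub (Nat.add a.cp b.cm) (Nat.add a.cm b.cp), Nat.sub (Nat.add a.cm b.cp) (Nat.add a.cp b.cm),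
    Nat.sub (Nat.add a.gp b.gm) (Nat.add a.gm b.gp), Nat.sub (Nat.add a.gm b.gp) (Nat.add a.gp b.gm),
    Nat.sub (Nat.add a.hp b.hm) (Nat.add a.hm b.hp), Nat.sub (Nat.add a.hm b.hp) (Nat.add a.hp b.hm),
    Nat.add a.e b.e⟩

/-- The truncated difference `x - y`, rescaled by `2⁻²⁴`. -/
def red (x y : ℕ) : ℕ := Nat.div (Nat.sub x y) 16777216

/-- The common shape of the entries of a product. -/
def pp (a b a' b' : ℕ) : ℕ := Nat.add (Nat.mul a b) (Nat.mul a' b')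

/-- The product. Its quadratic part goes into the error, together with four units for the rounding of
the linear part and of the error itself. -/
def mul (a b : Af) : Af :=
  ⟨red (pp a.cp b.cp a.cm b.cm) (pp a.cp b.cm a.cm b.cp),
   red (pp a.cp b.cm a.cm b.cp) (pp a.cp b.cp a.cm b.cm),
   red (Nat.add (pp a.cp b.gp a.cm b.gm) (pp b.cp a.gp b.cm a.gm))
       (Nat.add (pp a.cp b.gm a.cm b.gp) (pp b.cp a.gm b.cm a.gp)),
   red (Nat.add (pp a.cp b.gm a.cm b.gp) (pp b.cp a.gm b.cm a.gp))
       (Nat.add (pp a.cp b.gp a.cm b.gm) (pp b.cp a.gp b.cm a.gm)),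
   red (Nat.add (pp a.cp b.hp a.cm b.hm) (pp b.cp a.hp b.cm a.hm))
       (Nat.add (pp a.cp b.hm a.cm b.hp) (pp b.cp a.hm b.cm a.hp)),
   red (Nat.add (pp a.cp b.hm a.cm b.hp) (pp b.cp a.hm b.cm a.hp))
       (Nat.add (pp a.cp b.hp a.cm b.hm) (pp b.cp a.hp b.cm a.hm)),
   Nat.add (Nat.div (Nat.add (Nat.mul (rad a) (rad b))
      (Nat.add (Nat.mul a.e (Nat.add b.cp b.cm)) (Nat.mul b.e (Nat.add a.cp a.cm)))) 16777216) 4⟩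

instance : Add Af := ⟨add⟩
instance : Sub Af := ⟨sub⟩
instance : Mul Af := ⟨mul⟩
instance : NatCast Af := ⟨con⟩

/-- A certificate that every enclosed value is positive. -/
def pos (a : Af) : Bool := Nat.blt (Nat.add a.cm (rad a)) a.cp
/-- A certificate that every enclosed value is negative. -/
def neg (a : Af) : Bool := Nat.blt (Nat.add a.cp (rad a)) a.cm

/-- The linear part, without the constant and the error. -/
def lin (a : Af) : Af := ⟨0, 0, a.gp, a.gm, a.hp, a.hm, 0⟩

/-- An enclosure of the solution `v` of `y v = x`, where `n` encloses `x`, `d` encloses `y` and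
`z / w ≤ y`. The first-order guess `Q` is corrected by an error bound for `(x - y Q) / y`.
Here `281474976710656 = 2⁴⁸`. -/
def quo (n d : Af) (w z : ℕ) : Af :=
  let r : Af := ⟨Nat.div 281474976710656 (Nat.sub d.cp d.cm), 0, 0, 0, 0, 0, 0⟩
  let q0 : Af := ⟨(n * r).cp, (n * r).cm, 0, 0, 0, 0, 0⟩
  let q1 : Af := lin (r * (n - q0 * lin d))
  let Q : Af := ⟨q0.cp, q0.cm, q1.gp, q1.gm, q1.hp, q1.hm, 0⟩
  let R : Af := n - d * Q
  ⟨q0.cp, q0.cm, q1.gp, q1.gm, q1.hp, q1.hm,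
    Nat.add (Nat.div (Nat.mul (Nat.add (Nat.add R.cp R.cm) (rad R)) w) z) 1⟩

/-- The form `a`, evaluated at the coordinates `(s, t)`, encloses `v`. -/
def Rep (s t : ℝ) (a : Af) (v : ℝ) : Prop :=
  |v * 16777216 - (((a.cp : ℝ) - a.cm) + ((a.gp : ℝ) - a.gm) * s + ((a.hp : ℝ) - a.hm) * t)| ≤ a.e

variable {s t : ℝ} {a b : Af} {v w : ℝ}

theorem Rep.con (s t : ℝ) (n : ℕ) : Rep s t (n : Af) (n : ℝ) := by
  show Rep s t (Af.con n) n
  simp [Rep, Af.con]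

theorem cast_sub_sub (x y : ℕ) : (((x - y : ℕ) : ℝ) - ((y - x : ℕ) : ℝ)) = x - y := by
  rcases le_total x y with h | h <;> simp [h, Nat.cast_sub]

theorem Rep.add (ha : Rep s t a v) (hb : Rep s t b w) : Rep s t (a + b) (v + w) := by
  show Rep s t (Af.add a b) _
  simp only [Rep, Af.add, Nat.add_eq, Nat.sub_eq, cast_sub_sub, Nat.cast_add] at *
  rw [abs_le] at *
  constructor <;> linarith [ha.1, ha.2, hb.1, hb.2]

theorem Rep.sub (ha : Rep s t a v) (hb : Rep s t b w) : Rep s t (a - b) (v - w) := by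
  show Rep s t (Af.sub a b) _
  simp only [Rep, Af.sub, Nat.add_eq, Nat.sub_eq, cast_sub_sub, Nat.cast_add] at *
  rw [abs_le] at *
  constructor <;> linarith [ha.1, ha.2, hb.1, hb.2]

/-- The two truncated quotients represent the signed number `(x - y)/2²⁴` up to one unit. -/
theorem red_spec (x y : ℕ) :
    |((x : ℝ) - y) / 16777216 - ((red x y : ℝ) - red y x)| ≤ 1 := by
  have key : ∀ x y : ℕ, y ≤ x → |((x : ℝ) - y) / 16777216 - ((red x y : ℝ) - red y x)| ≤ 1 := by
    intro x y h
    have h0 : red y x = 0 := by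
      simp [red, Nat.sub_eq_zero_of_le h]
    have h1 : ((x - y : ℕ) : ℝ) = x - y := by push_cast [h]; ring
    have h2 := Nat.div_add_mod (x - y) 16777216
    have h3 := Nat.mod_lt (x - y) (show 16777216 > 0 by norm_num)
    have h4 : red x y = (x - y) / 16777216 := rfl
    rw [h0, ← h1, h4]
    have h5 : ((x - y : ℕ) : ℝ) = 16777216 * ((x - y) / 16777216 : ℕ) + ((x - y) % 16777216 : ℕ) := by
      exact_mod_cast h2.symm
    have h6 : (((x - y) % 16777216 : ℕ) : ℝ) < 16777216 := by exact_mod_cast h3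
    have h7 : (0 : ℝ) ≤ ((x - y) % 16777216 : ℕ) := Nat.cast_nonneg _
    rw [h5, abs_le]
    constructor <;> push_cast <;> linarith
  rcases le_total y x with h | h
  · exact key x y h
  · have := key y x h
    rw [abs_sub_comm] at this
    convert this using 2
    ring

theorem nat_div_eq (x y : ℕ) : Nat.div x y = x / y := rfl

theorem div_le_real (x : ℕ) (m : ℕ) : (x : ℝ) / m ≤ ((x / m : ℕ) : ℝ) + 1 := by
  have h := Nat.lt_floor_add_one ((x : ℝ) / m)
  rw [Nat.floor_div_eq_div] at h
  exact h.le

theorem rad_cast (a : Af) : (rad a : ℝ) = a.gp + a.gm + (a.hp + a.hm) + a.e := by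
  simp [rad]

theorem abs_lin (hs : |s| ≤ 1) (ht : |t| ≤ 1) (a : Af) :
    |((a.gp : ℝ) - a.gm) * s + ((a.hp : ℝ) - a.hm) * t| ≤ a.gp + a.gm + (a.hp + a.hm) := by
  have h1 : |((a.gp : ℝ) - a.gm)| ≤ a.gp + a.gm := by
    rw [abs_le]; constructor <;> linarith [a.gp.cast_nonneg (α := ℝ), a.gm.cast_nonneg (α := ℝ)]
  have h2 : |((a.hp : ℝ) - a.hm)| ≤ a.hp + a.hm := by
    rw [abs_le]; constructor <;> linarith [a.hp.cast_nonneg (α := ℝ), a.hm.cast_nonneg (α := ℝ)]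
  refine (abs_add_le _ _).trans ?_
  rw [abs_mul, abs_mul]
  have := mul_le_mul h1 hs (abs_nonneg _) (by positivity)
  have := mul_le_mul h2 ht (abs_nonneg _) (by positivity)
  linarith

theorem Rep.mul (hs : |s| ≤ 1) (ht : |t| ≤ 1) (ha : Rep s t a v) (hb : Rep s t b w) :
    Rep s t (a * b) (v * w) := by
  show Rep s t (Af.mul a b) _
  have la := abs_lin hs ht a
  have lb := abs_lin hs ht b
  have r1 := red_spec (pp a.cp b.cp a.cm b.cm) (pp a.cp b.cm a.cm b.cp)
  have r2 := red_spec (Nat.add (pp a.cp b.gp a.cm b.gm) (pp b.cp a.gp b.cm a.gm))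
       (Nat.add (pp a.cp b.gm a.cm b.gp) (pp b.cp a.gm b.cm a.gp))
  have r3 := red_spec (Nat.add (pp a.cp b.hp a.cm b.hm) (pp b.cp a.hp b.cm a.hm))
       (Nat.add (pp a.cp b.hm a.cm b.hp) (pp b.cp a.hm b.cm a.hp))
  have r4 := div_le_real (Nat.add (Nat.mul (rad a) (rad b))
      (Nat.add (Nat.mul a.e (Nat.add b.cp b.cm)) (Nat.mul b.e (Nat.add a.cp a.cm)))) 16777216
  unfold Rep at *
  simp only [Af.mul, Nat.add_eq, nat_div_eq, Nat.cast_add] at *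
  set C := ((red (pp a.cp b.cp a.cm b.cm) (pp a.cp b.cm a.cm b.cp) : ℕ) : ℝ) -
    red (pp a.cp b.cm a.cm b.cp) (pp a.cp b.cp a.cm b.cm)
  set G := ((red (pp a.cp b.gp a.cm b.gm + pp b.cp a.gp b.cm a.gm)
       (pp a.cp b.gm a.cm b.gp + pp b.cp a.gm b.cm a.gp) : ℕ) : ℝ) -
       (red (pp a.cp b.gm a.cm b.gp + pp b.cp a.gm b.cm a.gp) (pp a.cp b.gp a.cm b.gm + pp b.cp a.gp b.cm a.gm) : ℕ)
  set H := ((red (pp a.cp b.hp a.cm b.hm + pp b.cp a.hp b.cm a.hm)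
       (pp a.cp b.hm a.cm b.hp + pp b.cp a.hm b.cm a.hp) : ℕ) : ℝ) -
       (red (pp a.cp b.hm a.cm b.hp + pp b.cp a.hm b.cm a.hp) (pp a.cp b.hp a.cm b.hm + pp b.cp a.hp b.cm a.hm) : ℕ)
  set E := (((rad a).mul (rad b) + (a.e.mul (b.cp + b.cm) + b.e.mul (a.cp + a.cm))) / 16777216 : ℕ)
  simp only [pp, Nat.add_eq, Nat.mul_eq, Nat.cast_add, Nat.cast_mul, Nat.cast_ofNat, rad_cast] at r1 r2 r3 r4
  set c1 := (a.cp : ℝ) - a.cm with hc1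
  set c2 := (b.cp : ℝ) - b.cm with hc2
  set g1 := (a.gp : ℝ) - a.gm with hg1
  set g2 := (b.gp : ℝ) - b.gm with hg2
  set h1 := (a.hp : ℝ) - a.hm with hh1
  set h2 := (b.hp : ℝ) - b.hm with hh2
  set R1 := (a.gp : ℝ) + a.gm + (a.hp + a.hm)
  set R2 := (b.gp : ℝ) + b.gm + (b.hp + b.hm)
  obtain ⟨l1, hl1⟩ : ∃ l1, l1 = g1 * s + h1 * t := ⟨_, rfl⟩
  obtain ⟨l2, hl2⟩ : ∃ l2, l2 = g2 * s + h2 * t := ⟨_, rfl⟩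
  obtain ⟨d1, hd1⟩ : ∃ d, d = v * 16777216 - (c1 + g1 * s + h1 * t) := ⟨_, rfl⟩
  obtain ⟨d2, hd2⟩ : ∃ d, d = w * 16777216 - (c2 + g2 * s + h2 * t) := ⟨_, rfl⟩
  rw [← hd1] at ha
  rw [← hd2] at hb
  rw [← hl1] at la
  rw [← hl2] at lb
  have hv : v * 16777216 = c1 + l1 + d1 := by rw [hd1, hl1]; ring
  have hw : w * 16777216 = c2 + l2 + d2 := by rw [hd2, hl2]; ring
  have k1 : |c1 * c2 / 16777216 - C| ≤ 1 := by
    refine le_trans (le_of_eq ?_) r1; congr 2; rw [hc1, hc2]; ring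
  have k2 : |(c1 * g2 + c2 * g1) / 16777216 - G| ≤ 1 := by
    refine le_trans (le_of_eq ?_) r2; congr 2; rw [hc1, hc2, hg1, hg2]; ring
  have k3 : |(c1 * h2 + c2 * h1) / 16777216 - H| ≤ 1 := by
    refine le_trans (le_of_eq ?_) r3; congr 2; rw [hc1, hc2, hh1, hh2]; ring
  have bc1 : |c1| ≤ a.cp + a.cm := by
    rw [abs_le]; constructor <;> linarith [a.cp.cast_nonneg (α := ℝ), a.cm.cast_nonneg (α := ℝ)]
  have bc2 : |c2| ≤ b.cp + b.cm := by
    rw [abs_le]; constructor <;> linarith [b.cp.cast_nonneg (α := ℝ), b.cm.cast_nonneg (α := ℝ)]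
  have eqn : v * w * 16777216 - (C + G * s + H * t) =
      (c1 * c2 / 16777216 - C) + ((c1 * g2 + c2 * g1) / 16777216 - G) * s
      + ((c1 * h2 + c2 * h1) / 16777216 - H) * t
      + ((l1 + d1) * (l2 + d2) + d1 * c2 + d2 * c1) / 16777216 := by
    have : v * w * 16777216 = (v * 16777216) * (w * 16777216) / 16777216 := by ring
    rw [this, hv, hw, hl1, hl2]; ring
  have q1 : |(l1 + d1) * (l2 + d2)| ≤ (R1 + a.e) * (R2 + b.e) := by
    rw [abs_mul]
    exact mul_le_mul ((abs_add_le _ _).trans (add_le_add la ha))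
      ((abs_add_le _ _).trans (add_le_add lb hb)) (abs_nonneg _) (by positivity)
  have q2 : |d1 * c2| ≤ a.e * (b.cp + b.cm) := by
    rw [abs_mul]; exact mul_le_mul ha bc2 (abs_nonneg _) (by positivity)
  have q3 : |d2 * c1| ≤ b.e * (a.cp + a.cm) := by
    rw [abs_mul]; exact mul_le_mul hb bc1 (abs_nonneg _) (by positivity)
  have m2 : |((c1 * g2 + c2 * g1) / 16777216 - G) * s| ≤ 1 := by
    rw [abs_mul]; exact mul_le_one₀ k2 (abs_nonneg _) hs
  have m3 : |((c1 * h2 + c2 * h1) / 16777216 - H) * t| ≤ 1 := by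
    rw [abs_mul]; exact mul_le_one₀ k3 (abs_nonneg _) ht
  rw [eqn]
  push_cast
  rw [abs_le] at *
  constructor <;> linarith [k1.1, k1.2, m2.1, m2.2, m3.1, m3.2, q1.1, q1.2, q2.1, q2.2, q3.1, q3.2]

theorem Rep.abs_sub_le (hs : |s| ≤ 1) (ht : |t| ≤ 1) (ha : Rep s t a v) :
    |v * 16777216 - ((a.cp : ℝ) - a.cm)| ≤ rad a := by
  have la := abs_lin hs ht a
  unfold Rep at ha
  rw [rad_cast]
  rw [abs_le] at *
  constructor <;> linarith [la.1, la.2, ha.1, ha.2]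

theorem Rep.pos (hs : |s| ≤ 1) (ht : |t| ≤ 1) (ha : Rep s t a v) (h : a.pos = true) : 0 < v := by
  have h1 := ha.abs_sub_le hs ht
  have h2 : a.cm + rad a < a.cp := by simpa [Af.pos, Nat.blt_eq] using h
  have h3 : (a.cm : ℝ) + rad a < a.cp := by exact_mod_cast h2
  rw [abs_le] at h1
  linarith [h1.1]

theorem Rep.neg (hs : |s| ≤ 1) (ht : |t| ≤ 1) (ha : Rep s t a v) (h : a.neg = true) : v < 0 := by
  have h1 := ha.abs_sub_le hs ht
  have h2 : a.cp + rad a < a.cm := by simpa [Af.neg, Nat.blt_eq] using h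
  have h3 : (a.cp : ℝ) + rad a < a.cm := by exact_mod_cast h2
  rw [abs_le] at h1
  linarith [h1.2]

/-- The error of `quo` is the residual `x - y Q` divided by a lower bound `l / k` of the denominator `y`;
the choice of `Q` plays no role for correctness. -/
theorem Rep.quo (hs : |s| ≤ 1) (ht : |t| ≤ 1) {n d : Af} {x y z : ℝ} {k l : ℕ}
    (hn : Rep s t n x) (hd : Rep s t d y) (hz : y * z = x) (hl : 0 < l)
    (hy : (l : ℝ) ≤ y * k) : Rep s t (Af.quo n d k l) z := by
  unfold Af.quo
  extract_lets r q0 q1 Q R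
  set v : ℝ := ((((Q.cp : ℝ) - Q.cm) + ((Q.gp : ℝ) - Q.gm) * s + ((Q.hp : ℝ) - Q.hm) * t)) / 16777216
    with hv
  have hQ : Rep s t Q v := by
    unfold Rep
    have : v * 16777216 - (((Q.cp : ℝ) - Q.cm) + ((Q.gp : ℝ) - Q.gm) * s + ((Q.hp : ℝ) - Q.hm) * t)
      = 0 := by rw [hv]; ring
    rw [this]; simp [Q]
  have hR : Rep s t R (x - y * v) := hn.sub (hd.mul hs ht hQ)
  have h1 := hR.abs_sub_le hs ht
  have h2 : x - y * v = y * (z - v) := by rw [← hz]; ring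
  have hy0 : 0 < y := by
    have : (0 : ℝ) < l := by exact_mod_cast hl
    have h3 : 0 < y * k := lt_of_lt_of_le this hy
    exact pos_of_mul_pos_left h3 (Nat.cast_nonneg _)
  have h3 : |(x - y * v) * 16777216| ≤ R.cp + R.cm + rad R := by
    have e1 := R.cp.cast_nonneg (α := ℝ)
    have e2 := R.cm.cast_nonneg (α := ℝ)
    rw [abs_le] at *
    constructor <;> linarith [h1.1, h1.2]
  have h4 := div_le_real ((R.cp + R.cm + rad R) * k) l
  unfold Rep
  have h5 : z * 16777216 - (((Q.cp : ℝ) - Q.cm) + ((Q.gp : ℝ) - Q.gm) * s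
      + ((Q.hp : ℝ) - Q.hm) * t) = (z - v) * 16777216 := by rw [hv]; ring
  show |z * 16777216 - (((Q.cp : ℝ) - Q.cm) + ((Q.gp : ℝ) - Q.gm) * s
      + ((Q.hp : ℝ) - Q.hm) * t)| ≤ _
  rw [h5]
  have h6 : |(z - v) * 16777216| ≤ (((R.cp + R.cm + rad R) * k : ℕ) : ℝ) / l := by
    have hl' : (0 : ℝ) < l := by exact_mod_cast hl
    rw [le_div_iff₀ hl']
    have h7 : y * |(z - v) * 16777216| ≤ R.cp + R.cm + rad R := by
      rw [h2] at h3
      calc y * |(z - v) * 16777216| = |y * (z - v) * 16777216| := by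
            rw [mul_assoc, abs_mul y, abs_of_pos hy0]
        _ ≤ _ := h3
    push_cast
    calc |(z - v) * 16777216| * l ≤ |(z - v) * 16777216| * (y * k) := by gcongr
      _ = (y * |(z - v) * 16777216|) * k := by ring
      _ ≤ _ := by gcongr
  refine h6.trans (h4.trans (le_of_eq ?_))
  simp [nat_div_eq]

end Af

end

/-! ### Coefficient polynomials -/

section

section Poly
variable {R : Type} [Add R] [Sub R] [Mul R] [NatCast R]

/-! Coefficients of `M(T, x) = (1 + q) - T ((1 + q) - B₀ x + B₁ x²)` and of
`N(T, x) = A₀ + 3 (1 + q) x - T (A₀ + C₁ x + C₂ x² + C₃ x³)`. All polynomials are written over an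
arbitrary carrier of the ring operations, so that the same expression is evaluated both on real numbers
and on affine forms. -/
def pB0 (q m : R) : R := (2 : ℕ) * (((1 : ℕ) + q) * m + q * ((1 : ℕ) - q * m))
def pB1 (q m : R) : R := ((1 : ℕ) + q) * m * (m + (2 : ℕ) * q)
def pA0 (q : R) : R := (1 : ℕ) + (3 : ℕ) * q
def pC1 (q m : R) : R := ((1 : ℕ) - m) * pA0 q - ((1 : ℕ) + q) * m
def pC2 (q m : R) : R := (0 : ℕ) - m * pA0 q - ((1 : ℕ) - m) * (((1 : ℕ) + q) * m)
def pC3 (q m : R) : R := m * (((1 : ℕ) + q) * m)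
/-- The eigenvalue `λ` of the system at the sonic point, where `t` is the slope of `T(x)`. -/
def pL (q t m : R) : R := (2 : ℕ) * ((1 : ℕ) + m + (2 : ℕ) * (q * m)) - pA0 q * t
/-- The eigenvalue `κ` of the system at the sonic point; `k = κ/λ`. -/
def pK (q t : R) : R := (2 : ℕ) * ((1 : ℕ) + q) + pA0 q * t
/-- The equation for the slope `t` is `pDen q t * m = pNum q t`. -/
def pNum (q t : R) : R := t * t + q * ((3 : ℕ) * (t * t) + (2 : ℕ) * t - (4 : ℕ))
def pDen (q t : R) : R := (4 : ℕ) + (2 : ℕ) * t + (4 : ℕ) * (q * ((1 : ℕ) + t - q))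

/-! Expansion in powers of `ω` of the barrier expression along `u = t (1 - ω/4)`: `lG` comes from `M`,
`lk` from the part of `N` containing the `Cᵢ`, `lF` from `N`, and `lE` is the total, up to
positive factors. -/
def lG0 (q t m : R) : R := (16 : ℕ) * (((1 : ℕ) + q) * (t * t) - pB0 q m * t)
def lG1 (q t m : R) : R :=
  (20 : ℕ) * (pB0 q m * t) - (8 : ℕ) * (((1 : ℕ) + q) * (t * t)) - (16 : ℕ) * pB1 q m
def lG2 (q t m : R) : R :=
  ((1 : ℕ) + q) * (t * t) + (16 : ℕ) * pB1 q m - (4 : ℕ) * (pB0 q m * t)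
def lk0 (q t m : R) : R := (16 : ℕ) * (pC1 q m * (t * t))
def lk1 (q t m : R) : R := (0 : ℕ) - (8 : ℕ) * (pC1 q m * (t * t)) - (16 : ℕ) * (pC2 q m * t)
def lk2 (q t m : R) : R := pC1 q m * (t * t) + (4 : ℕ) * (pC2 q m * t) + (16 : ℕ) * pC3 q m
def lF0 (q t m : R) : R := (64 : ℕ) * (pA0 q * (t * t * t)) - (192 : ℕ) * (((1 : ℕ) + q) * (t * t))
  + (4 : ℕ) * lk0 q t m
def lF1 (q t m : R) : R := (96 : ℕ) * (((1 : ℕ) + q) * (t * t)) - (48 : ℕ) * (pA0 q * (t * t * t))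
  + (4 : ℕ) * (lk1 q t m - lk0 q t m)
def lF2 (q t m : R) : R := (12 : ℕ) * (pA0 q * (t * t * t)) - (12 : ℕ) * (((1 : ℕ) + q) * (t * t))
  + (4 : ℕ) * (lk2 q t m - lk1 q t m)
def lF3 (q t m : R) : R := (0 : ℕ) - pA0 q * (t * t * t) - (4 : ℕ) * lk2 q t m
def lE1 (q t m : R) : R := (32 : ℕ) * (lG1 q t m - lG0 q t m) + (4 : ℕ) * lF1 q t m - lF0 q t m
def lE2 (q t m : R) : R := (32 : ℕ) * (lG2 q t m - lG1 q t m) + (4 : ℕ) * lF2 q t m - lF1 q t m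
def lE3 (q t m : R) : R := (4 : ℕ) * lF3 q t m - (32 : ℕ) * lG2 q t m - lF2 q t m
def lE4 (q t m : R) : R := (0 : ℕ) - lF3 q t m

/-! The same expansion along `u = t + 3ω`. -/
def uG0 (q t m : R) : R := ((1 : ℕ) + q) * (t * t) - pB0 q m * t
def uG1 (q t m : R) : R :=
  (6 : ℕ) * (((1 : ℕ) + q) * t) + pB0 q m * t - (3 : ℕ) * pB0 q m - pB1 q m
def uG2 (q m : R) : R := (9 : ℕ) * ((1 : ℕ) + q) + (3 : ℕ) * pB0 q m + pB1 q m
def uk0 (q t m : R) : R := pC1 q m * (t * t)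
def uk1 (q t m : R) : R := (6 : ℕ) * (pC1 q m * t) - pC2 q m * t
def uk2 (q m : R) : R := (9 : ℕ) * pC1 q m - (3 : ℕ) * pC2 q m + pC3 q m
def uF0 (q t m : R) : R := pA0 q * (t * t * t) - (3 : ℕ) * (((1 : ℕ) + q) * (t * t)) + uk0 q t m
def uF1 (q t m : R) : R := (9 : ℕ) * (pA0 q * (t * t)) - (18 : ℕ) * (((1 : ℕ) + q) * t)
  + (uk1 q t m - uk0 q t m)
def uF2 (q t m : R) : R := (27 : ℕ) * (pA0 q * t) - (27 : ℕ) * ((1 : ℕ) + q)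
  + (uk2 q m - uk1 q t m)
def uF3 (q m : R) : R := (27 : ℕ) * pA0 q - uk2 q m
def uE1 (q t m : R) : R :=
  (2 : ℕ) * (t * (uG1 q t m - uG0 q t m)) + t * uF1 q t m + (3 : ℕ) * uF0 q t m
def uE2 (q t m : R) : R :=
  (2 : ℕ) * (t * (uG2 q m - uG1 q t m)) + t * uF2 q t m + (3 : ℕ) * uF1 q t m
def uE3 (q t m : R) : R := t * uF3 q m - (2 : ℕ) * (t * uG2 q m) + (3 : ℕ) * uF2 q t m
def uE4 (q m : R) : R := (3 : ℕ) * uF3 q m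

/-- The coefficient of the unknown `b` in the equation for the second Taylor coefficient. -/
def pS2 (q t m : R) : R := pK q t - (2 : ℕ) * pL q t m
/-- The coefficient of the unknown `a` in the equation for the third Taylor coefficient. -/
def pS3 (q t m : R) : R := pK q t - (3 : ℕ) * pL q t m
/-- The second Taylor coefficient of `T(x)` at the sonic point is `b = pR2 / pS2`. -/
def pR2 (q t m : R) : R :=
  (2 : ℕ) * (t * pB0 q m - pB1 q m) - t * t * pL q t m - t * (t * pC1 q m + pC2 q m)
/-- The coefficient of `x²` in `M` along `T = 1 + t x + b x²`. -/
def pM2 (q t m b : R) : R := t * pB0 q m - b * ((1 : ℕ) + q) - pB1 q m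
/-- The coefficient of `x²` in `N` along `T = 1 + t x + b x²`. -/
def pN2 (q t m b : R) : R := (0 : ℕ) - b * pA0 q - t * pC1 q m - pC2 q m
/-- The third Taylor coefficient of `T(x)` at the sonic point is `a = pR3 / pS3`. -/
def pR3 (q t m b : R) : R :=
  (2 : ℕ) * (b * pB0 q m - t * pB1 q m + t * pM2 q t m b) - b * t * pL q t m
    - t * (b * pC1 q m + t * pC2 q m + pC3 q m) + (2 : ℕ) * (b * pN2 q t m b)
/-! `hᵢⱼ` is the coefficient of `xⁱ aʲ` in the barrier expression along the cubic
`1 + t x + b x² + a x³`. -/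
def h41 (q t m b : R) : R :=
  (3 : ℕ) * pN2 q t m b - (2 : ℕ) * (t * pL q t m) - t * pC1 q m - (2 : ℕ) * (b * pA0 q)
def h40 (q t m b : R) : R :=
  (2 : ℕ) * (t * (b * pB0 q m - t * pB1 q m) + b * pM2 q t m b - b * pB1 q m)
    - t * (b * pC2 q m + t * pC3 q m) - (2 : ℕ) * (b * (b * pC1 q m + t * pC2 q m + pC3 q m))
def h52 (q : R) : R := (0 : ℕ) - (3 : ℕ) * pA0 q
def h51 (q t m b : R) : R :=
  (2 : ℕ) * (t * pB0 q m - pB1 q m - b * ((1 : ℕ) + q) + pM2 q t m b) - t * pC2 q m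
    - (2 : ℕ) * (b * pC1 q m) - (3 : ℕ) * (b * pC1 q m + t * pC2 q m + pC3 q m)
def h50 (q t m b : R) : R :=
  (2 : ℕ) * (b * (b * pB0 q m - t * pB1 q m) - t * (b * pB1 q m)) - t * (b * pC3 q m)
    - (2 : ℕ) * (b * (b * pC2 q m + t * pC3 q m))
def h62 (q m : R) : R := (0 : ℕ) - (2 : ℕ) * ((1 : ℕ) + q) - (3 : ℕ) * pC1 q m
def h61 (q t m b : R) : R :=
  (2 : ℕ) * ((2 : ℕ) * (b * pB0 q m) - (2 : ℕ) * (t * pB1 q m)) - t * pC3 q m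
    - (2 : ℕ) * (b * pC2 q m) - (3 : ℕ) * (b * pC2 q m + t * pC3 q m)
def h60 (q m b : R) : R :=
  (0 : ℕ) - (2 : ℕ) * (b * b * pB1 q m) - (2 : ℕ) * (b * (b * pC3 q m))
def h72 (q m : R) : R := (2 : ℕ) * pB0 q m - (3 : ℕ) * pC2 q m
def h71 (q m b : R) : R := (0 : ℕ) - (4 : ℕ) * (b * pB1 q m) - (5 : ℕ) * (b * pC3 q m)
end Poly

/-- The expression `2 T M + T′(x) N` along a cubic `T = 1 + t x + b x² + a x³`. The three lowest orders
vanish precisely when `t`, `b`, `a` are the Taylor coefficients of a solution. -/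
theorem h_identity (q t m a b x : ℝ) :
    2 * (1 + t * x + b * x ^ 2 + a * x ^ 3) *
      ((1 + q) - (1 + t * x + b * x ^ 2 + a * x ^ 3) *
        ((1 + q) - pB0 q m * x + pB1 q m * x ^ 2))
    + (t + 2 * b * x + 3 * a * x ^ 2) * (pA0 q + 3 * (1 + q) * x
      - (1 + t * x + b * x ^ 2 + a * x ^ 3) *
        (pA0 q + pC1 q m * x + pC2 q m * x ^ 2 + pC3 q m * x ^ 3)) =
    x * (pDen q t * m - pNum q t) * (1 + t * x + b * x ^ 2 + 2 * a * x ^ 3)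
    + x ^ 2 * (pR2 q t m - pS2 q t m * b) + x ^ 3 * (pR3 q t m b - pS3 q t m * a)
    + x ^ 4 * (h40 q t m b + h41 q t m b * a)
    + x ^ 5 * (h50 q t m b + h51 q t m b * a + h52 q * a ^ 2)
    + x ^ 6 * (h60 q m b + h61 q t m b * a + h62 q m * a ^ 2)
    + x ^ 7 * (h71 q m b * a + h72 q m * a ^ 2)
    + x ^ 8 * (-a ^ 2 * (2 * pB1 q m + 3 * pC3 q m)) := by
  unfold h72 h71 h60 h61 h62 h50 h51 h52 h40 h41 pR3 pN2 pM2 pR2 pS3 pS2 pK pL pC3 pC2 pC1 pA0 pB1 pB0 pDen pNum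
  push_cast
  ring

end

/-! ### Certified inequalities on the parameter curve -/

section

/-- The region where the certificates are needed: `t` is the slope at the sonic point, and
`3 ≤ k ≤ 4`. -/
structure InD (q t m : ℝ) : Prop where
  q0 : 0 ≤ q
  q1 : q ≤ 1
  t0 : 2 / 5 ≤ t
  num : pDen q t * m = pNum q t
  m0 : 0 ≤ m
  k3 : 3 * pL q t m ≤ pK q t
  k4 : pK q t ≤ 4 * pL q t m

theorem InD.den {q t m : ℝ} (h : InD q t m) : 4 ≤ pDen q t := by
  have := h.q0; have := h.q1; have := h.t0
  simp only [pDen]; push_cast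
  nlinarith [mul_nonneg h.q0 (by linarith : 0 ≤ 1 + t - q)]

theorem InD.S2 {q t m : ℝ} (h : InD q t m) : 4 ≤ pS2 q t m * 5 := by
  have h1 := h.q0; have := h.q1; have h2 := h.t0; have := h.k3
  simp only [pS2]
  have : 12 / 5 ≤ pK q t := by
    simp only [pK, pA0]; push_cast; nlinarith
  push_cast
  linarith

section Poly
variable {R : Type} [Add R] [Sub R] [Mul R] [NatCast R]

/-- The Bernstein coefficients on `[0, 1]` of the barrier cubic along `u = t + 3ω`. -/
def goal1 (q t m : R) : List R :=
  [uE1 q t m, (3 : ℕ) * uE1 q t m + uE2 q t m,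
    (3 : ℕ) * uE1 q t m + (2 : ℕ) * uE2 q t m + uE3 q t m,
    uE1 q t m + uE2 q t m + uE3 q t m + uE4 q m]

/-- The Bernstein coefficients of the negated barrier cubic along `u = t (1 - ω/4)`. -/
def goal2 (q t m : R) : List R :=
  [(0 : ℕ) - lE1 q t m, (0 : ℕ) - ((3 : ℕ) * lE1 q t m + lE2 q t m),
    (0 : ℕ) - ((3 : ℕ) * lE1 q t m + (2 : ℕ) * lE2 q t m + lE3 q t m),
    (0 : ℕ) - (lE1 q t m + lE2 q t m + lE3 q t m + lE4 q t m)]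

/-- Positivity of `M` along the lower barrier (Bernstein coefficients, and the value at `ω = 1`),
`3 m < t`, `λ > 0`, and two conditions which make `(1 + q) - B₀ x + B₁ x²` positive on `[0, 3/5]`. -/
def goal3 (q t m : R) : List R :=
  [lG0 q t m, (3 : ℕ) * lG0 q t m + lG1 q t m,
    (3 : ℕ) * lG0 q t m + (2 : ℕ) * lG1 q t m + lG2 q t m,
    lG0 q t m + lG1 q t m + lG2 q t m, t - (3 : ℕ) * m, pL q t m,
    ((5 : ℕ) * pB0 q m - (6 : ℕ) * pB1 q m),
    (25 : ℕ) * ((1 : ℕ) + q) - (15 : ℕ) * pB0 q m + (9 : ℕ) * pB1 q m]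

/-! The coefficients of the quartic `-M/x` along `T = 1 + t x + b x² + x³`, with `x = 3 s / 5`, `0 ≤ s ≤ 1`,
times `1250`. The constant term is rewritten by means of the equation for `t`. -/
def r2G0 (q t m : R) : R := (625 : ℕ) * (t * pL q t m)
def r2G1 (q t m b : R) : R := (750 : ℕ) * (b * ((1 : ℕ) + q) - t * pB0 q m + pB1 q m)
def r2G2 (q t m b : R) : R := (450 : ℕ) * ((1 : ℕ) + q - b * pB0 q m + t * pB1 q m)
def r2G3 (q m b : R) : R := (270 : ℕ) * (b * pB1 q m - pB0 q m)
def r2G4 (q m : R) : R := (162 : ℕ) * pB1 q m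

/-- Bernstein coefficients showing that `M < 0` along the parabola plus `x³` on `0 < x ≤ 3/5`. -/
def goal4 (q t m b : R) : List R :=
  [(4 : ℕ) * r2G0 q t m + r2G1 q t m b,
    (6 : ℕ) * r2G0 q t m + (3 : ℕ) * r2G1 q t m b + r2G2 q t m b,
    (4 : ℕ) * r2G0 q t m + (3 : ℕ) * r2G1 q t m b + (2 : ℕ) * r2G2 q t m b + r2G3 q m b,
    r2G0 q t m + r2G1 q t m b + r2G2 q t m b + r2G3 q m b + r2G4 q m]

/-- The third Taylor coefficient exceeds `1`, and `N < 0` on the end `x = 3/5` above the barrier. -/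
def goal5 (q t m b : R) : List R :=
  [pR3 q t m b - pS3 q t m,
   ((pS3 q t m) * ((125 : ℕ) + (75 : ℕ) * t + (45 : ℕ) * b) + (27 : ℕ) * pR3 q t m b) *
     ((125 : ℕ) * pA0 q + (75 : ℕ) * pC1 q m + (45 : ℕ) * pC2 q m + (27 : ℕ) * pC3 q m)
    - (125 : ℕ) * (pS3 q t m * ((125 : ℕ) * pA0 q + (225 : ℕ) * ((1 : ℕ) + q)))]

/-! The coefficients of `x⁴`, …, `x⁷` of the remainder in `h_identity`, multiplied by a power of `pS3` to
clear the denominator of `a = pR3 / pS3`. -/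
def w4 (q t m b : R) : R := h40 q t m b * pS3 q t m + h41 q t m b * pR3 q t m b
def w5 (q t m b : R) : R := h50 q t m b * (pS3 q t m * pS3 q t m)
  + h51 q t m b * (pS3 q t m * pR3 q t m b) + h52 q * (pR3 q t m b * pR3 q t m b)
def w6 (q t m b : R) : R := h60 q m b * (pS3 q t m * pS3 q t m)
  + h61 q t m b * (pS3 q t m * pR3 q t m b) + h62 q m * (pR3 q t m b * pR3 q t m b)
def w7 (q t m b : R) : R := 
  h71 q m b * (pS3 q t m * pR3 q t m b) + h72 q m * (pR3 q t m b * pR3 q t m b)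

/-- The remainder in `h_identity` is negative on `0 < x ≤ 3/5`. -/
def goal6 (q t m b : R) : List R :=
  [(0 : ℕ) - w4 q t m b, (0 : ℕ) - w5 q t m b,
    (0 : ℕ) - ((10 : ℕ) * w5 q t m b + (3 : ℕ) * w6 q t m b),
    (0 : ℕ) - ((25 : ℕ) * w5 q t m b + (15 : ℕ) * w6 q t m b + (9 : ℕ) * w7 q t m b)]
end Poly

/-- The enclosure of `m = pNum / pDen`, using `pDen ≥ 4`. -/
def mQ (q t : Af) : Af := Af.quo (pNum q t) (pDen q t) 1 4
/-- The enclosure of `b = pR2 / pS2`, using `pS2 ≥ 4/5`. -/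
def bQ (q t m : Af) : Af := Af.quo (pR2 q t m) (pS2 q t m) 5 4

def half (r : ℕ) : ℕ := Nat.div (Nat.add r 1) 2

/-- Boxes that do not meet the region `InD`: there `m < 0`, `κ < 3λ` or `κ > 4λ`. -/
def prune (q t m : Af) : Bool :=
  cond (Af.neg m) true (cond (Af.neg (pK q t - (3 : ℕ) * pL q t m)) true
    (Af.neg ((4 : ℕ) * pL q t m - pK q t)))

def allPos : List Af → Bool := List.rec true (fun a _ ih => cond (Af.pos a) ih false)

def leaf (goal : Af → Af → Af → List Af) (q t m : Af) : Bool :=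
  cond (prune q t m) true (allPos (goal q t m))

/-- The coordinate `q`, in a box with centre `cq` and radius `rq`. -/
def afq (cq rq : ℕ) : Af := ⟨cq, 0, rq, 0, 0, 0, 0⟩
/-- The coordinate `t`, in a box with centre `ct` and radius `rt`. -/
def aft (ct rt : ℕ) : Af := ⟨ct, 0, 0, 0, rt, 0, 0⟩

/-- The test on one box: it misses the region, or all goals are positive on it. -/
def leafBox (goal : Af → Af → Af → List Af) (cq rq ct rt : ℕ) : Bool :=
  leaf goal (afq cq rq) (aft ct rt) (mQ (afq cq rq) (aft ct rt))

/-- Bisection to depth `n`. The relatively longer side is halved. Recursors and `cond` are used so that the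
kernel reduces the test directly. -/
def check (goal : Af → Af → Af → List Af) (n : ℕ) : ℕ → ℕ → ℕ → ℕ → Bool :=
  Nat.rec (fun cq rq ct rt => leafBox goal cq rq ct rt)
    (fun _ ih cq rq ct rt =>
      cond (leafBox goal cq rq ct rt) true
        (cond (Nat.blt rt (Nat.mul 5 rq))
          (cond (ih (Nat.sub cq (half rq)) (half rq) ct rt)
            (ih (Nat.add cq (half rq)) (half rq) ct rt) false)
          (cond (ih cq rq (Nat.sub ct (half rt)) (half rt))
            (ih cq rq (Nat.add ct (half rt)) (half rt)) false))) n

/-- Goals which depend on `b`, evaluated with the enclosure of `b`. -/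
def withB (g : Af → Af → Af → Af → List Af) (q t m : Af) : List Af := g q t m (bQ q t m)

/-! The box is `0 ≤ q ≤ 0.2578125`, `0.46875 ≤ t ≤ 2.03125`, given by centre and radius in units
of `2⁻²⁴`. -/
theorem cert1 : check goal1 20 2162688 2162688 20971520 13107200 = true := by decide +kernel
theorem cert2 : check goal2 20 2162688 2162688 20971520 13107200 = true := by decide +kernel
theorem cert3 : check goal3 20 2162688 2162688 20971520 13107200 = true := by decide +kernel
theorem cert4 : check (withB goal4) 20 2162688 2162688 20971520 13107200 = true := by decide +kernel
theorem cert5 : check (withB goal5) 22 2162688 2162688 20971520 13107200 = true := by decide +kernel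
theorem cert6 : check (withB goal6) 20 2162688 2162688 20971520 13107200 = true := by decide +kernel

end

/-! ### Soundness of the certificates -/

section

variable {s t : ℝ}

/-- A goal evaluated on enclosures encloses the goal evaluated on reals. -/
def RepList (s t : ℝ) (l : List Af) (v : List ℝ) : Prop := List.Forall₂ (Af.Rep s t) l v

theorem allPos_sound (hs : |s| ≤ 1) (ht : |t| ≤ 1) {l : List Af} {v : List ℝ}
    (h : RepList s t l v) (hp : allPos l = true) : ∀ x ∈ v, 0 < x := by
  unfold RepList at h
  induction h with
  | nil => simp
  | @cons a x l v hax hlv ih =>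
    have h2 : cond (Af.pos a) (allPos l) false = true := hp
    cases h3 : Af.pos a with
    | false => simp [h3] at h2
    | true =>
      simp only [h3, cond_true] at h2
      intro y hy
      rcases List.mem_cons.1 hy with rfl | hy
      · exact hax.pos hs ht h3
      · exact ih h2 y hy

theorem rep_pK {q' t' : Af} {q θ : ℝ} (hs : |s| ≤ 1) (ht : |t| ≤ 1)
    (hq : Af.Rep s t q' q) (hθ : Af.Rep s t t' θ) : Af.Rep s t (pK q' t') (pK q θ) := by
  unfold pK pA0
  repeat' with_reducible first
    | exact hq
    | exact hθ
    | exact Af.Rep.con s t _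
    | apply Af.Rep.add
    | apply Af.Rep.sub
    | apply Af.Rep.mul hs ht

theorem rep_pL {q' t' m' : Af} {q θ m : ℝ} (hs : |s| ≤ 1) (ht : |t| ≤ 1)
    (hq : Af.Rep s t q' q) (hθ : Af.Rep s t t' θ) (hm : Af.Rep s t m' m) :
    Af.Rep s t (pL q' t' m') (pL q θ m) := by
  unfold pL pA0
  repeat' with_reducible first
    | exact hq
    | exact hθ
    | exact hm
    | exact Af.Rep.con s t _
    | apply Af.Rep.add
    | apply Af.Rep.sub
    | apply Af.Rep.mul hs ht

theorem rep_mQ {q' t' : Af} {q θ m : ℝ} (hs : |s| ≤ 1) (ht : |t| ≤ 1)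
    (hq : Af.Rep s t q' q) (hθ : Af.Rep s t t' θ) (h : InD q θ m) :
    Af.Rep s t (mQ q' t') m := by
  refine Af.Rep.quo hs ht (x := pNum q θ) (y := pDen q θ) ?_ ?_ h.num (by norm_num) ?_
  · unfold pNum
    repeat' with_reducible first
      | exact hq
      | exact hθ
      | exact Af.Rep.con s t _
      | apply Af.Rep.add
      | apply Af.Rep.sub
      | apply Af.Rep.mul hs ht
  · unfold pDen
    repeat' with_reducible first
      | exact hq
      | exact hθ
      | exact Af.Rep.con s t _
      | apply Af.Rep.add
      | apply Af.Rep.sub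
      | apply Af.Rep.mul hs ht
  · have := h.den
    push_cast; linarith

theorem rep_bQ {q' t' m' : Af} {q θ m b : ℝ} (hs : |s| ≤ 1) (ht : |t| ≤ 1)
    (hq : Af.Rep s t q' q) (hθ : Af.Rep s t t' θ) (hm : Af.Rep s t m' m) (h : InD q θ m)
    (hb : pS2 q θ m * b = pR2 q θ m) :
    Af.Rep s t (bQ q' t' m') b := by
  refine Af.Rep.quo hs ht (x := pR2 q θ m) (y := pS2 q θ m) ?_ ?_ hb (by norm_num) ?_
  · unfold pR2 pL pC1 pC2 pB0 pB1 pA0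
    repeat' with_reducible first
      | exact hq
      | exact hθ
      | exact hm
      | exact Af.Rep.con s t _
      | apply Af.Rep.add
      | apply Af.Rep.sub
      | apply Af.Rep.mul hs ht
  · unfold pS2 pK pL pA0
    repeat' with_reducible first
      | exact hq
      | exact hθ
      | exact hm
      | exact Af.Rep.con s t _
      | apply Af.Rep.add
      | apply Af.Rep.sub
      | apply Af.Rep.mul hs ht
  · have := h.S2
    push_cast; linarith

/-- `g` on enclosures is compatible with `v` on reals. -/
def Sound (g : Af → Af → Af → List Af) (v : ℝ → ℝ → ℝ → List ℝ) : Prop :=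
  ∀ (s t : ℝ), |s| ≤ 1 → |t| ≤ 1 → ∀ (q' t' m' : Af) (q θ m : ℝ), Af.Rep s t q' q →
    Af.Rep s t t' θ → Af.Rep s t m' m → InD q θ m → RepList s t (g q' t' m') (v q θ m)

/-- A real number in an interval is an affine function of a coordinate in `[-1, 1]`. -/
theorem exists_coord (x : ℝ) (c r : ℕ) (h : |x * 16777216 - c| ≤ r) :
    ∃ s : ℝ, |s| ≤ 1 ∧ x * 16777216 = c + r * s := by
  rcases Nat.eq_zero_or_pos r with rfl | hr
  · refine ⟨0, by simp, ?_⟩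
    have : |x * 16777216 - c| = 0 := le_antisymm (by simpa using h) (abs_nonneg _)
    rw [abs_eq_zero] at this
    push_cast; linarith
  · have hr' : (0 : ℝ) < r := by exact_mod_cast hr
    refine ⟨(x * 16777216 - c) / r, ?_, ?_⟩
    · rw [abs_div, abs_of_pos hr', div_le_one hr']; exact h
    · field_simp; ring

theorem leafBox_sound {g : Af → Af → Af → List Af} {v : ℝ → ℝ → ℝ → List ℝ} (hg : Sound g v)
    {cq rq ct rt : ℕ} (h : leafBox g cq rq ct rt = true) {q θ m : ℝ} (hD : InD q θ m)
    (hq : |q * 16777216 - cq| ≤ rq) (ht : |θ * 16777216 - ct| ≤ rt) :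
    ∀ x ∈ v q θ m, 0 < x := by
  obtain ⟨s, hs, hs'⟩ := exists_coord _ _ _ hq
  obtain ⟨t, ht, ht'⟩ := exists_coord _ _ _ ht
  have rq' : Af.Rep s t (afq cq rq) q := by
    unfold Af.Rep; rw [hs']; simp [afq]
  have rt' : Af.Rep s t (aft ct rt) θ := by
    unfold Af.Rep; rw [ht']; simp [aft]
  have rm' := rep_mQ hs ht rq' rt' hD
  unfold leafBox leaf at h
  cases hp : prune (afq cq rq) (aft ct rt) (mQ (afq cq rq) (aft ct rt)) with
  | false =>
    rw [hp] at h
    exact allPos_sound hs ht (hg s t hs ht _ _ _ _ _ _ rq' rt' rm' hD) h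
  | true =>
    exfalso
    unfold prune at hp
    have e1 : Af.neg (mQ (afq cq rq) (aft ct rt)) ≠ true := fun h => by
      have := rm'.neg hs ht h
      linarith [hD.m0]
    have e2 : Af.neg (pK (afq cq rq) (aft ct rt) - (3 : ℕ) * pL (afq cq rq) (aft ct rt)
        (mQ (afq cq rq) (aft ct rt))) ≠ true := fun h => by
      have := ((rep_pK hs ht rq' rt').sub ((Af.Rep.con s t 3).mul hs ht
        (rep_pL hs ht rq' rt' rm'))).neg hs ht h
      push_cast at this
      linarith [hD.k3]
    have e3 : Af.neg ((4 : ℕ) * pL (afq cq rq) (aft ct rt)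
        (mQ (afq cq rq) (aft ct rt)) - pK (afq cq rq) (aft ct rt)) ≠ true := fun h => by
      have := (((Af.Rep.con s t 4).mul hs ht
        (rep_pL hs ht rq' rt' rm')).sub (rep_pK hs ht rq' rt')).neg hs ht h
      push_cast at this
      linarith [hD.k4]
    rw [ne_eq, Bool.not_eq_true] at e1 e2 e3
    rw [e1, e2, e3] at hp
    simp at hp

theorem split_box {x : ℝ} {c r : ℕ} (hx : 0 ≤ x) (h : |x - c| ≤ r) :
    |x - (Nat.sub c (half r) : ℕ)| ≤ half r ∨ |x - (Nat.add c (half r) : ℕ)| ≤ half r := by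
  have h2 : r ≤ 2 * half r := by
    have : half r = (r + 1) / 2 := rfl
    omega
  have h3 : (r : ℝ) ≤ 2 * half r := by exact_mod_cast h2
  rw [abs_le] at h
  rcases le_total x c with hc | hc
  · left
    rcases le_total (half r) c with h4 | h4
    · have : ((Nat.sub c (half r) : ℕ) : ℝ) = c - half r := by
        rw [Nat.sub_eq]; push_cast [h4]; ring
      rw [this, abs_le]
      constructor <;> linarith [h.1]
    · have : Nat.sub c (half r) = 0 := Nat.sub_eq_zero_of_le h4
      have h5 : (c : ℝ) ≤ half r := by exact_mod_cast h4
      rw [this, abs_le]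
      push_cast
      constructor <;> linarith
  · right
    rw [Nat.add_eq, abs_le]
    push_cast
    constructor <;> linarith [h.2]

/-- A successful test proves all goals at each point of the box that belongs to the region. -/
theorem check_sound {g : Af → Af → Af → List Af} {v : ℝ → ℝ → ℝ → List ℝ} (hg : Sound g v)
    (n : ℕ) : ∀ {cq rq ct rt : ℕ}, check g n cq rq ct rt = true → ∀ {q θ m : ℝ}, InD q θ m →
    |q * 16777216 - cq| ≤ rq → |θ * 16777216 - ct| ≤ rt →
    ∀ x ∈ v q θ m, 0 < x := by
  induction n with
  | zero =>
    intro cq rq ct rt h q θ m hD hq ht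
    exact leafBox_sound hg h hD hq ht
  | succ n ih =>
    intro cq rq ct rt h q θ m hD hq ht
    have h' : cond (leafBox g cq rq ct rt) true
        (cond (Nat.blt rt (Nat.mul 5 rq))
          (cond (check g n (Nat.sub cq (half rq)) (half rq) ct rt)
            (check g n (Nat.add cq (half rq)) (half rq) ct rt) false)
          (cond (check g n cq rq (Nat.sub ct (half rt)) (half rt))
            (check g n cq rq (Nat.add ct (half rt)) (half rt)) false)) = true := h
    have q0 : 0 ≤ q * 16777216 := by have := hD.q0; positivity
    have t0 : 0 ≤ θ * 16777216 := by have := hD.t0; linarith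
    cases hl : leafBox g cq rq ct rt with
    | true => exact leafBox_sound hg hl hD hq ht
    | false =>
      rw [hl] at h'
      cases hb : Nat.blt rt (Nat.mul 5 rq) with
      | true =>
        simp only [hb, cond_false, cond_true, Bool.cond_false_right, Bool.and_eq_true] at h'
        rcases split_box q0 hq with h1 | h1
        · exact ih h'.1 hD h1 ht
        · exact ih h'.2 hD h1 ht
      | false =>
        simp only [hb, cond_false, Bool.cond_false_right, Bool.and_eq_true] at h'
        rcases split_box t0 ht with h1 | h1
        · exact ih h'.1 hD hq h1
        · exact ih h'.2 hD hq h1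

theorem sound1 : Sound goal1 goal1 := by
  intro s t hs ht q' t' m' q θ m hq hθ hm hD
  unfold goal1 RepList uE4 uE3 uE2 uE1 uF3 uF2 uF1 uF0 uk2 uk1 uk0 uG2 uG1 uG0 pC1 pC2 pC3 pB0 pB1 pA0
  repeat' with_reducible first
    | exact hq
    | exact hθ
    | exact hm
    | exact Af.Rep.con s t _
    | apply Af.Rep.add
    | apply Af.Rep.sub
    | apply Af.Rep.mul hs ht
    | apply List.Forall₂.cons
    | exact List.Forall₂.nil

theorem sound2 : Sound goal2 goal2 := by
  intro s t hs ht q' t' m' q θ m hq hθ hm hD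
  unfold goal2 RepList lE4 lE3 lE2 lE1 lF3 lF2 lF1 lF0 lk2 lk1 lk0 lG2 lG1 lG0 pC1 pC2 pC3 pB0 pB1 pA0
  repeat' with_reducible first
    | exact hq
    | exact hθ
    | exact hm
    | exact Af.Rep.con s t _
    | apply Af.Rep.add
    | apply Af.Rep.sub
    | apply Af.Rep.mul hs ht
    | apply List.Forall₂.cons
    | exact List.Forall₂.nil


theorem sound3 : Sound goal3 goal3 := by
  intro s t hs ht q' t' m' q θ m hq hθ hm hD
  unfold goal3 RepList lG2 lG1 lG0 pL pB0 pB1 pA0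
  repeat' with_reducible first
    | exact hq
    | exact hθ
    | exact hm
    | exact Af.Rep.con s t _
    | apply Af.Rep.add
    | apply Af.Rep.sub
    | apply Af.Rep.mul hs ht
    | apply List.Forall₂.cons
    | exact List.Forall₂.nil

/-- Compatibility for the goals that involve the quotient `b`. -/
theorem sound_withB {g : ∀ {R : Type} [Add R] [Sub R] [Mul R] [NatCast R], R → R → R → R → List R}
    (hg : ∀ (s t : ℝ), |s| ≤ 1 → |t| ≤ 1 → ∀ (q' t' m' b' : Af) (q θ m b : ℝ), Af.Rep s t q' q →
      Af.Rep s t t' θ → Af.Rep s t m' m → Af.Rep s t b' b →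
      RepList s t (g q' t' m' b') (g q θ m b)) :
    Sound (withB g) (fun q θ m => g q θ m (pR2 q θ m / pS2 q θ m)) := by
  intro s t hs ht q' t' m' q θ m hq hθ hm hD
  refine hg s t hs ht _ _ _ _ _ _ _ _ hq hθ hm (rep_bQ hs ht hq hθ hm hD ?_)
  have := hD.S2
  have h0 : pS2 q θ m ≠ 0 := by intro h; rw [h] at this; linarith
  field_simp

theorem sound4 : Sound (withB goal4) (fun q θ m => goal4 q θ m (pR2 q θ m / pS2 q θ m)) := by
  apply sound_withB
  intro s t hs ht q' t' m' b' q θ m b hq hθ hm hb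
  unfold goal4 RepList r2G4 r2G3 r2G2 r2G1 r2G0 pL pB0 pB1 pA0
  repeat' with_reducible first
    | exact hq
    | exact hθ
    | exact hm
    | exact hb
    | exact Af.Rep.con s t _
    | apply Af.Rep.add
    | apply Af.Rep.sub
    | apply Af.Rep.mul hs ht
    | apply List.Forall₂.cons
    | exact List.Forall₂.nil

theorem sound5 : Sound (withB goal5) (fun q θ m => goal5 q θ m (pR2 q θ m / pS2 q θ m)) := by
  apply sound_withB
  intro s t hs ht q' t' m' b' q θ m b hq hθ hm hb
  unfold goal5 RepList pR3 pS3 pN2 pM2 pK pL pC1 pC2 pC3 pB0 pB1 pA0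
  repeat' with_reducible first
    | exact hq
    | exact hθ
    | exact hm
    | exact hb
    | exact Af.Rep.con s t _
    | apply Af.Rep.add
    | apply Af.Rep.sub
    | apply Af.Rep.mul hs ht
    | apply List.Forall₂.cons
    | exact List.Forall₂.nil

theorem sound6 : Sound (withB goal6) (fun q θ m => goal6 q θ m (pR2 q θ m / pS2 q θ m)) := by
  apply sound_withB
  intro s t hs ht q' t' m' b' q θ m b hq hθ hm hb
  unfold goal6 RepList w7 w6 w5 w4 h72 h71 h62 h61 h60 h52 h51 h50 h41 h40 pR3 pS3 pN2 pM2 pK pL pC1 pC2 pC3 pB0 pB1 pA0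
  repeat' with_reducible first
    | exact hq
    | exact hθ
    | exact hm
    | exact hb
    | exact Af.Rep.con s t _
    | apply Af.Rep.add
    | apply Af.Rep.sub
    | apply Af.Rep.mul hs ht
    | apply List.Forall₂.cons
    | exact List.Forall₂.nil

/-- Soundness specialised to the box of the certificates. -/
theorem box_of {g : Af → Af → Af → List Af} {v : ℝ → ℝ → ℝ → List ℝ} (hg : Sound g v) {n : ℕ}
    (h : check g n 2162688 2162688 20971520 13107200 = true) {q θ m : ℝ} (hD : InD q θ m)
    (hq : q ≤ 2578125 / 10000000) (h1 : 46875 / 100000 ≤ θ) (h2 : θ ≤ 203125 / 100000) :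
    ∀ x ∈ v q θ m, 0 < x := by
  refine check_sound hg n h hD ?_ ?_
  · rw [abs_le]; push_cast
    constructor <;> linarith [hD.q0]
  · rw [abs_le]; push_cast
    constructor <;> linarith

end

/-! ### The parametrization of the self-similar exponent -/

section

/-- The exponent `r` in terms of `q`; this parametrization makes `ℛ₁` rational. -/
def rQ (α q : ℝ) : ℝ := 1 + 2 * α * q / ((α + q) * (1 + q))

theorem R1_eq {α q : ℝ} (hα : 0 < α) (hq : 0 < q) (h : q ^ 2 ≤ α) :
    R1 (1 + 2 * α) (rQ α q) = 4 * α * (α - q ^ 2) / ((α + q) * (1 + q)) := by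
  unfold R1
  have h1 : 0 < α + q := by positivity
  have h2 : 0 < 1 + q := by positivity
  have : (1 + 2 * α) ^ 2 * (rQ α q - 3) ^ 2
      - 2 * (1 + 2 * α) * (3 * (rQ α q) ^ 2 - 6 * (rQ α q) + 7) + 9 * (rQ α q) ^ 2
      - 14 * (rQ α q) + 9 = (4 * α * (α - q ^ 2) / ((α + q) * (1 + q))) ^ 2 := by
    unfold rQ; field_simp; ring
  rw [this, Real.sqrt_sq]
  have : 0 ≤ α - q ^ 2 := by linarith
  positivity

theorem W0_eq {α q : ℝ} (hα : 0 < α) (hq : 0 < q) (h : q ^ 2 ≤ α) :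
    W₀ (1 + 2 * α) (rQ α q) = (1 - q) / (α + q) := by
  unfold W₀
  rw [R1_eq hα hq h]
  have h1 : 0 < α + q := by positivity
  have h2 : 0 < 1 + q := by positivity
  have : (1 + 2 * α - 1) = 2 * α := by ring
  rw [this]
  unfold rQ; field_simp; ring

theorem Z0_eq {α q : ℝ} (hα : 0 < α) (hq : 0 < q) (h : q ^ 2 ≤ α) :
    Z₀ (1 + 2 * α) (rQ α q) = -(1 + q) / (α + q) := by
  unfold Z₀
  rw [R1_eq hα hq h]
  have h1 : 0 < α + q := by positivity
  have h2 : 0 < 1 + q := by positivity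
  have : (1 + 2 * α - 1) = 2 * α := by ring
  rw [this]
  unfold rQ; field_simp; ring

theorem kFun_eq {α q L K : ℝ} (hα : 0 < α) (hq : 0 < q) (h : q ^ 2 ≤ α)
    (hLK : L ≤ K) (h1 : L + K = 2 * (2 + q + q / α + 2 * q * (q / α)))
    (h2 : L * K = 4 * (1 - 3 * q ^ 2) * (1 - q * (q / α))) :
    kFun (1 + 2 * α) (rQ α q) = K / L := by
  have p1 : 0 < α + q := by positivity
  have p2 : 0 < 1 + q := by positivity
  have hR2 : R2 (1 + 2 * α) (rQ α q) = α * (K - L) / ((α + q) * (1 + q)) := by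
    unfold R2
    rw [R1_eq hα hq h]
    have e1 : (1 + 2 * α - 1) = 2 * α := by ring
    rw [e1]
    have e2 : (K - L) ^ 2 = 4 * (2 + q + q / α + 2 * q * (q / α)) ^ 2
        - 16 * (1 - 3 * q ^ 2) * (1 - q * (q / α)) := by
      have : (K - L) ^ 2 = (L + K) ^ 2 - 4 * (L * K) := by ring
      rw [this, h1, h2]; ring
    have e3 : (1 + 2 * α) * ((76 - 27 * (1 + 2 * α)) * (1 + 2 * α) - 71)
        - (3 * (1 + 2 * α) - 5) * (((1 + 2 * α) - 5) * (1 + 2 * α) + 2) * (rQ α q) ^ 2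
      + ((1 + 2 * α) * ((1 + 2 * α) * (18 * (1 + 2 * α) - 52) + 50) - 8) * (rQ α q)
      + 4 * α * (α - q ^ 2) / ((α + q) * (1 + q)) * (9 * ((1 + 2 * α) - 2) * (1 + 2 * α)
        + ((2 - 3 * (1 + 2 * α)) * (1 + 2 * α) + 5) * (rQ α q) + 5) + 18 =
        (2 * α * (α * (K - L) / ((α + q) * (1 + q)))) ^ 2 := by
      have : (2 * α * (α * (K - L) / ((α + q) * (1 + q)))) ^ 2 =
        4 * α ^ 4 * (K - L) ^ 2 / ((α + q) * (1 + q)) ^ 2 := by field_simp; ring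
      rw [this, e2]
      unfold rQ; field_simp; ring
    rw [e3, Real.sqrt_sq]
    · field_simp
    · have : 0 ≤ K - L := by linarith
      positivity
  have hA : -4 + (1 + (1 + 2 * α)) * (rQ α q - 1) / (1 + 2 * α - 1) =
      -(α * (L + K)) / ((α + q) * (1 + q)) := by
    rw [h1]
    have e1 : (1 + 2 * α - 1) = 2 * α := by ring
    rw [e1]
    unfold rQ; field_simp; ring
  unfold kFun
  rw [hA, hR2]
  have e1 : -(α * (L + K)) / ((α + q) * (1 + q)) - α * (K - L) / ((α + q) * (1 + q)) =
    (-(2 * α) / ((α + q) * (1 + q))) * K := by field_simp; ring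
  have e2 : -(α * (L + K)) / ((α + q) * (1 + q)) + α * (K - L) / ((α + q) * (1 + q)) =
    (-(2 * α) / ((α + q) * (1 + q))) * L := by field_simp; ring
  rw [e1, e2, mul_div_mul_left]
  have : 0 < 2 * α / ((α + q) * (1 + q)) := by positivity
  rw [neg_div]; exact neg_ne_zero.2 this.ne'

theorem rQ_mono {α a b : ℝ} (hα : 0 < α) (ha : 0 < a) (hab : a < b) (h : a * b < α) :
    rQ α a < rQ α b := by
  unfold rQ
  have hb : 0 < b := ha.trans hab
  have : 2 * α * a / ((α + a) * (1 + a)) < 2 * α * b / ((α + b) * (1 + b)) := by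
    rw [div_lt_div_iff₀ (by positivity) (by positivity)]
    nlinarith [mul_pos hα (mul_pos (sub_pos.2 hab) (sub_pos.2 h))]
  linarith

theorem rQ_lt_rStar {α q : ℝ} (hα : 0 < α) (hq : 0 < q) (h1 : q ^ 2 < α) (h2 : 3 * q ^ 2 < 1) :
    rQ α q < rStar (1 + 2 * α) := by
  unfold rStar
  split_ifs with hc
  · have hs : 0 < √α := Real.sqrt_pos.2 hα
    have hss : √α ^ 2 = α := Real.sq_sqrt hα.le
    have hqs : q < √α := Real.lt_sqrt_of_sq_lt h1
    have e : 1 + 2 / (√(2 / (1 + 2 * α - 1)) + 1) ^ 2 = rQ α (√α) := by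
      have : 2 / (1 + 2 * α - 1) = α⁻¹ := by field_simp; ring
      rw [this, Real.sqrt_inv]
      unfold rQ
      set s := √α
      rw [← hss]
      field_simp
      ring
    rw [e]
    exact rQ_mono hα hq hqs (by nlinarith)
  · have hα3 : 1 / 3 ≤ α := by linarith
    have hs : 0 < √(3 : ℝ) := Real.sqrt_pos.2 (by norm_num)
    have hss : √(3 : ℝ) ^ 2 = 3 := Real.sq_sqrt (by norm_num)
    have hqs : q < 1 / √3 := by
      rw [lt_div_iff₀ hs]
      by_contra hcon
      push Not at hcon
      nlinarith
    have e : (3 * (1 + 2 * α) - 1) / (2 + √3 * (1 + 2 * α - 1)) = rQ α (1 / √3) := by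
      unfold rQ
      have e1 : 2 + √3 * (1 + 2 * α - 1) = 2 * (1 + √3 * α) := by ring
      rw [e1]
      set s := √(3 : ℝ)
      field_simp
      have hs3 : s ^ 3 = 3 * s := by rw [pow_succ, hss]
      ring_nf
      try simp only [hss, hs3]
      try ring_nf
    rw [e]
    refine rQ_mono hα hq hqs ?_
    have : q * (1 / √3) < 1 / √3 * (1 / √3) := by gcongr
    have e2 : 1 / √3 * (1 / √(3:ℝ)) = 1 / 3 := by
      rw [div_mul_div_comm, Real.mul_self_sqrt (by norm_num)]; norm_num
    linarith

end

/-! ### The parameter window 3 ≤ k ≤ 4 -/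

section

/-- The slope of `T(x)` at the sonic point: the positive root of a quadratic equation. -/
def thQ (α q : ℝ) : ℝ :=
  ((1 + q - pC1 q (q / α)) + √((1 + q - pC1 q (q / α)) ^ 2 + 8 * pA0 q * pB0 q (q / α))) /
    (2 * pA0 q)
/-- The eigenvalue `λ` at the sonic point, as a function of `q`. -/
def lamQ (α q : ℝ) : ℝ := pL q (thQ α q) (q / α)
/-- The eigenvalue `κ` at the sonic point, as a function of `q`. -/
def kapQ (α q : ℝ) : ℝ := pK q (thQ α q)

section
variable {α q : ℝ}

theorem pA0_pos (hq : 0 ≤ q) : 0 < pA0 q := by unfold pA0; push_cast; positivity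

theorem pB0_nonneg {q m : ℝ} (hq : 0 ≤ q) (hm : 0 ≤ m) (h : q * m ≤ 1) : 0 ≤ pB0 q m := by
  unfold pB0; push_cast
  have : 0 ≤ 1 - q * m := by linarith
  positivity

theorem mu_le (hα : 0 < α) (h : q ^ 2 ≤ α) : q * (q / α) ≤ 1 := by
  rw [← mul_div_assoc, div_le_one hα]; nlinarith

theorem thQ_nonneg (hα : 0 < α) (hq : 0 ≤ q) (h : q ^ 2 ≤ α) : 0 ≤ thQ α q := by
  unfold thQ
  have hA := pA0_pos hq
  have hB := pB0_nonneg hq (div_nonneg hq hα.le) (mu_le hα h)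
  refine div_nonneg ?_ (by linarith)
  have := Real.abs_le_sqrt (x := (1 + q - pC1 q (q / α))) (y := (1 + q - pC1 q (q / α)) ^ 2 + 8 * pA0 q * pB0 q (q / α))
    (by have : 0 ≤ 8 * pA0 q * pB0 q (q / α) := by positivity
        linarith)
  linarith [neg_abs_le (1 + q - pC1 q (q / α))]

theorem thQ_root (hα : 0 < α) (hq : 0 ≤ q) (h : q ^ 2 ≤ α) :
    pA0 q * thQ α q ^ 2 = (1 + q - pC1 q (q / α)) * thQ α q + 2 * pB0 q (q / α) := by
  have hA := pA0_pos hq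
  have hB := pB0_nonneg hq (div_nonneg hq hα.le) (mu_le hα h)
  have hs := Real.sq_sqrt (show 0 ≤ (1 + q - pC1 q (q / α)) ^ 2 + 8 * pA0 q * pB0 q (q / α) by positivity)
  unfold thQ
  set s := √((1 + q - pC1 q (q / α)) ^ 2 + 8 * pA0 q * pB0 q (q / α))
  field_simp
  linear_combination hs

theorem thQ_pos (hα : 0 < α) (hq : 0 < q) (h : q ^ 2 ≤ α) : 0 < thQ α q := by
  have h0 := thQ_nonneg hα hq.le h
  rcases h0.eq_or_lt with h1 | h1
  · exfalso
    have := thQ_root hα hq.le h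
    rw [← h1] at this
    have hm : 0 < q / α := by positivity
    have h2 := mu_le hα h
    have : 0 < pB0 q (q / α) := by
      unfold pB0; push_cast
      have : 0 ≤ 1 - q * (q / α) := by linarith
      positivity
    nlinarith
  · exact h1

theorem thQ_num (hα : 0 < α) (hq : 0 ≤ q) (h : q ^ 2 ≤ α) :
    pDen q (thQ α q) * (q / α) = pNum q (thQ α q) := by
  have := thQ_root hα hq h
  set m := q / α
  set t := thQ α q
  unfold pDen pNum
  unfold pA0 pC1 pB0 pA0 at this
  push_cast at *
  linear_combination -this

theorem lam_add_kap : lamQ α q + kapQ α q = 2 * (2 + q + q / α + 2 * q * (q / α)) := by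
  unfold lamQ kapQ pL pK; push_cast; ring

theorem lam_mul_kap (hα : 0 < α) (hq : 0 ≤ q) (h : q ^ 2 ≤ α) :
    lamQ α q * kapQ α q = 4 * (1 - 3 * q ^ 2) * (1 - q * (q / α)) := by
  have := thQ_root hα hq h
  unfold lamQ kapQ pL pK
  set m := q / α
  set t := thQ α q
  unfold pC1 pB0 at this
  unfold pA0 at *
  push_cast at *
  linear_combination -(1 + 3 * q) * this

theorem kap_pos (hα : 0 < α) (hq : 0 ≤ q) (h : q ^ 2 ≤ α) : 0 < kapQ α q := by
  have := thQ_nonneg hα hq h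
  have := pA0_pos hq
  unfold kapQ pK; push_cast
  positivity

theorem thQ_zero : thQ α 0 = 0 := by
  unfold thQ pC1 pA0 pB0
  simp

theorem continuousOn_thQ (hα : 0 < α) : ContinuousOn (thQ α) (Ici 0) := by
  unfold thQ
  have hA : ∀ q ∈ Ici (0:ℝ), 2 * pA0 q ≠ 0 := fun q hq => by
    have := pA0_pos hq; positivity
  refine ContinuousOn.div ?_ ?_ hA
  · apply Continuous.continuousOn
    unfold pC1 pA0 pB0
    fun_prop
  · unfold pA0; fun_prop

theorem continuousOn_lamQ (hα : 0 < α) : ContinuousOn (lamQ α) (Ici 0) := by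
  have := continuousOn_thQ hα
  unfold lamQ pL pA0; fun_prop
theorem continuousOn_kapQ (hα : 0 < α) : ContinuousOn (kapQ α) (Ici 0) := by
  have := continuousOn_thQ hα
  unfold kapQ pK pA0; fun_prop

/-- The parameters with `3 ≤ k ≤ 4` for which `r` lies in the admissible range. -/
structure Good (α q : ℝ) : Prop where
  α0 : 0 < α
  q0 : 0 < q
  qα : q ^ 2 < α
  q3 : 3 * q ^ 2 < 1
  k3 : 3 * lamQ α q ≤ kapQ α q
  k4 : kapQ α q ≤ 4 * lamQ α q

/-- An interval on which `3 ≤ k ≤ 4`, with equality at the ends. As `q` increases from `0`, the ratio `k`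
runs from `1` to `∞`; `q₄` is the first point with `k = 4` and `q₃` the last point before it with
`k = 3`. -/
theorem exists_window (hα : 0 < α) : ∃ q3 q4, 0 < q3 ∧ q3 < q4 ∧
    kapQ α q3 = 3 * lamQ α q3 ∧ kapQ α q4 = 4 * lamQ α q4 ∧
    (∀ q ∈ Icc q3 q4, Good α q) ∧ ∀ q ∈ Ioo q3 q4, 3 * lamQ α q < kapQ α q ∧ kapQ α q < 4 * lamQ α q := by
  obtain ⟨Q, hQ0, hQα, hQ3, hQ⟩ : ∃ Q : ℝ, 0 < Q ∧ Q ^ 2 ≤ α ∧ 3 * Q ^ 2 ≤ 1 ∧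
      (1 - 3 * Q ^ 2) * (1 - Q * (Q / α)) = 0 := by
    rcases le_total α (1 / 3) with h | h
    · have hs := Real.sq_sqrt hα.le
      refine ⟨√α, Real.sqrt_pos.2 hα, hs.le, by linarith, ?_⟩
      have : √α * (√α / α) = 1 := by
        rw [← mul_div_assoc, ← pow_two, hs, div_self hα.ne']
      rw [this]; ring
    · have hs := Real.sq_sqrt (show (0:ℝ) ≤ 1 / 3 by norm_num)
      refine ⟨√(1 / 3), Real.sqrt_pos.2 (by norm_num), by linarith, by linarith, ?_⟩
      rw [hs]; ring
  have hlt : ∀ q ∈ Icc 0 Q, q ^ 2 ≤ α := fun q hq => by nlinarith [hq.1, hq.2]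
  have hc : ∀ c : ℝ, ContinuousOn (fun q => kapQ α q - c * lamQ α q) (Icc 0 Q) := fun c =>
    ((continuousOn_kapQ hα).sub (continuousOn_const.mul (continuousOn_lamQ hα))).mono
      (fun x hx => hx.1)
  have h0 : lamQ α 0 = 2 ∧ kapQ α 0 = 2 := by
    unfold lamQ kapQ pL pK; rw [thQ_zero]; push_cast; norm_num
  have hlQ : lamQ α Q = 0 := by
    have := lam_mul_kap hα hQ0.le hQα
    rw [mul_assoc, hQ, mul_zero] at this
    rcases mul_eq_zero.1 this with h | h
    · exact h
    · exact absurd h (kap_pos hα hQ0.le hQα).ne'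
  have hkQ := kap_pos hα hQ0.le hQα
  -- first zero of `k - 4`
  have hne : (Icc 0 Q ∩ (fun q => kapQ α q - 4 * lamQ α q) ⁻¹' {0}).Nonempty := by
    have := intermediate_value_Icc hQ0.le (hc 4)
    obtain ⟨q, hq, hq'⟩ := this (show (0:ℝ) ∈ Icc _ _ by
      simp only [h0, hlQ]; constructor <;> linarith)
    exact ⟨q, hq, hq'⟩
  have hK : IsCompact (Icc 0 Q ∩ (fun q => kapQ α q - 4 * lamQ α q) ⁻¹' {0}) :=
    isCompact_Icc.of_isClosed_subset ((hc 4).preimage_isClosed_of_isClosed isClosed_Icc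
      isClosed_singleton) inter_subset_left
  obtain ⟨q4, ⟨hq4, hz4⟩, hmin⟩ := hK.exists_isLeast hne
  have hz4' : kapQ α q4 - 4 * lamQ α q4 = 0 := hz4
  have hk4 := kap_pos hα hq4.1 (hlt _ hq4)
  have hne3 : (Icc 0 q4 ∩ (fun q => kapQ α q - 3 * lamQ α q) ⁻¹' {0}).Nonempty := by
    have := intermediate_value_Icc hq4.1 ((hc 3).mono (Icc_subset_Icc_right hq4.2))
    obtain ⟨q, hq, hq'⟩ := this (show (0:ℝ) ∈ Icc _ _ by
      simp only [h0]; constructor <;> linarith)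
    exact ⟨q, hq, hq'⟩
  have hK3 : IsCompact (Icc 0 q4 ∩ (fun q => kapQ α q - 3 * lamQ α q) ⁻¹' {0}) :=
    isCompact_Icc.of_isClosed_subset (((hc 3).mono (Icc_subset_Icc_right hq4.2)).preimage_isClosed_of_isClosed isClosed_Icc
      isClosed_singleton) inter_subset_left
  obtain ⟨q3, ⟨hq3, hz3⟩, hmax⟩ := hK3.exists_isGreatest hne3
  have hz3' : kapQ α q3 - 3 * lamQ α q3 = 0 := hz3
  have h30 : 0 < q3 := by
    rcases hq3.1.eq_or_lt with h | h
    · rw [← h, h0.1, h0.2] at hz3'; norm_num at hz3'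
    · exact h
  have h34 : q3 < q4 := by
    rcases hq3.2.eq_or_lt with h | h
    · rw [h] at hz3'; linarith
    · exact h
  have strict : ∀ q ∈ Ioo q3 q4, 3 * lamQ α q < kapQ α q ∧ kapQ α q < 4 * lamQ α q := by
    intro q hq
    constructor
    · by_contra hcon
      push Not at hcon
      have := intermediate_value_Icc hq.2.le ((hc 3).mono (Icc_subset_Icc (h30.le.trans hq.1.le) hq4.2))
      obtain ⟨z, hz, hz'⟩ := this (show (0:ℝ) ∈ Icc _ _ by constructor <;> linarith)
      have := hmax ⟨⟨h30.le.trans (hq.1.le.trans hz.1), hz.2⟩, hz'⟩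
      linarith [hq.1, hz.1]
    · by_contra hcon
      push Not at hcon
      have hq' : 0 ≤ q := h30.le.trans hq.1.le
      have := intermediate_value_Icc hq' ((hc 4).mono (Icc_subset_Icc_right (hq.2.le.trans hq4.2)))
      obtain ⟨z, hz, hz'⟩ := this (show (0:ℝ) ∈ Icc _ _ by simp only [h0]; constructor <;> linarith)
      have := hmin ⟨⟨hz.1, hz.2.trans (hq.2.le.trans hq4.2)⟩, hz'⟩
      linarith [hq.2, hz.2]
  have hq4Q : q4 < Q := by
    rcases hq4.2.eq_or_lt with h | h
    · rw [h, hlQ] at hz4'; linarith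
    · exact h
  refine ⟨q3, q4, h30, h34, by linarith, by linarith, ?_, strict⟩
  intro q hq
  have hqQ : q < Q := hq.2.trans_lt hq4Q
  have hq0 : 0 < q := h30.trans_le hq.1
  have hk : 3 * lamQ α q ≤ kapQ α q ∧ kapQ α q ≤ 4 * lamQ α q := by
    have p3 := kap_pos hα hq3.1 (hlt _ ⟨hq3.1, h34.le.trans hq4.2⟩)
    rcases hq.1.eq_or_lt with h | h
    · rw [← h]; constructor <;> linarith
    · rcases hq.2.eq_or_lt with h' | h'
      · rw [h']; constructor <;> linarith
      · exact ⟨(strict q ⟨h, h'⟩).1.le, (strict q ⟨h, h'⟩).2.le⟩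
  exact ⟨hα, hq0, by nlinarith, by nlinarith, hk.1, hk.2⟩

theorem Good.lam_pos (h : Good α q) : 0 < lamQ α q := by
  have := kap_pos h.α0 h.q0.le h.qα.le
  linarith [h.k4]

theorem Good.mu_pos (h : Good α q) : 0 < q / α := div_pos h.q0 h.α0
theorem Good.qmu_lt (h : Good α q) : q * (q / α) < 1 := by
  rw [← mul_div_assoc, div_lt_one h.α0]; nlinarith [h.qα]
theorem Good.th_pos (h : Good α q) : 0 < thQ α q := thQ_pos h.α0 h.q0 h.qα.le

/-- The quotient `k(r)` is the ratio of the eigenvalues at the sonic point. -/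
theorem Good.k (h : Good α q) : kFun (1 + 2 * α) (rQ α q) = kapQ α q / lamQ α q := by
  refine kFun_eq h.α0 h.q0 h.qα.le ?_ lam_add_kap (lam_mul_kap h.α0 h.q0.le h.qα.le)
  linarith [h.k3, h.lam_pos]

/-- A priori bounds which place the whole window inside the certified box, for every `α`. -/
theorem Good.box (h : Good α q) : InD q (thQ α q) (q / α) ∧ q ≤ 2578125 / 10000000 ∧
    46875 / 100000 ≤ thQ α q ∧ thQ α q ≤ 203125 / 100000 := by
  have h1 : lamQ α q + kapQ α q = _ := lam_add_kap
  have h2 := lam_mul_kap h.α0 h.q0.le h.qα.le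
  have hk3 := h.k3
  have hk4 := h.k4
  have hl := h.lam_pos
  have hm := h.mu_pos
  have hqm := h.qmu_lt
  have hq := h.q0
  have hq3 := h.q3
  have hkd : kapQ α q = 2 * (1 + q) + (1 + 3 * q) * thQ α q := by
    unfold kapQ pK pA0; push_cast; ring
  set m := q / α with hmdef
  set L := lamQ α q with hL
  set K := kapQ α q with hK
  set T := 2 + q + m + 2 * q * m with hT
  have hTq : 2 + q ≤ T := by
    have : 0 < q * m := mul_pos hq hm
    linarith
  have hT2 : 4 * T ^ 2 ≤ 25 * (1 - 3 * q ^ 2) := by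
    have e1 : 4 * T ^ 2 = (L + K) ^ 2 := by rw [h1]; ring
    have e2 : 0 ≤ (4 * L - K) * (4 * K - L) := mul_nonneg (by linarith) (by linarith)
    have e3 : L * K ≤ 4 * (1 - 3 * q ^ 2) := by
      rw [h2]
      have : 0 < q * m := mul_pos hq hm
      nlinarith
    nlinarith
  have hqb : q ≤ 252 / 1000 := by
    by_contra hc
    push Not at hc
    nlinarith
  have hT25 : T ≤ 5 / 2 := by
    nlinarith [sq_nonneg q]
  have ht1 : 47 / 100 ≤ thQ α q := by
    have : 3 * (2 + q) / 2 ≤ K := by linarith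
    rw [hkd] at this
    by_contra hc
    push Not at hc
    nlinarith
  have ht2 : thQ α q ≤ 2 := by
    have : K ≤ 4 := by linarith
    rw [hkd] at this
    by_contra hc
    push Not at hc
    nlinarith
  refine ⟨⟨hq.le, by linarith, by linarith, thQ_num h.α0 hq.le h.qα.le, hm.le, hk3, hk4⟩, by linarith,
    by linarith, by linarith⟩
end

end

/-! ### Briot–Bouquet fixed points -/

section

theorem abs_rpow_mul_le {μ₀ s a B : ℝ} (hμ : 0 ≤ μ₀) (hs : s ∈ Set.uIoc (0:ℝ) 1) (h : |a| ≤ B) :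
    ‖s ^ μ₀ * a‖ ≤ B := by
  rw [uIoc_of_le zero_le_one] at hs
  have h1 : s ^ μ₀ ≤ 1 := Real.rpow_le_one hs.1.le hs.2 hμ
  have h0 : 0 ≤ s ^ μ₀ := Real.rpow_nonneg hs.1.le _
  rw [Real.norm_eq_abs, abs_mul, abs_of_nonneg h0]
  nlinarith [abs_nonneg a]

/-- The Briot–Bouquet equation, `x` times the derivative of `w` equal to `x F(x, w) - μ₀ w`, in integral
form, for a bounded field which is Lipschitz in `w`. The integral operator is a contraction for the
sup norm with weight `exp (-K |x|)`, `K = 2 * L + 2`; the fixed point is jointly continuous in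
`x` and in the parameter. -/
theorem bb_exists {P : Type} [PseudoMetricSpace P] {μ₀ : ℝ} (hμ : 0 ≤ μ₀) (F : ℝ → P → ℝ → ℝ)
    (hF : Continuous fun a : ℝ × P × ℝ => F a.1 a.2.1 a.2.2) {B L : ℝ}
    (hB : ∀ x p w, |F x p w| ≤ B) (hL0 : 0 ≤ L)
    (hL : ∀ x p w w', |F x p w - F x p w'| ≤ L * |w - w'|) :
    ∃ w : ℝ → P → ℝ, Continuous (Function.uncurry w) ∧
      ∀ x p, w x p = x * ∫ s in (0:ℝ)..1, s ^ μ₀ * F (x * s) p (w (x * s) p) := by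
  rcases isEmpty_or_nonempty P with hP | hP
  · exact ⟨fun _ _ => 0, (continuous_const : Continuous fun _ : ℝ × P => (0:ℝ)), fun x p => isEmptyElim p⟩
  set K : ℝ := 2 * L + 2 with hK
  have hB0 : 0 ≤ B := (abs_nonneg _).trans (hB 0 hP.some 0)
  have hrp : Continuous fun s : ℝ => s ^ μ₀ := Real.continuous_rpow_const hμ
  let G : (BoundedContinuousFunction (ℝ × P) ℝ) → ℝ × P → ℝ → ℝ := fun u a s =>
    s ^ μ₀ * F (a.1 * s) a.2 (exp (K * |a.1 * s|) * u (a.1 * s, a.2))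
  have hG : ∀ u, Continuous (Function.uncurry (G u)) := by
    intro u
    have h1 : Continuous fun b : (ℝ × P) × ℝ =>
        exp (K * |b.1.1 * b.2|) * u (b.1.1 * b.2, b.1.2) := by
      have := u.continuous
      fun_prop
    have h2 : Continuous fun b : (ℝ × P) × ℝ =>
        F (b.1.1 * b.2) b.1.2 (exp (K * |b.1.1 * b.2|) * u (b.1.1 * b.2, b.1.2)) :=
      hF.comp (f := fun b : (ℝ × P) × ℝ => (b.1.1 * b.2, b.1.2, _))
        ((by fun_prop : Continuous fun b : (ℝ × P) × ℝ => b.1.1 * b.2).prodMk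
          ((by fun_prop : Continuous fun b : (ℝ × P) × ℝ => b.1.2).prodMk h1))
    exact (hrp.comp continuous_snd).mul h2
  have hGi : ∀ u a x y, IntervalIntegrable (G u a) MeasureTheory.volume x y := fun u a x y =>
    ((hG u).comp (Continuous.prodMk_right a)).intervalIntegrable _ _
  let Ψ : (BoundedContinuousFunction (ℝ × P) ℝ) → ℝ × P → ℝ := fun u a =>
    exp (-(K * |a.1|)) * (a.1 * ∫ s in (0:ℝ)..1, G u a s)
  have hΨc : ∀ u, Continuous (Ψ u) := by
    intro u
    have := intervalIntegral.continuous_parametric_intervalIntegral_of_continuous'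
      (μ := MeasureTheory.volume) (hG u) 0 1
    have h2 : Continuous fun a : ℝ × P => exp (-(K * |a.1|)) := by fun_prop
    exact h2.mul (continuous_fst.mul this)
  have hxe : ∀ x : ℝ, exp (-(K * |x|)) * |x| ≤ 1 := by
    intro x
    have : |x| ≤ exp (K * |x|) := by
      have := Real.add_one_le_exp (K * |x|)
      nlinarith [abs_nonneg x]
    rw [Real.exp_neg, inv_mul_le_iff₀ (exp_pos _)]; simpa using this
  have hΨb : ∀ u a, ‖Ψ u a‖ ≤ B := by
    intro u a
    have h1 : ‖∫ s in (0:ℝ)..1, G u a s‖ ≤ B * |1 - 0| :=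
      intervalIntegral.norm_integral_le_of_norm_le_const fun s hs =>
        abs_rpow_mul_le hμ hs (hB _ _ _)
    simp only [sub_zero, abs_one, mul_one] at h1
    simp only [Ψ, norm_mul, Real.norm_eq_abs, abs_exp] at h1 ⊢
    rw [← mul_assoc]
    calc _ ≤ 1 * B := mul_le_mul (hxe _) h1 (abs_nonneg _) zero_le_one
      _ = B := one_mul _
  let Φ : BoundedContinuousFunction (ℝ × P) ℝ → BoundedContinuousFunction (ℝ × P) ℝ := fun u =>
    BoundedContinuousFunction.ofNormedAddCommGroup (Ψ u) (hΨc u) B (hΨb u)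
  have hΦ : ContractingWith (1/2) Φ := by
    refine ⟨by norm_num, LipschitzWith.of_dist_le_mul fun u v => ?_⟩
    rw [BoundedContinuousFunction.dist_le (by positivity)]
    intro a
    change dist (Ψ u a) (Ψ v a) ≤ _
    set d := dist u v with hd
    have hd0 : 0 ≤ d := dist_nonneg
    have h1 : ‖∫ s in (0:ℝ)..1, (G u a s - G v a s)‖ ≤
        ∫ s in (0:ℝ)..1, L * d * exp ((K * |a.1|) * s) := by
      refine intervalIntegral.norm_integral_le_of_norm_le zero_le_one ?_
        ((by fun_prop : Continuous fun s => L * d * exp ((K * |a.1|) * s)).intervalIntegrable _ _)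
      refine Filter.Eventually.of_forall fun s hs => ?_
      have hs' := hs
      rw [← uIoc_of_le zero_le_one] at hs'
      change ‖s ^ μ₀ * _ - s ^ μ₀ * _‖ ≤ _
      rw [← mul_sub]
      refine abs_rpow_mul_le hμ hs' ((hL _ _ _ _).trans ?_)
      rw [← mul_sub, abs_mul, abs_exp, abs_mul, abs_of_pos hs.1]
      have h3 : |u (a.1 * s, a.2) - v (a.1 * s, a.2)| ≤ d :=
        BoundedContinuousFunction.dist_coe_le_dist (f := u) (g := v) _
      calc _ ≤ L * (exp (K * (|a.1| * s)) * d) := by gcongr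
        _ = _ := by rw [← mul_assoc K]; ring
    have h2 : |a.1| * ∫ s in (0:ℝ)..1, exp ((K * |a.1|) * s) = (exp (K * |a.1|) - 1) / K := by
      have hK0 : K ≠ 0 := by positivity
      have := intervalIntegral.mul_integral_comp_mul_left (a := 0) (b := 1) (f := Real.exp)
        (K * |a.1|)
      rw [mul_zero, mul_one, integral_exp, exp_zero] at this
      rw [← this]; field_simp
    have h4 : Ψ u a - Ψ v a = exp (-(K * |a.1|)) * (a.1 * ∫ s in (0:ℝ)..1, (G u a s - G v a s)) := by
      simp only [Ψ]
      rw [intervalIntegral.integral_sub (hGi _ _ _ _) (hGi _ _ _ _)]; ring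
    rw [Real.dist_eq, h4, abs_mul, abs_mul, abs_exp]
    rw [intervalIntegral.integral_const_mul] at h1
    calc _ ≤ exp (-(K * |a.1|)) * (|a.1| * (L * d * ∫ s in (0:ℝ)..1, exp ((K * |a.1|) * s))) := by
          gcongr; exact h1
      _ = exp (-(K * |a.1|)) * (L * d * ((exp (K * |a.1|) - 1) / K)) := by rw [← h2]; ring
      _ ≤ exp (-(K * |a.1|)) * (L * d * ((exp (K * |a.1|)) / K)) := by gcongr; linarith
      _ = L / K * d := by rw [exp_neg]; field_simp
      _ ≤ 1 / 2 * d := by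
          refine mul_le_mul_of_nonneg_right ?_ hd0
          rw [div_le_div_iff₀ (by positivity) (by norm_num)]; linarith
      _ = _ := by simp
  obtain ⟨u, hu, -⟩ := hΦ.exists_fixedPoint (0 : BoundedContinuousFunction (ℝ × P) ℝ)
    (edist_ne_top _ _)
  refine ⟨fun x p => exp (K * |x|) * u (x, p), ?_, fun x p => ?_⟩
  · have := u.continuous
    change Continuous fun a : ℝ × P => exp (K * |a.1|) * u (a.1, a.2)
    fun_prop
  · have h5 : u (x, p) = Ψ u (x, p) := by
      conv_lhs => rw [← hu]
      rfl
    change exp (K * |x|) * u (x, p) = _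
    rw [h5]
    simp only [Ψ, G]
    rw [← mul_assoc, ← exp_add]; simp

end

/-! ### Smoothness of Briot–Bouquet averages -/

section

/-- The average `∫₀¹ s^μ H(x s) ds`, so that `w = x * bbV μ H x` solves `w′ = H - μ w / x`. -/
def bbV (μ : ℝ) (H : ℝ → ℝ) (x : ℝ) : ℝ := ∫ s in (0:ℝ)..1, s ^ μ * H (x * s)

/-- Star-shaped about `0`. -/
def Star (I : Set ℝ) : Prop := ∀ x ∈ I, ∀ s ∈ Icc (0:ℝ) 1, x * s ∈ I

theorem continuousOn_bbV {μ : ℝ} (hμ : 0 ≤ μ) {H : ℝ → ℝ} {I : Set ℝ} (hI : Star I)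
    (hH : ContinuousOn H I) : ContinuousOn (bbV μ H) I := by
  rw [continuousOn_iff_continuous_domRestrict]
  let c : ℝ → ℝ := fun s => max 0 (min s 1)
  have hc : ∀ s, c s ∈ Icc (0:ℝ) 1 := fun s =>
    ⟨le_max_left _ _, max_le zero_le_one (min_le_right _ _)⟩
  have hcc : Continuous c := by fun_prop
  let f : I → ℝ → ℝ := fun x s => (c s) ^ μ * H (x * c s)
  have hf : Continuous (Function.uncurry f) := by
    refine Continuous.mul ((Real.continuous_rpow_const hμ).comp (hcc.comp continuous_snd)) ?_
    have h1 : Continuous fun a : I × ℝ => (⟨a.1 * c a.2, hI _ a.1.2 _ (hc _)⟩ : I) :=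
      Continuous.subtype_mk (by fun_prop) _
    exact (continuousOn_iff_continuous_domRestrict.1 hH).comp h1
  have h2 := intervalIntegral.continuous_parametric_intervalIntegral_of_continuous'
      (μ := MeasureTheory.volume) hf 0 1
  convert h2 using 2 with x
  simp only [domRestrict_apply, bbV, f]
  refine intervalIntegral.integral_congr fun s hs => ?_
  rw [uIcc_of_le zero_le_one] at hs
  have : c s = s := by simp only [c]; rw [min_eq_left hs.2, max_eq_right hs.1]
  simp only [this]

theorem intervalIntegrable_bb {μ : ℝ} (hμ : 0 ≤ μ) {H : ℝ → ℝ} {I : Set ℝ} (hI : Star I)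
    (hH : ContinuousOn H I) {x : ℝ} (hx : x ∈ I) :
    IntervalIntegrable (fun s => s ^ μ * H (x * s)) MeasureTheory.volume 0 1 := by
  apply ContinuousOn.intervalIntegrable
  rw [uIcc_of_le zero_le_one]
  refine (Real.continuous_rpow_const hμ).continuousOn.mul (hH.comp (by fun_prop) ?_)
  exact fun s hs => hI x hx s hs

theorem hasDerivAt_bbV {μ : ℝ} (hμ : 0 ≤ μ) {H : ℝ → ℝ} {I : Set ℝ} (hIo : IsOpen I) (hI : Star I)
    (hH : ContDiffOn ℝ 1 H I) {x : ℝ} (hx : x ∈ I) :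
    HasDerivAt (bbV μ H) (bbV (μ + 1) (deriv H) x) x := by
  have hd : ContinuousOn (deriv H) I := hH.continuousOn_deriv_of_isOpen hIo le_rfl
  obtain ⟨ε, hε, hb⟩ := Metric.nhds_basis_closedBall.mem_iff.1 (hIo.mem_nhds hx)
  have hK : IsCompact ((fun a : ℝ × ℝ => a.1 * a.2) '' (Metric.closedBall x ε ×ˢ Icc (0:ℝ) 1)) :=
    ((isCompact_closedBall x ε).prod isCompact_Icc).image (by fun_prop)
  obtain ⟨C, hC⟩ := hK.exists_bound_of_continuousOn (f := deriv H) (hd.mono (by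
    rintro _ ⟨⟨y, s⟩, ⟨hy, hs⟩, rfl⟩
    exact hI y (hb hy) s hs))
  have hsub : ∀ s ∈ Set.uIoc (0:ℝ) 1, s ∈ Icc (0:ℝ) 1 := fun s hs => by
    rw [uIoc_of_le zero_le_one] at hs; exact ⟨hs.1.le, hs.2⟩
  have key := intervalIntegral.hasDerivAt_integral_of_dominated_loc_of_deriv_le
    (μ := MeasureTheory.volume) (a := 0) (b := 1)
    (F := fun x s => s ^ μ * H (x * s)) (F' := fun x s => s ^ (μ + 1) * deriv H (x * s))
    (x₀ := x) (s := Metric.closedBall x ε) (bound := fun _ => C)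
    (Metric.closedBall_mem_nhds x hε)
    (by
      filter_upwards [Metric.closedBall_mem_nhds x hε] with y hy
      exact (intervalIntegrable_iff.1 (intervalIntegrable_bb hμ hI hH.continuousOn (hb hy))).aestronglyMeasurable)
    (intervalIntegrable_bb hμ hI hH.continuousOn hx)
    (intervalIntegrable_iff.1 (intervalIntegrable_bb (by linarith) hI hd hx)).aestronglyMeasurable
    (Eventually.of_forall fun s hs y hy => abs_rpow_mul_le (by linarith) hs
      (hC _ ⟨(y, s), ⟨hy, hsub s hs⟩, rfl⟩))
    (by simp)
    (Eventually.of_forall fun s hs y hy => by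
      have h1 : HasDerivAt H (deriv H (y * s)) (y * s) :=
        ((hH.differentiableOn (by simp)).differentiableAt
          (hIo.mem_nhds (hI y (hb hy) s (hsub s hs)))).hasDerivAt
      have h2 := (h1.comp y ((hasDerivAt_id y).mul_const s)).const_mul (s ^ μ)
      rw [uIoc_of_le zero_le_one] at hs
      refine h2.congr_deriv ?_
      rw [Real.rpow_add hs.1, Real.rpow_one]; ring)
  exact key.2

theorem contDiffOn_bbV {I : Set ℝ} (hIo : IsOpen I) (hI : Star I) (n : ℕ) :
    ∀ {μ : ℝ}, 0 ≤ μ → ∀ {H : ℝ → ℝ}, ContDiffOn ℝ n H I → ContDiffOn ℝ n (bbV μ H) I := by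
  induction n with
  | zero =>
    intro μ hμ H hH
    simp only [Nat.cast_zero, contDiffOn_zero] at hH ⊢
    exact continuousOn_bbV hμ hI hH
  | succ n ih =>
    intro μ hμ H hH
    push_cast at hH ⊢
    have h1 : ContDiffOn ℝ 1 H I := hH.of_le (by simp)
    rw [contDiffOn_succ_iff_deriv_of_isOpen hIo] at hH ⊢
    refine ⟨fun x hx => (hasDerivAt_bbV hμ hIo hI h1 hx).differentiableAt.differentiableWithinAt,
      by simp, ?_⟩
    exact (ih (by linarith : 0 ≤ μ + 1) hH.2.2).congr fun x hx =>
      (hasDerivAt_bbV hμ hIo hI h1 hx).deriv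

theorem contDiffOn_bbV_infty {H : ℝ → ℝ} {I : Set ℝ} (hIo : IsOpen I) (hI : Star I)
    {μ : ℝ} (hμ : 0 ≤ μ) (hH : ContDiffOn ℝ (⊤ : ℕ∞) H I) :
    ContDiffOn ℝ (⊤ : ℕ∞) (bbV μ H) I := by
  rw [contDiffOn_infty] at hH ⊢
  exact fun n => contDiffOn_bbV hIo hI n hμ (hH n)

theorem bbV_neg (μ : ℝ) (H : ℝ → ℝ) (x : ℝ) : bbV μ (fun y => H (-y)) x = bbV μ H (-x) := by
  simp [bbV]

theorem hasDerivAt_mul_bbV_pos {μ : ℝ} (hμ : 0 ≤ μ) {H : ℝ → ℝ} (hH : Continuous H) {x : ℝ}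
    (hx : 0 < x) : HasDerivAt (fun x => x * bbV μ H x) (H x - μ * bbV μ H x) x := by
  have hf : Continuous fun t : ℝ => t ^ μ * H t := (Real.continuous_rpow_const hμ).mul hH
  have hrep : ∀ y : ℝ, 0 < y → y * bbV μ H y = y ^ (-μ) * ∫ t in (0:ℝ)..y, t ^ μ * H t := by
    intro y hy
    have := intervalIntegral.mul_integral_comp_mul_left (a := 0) (b := 1)
      (f := fun t : ℝ => t ^ μ * H t) y
    rw [mul_zero, mul_one] at this
    rw [← this]
    have h2 : ∫ s in (0:ℝ)..1, (y * s) ^ μ * H (y * s) = y ^ μ * bbV μ H y := by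
      rw [bbV, ← intervalIntegral.integral_const_mul]
      refine intervalIntegral.integral_congr fun s hs => ?_
      rw [uIcc_of_le zero_le_one] at hs
      simp only [Real.mul_rpow hy.le hs.1]; ring
    rw [h2, Real.rpow_neg hy.le]
    have := (Real.rpow_pos_of_pos hy μ).ne'
    field_simp
  have h1 : HasDerivAt (fun y => ∫ t in (0:ℝ)..y, t ^ μ * H t) (x ^ μ * H x) x :=
    intervalIntegral.integral_hasDerivAt_right (hf.intervalIntegrable _ _)
      (hf.stronglyMeasurableAtFilter _ _) hf.continuousAt
  have h2 : HasDerivAt (fun y : ℝ => y ^ (-μ)) ((-μ) * x ^ (-μ - 1)) x :=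
    Real.hasDerivAt_rpow_const (Or.inl hx.ne')
  have h3 := (h2.mul h1).congr_of_eventuallyEq
    (show (fun x => x * bbV μ H x) =ᶠ[𝓝 x] _ by
      filter_upwards [lt_mem_nhds hx] with y hy using hrep y hy)
  refine h3.congr_deriv ?_
  have h4 := hrep x hx
  rw [Real.rpow_sub hx, Real.rpow_one]
  have h5 : x ^ (-μ) * x ^ μ = 1 := by rw [← Real.rpow_add hx]; simp
  have h6 : bbV μ H x = x ^ (-μ) * (∫ t in (0:ℝ)..x, t ^ μ * H t) / x := by
    rw [← h4]; field_simp
  rw [h6]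
  linear_combination H x * h5

theorem hasDerivAt_mul_bbV {μ : ℝ} (hμ : 0 ≤ μ) {H : ℝ → ℝ} (hH : Continuous H) (x : ℝ) :
    HasDerivAt (fun x => x * bbV μ H x) (H x - μ * bbV μ H x) x := by
  rcases lt_trichotomy x 0 with hx | rfl | hx
  · have h1 := hasDerivAt_mul_bbV_pos hμ (H := fun y => H (-y)) (hH.comp continuous_neg)
      (neg_pos.2 hx)
    have h2 := (h1.comp x (hasDerivAt_neg x)).neg
    refine (h2.congr_of_eventuallyEq (Eventually.of_forall fun y => ?_)).congr_deriv ?_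
    · simp [bbV_neg]
    · simp [bbV_neg]
  · have hc : Continuous (bbV μ H) := by
      rw [← continuousOn_univ] at hH ⊢
      exact continuousOn_bbV hμ (fun _ _ _ _ => mem_univ _) hH
    have h0 : H 0 - μ * bbV μ H 0 = bbV μ H 0 := by
      have : bbV μ H 0 = H 0 / (μ + 1) := by
        simp only [bbV, zero_mul]
        rw [intervalIntegral.integral_mul_const, integral_rpow (Or.inl (by linarith))]
        rw [Real.one_rpow, Real.zero_rpow (by linarith)]; field_simp; ring
      rw [this]; field_simp; ring
    rw [h0, hasDerivAt_iff_tendsto_slope]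
    refine (hc.tendsto 0 |>.mono_left nhdsWithin_le_nhds).congr' ?_
    filter_upwards [self_mem_nhdsWithin] with y hy
    rw [slope_def_field]
    have : y ≠ 0 := hy
    field_simp; simp
  · exact hasDerivAt_mul_bbV_pos hμ hH hx

/-- Each derivative of `w` is controlled by the previous order, because `w′ = H - μ bbV μ H`. -/
theorem contDiffOn_of_bb {μ : ℝ} (hμ : 0 ≤ μ) {w H : ℝ → ℝ} (hH : Continuous H)
    (hw : ∀ x, w x = x * bbV μ H x) {I : Set ℝ} (hIo : IsOpen I) (hI : Star I)
    (hb : ∀ n : ℕ, ContDiffOn ℝ n w I → ContDiffOn ℝ n H I) : ContDiffOn ℝ (⊤ : ℕ∞) w I := by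
  have hw' : w = fun x => x * bbV μ H x := funext hw
  have hd : ∀ x, HasDerivAt w (H x - μ * bbV μ H x) x := fun x => by
    rw [hw']; exact hasDerivAt_mul_bbV hμ hH x
  rw [contDiffOn_infty]
  intro n
  induction n with
  | zero =>
    simp only [Nat.cast_zero, contDiffOn_zero]
    exact fun x _ => (hd x).continuousAt.continuousWithinAt
  | succ n ih =>
    push_cast
    rw [contDiffOn_succ_iff_deriv_of_isOpen hIo]
    refine ⟨fun x _ => (hd x).differentiableAt.differentiableWithinAt, by simp, ?_⟩
    have h1 := hb n ih
    exact (h1.sub (contDiffOn_const.mul (contDiffOn_bbV hIo hI n hμ h1))).congr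
      fun x _ => (hd x).deriv

/-- Hadamard division: `f(x) - f(0)` is divisible by `x` in the smooth class. -/
theorem exists_hadamard {f : ℝ → ℝ} {I : Set ℝ} (hIo : IsOpen I) (hI : Star I)
    (hf : ContDiffOn ℝ (⊤ : ℕ∞) f I) : ∃ g : ℝ → ℝ, ContDiffOn ℝ (⊤ : ℕ∞) g I ∧
      ∀ x ∈ I, f x = f 0 + x * g x := by
  have hd : ContDiffOn ℝ (⊤ : ℕ∞) (deriv f) I :=
    ((contDiffOn_infty_iff_deriv_of_isOpen hIo).1 hf).2
  refine ⟨bbV 0 (deriv f), contDiffOn_bbV_infty hIo hI le_rfl hd, fun x hx => ?_⟩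
  have hsub : ∀ t ∈ uIcc 0 x, t ∈ I := by
    intro t ht
    rcases eq_or_ne x 0 with rfl | hx0
    · simp at ht; rw [ht]; exact hx
    · have : t = x * (t / x) := by field_simp
      rw [this]
      refine hI x hx _ ?_
      rcases lt_or_gt_of_ne hx0 with h | h
      · rw [uIcc_of_ge h.le] at ht
        exact ⟨div_nonneg_of_nonpos ht.2 h.le, (div_le_one_of_neg h).2 ht.1⟩
      · rw [uIcc_of_le h.le] at ht
        exact ⟨div_nonneg ht.1 h.le, (div_le_one h).2 ht.2⟩
  have h1 := intervalIntegral.mul_integral_comp_mul_left (a := 0) (b := 1) (f := deriv f) x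
  rw [mul_zero, mul_one, intervalIntegral.integral_eq_sub_of_hasDerivAt (f := f)
    (fun t ht => ((hf.differentiableOn (by simp)).differentiableAt
      (hIo.mem_nhds (hsub t ht))).hasDerivAt)
    ((hd.continuousOn.mono hsub).intervalIntegrable)] at h1
  simp only [bbV, Real.rpow_zero, one_mul]
  linarith

/-- A solution of `y′ = H` is smooth if `H` is as regular as `y`. -/
theorem contDiffOn_of_ode {y H : ℝ → ℝ} {I : Set ℝ} (hIo : IsOpen I)
    (hd : ∀ x ∈ I, HasDerivAt y (H x) x)
    (hb : ∀ n : ℕ, ContDiffOn ℝ n y I → ContDiffOn ℝ n H I) : ContDiffOn ℝ (⊤ : ℕ∞) y I := by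
  rw [contDiffOn_infty]
  intro n
  induction n with
  | zero =>
    simp only [Nat.cast_zero, contDiffOn_zero]
    exact fun x hx => (hd x hx).continuousAt.continuousWithinAt
  | succ n ih =>
    push_cast
    rw [contDiffOn_succ_iff_deriv_of_isOpen hIo]
    exact ⟨fun x hx => (hd x hx).differentiableAt.differentiableWithinAt, by simp,
      (hb n ih).congr fun x hx => (hd x hx).deriv⟩

end

/-! ### Trajectories near a node: uniqueness and first bounds -/

section

/-- `x^c D²` is nonincreasing and tends to `0` at `0`, hence a bounded `D` with this damping vanishes. -/
theorem unique_of_damped {D D' : ℝ → ℝ} {δ c B : ℝ} (hc : 0 < c)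
    (hD : ∀ x ∈ Ioo 0 δ, HasDerivAt D (D' x) x)
    (hi : ∀ x ∈ Ioo 0 δ, x * (D x * D' x) ≤ -c * D x ^ 2)
    (hB : ∀ x ∈ Ioo 0 δ, |D x| ≤ B) : ∀ x ∈ Ioo 0 δ, D x = 0 := by
  have hd : ∀ x ∈ Ioo 0 δ, HasDerivAt (fun x => x ^ c * D x ^ 2)
      (c * x ^ (c - 1) * D x ^ 2 + x ^ c * (2 * D x * D' x)) x := fun x hx => by
    have h1 := (Real.hasDerivAt_rpow_const (p := c) (Or.inl hx.1.ne')).mul ((hD x hx).pow 2)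
    refine h1.congr_deriv ?_
    simp
  have hanti : AntitoneOn (fun x => x ^ c * D x ^ 2) (Ioo 0 δ) := by
    refine antitoneOn_of_deriv_nonpos (convex_Ioo _ _)
      (fun x hx => (hd x hx).continuousAt.continuousWithinAt)
      (fun x hx => (hd x (interior_subset hx)).differentiableAt.differentiableWithinAt) fun x hx => ?_
    have hx := interior_subset hx
    rw [(hd x hx).deriv]
    have h1 : x ^ c = x ^ (c - 1) * x := by
      rw [Real.rpow_sub hx.1, Real.rpow_one, div_mul_cancel₀ _ hx.1.ne']
    rw [h1]
    have h2 := hi x hx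
    have h3 := Real.rpow_pos_of_pos hx.1 (c - 1)
    have : c * x ^ (c - 1) * D x ^ 2 + x ^ (c - 1) * x * (2 * D x * D' x) =
      x ^ (c - 1) * (c * D x ^ 2 + 2 * (x * (D x * D' x))) := by ring
    rw [this]
    apply mul_nonpos_of_nonneg_of_nonpos h3.le
    nlinarith [sq_nonneg (D x)]
  intro x hx
  have hlim : Tendsto (fun y : ℝ => y ^ c * B ^ 2) (𝓝[>] 0) (𝓝 0) := by
    have h1 : Tendsto (fun y : ℝ => y ^ c * B ^ 2) (𝓝 0) (𝓝 ((0:ℝ) ^ c * B ^ 2)) :=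
      ((Real.continuousAt_rpow_const 0 c (Or.inr hc.le)).mul continuousAt_const).tendsto
    rw [Real.zero_rpow hc.ne', zero_mul] at h1
    exact h1.mono_left nhdsWithin_le_nhds
  have hle : x ^ c * D x ^ 2 ≤ 0 := by
    refine ge_of_tendsto hlim ?_
    filter_upwards [Ioo_mem_nhdsGT hx.1] with y hy
    have hyδ : y ∈ Ioo 0 δ := ⟨hy.1, hy.2.trans hx.2⟩
    have h1 := hanti hyδ hx hy.2.le
    refine h1.trans ?_
    have h2 := hB y hyδ
    have h3 := Real.rpow_pos_of_pos hy.1 c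
    have : D y ^ 2 ≤ B ^ 2 := by rw [← sq_abs]; gcongr
    exact mul_le_mul_of_nonneg_left this h3.le
  have h3 := Real.rpow_pos_of_pos hx.1 c
  have : D x ^ 2 ≤ 0 := by
    by_contra! h
    exact absurd hle (not_le.2 (mul_pos h3 h))
  exact pow_eq_zero_iff (two_ne_zero) |>.1 (le_antisymm this (sq_nonneg _))

/-- A trajectory of `z dy/dz = κ y + a₂ z² + a₁₁ z y + a₃ z³ + R`, parametrized by `s ∈ (0, s₀]` with
`z` comparable to `s`, `dz/ds = ρ`, and `2 ≤ κ ≤ 3`; `C` and `c` are the constants of the bounds. -/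
structure Traj (C c s₀ κ a₂ a₁₁ a₃ : ℝ) (z y ρ R : ℝ → ℝ) : Prop where
  κ2 : 2 ≤ κ
  κ3 : κ ≤ 3
  ba2 : |a₂| ≤ C
  ba11 : |a₁₁| ≤ C
  ba3 : |a₃| ≤ C
  dz : ∀ s ∈ Ioc 0 s₀, HasDerivAt z (ρ s) s
  dy : ∀ s ∈ Ioc 0 s₀, HasDerivAt y
    (ρ s / z s * (κ * y s + a₂ * z s ^ 2 + a₁₁ * z s * y s + a₃ * z s ^ 3 + R s)) s
  bR : ∀ s ∈ Ioc 0 s₀, |R s| ≤ C * (y s ^ 2 + z s ^ 2 * |y s| + z s ^ 4)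
  zl : ∀ s ∈ Ioc 0 s₀, c * s ≤ z s
  zu : ∀ s ∈ Ioc 0 s₀, z s ≤ C * s
  ρl : ∀ s ∈ Ioc 0 s₀, c ≤ ρ s
  ρu : ∀ s ∈ Ioc 0 s₀, ρ s ≤ C
  by' : ∀ s ∈ Ioc 0 s₀, |y s| ≤ C * z s

theorem Traj.mono {C c s₀ s₁ κ a₂ a₁₁ a₃ : ℝ} {z y ρ R : ℝ → ℝ}
    (h : Traj C c s₀ κ a₂ a₁₁ a₃ z y ρ R) (hs : s₁ ≤ s₀) : Traj C c s₁ κ a₂ a₁₁ a₃ z y ρ R := by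
  have hsub : ∀ s ∈ Ioc 0 s₁, s ∈ Ioc 0 s₀ := fun s h => ⟨h.1, h.2.trans hs⟩
  exact ⟨h.κ2, h.κ3, h.ba2, h.ba11, h.ba3, fun s hs => h.dz s (hsub s hs),
    fun s hs => h.dy s (hsub s hs), fun s hs => h.bR s (hsub s hs), fun s hs => h.zl s (hsub s hs),
    fun s hs => h.zu s (hsub s hs), fun s hs => h.ρl s (hsub s hs), fun s hs => h.ρu s (hsub s hs),
    fun s hs => h.by' s (hsub s hs)⟩

set_option maxHeartbeats 1000000 in
/-- The bound `y = O(z)` improves to `y² = O(z^{7/2})`, uniformly over the trajectories with the same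
constants: the linear term `κ y`, with `κ ≥ 2`, makes a large value of `y² z^{-7/2}` grow along
the trajectory. -/
theorem Traj.boot {C c s₀ : ℝ} (hC : 1 ≤ C) (hc : 0 < c) (hs0 : 0 < s₀) :
    ∃ s₁ D, 0 < s₁ ∧ s₁ ≤ s₀ ∧ s₁ ≤ 1 ∧ C * s₁ ≤ 1 ∧ 0 ≤ D ∧ ∀ κ a₂ a₁₁ a₃ z y ρ R,
      Traj C c s₀ κ a₂ a₁₁ a₃ z y ρ R →
      ∀ s ∈ Ioc 0 s₁, y s ^ 2 ≤ D * z s ^ (7 / 2 : ℝ) := by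
  set s₁ := min s₀ (1 / (8 * C * (2 * C + C ^ 2))) with hs1
  have hden : 0 < 8 * C * (2 * C + C ^ 2) := by positivity
  have hs1p : 0 < s₁ := lt_min hs0 (by positivity)
  have hs1C : s₁ * (8 * C * (2 * C + C ^ 2)) ≤ 1 := by
    have : s₁ ≤ 1 / (8 * C * (2 * C + C ^ 2)) := min_le_right _ _
    rwa [le_div_iff₀ hden] at this
  have hC2 : 1 ≤ C ^ 2 := one_le_pow₀ hC
  have hCs : C * s₁ * 24 ≤ 1 := by nlinarith [mul_pos hs1p (by positivity : 0 < C)]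
  refine ⟨s₁, (24 * C + 1) ^ 2 + C ^ 2 * (c * s₁) ^ (-(3 / 2) : ℝ) + 1, hs1p, min_le_left _ _,
    by nlinarith, by nlinarith, by positivity, ?_⟩
  intro κ a₂ a₁₁ a₃ z y ρ R h0 s hs
  have h := h0.mono (min_le_left s₀ (1 / (8 * C * (2 * C + C ^ 2))))
  rw [← hs1] at h
  set D := (24 * C + 1) ^ 2 + C ^ 2 * (c * s₁) ^ (-(3 / 2) : ℝ) + 1 with hD
  have zp : ∀ t ∈ Ioc 0 s₁, 0 < z t := fun t ht => lt_of_lt_of_le (mul_pos hc ht.1) (h.zl t ht)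
  have zs : ∀ t ∈ Ioc 0 s₁, z t ≤ C * s₁ := fun t ht =>
    (h.zu t ht).trans (by have := ht.2; gcongr)
  let V : ℝ → ℝ := fun t => y t ^ 2 * z t ^ (-(7 / 2) : ℝ)
  let V' : ℝ → ℝ := fun t => 2 * ρ t * z t ^ (-(7 / 2) - 1 : ℝ) * (y t * (κ * y t + a₂ * z t ^ 2 +
    a₁₁ * z t * y t + a₃ * z t ^ 3 + R t) - 7 / 4 * y t ^ 2)
  have hV : ∀ t ∈ Ioc 0 s₁, HasDerivAt V (V' t) t := fun t ht => by
    have h1 := ((h.dy t ht).pow 2).mul ((h.dz t ht).rpow_const (p := (-(7 / 2) : ℝ))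
      (Or.inl (zp t ht).ne'))
    refine h1.congr_deriv ?_
    have hz := (zp t ht)
    simp only [V', Pi.pow_apply]
    rw [Real.rpow_sub hz, Real.rpow_one]
    field_simp
    push_cast
    ring
  have hpos : ∀ t ∈ Ioc 0 s₁, V t = D → 0 < V' t := by
    intro t ht hVt
    have hz := zp t ht
    have hz1 := zs t ht
    have hρ : 0 < ρ t := lt_of_lt_of_le hc (h.ρl t ht)
    have hrp : 0 < z t ^ (-(7 / 2) - 1 : ℝ) := Real.rpow_pos_of_pos hz _
    refine mul_pos (by positivity) ?_
    have hY : y t ^ 2 = D * z t ^ (7 / 2 : ℝ) := by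
      rw [← hVt]; simp only [V]; rw [mul_assoc, ← Real.rpow_add hz]; simp
    have h72 : z t ^ 4 ≤ z t ^ (7 / 2 : ℝ) := by
      rw [← Real.rpow_natCast]
      exact Real.rpow_le_rpow_of_exponent_ge hz (by nlinarith) (by norm_num)
    have hDge : (24 * C + 1) ^ 2 ≤ D := by
      rw [hD]; have : 0 ≤ C ^ 2 * (c * s₁) ^ (-(3 / 2) : ℝ) := by positivity
      linarith
    have hyl : (24 * C + 1) * z t ^ 2 ≤ |y t| := by
      rw [← abs_of_nonneg (by positivity : 0 ≤ (24 * C + 1) * z t ^ 2)]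
      apply sq_le_sq.1
      rw [hY]
      calc ((24 * C + 1) * z t ^ 2) ^ 2 = (24 * C + 1) ^ 2 * z t ^ 4 := by ring
        _ ≤ _ := by gcongr
    set Y := |y t| with hYd
    have hyy : y t ^ 2 = Y ^ 2 := (sq_abs _).symm
    have hY0 : 0 ≤ Y := abs_nonneg _
    have hYC := h.by' t ht
    rw [← hYd] at hYC
    have e1 : -(C * z t ^ 2 * Y) ≤ y t * (a₂ * z t ^ 2) := by
      refine (abs_le.1 ?_).1
      rw [abs_mul, abs_mul, abs_of_pos (pow_pos hz 2)]
      calc Y * (|a₂| * z t ^ 2) ≤ Y * (C * z t ^ 2) := by gcongr; exact h.ba2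
        _ = _ := by ring
    have e2 : -(C * z t * Y ^ 2) ≤ y t * (a₁₁ * z t * y t) := by
      refine (abs_le.1 ?_).1
      rw [abs_mul, abs_mul, abs_mul, abs_of_pos hz]
      calc Y * (|a₁₁| * z t * Y) ≤ Y * (C * z t * Y) := by gcongr; exact h.ba11
        _ = _ := by ring
    have e3 : -(C * z t ^ 3 * Y) ≤ y t * (a₃ * z t ^ 3) := by
      refine (abs_le.1 ?_).1
      rw [abs_mul, abs_mul, abs_of_pos (pow_pos hz 3)]
      calc Y * (|a₃| * z t ^ 3) ≤ Y * (C * z t ^ 3) := by gcongr; exact h.ba3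
        _ = _ := by ring
    have e4 : -(Y * (C * (Y ^ 2 + z t ^ 2 * Y + z t ^ 4))) ≤ y t * R t := by
      refine (abs_le.1 ?_).1
      rw [abs_mul]
      have := h.bR t ht
      rw [hyy] at this
      gcongr
    have e5 : 2 * Y ^ 2 ≤ κ * Y ^ 2 := by gcongr; exact h.κ2
    have hYpos : 0 < Y := lt_of_lt_of_le (by positivity) hyl
    have hz1' : z t ≤ 1 := by nlinarith
    have hz3 : z t ^ 3 ≤ z t ^ 2 := pow_le_pow_of_le_one hz.le hz1' (by norm_num)
    have hz4 : z t ^ 4 ≤ z t ^ 2 := pow_le_pow_of_le_one hz.le hz1' (by norm_num)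
    have hz2 : z t ^ 2 ≤ z t := by nlinarith
    have hCz : C * (2 + C) * z t ≤ 1 / 8 := by
      have h5 : C * (2 + C) * z t ≤ C * (2 + C) * (C * s₁) := by gcongr
      have h6 : C * (2 + C) * (C * s₁) * 8 = s₁ * (8 * C * (2 * C + C ^ 2)) := by ring
      linarith
    have e6 : Y * (C * (Y ^ 2 + z t ^ 2 * Y + z t ^ 4)) ≤
        (C * C + C) * z t * Y ^ 2 + C * z t ^ 2 * Y := by
      have f1 : Y * Y ^ 2 ≤ C * z t * Y ^ 2 := by gcongr
      have f2 : z t ^ 2 * Y ^ 2 ≤ z t * Y ^ 2 := by gcongr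
      have f3 : z t ^ 4 * Y ≤ z t ^ 2 * Y := by gcongr
      have : Y * (C * (Y ^ 2 + z t ^ 2 * Y + z t ^ 4)) =
        C * (Y * Y ^ 2) + C * (z t ^ 2 * Y ^ 2) + C * (z t ^ 4 * Y) := by ring
      rw [this]
      calc _ ≤ C * (C * z t * Y ^ 2) + C * (z t * Y ^ 2) + C * (z t ^ 2 * Y) := by gcongr
        _ = _ := by ring
    have e7 : C * z t ^ 3 * Y ≤ C * z t ^ 2 * Y := by gcongr
    have e8 : C * (2 + C) * z t * Y ^ 2 ≤ 1 / 8 * Y ^ 2 := by gcongr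
    have e9 : (24 * C + 1) * z t ^ 2 * Y ≤ Y * Y := by gcongr
    have e10 : 0 < z t ^ 2 * Y := by positivity
    have : y t * (κ * y t + a₂ * z t ^ 2 + a₁₁ * z t * y t + a₃ * z t ^ 3 + R t) =
      κ * y t ^ 2 + y t * (a₂ * z t ^ 2) + y t * (a₁₁ * z t * y t) + y t * (a₃ * z t ^ 3)
        + y t * R t := by ring
    rw [this, hyy]
    linarith
  -- backward comparison from `s₁`
  have hend : V s₁ ≤ D := by
    have ht : s₁ ∈ Ioc 0 s₁ := ⟨hs1p, le_rfl⟩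
    have hz := zp s₁ ht
    have h1 : y s₁ ^ 2 ≤ C ^ 2 * z s₁ ^ 2 := by
      rw [← sq_abs, ← mul_pow]; have := h.by' s₁ ht; gcongr
    have h2 : z s₁ ^ 2 * z s₁ ^ (-(7 / 2) : ℝ) = z s₁ ^ (-(3 / 2) : ℝ) := by
      rw [← Real.rpow_natCast, ← Real.rpow_add hz]; norm_num
    have h3 : z s₁ ^ (-(3 / 2) : ℝ) ≤ (c * s₁) ^ (-(3 / 2) : ℝ) :=
      Real.rpow_le_rpow_of_nonpos (by positivity) (h.zl s₁ ht) (by norm_num)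
    calc V s₁ ≤ C ^ 2 * z s₁ ^ 2 * z s₁ ^ (-(7 / 2) : ℝ) := by
          simp only [V]; gcongr
      _ = C ^ 2 * z s₁ ^ (-(3 / 2) : ℝ) := by rw [mul_assoc, h2]
      _ ≤ C ^ 2 * (c * s₁) ^ (-(3 / 2) : ℝ) := by gcongr
      _ ≤ D := by rw [hD]; nlinarith [sq_nonneg (24 * C + 1)]
  have hmem : ∀ t ∈ Icc 0 (s₁ - s), s₁ - t ∈ Ioc 0 s₁ := fun t ht =>
    ⟨by linarith [ht.2, hs.1], by linarith [ht.1]⟩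
  have hVr : ∀ t ∈ Icc 0 (s₁ - s), HasDerivAt (fun t => V (s₁ - t)) (-V' (s₁ - t)) t := by
    intro t ht
    have := (hV _ (hmem t ht)).comp t ((hasDerivAt_id t).const_sub s₁)
    exact this.congr_deriv (by simp)
  have key := image_le_of_deriv_right_lt_deriv_boundary (f := fun t => V (s₁ - t))
    (f' := fun t => -V' (s₁ - t)) (a := 0) (b := s₁ - s) (B := fun _ => D) (B' := fun _ => 0)
    (fun t ht => (hVr t ht).continuousAt.continuousWithinAt)
    (fun t ht => (hVr t (Ico_subset_Icc_self ht)).hasDerivWithinAt) (by simpa using hend)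
    (fun t => hasDerivAt_const t D)
    (fun t ht he => neg_neg_of_pos (hpos _ (hmem t (Ico_subset_Icc_self ht)) he))
    (x := s₁ - s) ⟨by linarith [hs.2], le_rfl⟩
  simp only [sub_sub_cancel] at key
  have hz := zp s hs
  calc y s ^ 2 = V s * z s ^ (7 / 2 : ℝ) := by
        simp only [V]; rw [mul_assoc, ← Real.rpow_add hz]; simp
    _ ≤ D * z s ^ (7 / 2 : ℝ) := by gcongr

end

/-! ### The shooting function -/

section

theorem exists_lim_of_squeeze {Q g : ℝ → ℝ} {s₁ : ℝ} (h1 : 0 < s₁)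
    (hm : MonotoneOn (fun s => Q s + g s) (Ioc 0 s₁)) (ha : AntitoneOn (fun s => Q s - g s) (Ioc 0 s₁))
    (hg : ∀ s ∈ Ioc 0 s₁, 0 ≤ g s) : ∃ l, ∀ s ∈ Ioc 0 s₁, |Q s - l| ≤ g s := by
  have key : ∀ s ∈ Ioc 0 s₁, ∀ t ∈ Ioc 0 s₁, Q s - g s ≤ Q t + g t := by
    intro s hs t ht
    rcases le_total t s with h | h
    · have := ha ht hs h; have := hg t ht; simp only at *; linarith
    · have := hm hs ht h; have := hg s hs; simp only at *; linarith
  have hne : ((fun s => Q s + g s) '' Ioc 0 s₁).Nonempty := ⟨_, s₁, ⟨h1, le_rfl⟩, rfl⟩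
  have hbd : ∀ s ∈ Ioc 0 s₁, Q s - g s ≤ sInf ((fun s => Q s + g s) '' Ioc 0 s₁) := fun s hs =>
    le_csInf hne (by rintro _ ⟨t, ht, rfl⟩; exact key s hs t ht)
  refine ⟨sInf ((fun s => Q s + g s) '' Ioc 0 s₁), fun s hs => abs_le.2 ⟨?_, ?_⟩⟩
  · have : sInf ((fun s => Q s + g s) '' Ioc 0 s₁) ≤ Q s + g s :=
      csInf_le ⟨Q s₁ - g s₁, by rintro _ ⟨t, ht, rfl⟩; exact key s₁ ⟨h1, le_rfl⟩ t ht⟩ ⟨s, hs, rfl⟩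
    linarith
  · have := hbd s hs; linarith

/-- The coefficient of `z^κ` in `y` after removal of the lower-order terms, multiplied by
`(κ - 2)(3 - κ)` so that it remains finite at the resonances `κ = 2` and `κ = 3`. -/
def Qf (κ a₂ a₁₁ a₃ z y : ℝ) : ℝ :=
  (κ - 2) * (3 - κ) * (z ^ (-κ) * ((1 - a₁₁ * z) * y)) + a₂ * (3 - κ) * z ^ (2 - κ)
    - (a₃ - a₁₁ * a₂) * (κ - 2) * z ^ (3 - κ)

theorem Traj.hasDerivAt_Q {C c s₀ κ a₂ a₁₁ a₃ : ℝ} {z y ρ R : ℝ → ℝ}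
    (h : Traj C c s₀ κ a₂ a₁₁ a₃ z y ρ R) {s : ℝ} (hs : s ∈ Ioc 0 s₀) (hz : 0 < z s) :
    HasDerivAt (fun s => Qf κ a₂ a₁₁ a₃ (z s) (y s))
      (ρ s * z s ^ (-κ - 1) * ((κ - 2) * (3 - κ) * ((1 - a₁₁ * z s) * R s
        - a₁₁ ^ 2 * z s ^ 2 * y s - a₁₁ * a₃ * z s ^ 4))) s := by
  have hzd := h.dz s hs
  have h0 := hz.ne'
  have d1 := ((hzd.rpow_const (p := -κ) (Or.inl h0)).mul
    (((hzd.const_mul a₁₁).const_sub 1).mul (h.dy s hs))).const_mul ((κ - 2) * (3 - κ))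
  have d2 := (hzd.rpow_const (p := 2 - κ) (Or.inl h0)).const_mul (a₂ * (3 - κ))
  have d3 := (hzd.rpow_const (p := 3 - κ) (Or.inl h0)).const_mul ((a₃ - a₁₁ * a₂) * (κ - 2))
  have e1 : z s ^ (-κ) = z s ^ (-κ - 1) * z s := by
    rw [Real.rpow_sub hz, Real.rpow_one, div_mul_cancel₀ _ h0]
  have e2 : z s ^ (2 - κ - 1) = z s ^ (-κ - 1) * z s ^ 2 := by
    rw [← Real.rpow_natCast, ← Real.rpow_add hz]; congr 1; push_cast; ring
  have e3 : z s ^ (3 - κ - 1) = z s ^ (-κ - 1) * z s ^ 3 := by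
    rw [← Real.rpow_natCast, ← Real.rpow_add hz]; congr 1; push_cast; ring
  refine ((d1.add d2).sub d3).congr_deriv ?_
  rw [e2, e3]
  simp only [Pi.mul_apply]
  rw [e1]
  field_simp
  ring

/-- `Qf` converges along the trajectory, at a rate uniform over the trajectories with the same constants. -/
theorem Traj.Q_lim {C c s₀ : ℝ} (hC : 1 ≤ C) (hc : 0 < c) (hs0 : 0 < s₀) :
    ∃ s₁ K, 0 < s₁ ∧ s₁ ≤ s₀ ∧ C * s₁ ≤ 1 ∧ 0 ≤ K ∧ ∀ κ a₂ a₁₁ a₃ z y ρ R,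
      Traj C c s₀ κ a₂ a₁₁ a₃ z y ρ R →
      ∃ l, ∀ s ∈ Ioc 0 s₁, |Qf κ a₂ a₁₁ a₃ (z s) (y s) - l| ≤ K * z s ^ (7 / 2 - κ) := by
  obtain ⟨s₁, D, h1, h10, h11, hC1, hD, hb⟩ := Traj.boot hC hc hs0
  set K₀ := ((1 + C) * C * 2 + C ^ 2 * 2) * (D + 1) with hK0
  have hK00 : 0 ≤ K₀ := by positivity
  refine ⟨s₁, 2 * K₀, h1, h10, hC1, by positivity, ?_⟩
  intro κ a₂ a₁₁ a₃ z y ρ R h0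
  have hby := hb κ a₂ a₁₁ a₃ z y ρ R h0
  have h := h0.mono h10
  have zp : ∀ t ∈ Ioc 0 s₁, 0 < z t := fun t ht => lt_of_lt_of_le (mul_pos hc ht.1) (h.zl t ht)
  have z1 : ∀ t ∈ Ioc 0 s₁, z t ≤ 1 := fun t ht =>
    (h.zu t ht).trans (le_trans (by have := ht.2; gcongr) hC1)
  have hdg : ∀ s ∈ Ioc 0 s₁, HasDerivAt (fun s => 2 * K₀ * z s ^ (7 / 2 - κ))
      (2 * K₀ * (ρ s * (7 / 2 - κ) * z s ^ (7 / 2 - κ - 1))) s := fun s hs =>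
    ((h.dz s hs).rpow_const (p := 7 / 2 - κ) (Or.inl (zp s hs).ne')).const_mul (2 * K₀)
  have hQd := fun s (hs : s ∈ Ioc 0 s₁) => h.hasDerivAt_Q hs (zp s hs)
  have hbd : ∀ s ∈ Ioc 0 s₁, |ρ s * z s ^ (-κ - 1) * ((κ - 2) * (3 - κ) * ((1 - a₁₁ * z s) * R s
        - a₁₁ ^ 2 * z s ^ 2 * y s - a₁₁ * a₃ * z s ^ 4))| ≤
        2 * K₀ * (ρ s * (7 / 2 - κ) * z s ^ (7 / 2 - κ - 1)) := by
    intro s hs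
    have hz := zp s hs
    have hz1 := z1 s hs
    have hρ : 0 < ρ s := lt_of_lt_of_le hc (h.ρl s hs)
    have hrp : 0 < z s ^ (-κ - 1) := Real.rpow_pos_of_pos hz _
    have k2 := h.κ2
    have k3 := h.κ3
    have hκ : |(κ - 2) * (3 - κ)| ≤ 1 := by
      rw [abs_of_nonneg (mul_nonneg (by linarith) (by linarith))]; nlinarith
    have hyz : z s ^ 2 * |y s| ≤ y s ^ 2 + z s ^ 4 := by
      rw [← sq_abs (y s)]; nlinarith [sq_nonneg (z s ^ 2 - |y s|), sq_nonneg (|y s|), sq_nonneg (z s ^ 2)]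
    have h72 : z s ^ 4 ≤ z s ^ (7 / 2 : ℝ) := by
      rw [← Real.rpow_natCast]
      exact Real.rpow_le_rpow_of_exponent_ge hz hz1 (by norm_num)
    have hsum : y s ^ 2 + z s ^ 4 ≤ (D + 1) * z s ^ (7 / 2 : ℝ) := by
      have := hby s hs; linarith
    have hh : |(1 - a₁₁ * z s) * R s - a₁₁ ^ 2 * z s ^ 2 * y s - a₁₁ * a₃ * z s ^ 4| ≤
        K₀ * z s ^ (7 / 2 : ℝ) := by
      have f1 : |(1 - a₁₁ * z s) * R s| ≤ (1 + C) * (C * (2 * (y s ^ 2 + z s ^ 4))) := by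
        rw [abs_mul]
        have g1 : |1 - a₁₁ * z s| ≤ 1 + C := by
          refine (abs_sub _ _).trans ?_
          rw [abs_one, abs_mul, abs_of_pos hz]
          have := mul_le_mul h.ba11 hz1 hz.le (by linarith)
          linarith
        have g2 := h.bR s hs
        refine mul_le_mul g1 (g2.trans ?_) (abs_nonneg _) (by linarith)
        gcongr; linarith
      have f2 : |a₁₁ ^ 2 * z s ^ 2 * y s| ≤ C ^ 2 * (y s ^ 2 + z s ^ 4) := by
        rw [mul_assoc, abs_mul, abs_mul, abs_pow, abs_of_pos (pow_pos hz 2)]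
        have := h.ba11
        gcongr
      have f3 : |a₁₁ * a₃ * z s ^ 4| ≤ C ^ 2 * (y s ^ 2 + z s ^ 4) := by
        rw [abs_mul, abs_mul, abs_of_pos (pow_pos hz 4), sq C]
        have := h.ba11; have := h.ba3
        have : z s ^ 4 ≤ y s ^ 2 + z s ^ 4 := by nlinarith [sq_nonneg (y s)]
        gcongr
      calc _ ≤ |(1 - a₁₁ * z s) * R s| + |a₁₁ ^ 2 * z s ^ 2 * y s| + |a₁₁ * a₃ * z s ^ 4| :=
            (abs_sub _ _).trans (by gcongr; exact abs_sub _ _)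
        _ ≤ ((1 + C) * C * 2 + C ^ 2 * 2) * (y s ^ 2 + z s ^ 4) := by linarith
        _ ≤ ((1 + C) * C * 2 + C ^ 2 * 2) * ((D + 1) * z s ^ (7 / 2 : ℝ)) := by gcongr
        _ = _ := by rw [hK0]; ring
    rw [abs_mul, abs_mul, abs_mul ((κ - 2) * (3 - κ)), abs_of_pos hρ, abs_of_pos hrp]
    have hex : z s ^ (7 / 2 - κ - 1) = z s ^ (-κ - 1) * z s ^ (7 / 2 : ℝ) := by
      rw [← Real.rpow_add hz]; congr 1; ring
    rw [hex]
    calc _ ≤ ρ s * z s ^ (-κ - 1) * (1 * (K₀ * z s ^ (7 / 2 : ℝ))) := by gcongr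
      _ = 2 * K₀ * (ρ s * (1 / 2) * (z s ^ (-κ - 1) * z s ^ (7 / 2 : ℝ))) := by ring
      _ ≤ _ := by gcongr; linarith
  refine exists_lim_of_squeeze h1 ?_ ?_ (fun s hs => ?_)
  · refine monotoneOn_of_deriv_nonneg (convex_Ioc _ _)
      (fun s hs => ((hQd s hs).add (hdg s hs)).continuousAt.continuousWithinAt)
      (fun s hs => ((hQd s (interior_subset hs)).add
        (hdg s (interior_subset hs))).differentiableAt.differentiableWithinAt) fun s hs => ?_
    have hs := interior_subset hs
    have hd : HasDerivAt (fun s => Qf κ a₂ a₁₁ a₃ (z s) (y s) + 2 * K₀ * z s ^ (7 / 2 - κ)) _ s :=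
      (hQd s hs).add (hdg s hs)
    rw [hd.deriv]
    linarith [(abs_le.1 (hbd s hs)).1]
  · refine antitoneOn_of_deriv_nonpos (convex_Ioc _ _)
      (fun s hs => ((hQd s hs).sub (hdg s hs)).continuousAt.continuousWithinAt)
      (fun s hs => ((hQd s (interior_subset hs)).sub
        (hdg s (interior_subset hs))).differentiableAt.differentiableWithinAt) fun s hs => ?_
    have hs := interior_subset hs
    have hd : HasDerivAt (fun s => Qf κ a₂ a₁₁ a₃ (z s) (y s) - 2 * K₀ * z s ^ (7 / 2 - κ)) _ s :=
      (hQd s hs).sub (hdg s hs)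
    rw [hd.deriv]
    linarith [(abs_le.1 (hbd s hs)).2]
  · have := Real.rpow_pos_of_pos (zp s hs) (7 / 2 - κ)
    positivity

set_option maxHeartbeats 800000 in
/-- The limit of `Qf` is continuous in the parameter. It equals `a₂ < 0` at `κ = 2` and
`-(a₃ - a₁₁ a₂) > 0` at `κ = 3`, so it vanishes in between; there the trajectory has no `z^κ` term. -/
theorem shoot {C c s₀ q₃ q₄ : ℝ} (hC : 1 ≤ C) (hc : 0 < c) (hs0 : 0 < s₀) (hq : q₃ < q₄)
    {κ a₂ a₁₁ a₃ : ℝ → ℝ} (cκ : ContinuousOn κ (Icc q₃ q₄)) (ca2 : ContinuousOn a₂ (Icc q₃ q₄))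
    (ca11 : ContinuousOn a₁₁ (Icc q₃ q₄)) (ca3 : ContinuousOn a₃ (Icc q₃ q₄))
    {z y ρ R : ℝ → ℝ → ℝ}
    (hT : ∀ q ∈ Icc q₃ q₄, Traj C c s₀ (κ q) (a₂ q) (a₁₁ q) (a₃ q) (z q) (y q) (ρ q) (R q))
    (cz : ∀ s ∈ Ioc 0 s₀, ContinuousOn (fun q => z q s) (Icc q₃ q₄))
    (cy : ∀ s ∈ Ioc 0 s₀, ContinuousOn (fun q => y q s) (Icc q₃ q₄))
    (hk3 : κ q₃ = 2) (hk4 : κ q₄ = 3) (hk : ∀ q ∈ Ioo q₃ q₄, 2 < κ q ∧ κ q < 3)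
    (ha3 : a₂ q₃ < 0) (ha4 : a₃ q₄ - a₁₁ q₄ * a₂ q₄ < 0) :
    ∃ q ∈ Ioo q₃ q₄, ∃ s₁ K, 0 < s₁ ∧ s₁ ≤ s₀ ∧ ∀ s ∈ Ioc 0 s₁,
      |y q s - a₂ q / (2 - κ q) * z q s ^ 2
        - (a₃ q + a₁₁ q * (a₂ q / (2 - κ q))) / (3 - κ q) * z q s ^ 3| ≤ K * z q s ^ 3 := by
  obtain ⟨s₁, K, h1, h10, hC1, hK, hl⟩ := Traj.Q_lim hC hc hs0
  have hl' : ∀ q, ∃ l, q ∈ Icc q₃ q₄ → ∀ s ∈ Ioc 0 s₁,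
      |Qf (κ q) (a₂ q) (a₁₁ q) (a₃ q) (z q s) (y q s) - l| ≤ K * z q s ^ (7 / 2 - κ q) := by
    intro q
    by_cases hq : q ∈ Icc q₃ q₄
    · obtain ⟨l, h⟩ := hl _ _ _ _ _ _ _ _ (hT q hq)
      exact ⟨l, fun _ => h⟩
    · exact ⟨0, fun h => absurd h hq⟩
  choose J hJ using hl'
  have zp : ∀ q ∈ Icc q₃ q₄, ∀ t ∈ Ioc 0 s₁, 0 < z q t := fun q hq t ht =>
    lt_of_lt_of_le (mul_pos hc ht.1) ((hT q hq).zl t ⟨ht.1, ht.2.trans h10⟩)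
  have z1 : ∀ q ∈ Icc q₃ q₄, ∀ t ∈ Ioc 0 s₁, z q t ≤ C * t := fun q hq t ht =>
    ((hT q hq).zu t ⟨ht.1, ht.2.trans h10⟩)
  have z1' : ∀ q ∈ Icc q₃ q₄, ∀ t ∈ Ioc 0 s₁, z q t ≤ 1 := fun q hq t ht =>
    (z1 q hq t ht).trans (le_trans (by have := ht.2; gcongr) hC1)
  have hJ' : ∀ q ∈ Icc q₃ q₄, ∀ s ∈ Ioc 0 s₁,
      |Qf (κ q) (a₂ q) (a₁₁ q) (a₃ q) (z q s) (y q s) - J q| ≤ K * (C * s) ^ (1 / 2 : ℝ) := by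
    intro q hq s hs
    refine (hJ q hq s hs).trans ?_
    have := (hT q hq).κ3
    have hz := zp q hq s hs
    refine mul_le_mul_of_nonneg_left ?_ hK
    calc z q s ^ (7 / 2 - κ q) ≤ z q s ^ (1 / 2 : ℝ) :=
          Real.rpow_le_rpow_of_exponent_ge hz (z1' q hq s hs) (by linarith)
      _ ≤ _ := Real.rpow_le_rpow hz.le (z1 q hq s hs) (by norm_num)
  have hsm : ∀ ε > 0, ∃ s ∈ Ioc 0 s₁, K * (C * s) ^ (1 / 2 : ℝ) < ε := by
    intro ε hε
    have h2 : Tendsto (fun s : ℝ => K * (C * s) ^ (1 / 2 : ℝ)) (𝓝[>] 0) (𝓝 0) := by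
      have : Continuous fun s : ℝ => K * (C * s) ^ (1 / 2 : ℝ) :=
        continuous_const.mul ((Real.continuous_rpow_const (by norm_num)).comp (by fun_prop))
      have h3 := this.tendsto 0
      rw [mul_zero, Real.zero_rpow (by norm_num), mul_zero] at h3
      exact h3.mono_left nhdsWithin_le_nhds
    obtain ⟨s, h5, h6⟩ := ((h2.eventually_lt_const hε).and (Ioc_mem_nhdsGT h1)).exists
    exact ⟨s, h6, h5⟩
  have hQc : ∀ s ∈ Ioc 0 s₁,
      ContinuousOn (fun q => Qf (κ q) (a₂ q) (a₁₁ q) (a₃ q) (z q s) (y q s)) (Icc q₃ q₄) := by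
    intro s hs
    have hs' : s ∈ Ioc 0 s₀ := ⟨hs.1, hs.2.trans h10⟩
    have h3 := cz s hs'
    have h4 := cy s hs'
    have hne : ∀ q ∈ Icc q₃ q₄, z q s ≠ 0 := fun q hq => (zp q hq s hs).ne'
    have r1 : ContinuousOn (fun q => z q s ^ (-κ q)) (Icc q₃ q₄) :=
      h3.rpow cκ.neg fun q hq => Or.inl (hne q hq)
    have r2 : ContinuousOn (fun q => z q s ^ (2 - κ q)) (Icc q₃ q₄) :=
      h3.rpow (continuousOn_const.sub cκ) fun q hq => Or.inl (hne q hq)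
    have r3 : ContinuousOn (fun q => z q s ^ (3 - κ q)) (Icc q₃ q₄) :=
      h3.rpow (continuousOn_const.sub cκ) fun q hq => Or.inl (hne q hq)
    unfold Qf
    fun_prop
  have hJc : ContinuousOn J (Icc q₃ q₄) := by
    refine continuousOn_of_uniform_approx_of_continuousOn fun u hu => ?_
    obtain ⟨ε, hε, hu⟩ := Metric.mem_uniformity_dist.1 hu
    obtain ⟨s, hs, hsε⟩ := hsm ε hε
    refine ⟨_, hQc s hs, fun q hq => hu ?_⟩
    rw [dist_comm, Real.dist_eq]
    exact lt_of_le_of_lt (hJ' q hq s hs) hsε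
  have hJeq : ∀ q ∈ Icc q₃ q₄, ∀ v, (∀ s ∈ Ioc 0 s₁,
      Qf (κ q) (a₂ q) (a₁₁ q) (a₃ q) (z q s) (y q s) = v) → J q = v := by
    intro q hq v hv
    by_contra hne
    obtain ⟨s, hs, hsε⟩ := hsm |v - J q| (abs_pos.2 (sub_ne_zero.2 (Ne.symm hne)))
    have := hJ' q hq s hs
    rw [hv s hs] at this
    linarith
  have hm3 : q₃ ∈ Icc q₃ q₄ := ⟨le_rfl, hq.le⟩
  have hm4 : q₄ ∈ Icc q₃ q₄ := ⟨hq.le, le_rfl⟩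
  have hJ3 : J q₃ = a₂ q₃ := hJeq q₃ hm3 _ fun s hs => by
    simp only [Qf, hk3]; norm_num
  have hJ4 : J q₄ = -(a₃ q₄ - a₁₁ q₄ * a₂ q₄) := hJeq q₄ hm4 _ fun s hs => by
    simp only [Qf, hk4]; norm_num
  obtain ⟨q, hqq, hq0⟩ := intermediate_value_Ioo hq.le hJc
    (show (0:ℝ) ∈ Ioo (J q₃) (J q₄) from ⟨by rw [hJ3]; exact ha3, by rw [hJ4]; linarith⟩)
  have hqI := Ioo_subset_Icc_self hqq
  obtain ⟨k2, k3⟩ := hk q hqq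
  set d := (κ q - 2) * (3 - κ q) with hd
  have hdp : 0 < d := mul_pos (by linarith) (by linarith)
  set A := a₂ q / (2 - κ q) with hA
  set e := (a₃ q + a₁₁ q * A) / (3 - κ q) with he
  set a4 := (a₃ q - a₁₁ q * a₂ q) with ha4
  set C1 := 2 * (K / d) + |A| + |a4 / (3 - κ q)| + C with hC1d
  refine ⟨q, hqq, s₁, K / d + C * (K / d + |A| + |a4 / (3 - κ q)| + C * C + |A|), h1, h10,
    fun s hs => ?_⟩
  have hz := zp q hqI s hs
  have hz1 := z1' q hqI s hs
  have hs' : s ∈ Ioc 0 s₀ := ⟨hs.1, hs.2.trans h10⟩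
  have hQ := hJ q hqI s hs
  rw [hq0, sub_zero] at hQ
  set Z := z q s with hZ
  set Y := y q s with hY
  set G := (1 - a₁₁ q * Z) * Y with hG
  have e1 : Z ^ (κ q) * Z ^ (-κ q) = 1 := by rw [← Real.rpow_add hz]; simp
  have e2 : Z ^ (κ q) * Z ^ (2 - κ q) = Z ^ 2 := by
    rw [← Real.rpow_add hz, ← Real.rpow_natCast]; congr 1; push_cast; ring
  have e3 : Z ^ (κ q) * Z ^ (3 - κ q) = Z ^ 3 := by
    rw [← Real.rpow_add hz, ← Real.rpow_natCast]; congr 1; push_cast; ring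
  have e4 : Z ^ (κ q) * Z ^ (7 / 2 - κ q) = Z ^ (7 / 2 : ℝ) := by
    rw [← Real.rpow_add hz]; congr 1; ring
  have hZ3 : Z ^ (7 / 2 : ℝ) ≤ Z ^ 3 := by
    rw [← Real.rpow_natCast]
    exact Real.rpow_le_rpow_of_exponent_ge hz hz1 (by norm_num)
  have hGe : G - A * Z ^ 2 - a4 / (3 - κ q) * Z ^ 3 =
      Z ^ (κ q) * Qf (κ q) (a₂ q) (a₁₁ q) (a₃ q) Z Y / d := by
    have n1 : 2 - κ q ≠ 0 := by linarith
    have n2 : 3 - κ q ≠ 0 := by linarith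
    rw [eq_div_iff hdp.ne']
    have : Z ^ (κ q) * Qf (κ q) (a₂ q) (a₁₁ q) (a₃ q) Z Y =
        d * (Z ^ (κ q) * Z ^ (-κ q)) * G + a₂ q * (3 - κ q) * (Z ^ (κ q) * Z ^ (2 - κ q))
        - a4 * (κ q - 2) * (Z ^ (κ q) * Z ^ (3 - κ q)) := by
      simp only [Qf, hG, hd, ha4]; ring
    rw [this, e1, e2, e3, hA, hd]
    field_simp
    ring
  have hGb : |G - A * Z ^ 2 - a4 / (3 - κ q) * Z ^ 3| ≤ K / d * Z ^ 3 := by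
    rw [hGe, abs_div, abs_mul, abs_of_pos hdp, abs_of_pos (Real.rpow_pos_of_pos hz _), div_mul_eq_mul_div]
    refine div_le_div_of_nonneg_right ?_ hdp.le
    calc _ ≤ Z ^ (κ q) * (K * Z ^ (7 / 2 - κ q)) :=
          mul_le_mul_of_nonneg_left hQ (Real.rpow_nonneg hz.le _)
      _ = K * Z ^ (7 / 2 : ℝ) := by rw [← e4]; ring
      _ ≤ _ := mul_le_mul_of_nonneg_left hZ3 hK
  have hZ32 : Z ^ 3 ≤ Z ^ 2 := pow_le_pow_of_le_one hz.le hz1 (by norm_num)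
  have hYb := (hT q hqI).by' s hs'
  rw [← hZ, ← hY] at hYb
  have hb11 := (hT q hqI).ba11
  have hYA : |Y - A * Z ^ 2| ≤ (K / d + |A| + |a4 / (3 - κ q)| + C * C + |A|) * Z ^ 2 := by
    have : Y - A * Z ^ 2 = (G - A * Z ^ 2 - a4 / (3 - κ q) * Z ^ 3) + a4 / (3 - κ q) * Z ^ 3
      + a₁₁ q * (Z * Y) := by rw [hG]; ring
    rw [this]
    have t1 : |a4 / (3 - κ q) * Z ^ 3| ≤ |a4 / (3 - κ q)| * Z ^ 2 := by
      rw [abs_mul, abs_of_pos (pow_pos hz 3)]; exact mul_le_mul_of_nonneg_left hZ32 (abs_nonneg _)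
    have t2 : |a₁₁ q * (Z * Y)| ≤ C * C * Z ^ 2 := by
      rw [abs_mul, abs_mul, abs_of_pos hz]
      calc _ ≤ C * (Z * (C * Z)) := by gcongr
        _ = _ := by ring
    have t3 : K / d * Z ^ 3 ≤ K / d * Z ^ 2 :=
      mul_le_mul_of_nonneg_left hZ32 (div_nonneg hK hdp.le)
    have t4 : 0 ≤ |A| * Z ^ 2 := by positivity
    refine (abs_add_three _ _ _).trans ?_
    nlinarith
  have hfin : Y - A * Z ^ 2 - e * Z ^ 3 = (G - A * Z ^ 2 - a4 / (3 - κ q) * Z ^ 3)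
      + a₁₁ q * (Z * (Y - A * Z ^ 2)) := by
    have n1 : 2 - κ q ≠ 0 := by linarith
    have n2 : 3 - κ q ≠ 0 := by linarith
    have : e = a4 / (3 - κ q) + a₁₁ q * A := by
      have hAe : a₂ q = A * (2 - κ q) := by rw [hA]; field_simp
      rw [he, ha4, hAe]; field_simp; ring
    rw [this, hG]; ring
  rw [hfin]
  refine (abs_add_le _ _).trans ?_
  rw [abs_mul, abs_mul, abs_of_pos hz]
  calc _ ≤ K / d * Z ^ 3 + C * (Z * ((K / d + |A| + |a4 / (3 - κ q)| + C * C + |A|) * Z ^ 2)) := by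
        gcongr
    _ = _ := by ring

end

/-! ### Barriers between P₀ and the sonic point -/

section

/-- A parameter point `(q, θ, μ)` of the certified region. -/
structure Par (q t m : ℝ) : Prop where
  dom : InD q t m
  qp : 0 < q
  mp : 0 < m
  hq : q ≤ 2578125 / 10000000
  h1 : 46875 / 100000 ≤ t
  h2 : t ≤ 203125 / 100000

theorem Good.par {α q : ℝ} (h : Good α q) : Par q (thQ α q) (q / α) :=
  ⟨h.box.1, h.q0, h.mu_pos, h.box.2.1, h.box.2.2.1, h.box.2.2.2⟩

/-! A polynomial with positive Bernstein coefficients on `[0, 1]` is positive there. -/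
theorem bern2 {a b c x : ℝ} (h0 : 0 < a) (h1 : 0 < 2 * a + b) (h2 : 0 < a + b + c) (hx : 0 ≤ x)
    (hx1 : x ≤ 1) : 0 < a + b * x + c * x ^ 2 := by
  have hy : 0 ≤ 1 - x := by linarith
  have e : a + b * x + c * x ^ 2 = a * (1 - x) ^ 2 + (2 * a + b) * (x * (1 - x))
    + (a + b + c) * x ^ 2 := by ring
  rw [e]
  rcases hx.eq_or_lt with rfl | hx
  · simpa using h0
  · have := mul_nonneg hx.le hy
    have := mul_pos h2 (pow_pos hx 2)
    have := mul_nonneg h1.le (mul_nonneg hx.le hy)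
    have := mul_nonneg h0.le (sq_nonneg (1 - x))
    linarith

theorem bern3 {a b c d x : ℝ} (h0 : 0 < a) (h1 : 0 < 3 * a + b) (h2 : 0 < 3 * a + 2 * b + c)
    (h3 : 0 < a + b + c + d) (hx : 0 ≤ x) (hx1 : x ≤ 1) :
    0 < a + b * x + c * x ^ 2 + d * x ^ 3 := by
  have hy : 0 ≤ 1 - x := by linarith
  have e : a + b * x + c * x ^ 2 + d * x ^ 3 = a * (1 - x) ^ 3 + (3 * a + b) * (x * (1 - x) ^ 2)
    + (3 * a + 2 * b + c) * (x ^ 2 * (1 - x)) + (a + b + c + d) * x ^ 3 := by ring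
  rw [e]
  rcases hx.eq_or_lt with rfl | hx
  · simpa using h0
  · have := mul_pos h3 (pow_pos hx 3)
    have := mul_nonneg h1.le (mul_nonneg hx.le (pow_nonneg hy 2))
    have := mul_nonneg h2.le (mul_nonneg (pow_nonneg hx.le 2) hy)
    have := mul_nonneg h0.le (pow_nonneg hy 3)
    linarith

theorem bern4 {a b c d f x : ℝ} (h0 : 0 < a) (h1 : 0 < 4 * a + b) (h2 : 0 < 6 * a + 3 * b + c)
    (h3 : 0 < 4 * a + 3 * b + 2 * c + d) (h4 : 0 < a + b + c + d + f) (hx : 0 ≤ x) (hx1 : x ≤ 1) :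
    0 < a + b * x + c * x ^ 2 + d * x ^ 3 + f * x ^ 4 := by
  have hy : 0 ≤ 1 - x := by linarith
  have e : a + b * x + c * x ^ 2 + d * x ^ 3 + f * x ^ 4 = a * (1 - x) ^ 4
    + (4 * a + b) * (x * (1 - x) ^ 3) + (6 * a + 3 * b + c) * (x ^ 2 * (1 - x) ^ 2)
    + (4 * a + 3 * b + 2 * c + d) * (x ^ 3 * (1 - x)) + (a + b + c + d + f) * x ^ 4 := by ring
  rw [e]
  rcases hx.eq_or_lt with rfl | hx
  · simpa using h0
  · have := mul_pos h4 (pow_pos hx 4)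
    have := mul_nonneg h1.le (mul_nonneg hx.le (pow_nonneg hy 3))
    have := mul_nonneg h2.le (mul_nonneg (pow_nonneg hx.le 2) (pow_nonneg hy 2))
    have := mul_nonneg h3.le (mul_nonneg (pow_nonneg hx.le 3) hy)
    have := mul_nonneg h0.le (pow_nonneg hy 4)
    linarith

/-- `u²·M/ω` along `x = -ω/u`, `T = 1 - ω`. -/
def Dmf (q m w u : ℝ) : ℝ := (1 + q) * u ^ 2 - (1 - w) * (pB0 q m * u + pB1 q m * w)
/-- `u³·N/ω` along `x = -ω/u`, `T = 1 - ω`. -/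
def Dnf (q m w u : ℝ) : ℝ := pA0 q * u ^ 3 - 3 * (1 + q) * u ^ 2
  + (1 - w) * (pC1 q m * u ^ 2 - pC2 q m * w * u + pC3 q m * w ^ 2)

section
variable {q t m w u : ℝ}

theorem Par.tp (h : Par q t m) : 0 < t := by linarith [h.h1]

/-- The trajectories cross the line `u = t + 3ω` in one direction only. -/
theorem Par.upper (h : Par q t m) (hw : 0 < w) (hw1 : w ≤ 1) :
    0 < 2 * (1 - w) * t * Dmf q m w (t + 3 * w) + (t + 3 * w) * Dnf q m w (t + 3 * w) := by
  have hb := box_of sound1 cert1 h.dom h.hq h.h1 h.h2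
  simp only [goal1, List.forall_mem_cons, List.not_mem_nil, false_imp_iff, implies_true, and_true] at hb
  obtain ⟨g1, g2, g3, g4⟩ := hb
  push_cast at g2 g3
  have := mul_pos hw (bern3 g1 g2 g3 g4 hw.le hw1)
  have hE := h.dom.num
  refine this.trans_eq ?_
  simp only [Dmf, Dnf, uE1, uE2, uE3, uE4, uF0, uF1, uF2, uF3, uk0, uk1, uk2, uG0, uG1, uG2, pC1, pC2, pC3, pA0,
    pB0, pB1]
  simp only [pDen, pNum] at hE
  push_cast at hE ⊢
  linear_combination t ^ 2 * hE

/-- The trajectories cross the line `u = t (1 - ω/4)` in one direction only. -/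
theorem Par.lower (h : Par q t m) (hw : 0 < w) (hw1 : w ≤ 1) :
    2 * (1 - w) * t * Dmf q m w (t * (1 - w / 4))
      + t * (1 - w / 4) * Dnf q m w (t * (1 - w / 4)) < 0 := by
  have hb := box_of sound2 cert2 h.dom h.hq h.h1 h.h2
  simp only [goal2, List.forall_mem_cons, List.not_mem_nil, false_imp_iff, implies_true, and_true] at hb
  obtain ⟨g1, g2, g3, g4⟩ := hb
  push_cast at g1 g2 g3 g4
  have := mul_pos hw (bern3 (a := -lE1 q t m) (b := -lE2 q t m) (c := -lE3 q t m) (d := -lE4 q t m)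
    (by linarith) (by linarith) (by linarith) (by linarith) hw.le hw1)
  have hE := h.dom.num
  have ht := h.tp
  rw [← neg_pos]
  have h3 : 0 < 256 * -(2 * (1 - w) * t * Dmf q m w (t * (1 - w / 4))
      + t * (1 - w / 4) * Dnf q m w (t * (1 - w / 4))) := by
    refine (mul_pos ht this).trans_eq ?_
    simp only [Dmf, Dnf, lE1, lE2, lE3, lE4, lF0, lF1, lF2, lF3, lk0, lk1, lk2, lG0, lG1, lG2, pC1, pC2, pC3, pA0,
      pB0, pB1]
    simp only [pDen, pNum] at hE
    push_cast at hE ⊢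
    linear_combination -256 * t ^ 2 * hE
  linarith

theorem Par.qm (h : Par q t m) : 3 * m < t := by
  have hb := box_of sound3 cert3 h.dom h.hq h.h1 h.h2
  simp only [goal3, List.forall_mem_cons, List.not_mem_nil, false_imp_iff, implies_true, and_true] at hb
  have := hb.2.2.2.2.1
  push_cast at this
  linarith
theorem Par.lam (h : Par q t m) : 0 < pL q t m := by
  have hb := box_of sound3 cert3 h.dom h.hq h.h1 h.h2
  simp only [goal3, List.forall_mem_cons, List.not_mem_nil, false_imp_iff, implies_true, and_true] at hb
  exact hb.2.2.2.2.2.1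

theorem Par.m1 (h : Par q t m) : m < 7 / 10 := by linarith [h.qm, h.h2]
theorem Par.qm1 (h : Par q t m) : q * m < 1 / 5 := by nlinarith [h.m1, h.hq, h.qp, h.mp]
theorem Par.B0 (h : Par q t m) : 0 < pB0 q m := by
  have := h.qm1; have := h.qp; have := h.mp
  have := mul_pos h.qp h.mp
  have := mul_pos h.qp (sub_pos.2 this)
  simp only [pB0]; push_cast
  nlinarith
theorem Par.B1 (h : Par q t m) : 0 < pB1 q m := by
  have := h.qp; have := h.mp
  simp only [pB1]; push_cast
  positivity

/-- `M/ω > 0` above the lower barrier. -/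
theorem Par.Dm_pos (h : Par q t m) (hw : 0 ≤ w) (hw1 : w ≤ 1) (hu : t * (1 - w / 4) ≤ u) :
    0 < Dmf q m w u := by
  have hb := box_of sound3 cert3 h.dom h.hq h.h1 h.h2
  simp only [goal3, List.forall_mem_cons, List.not_mem_nil, false_imp_iff, implies_true, and_true] at hb
  obtain ⟨g1, g2, g3, g4, -⟩ := hb
  push_cast at g2 g3
  have h0 := bern3 (d := 0) g1 g2 g3 (by linarith) hw hw1
  have hl : 0 < Dmf q m w (t * (1 - w / 4)) := by
    have : 16 * Dmf q m w (t * (1 - w / 4)) = lG0 q t m + lG1 q t m * w + lG2 q t m * w ^ 2 + 0 * w ^ 3 := by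
      simp only [Dmf, lG0, lG1, lG2]; push_cast; ring
    linarith
  set v := t * (1 - w / 4) with hv
  have hvp : 0 < v := mul_pos h.tp (by linarith)
  have hb1 := h.B1
  have hvb : 0 < (1 + q) * v - (1 - w) * pB0 q m := by
    by_contra! hc
    have h2 : 0 ≤ (1 - w) * (pB1 q m * w) := mul_nonneg (by linarith) (mul_nonneg hb1.le hw)
    have : Dmf q m w v = v * ((1 + q) * v - (1 - w) * pB0 q m) - (1 - w) * (pB1 q m * w) := by
      simp only [Dmf]; ring
    have := mul_nonneg_of_nonpos_of_nonpos (neg_nonpos.2 hvp.le) hc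
    linarith
  have : Dmf q m w u = Dmf q m w v + (u - v) * ((1 + q) * u + ((1 + q) * v - (1 - w) * pB0 q m)) := by
    simp only [Dmf]; ring
  have h3 : 0 ≤ (u - v) * ((1 + q) * u + ((1 + q) * v - (1 - w) * pB0 q m)) := by
    have := h.qp
    have hu0 : 0 ≤ u := hvp.le.trans hu
    refine mul_nonneg (by linarith) ?_
    have : 0 ≤ (1 + q) * u := by positivity
    linarith
  linarith
end

end

/-! ### The Taylor barrier at the sonic point -/

section

/-- Second Taylor coefficient of `T(x)` at the sonic point. -/
def bT (q t m : ℝ) : ℝ := pR2 q t m / pS2 q t m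
/-- Third Taylor coefficient of `T(x)` at the sonic point. -/
def aT (q t m : ℝ) : ℝ := pR3 q t m (bT q t m) / pS3 q t m
/-- The cubic Taylor polynomial of `T(x)` at the sonic point. -/
def tay (q t m x : ℝ) : ℝ := 1 + t * x + bT q t m * x ^ 2 + aT q t m * x ^ 3

/-- The polynomial `M(T, x)`. -/
def Mf (q m T x : ℝ) : ℝ := (1 + q) - T * ((1 + q) - pB0 q m * x + pB1 q m * x ^ 2)
/-- The polynomial `N(T, x)`. -/
def Nf (q m T x : ℝ) : ℝ := pA0 q + 3 * (1 + q) * x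
  - T * (pA0 q + pC1 q m * x + pC2 q m * x ^ 2 + pC3 q m * x ^ 3)

section
variable {q t m w u x : ℝ}

theorem Par.S2p (h : Par q t m) : 0 < pS2 q t m := by
  have := h.dom.S2; linarith

/-- This inequality gives both `a > 1` for `pS3 > 0` and the sign of the shooting function at `k = 3`. -/
theorem Par.r3 (h : Par q t m) : pS3 q t m < pR3 q t m (bT q t m) := by
  have hb := box_of sound5 cert5 h.dom h.hq h.h1 h.h2
  simp only [goal5, List.forall_mem_cons, List.not_mem_nil, false_imp_iff, implies_true, and_true] at hb
  have := hb.1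
  unfold bT; linarith

/-- This inequality gives both the lowest-order sign of the barrier and the sign of the shooting
function at `k = 4`. -/
theorem Par.w4 (h : Par q t m) : h40 q t m (bT q t m) * pS3 q t m
    + h41 q t m (bT q t m) * pR3 q t m (bT q t m) < 0 := by
  have hb := box_of sound6 cert6 h.dom h.hq h.h1 h.h2
  simp only [goal6, List.forall_mem_cons, List.not_mem_nil, false_imp_iff, implies_true, and_true] at hb
  have := hb.1
  simp only [SelfSimilarImplosion.w4] at this
  push_cast at this
  unfold bT; linarith

theorem Par.a1 (h : Par q t m) (hS : 0 < pS3 q t m) : 1 < aT q t m := by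
  rw [aT, one_lt_div hS]; exact h.r3

theorem Par.h4a (h : Par q t m) (hS : 0 < pS3 q t m) :
    h40 q t m (bT q t m) + h41 q t m (bT q t m) * aT q t m < 0 := by
  have := h.w4
  have e : h40 q t m (bT q t m) + h41 q t m (bT q t m) * aT q t m =
    (h40 q t m (bT q t m) * pS3 q t m + h41 q t m (bT q t m) * pR3 q t m (bT q t m)) / pS3 q t m := by
    rw [aT]; field_simp
  rw [e]; exact div_neg_of_neg_of_pos this hS

theorem Par.C3 (h : Par q t m) : 0 < pC3 q m := by
  have := h.qp; have := h.mp
  simp only [pC3]; push_cast; positivity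

/-- `T = t(x)` is a strict barrier for `0 < x ≤ 3/5`. -/
theorem Par.barrier (h : Par q t m) (hS : 0 < pS3 q t m) (hx : 0 < x) (hx1 : x ≤ 3 / 5) :
    2 * tay q t m x * Mf q m (tay q t m x) x
      + (t + 2 * bT q t m * x + 3 * aT q t m * x ^ 2) * Nf q m (tay q t m x) x < 0 := by
  have hi := h_identity q t m (aT q t m) (bT q t m) x
  have hb := box_of sound6 cert6 h.dom h.hq h.h1 h.h2
  simp only [goal6, List.forall_mem_cons, List.not_mem_nil, false_imp_iff, implies_true, and_true] at hb
  obtain ⟨-, g5, g6, g7⟩ := hb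
  push_cast at g5 g6 g7
  rw [← bT] at g5 g6 g7
  unfold Mf Nf tay
  rw [hi]
  have hR2 : pR2 q t m - pS2 q t m * bT q t m = 0 := by
    rw [bT, mul_div_cancel₀ _ h.S2p.ne', sub_self]
  have hR3 : pR3 q t m (bT q t m) - pS3 q t m * aT q t m = 0 := by
    rw [aT, mul_div_cancel₀ _ hS.ne', sub_self]
  have haS : pR3 q t m (bT q t m) = pS3 q t m * aT q t m := by linarith
  rw [h.dom.num, hR2, hR3]
  have hB := bern2 (a := -SelfSimilarImplosion.w5 q t m (bT q t m))
    (b := -(3 / 5 * SelfSimilarImplosion.w6 q t m (bT q t m)))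
    (c := -(9 / 25 * SelfSimilarImplosion.w7 q t m (bT q t m))) (x := 5 / 3 * x) (by linarith) (by linarith)
    (by linarith) (by linarith) (by linarith)
  simp only [SelfSimilarImplosion.w5, SelfSimilarImplosion.w6, SelfSimilarImplosion.w7, haS] at hB
  set a := aT q t m
  set b := bT q t m
  set S := pS3 q t m
  have h567 : (h50 q t m b + h51 q t m b * a + h52 q * a ^ 2) + (h60 q m b + h61 q t m b * a + h62 q m * a ^ 2) * x
     + (h71 q m b * a + h72 q m * a ^ 2) * x ^ 2 < 0 := by
    have hS2 : 0 < S ^ 2 := pow_pos hS 2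
    by_contra! hc
    have := mul_nonneg hS2.le hc
    nlinarith
  have e5 := mul_neg_of_pos_of_neg (pow_pos hx 5) h567
  have e4 := mul_neg_of_pos_of_neg (pow_pos hx 4) (h.h4a hS)
  have hB1 := h.B1
  have hC3 := h.C3
  have e8 : 0 ≤ x ^ 8 * (a ^ 2 * (2 * pB1 q m + 3 * pC3 q m)) := by positivity
  linarith

/-- `M < 0` along the cubic Taylor polynomial. -/
theorem Par.bpos (h : Par q t m) (hS : 0 < pS3 q t m) (hx : 0 < x) (hx1 : x ≤ 3 / 5) : 
    0 < (1 + q) - pB0 q m * x + pB1 q m * x ^ 2 ∧ Mf q m (tay q t m x) x < 0 := by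
  have hb := box_of sound3 cert3 h.dom h.hq h.h1 h.h2
  simp only [goal3, List.forall_mem_cons, List.not_mem_nil, false_imp_iff, implies_true, and_true] at hb
  obtain ⟨-, -, -, -, -, -, k1, k2⟩ := hb
  push_cast at k1 k2
  have hm2 : 0 < (1 + q) - pB0 q m * x + pB1 q m * x ^ 2 := by
    have e : (1 + q) - pB0 q m * x + pB1 q m * x ^ 2 =
      ((1 + q) - pB0 q m * (3 / 5) + pB1 q m * (3 / 5) ^ 2) + (3 / 5 - x) * (pB0 q m - pB1 q m * (3 / 5 + x)) := by ring
    rw [e]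
    have hB1 := h.B1
    have : 0 ≤ (3 / 5 - x) * (pB0 q m - pB1 q m * (3 / 5 + x)) := by
      refine mul_nonneg (by linarith) ?_
      have : pB1 q m * (3 / 5 + x) ≤ pB1 q m * (6 / 5) := by gcongr; linarith
      linarith
    linarith
  refine ⟨hm2, ?_⟩
  have ha := h.a1 hS
  have hb := box_of sound4 cert4 h.dom h.hq h.h1 h.h2
  simp only [goal4, List.forall_mem_cons, List.not_mem_nil, false_imp_iff, implies_true, and_true] at hb
  obtain ⟨g1, g2, g3, g4⟩ := hb
  push_cast at g1 g2 g3 g4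
  rw [← bT] at g1 g2 g3 g4
  have h0 : 0 < r2G0 q t m := by
    have := mul_pos h.tp h.lam
    simp only [r2G0]; push_cast; linarith
  have hB := bern4 h0 g1 g2 g3 g4 (x := 5 / 3 * x) (by linarith) (by linarith)
  set m2 := (1 + q) - pB0 q m * x + pB1 q m * x ^ 2 with hm2d
  set a := aT q t m with had
  set b := bT q t m with hbd
  have hK : 1250 * ((1 + t * x + b * x ^ 2 + 1 * x ^ 3) * m2 - (1 + q)) =
      x * (r2G0 q t m + r2G1 q t m b * (5 / 3 * x) + r2G2 q t m b * (5 / 3 * x) ^ 2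
        + r2G3 q m b * (5 / 3 * x) ^ 3 + r2G4 q m * (5 / 3 * x) ^ 4) := by
    have hE := h.dom.num
    simp only [hm2d, r2G0, r2G1, r2G2, r2G3, r2G4, pL, pA0, pB0, pB1]
    simp only [pDen, pNum] at hE
    push_cast at hE ⊢
    linear_combination (-625) * x * hE
  have hpos := mul_pos hx hB
  rw [← hK] at hpos
  have : 0 ≤ (a - 1) * x ^ 3 * m2 := by
    have : 0 ≤ a - 1 := by linarith
    positivity
  have e : Mf q m (tay q t m x) x = (1 + q) - (1 + t * x + b * x ^ 2 + 1 * x ^ 3) * m2 - (a - 1) * x ^ 3 * m2 := by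
    simp only [Mf, tay, hm2d]; ring
  rw [e]; linarith

/-- `N < 0` on the part of the line `x = 3/5` above the Taylor barrier. -/
theorem Par.end_neg (h : Par q t m) (hS : 0 < pS3 q t m) {T : ℝ} (hT : tay q t m (3 / 5) ≤ T) (hT0 : 0 < tay q t m (3 / 5)):
    Nf q m T (3 / 5) < 0 := by
  have hb := box_of sound5 cert5 h.dom h.hq h.h1 h.h2
  simp only [goal5, List.forall_mem_cons, List.not_mem_nil, false_imp_iff, implies_true, and_true] at hb
  obtain ⟨-, g⟩ := hb
  rw [← bT] at g
  push_cast at g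
  have haS : pR3 q t m (bT q t m) = pS3 q t m * aT q t m := by
    rw [aT, mul_div_cancel₀ _ hS.ne']
  rw [haS] at g
  set A := pA0 q + pC1 q m * (3 / 5) + pC2 q m * (3 / 5) ^ 2 + pC3 q m * (3 / 5) ^ 3 with hA
  have hq := h.qp
  have hp : 0 < pA0 q := pA0_pos hq.le
  have e : 0 < pS3 q t m * (tay q t m (3 / 5) * A - (pA0 q + 3 * (1 + q) * (3 / 5))) := by
    have : 15625 * (pS3 q t m * (tay q t m (3 / 5) * A - (pA0 q + 3 * (1 + q) * (3 / 5)))) = 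
      (pS3 q t m * (125 + 75 * t + 45 * bT q t m) + 27 * (pS3 q t m * aT q t m)) *
          (125 * pA0 q + 75 * pC1 q m + 45 * pC2 q m + 27 * pC3 q m) -
        125 * (pS3 q t m * (125 * pA0 q + 225 * (1 + q))) := by
      simp only [hA, tay]; ring
    linarith
  have e := pos_of_mul_pos_right e hS.le |> sub_pos.1
  have hA0 : 0 < A := by
    by_contra! hc
    nlinarith [mul_nonneg_of_nonpos_of_nonpos (neg_nonpos.2 hT0.le) hc]
  have : Nf q m T (3 / 5) = pA0 q + 3 * (1 + q) * (3 / 5) - T * A := by simp only [Nf, hA]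
  rw [this]
  nlinarith
end

end

/-! ### Bounded Lipschitz fields -/

section

/-- Bounded and Lipschitz in the last variable, uniformly in the first. -/
def LB {X : Type} (f : X → ℝ → ℝ) : Prop :=
  ∃ B L : ℝ, 0 ≤ B ∧ 0 ≤ L ∧ ∀ x w w', |f x w| ≤ B ∧ |f x w - f x w'| ≤ L * |w - w'|

namespace LB
variable {X : Type} {f g : X → ℝ → ℝ}

theorem const {c : X → ℝ} {B : ℝ} (h : ∀ x, |c x| ≤ B) : LB fun x _ => c x :=
  ⟨|B|, 0, abs_nonneg _, le_rfl, fun x w w' => ⟨(h x).trans (le_abs_self _), by simp⟩⟩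

theorem real (c : ℝ) : LB fun (_ : X) (_ : ℝ) => c := const (B := |c|) fun _ => le_rfl

theorem add (hf : LB f) (hg : LB g) : LB fun x w => f x w + g x w := by
  obtain ⟨B, L, hB, hL, h⟩ := hf
  obtain ⟨B', L', hB', hL', h'⟩ := hg
  refine ⟨B + B', L + L', by positivity, by positivity, fun x w w' => ⟨?_, ?_⟩⟩
  · exact (abs_add_le _ _).trans (add_le_add (h x w w').1 (h' x w w').1)
  · have : f x w + g x w - (f x w' + g x w') = (f x w - f x w') + (g x w - g x w') := by ring
    rw [this, add_mul]
    exact (abs_add_le _ _).trans (add_le_add (h x w w').2 (h' x w w').2)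

theorem mul (hf : LB f) (hg : LB g) : LB fun x w => f x w * g x w := by
  obtain ⟨B, L, hB, hL, h⟩ := hf
  obtain ⟨B', L', hB', hL', h'⟩ := hg
  refine ⟨B * B', L * B' + B * L', by positivity, by positivity, fun x w w' => ⟨?_, ?_⟩⟩
  · rw [abs_mul]; exact mul_le_mul (h x w w').1 (h' x w w').1 (abs_nonneg _) hB
  · have : f x w * g x w - f x w' * g x w' =
      (f x w - f x w') * g x w + f x w' * (g x w - g x w') := by ring
    rw [this]
    refine (abs_add_le _ _).trans ?_
    rw [abs_mul, abs_mul, add_mul]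
    refine add_le_add ?_ ?_
    · calc _ ≤ (L * |w - w'|) * B' :=
            mul_le_mul (h x w w').2 (h' x w w').1 (abs_nonneg _) (by positivity)
        _ = _ := by ring
    · calc _ ≤ B * (L' * |w - w'|) :=
            mul_le_mul (h x w' w).1 (h' x w w').2 (abs_nonneg _) hB
        _ = _ := by ring

theorem neg (hf : LB f) : LB fun x w => -f x w := by
  have := (real (X := X) (-1)).mul hf
  simpa using this

theorem sub (hf : LB f) (hg : LB g) : LB fun x w => f x w - g x w := by
  simpa only [sub_eq_add_neg] using hf.add hg.neg

theorem inv {c : ℝ} (hc : 0 < c) (hf : LB f) (h : ∀ x w, c ≤ f x w) : LB fun x w => (f x w)⁻¹ := by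
  obtain ⟨B, L, hB, hL, h'⟩ := hf
  refine ⟨c⁻¹, L / (c * c), by positivity, by positivity, fun x w w' => ⟨?_, ?_⟩⟩
  · have := h x w
    rw [abs_of_pos (inv_pos.2 (by linarith))]
    exact inv_anti₀ hc this
  · have p1 := hc.trans_le (h x w)
    have p2 := hc.trans_le (h x w')
    rw [inv_sub_inv p1.ne' p2.ne', abs_div, abs_of_pos (mul_pos p1 p2), abs_sub_comm]
    calc _ ≤ (L * |w - w'|) / (c * c) :=
          div_le_div₀ (by positivity) (h' x w w').2 (by positivity)
            (mul_le_mul (h x w) (h x w') hc.le p1.le)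
      _ = _ := by ring

theorem div {c : ℝ} (hf : LB f) (hg : LB g) (hc : 0 < c) (h : ∀ x w, c ≤ g x w) :
    LB fun x w => f x w / g x w := by
  simpa only [div_eq_mul_inv] using hf.mul (hg.inv hc h)

theorem pow (hf : LB f) (n : ℕ) : LB fun x w => f x w ^ n := by
  induction n with
  | zero => simpa using real (X := X) 1
  | succ n ih => simpa only [pow_succ] using ih.mul hf

theorem clamp {lo hi : X → ℝ} {c : X → ℝ} {B : ℝ} (h1 : ∀ x, |lo x| ≤ B) (h2 : ∀ x, |hi x| ≤ B) :
    LB fun x w => max (lo x) (min (hi x) (c x + w)) := by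
  refine ⟨|B|, 1, abs_nonneg _, zero_le_one, fun x w w' => ⟨?_, ?_⟩⟩
  · have a := abs_le.1 ((h1 x).trans (le_abs_self B))
    have b := abs_le.1 ((h2 x).trans (le_abs_self B))
    rw [abs_le]
    exact ⟨a.1.trans (le_max_left _ _), max_le a.2 ((min_le_left _ _).trans b.2)⟩
  · rw [one_mul]
    refine (abs_max_sub_max_le_max _ _ _ _).trans ?_
    rw [sub_self, abs_zero, max_eq_right (abs_nonneg _)]
    have := abs_min_sub_min_le_max (hi x) (c x + w) (hi x) (c x + w')
    refine this.trans ?_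
    rw [sub_self, abs_zero, max_eq_right (abs_nonneg _)]
    rw [add_sub_add_left_eq_sub]

theorem max_min_lip {lo hi : X → ℝ} {B : ℝ} (h1 : ∀ x, |lo x| ≤ B) (h2 : ∀ x, |hi x| ≤ B)
    (hf : LB f) : LB fun x w => max (lo x) (min (hi x) (f x w)) := by
  obtain ⟨B', L, hB', hL, h⟩ := hf
  obtain ⟨B2, L2, hB2, hL2, h'⟩ := clamp (c := fun _ => 0) h1 h2
  refine ⟨B2, L2 * L, hB2, by positivity, fun x w w' => ⟨?_, ?_⟩⟩
  · simpa using (h' x (f x w) 0).1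
  · have := (h' x (f x w) (f x w')).2
    simp only [zero_add] at this
    refine this.trans ?_
    rw [mul_assoc]
    exact mul_le_mul_of_nonneg_left (h x w w').2 hL2
end LB

/-- The Briot–Bouquet fixed point for a field given through `LB`. -/
theorem bb_exists' {P : Type} [PseudoMetricSpace P] {μ₀ : ℝ} (hμ : 0 ≤ μ₀) (F : ℝ × P → ℝ → ℝ)
    (hF : Continuous (Function.uncurry F)) (hB : LB F) :
    ∃ w : ℝ → P → ℝ, Continuous (Function.uncurry w) ∧
      ∀ p, Continuous (fun x => F (x, p) (w x p)) ∧
        ∀ x, w x p = x * bbV μ₀ (fun y => F (y, p) (w y p)) x := by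
  obtain ⟨B, L, h1, h2, h⟩ := hB
  obtain ⟨w, hw, hw'⟩ := bb_exists hμ (fun x p w => F (x, p) w)
    (hF.comp (by fun_prop : Continuous fun a : ℝ × P × ℝ => ((a.1, a.2.1), a.2.2)))
    (fun x p w => (h (x, p) w w).1) h2 (fun x p w w' => (h (x, p) w w').2)
  refine ⟨w, hw, fun p => ⟨?_, fun x => hw' x p⟩⟩
  exact hF.comp (by
    have : Continuous fun x => w x p := hw.comp (by fun_prop : Continuous fun x : ℝ => (x, p))
    fun_prop : Continuous fun x : ℝ => ((x, p), w x p))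

end

/-! ### The trajectory through the origin P₀ -/

section

/-- `M/ω` with `T = 1 - ω`, `x = -ωp`. -/
def lmf (q m w p : ℝ) : ℝ := (1 + q) - (1 - w) * p * (pB0 q m + pB1 q m * (w * p))
/-- `A₁(-ωp)` where `A = A₀ + x A₁`. -/
def lA1 (q m w p : ℝ) : ℝ := pC1 q m - pC2 q m * (w * p) + pC3 q m * (w * p) ^ 2
/-- `N/ω` with `T = 1 - ω`, `x = -ωp`. -/
def lnf (q m w p : ℝ) : ℝ := pA0 q - p * (3 * (1 + q) - (1 - w) * lA1 q m w p)
/-- The value of `p` at the origin `T = 0`. -/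
def pzero (q : ℝ) : ℝ := pA0 q / (3 * (1 + q))
/-- The field of the singular ODE at `T = 0`. -/
def lh (q m w p : ℝ) : ℝ := w * (p + p * (lA1 q m w p
  - 3 * (pB0 q m + pB1 q m * (w * p)) * (p - pzero q)) / (2 * lmf q m w p))

section
variable {q t m w p : ℝ}

theorem lmf_eq (hp : p ≠ 0) : lmf q m w p = p ^ 2 * Dmf q m w p⁻¹ := by
  unfold lmf Dmf; field_simp
theorem lnf_eq (hp : p ≠ 0) : lnf q m w p = p ^ 3 * Dnf q m w p⁻¹ := by
  unfold lnf Dnf lA1; field_simp; ring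

theorem Par.lmf_pos (h : Par q t m) (hw : 0 ≤ w) (hp : 0 < p)
    (hu : w ≤ 1 → p * (t * (1 - w / 4)) ≤ 1) : 0 < lmf q m w p := by
  rcases le_total w 1 with h1 | h1
  · rw [lmf_eq hp.ne']
    refine mul_pos (by positivity) (h.Dm_pos hw h1 ?_)
    rw [← one_div, le_div_iff₀ hp, mul_comm]
    exact hu h1
  · unfold lmf
    have := h.B0; have := h.B1; have := h.qp
    have : 0 ≤ (w - 1) * p * (pB0 q m + pB1 q m * (w * p)) := by
      have : 0 ≤ w - 1 := by linarith
      positivity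
    linarith

theorem pzero_bd (h : Par q t m) : 1 / 3 ≤ pzero q ∧ pzero q ≤ 471 / 1000 := by
  have := h.qp; have := h.hq
  unfold pzero pA0
  push_cast
  rw [le_div_iff₀ (by linarith), div_le_iff₀ (by linarith)]
  constructor <;> linarith

/-- The ODE in Briot–Bouquet form with index `3/2` at `T = 0`. -/
theorem lh_eq (hq : 0 < q) (hm : lmf q m w p ≠ 0) {s : ℝ} (hs : s * w = 1 - w) :
    s * lh q m w p - 3 / 2 * (p - pzero q) = (1 - w) * p + lnf q m w p / (2 * lmf q m w p) := by
  have hA : pA0 q = 3 * (1 + q) * pzero q := by unfold pzero; field_simp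
  have : s * lh q m w p = (1 - w) * (p + p * (lA1 q m w p
    - 3 * (pB0 q m + pB1 q m * (w * p)) * (p - pzero q)) / (2 * lmf q m w p)) := by
    rw [lh, ← mul_assoc, hs]
  rw [this]
  have e : lnf q m w p = (1 - w) * (p * (lA1 q m w p
    - 3 * (pB0 q m + pB1 q m * (w * p)) * (p - pzero q))) - 3 * (p - pzero q) * lmf q m w p := by
    rw [lnf, hA, lmf]; ring
  rw [e]; field_simp; ring
end

/-- The trajectory through `P₀`, in the variables `σ = T/(1 - T)`, `p = -x/ω`. -/
structure LeftSol (q t m : ℝ) (p : ℝ → ℝ) (ε : ℝ) : Prop where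
  ε0 : 0 < ε
  ε1 : ε ≤ 1 / 2
  zero : p 0 = pzero q
  smooth : ContDiffOn ℝ (⊤ : ℕ∞) p (Ioi (-ε))
  ode : ∀ s ∈ Ioi (-ε), ∃ d, HasDerivAt p d s ∧
    s * d = (1 - 1 / (1 + s)) * p s + lnf q m (1 / (1 + s)) (p s) / (2 * lmf q m (1 / (1 + s)) (p s))
  lo : ∀ s ∈ Ioi (-ε), 1 ≤ p s * (t + 3 * (1 / (1 + s)))
  hi : ∀ s ∈ Ioi (-ε), p s * (t * (1 - 1 / (1 + s) / 4)) ≤ 1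

theorem continuous_clampω : Continuous fun s : ℝ => 1 / (1 + max s (-1 / 2)) := by
  refine continuous_const.div (by fun_prop) fun s => ?_
  have := le_max_right s (-1 / 2)
  intro h; linarith

theorem clampω_bd (s : ℝ) : 0 < 1 / (1 + max s (-1 / 2)) ∧ 1 / (1 + max s (-1 / 2)) ≤ 2 := by
  have := le_max_right s (-1 / 2)
  have h : 1 / 2 ≤ 1 + max s (-1 / 2) := by linarith
  refine ⟨by positivity, ?_⟩
  rw [div_le_iff₀ (by linarith)]; linarith

/-- A uniform lower bound for `M/ω` between the two barriers, by compactness. -/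
theorem lmf_lower {P : Type} [PseudoMetricSpace P] [CompactSpace P] {Q Θ Μ : P → ℝ}
    (cQ : Continuous Q) (cΘ : Continuous Θ) (cM : Continuous Μ) (hP : ∀ i, Par (Q i) (Θ i) (Μ i)) :
    ∃ c > 0, ∀ w ∈ Icc (0:ℝ) 2, ∀ i, ∀ p, 1 ≤ p * (Θ i + 3 * w) → p * (Θ i * (1 - w / 4)) ≤ 1 →
      c ≤ lmf (Q i) (Μ i) w p := by
  set K : Set (ℝ × P × ℝ) := (Icc (0:ℝ) 2 ×ˢ (univ ×ˢ Icc (0:ℝ) 5)) ∩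
    {a | 1 ≤ a.2.2 * (Θ a.2.1 + 3 * a.1) ∧ a.2.2 * (Θ a.2.1 * (1 - a.1 / 4)) ≤ 1} with hK
  have hKc : IsCompact K := by
    refine (isCompact_Icc.prod (isCompact_univ.prod isCompact_Icc)).inter_right ?_
    have k1 : IsClosed {a : ℝ × P × ℝ | 1 ≤ a.2.2 * (Θ a.2.1 + 3 * a.1)} :=
      isClosed_le (by fun_prop) (by fun_prop)
    have k2 : IsClosed {a : ℝ × P × ℝ | a.2.2 * (Θ a.2.1 * (1 - a.1 / 4)) ≤ 1} :=
      isClosed_le (by fun_prop) (by fun_prop)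
    exact k1.inter k2
  have hpos : ∀ w ∈ Icc (0:ℝ) 2, ∀ i, ∀ p, 1 ≤ p * (Θ i + 3 * w) → p * (Θ i * (1 - w / 4)) ≤ 1 →
      0 < p ∧ p ≤ 5 := by
    intro w hw i p h1 h2
    have ht := (hP i).h1
    have hp : 0 < p := by
      by_contra! hc
      have := mul_nonneg_of_nonpos_of_nonpos (neg_nonpos.2 (by linarith [hw.1] : 0 ≤ Θ i + 3 * w)) hc
      linarith
    refine ⟨hp, ?_⟩
    by_contra! hc
    have : 46875 / 100000 * (1 / 2) ≤ Θ i * (1 - w / 4) :=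
      mul_le_mul ht (by linarith [hw.2]) (by norm_num) (by linarith)
    nlinarith
  have hcont : Continuous fun a : ℝ × P × ℝ => lmf (Q a.2.1) (Μ a.2.1) a.1 a.2.2 := by
    unfold lmf pB0 pB1; fun_prop
  obtain ⟨c, hc, h⟩ := hKc.exists_forall_le' (a := 0) hcont.continuousOn (by
    rintro ⟨w, i, p⟩ ⟨⟨hw, -⟩, h1, h2⟩
    exact (hP i).lmf_pos hw.1 (hpos w hw i p h1 h2).1 fun _ => h2)
  refine ⟨c, hc, fun w hw i p h1 h2 => ?_⟩
  obtain ⟨h3, h4⟩ := hpos w hw i p h1 h2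
  exact h (w, i, p) ⟨⟨hw, mem_univ _, h3.le, h4⟩, h1, h2⟩

theorem LB.ofP {P : Type} [PseudoMetricSpace P] [CompactSpace P] {c : P → ℝ} (hc : Continuous c) :
    LB fun (x : ℝ × P) (_ : ℝ) => c x.2 := by
  obtain ⟨B, hB⟩ := isCompact_univ.exists_bound_of_continuousOn hc.continuousOn
  exact LB.const (c := fun x : ℝ × P => c x.2) (B := B) fun x => hB x.2 (mem_univ _)

set_option maxHeartbeats 1000000 in
/-- The Briot–Bouquet fixed point of the field truncated to the strip between the barriers. The barriers keep
the solution in the strip, so the truncation is inactive. -/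
theorem left_exists {P : Type} [PseudoMetricSpace P] [CompactSpace P] {Q Θ Μ : P → ℝ}
    (cQ : Continuous Q) (cΘ : Continuous Θ) (cM : Continuous Μ) (hP : ∀ i, Par (Q i) (Θ i) (Μ i)) :
    ∃ p : ℝ → P → ℝ, Continuous (Function.uncurry p) ∧
      ∀ i, ∃ ε, LeftSol (Q i) (Θ i) (Μ i) (fun s => p s i) ε := by
  obtain ⟨c, hc, hcl⟩ := lmf_lower cQ cΘ cM hP
  set om : ℝ → ℝ := fun s => 1 / (1 + max s (-1 / 2)) with hom
  have com : Continuous om := continuous_clampω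
  have omb : ∀ s, 0 < om s ∧ om s ≤ 2 := clampω_bd
  set lo : ℝ × P → ℝ := fun x => 1 / (Θ x.2 + 3 * om x.1) with hlo
  set hi : ℝ × P → ℝ := fun x => 1 / (Θ x.2 * (1 - om x.1 / 4)) with hhi
  have dlo : ∀ x : ℝ × P, 2 / 5 ≤ Θ x.2 + 3 * om x.1 := fun x => by
    linarith [(hP x.2).h1, (omb x.1).1]
  have dhi : ∀ x : ℝ × P, 1 / 5 ≤ Θ x.2 * (1 - om x.1 / 4) := fun x => by
    calc (1 / 5 : ℝ) ≤ 2 / 5 * (1 / 2) := by norm_num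
      _ ≤ _ := mul_le_mul (by linarith [(hP x.2).h1]) (by linarith [(omb x.1).2]) (by norm_num)
          (by linarith [(hP x.2).h1])
  have lohi : ∀ x, lo x ≤ hi x := fun x => by
    refine one_div_le_one_div_of_le (by linarith [dhi x]) ?_
    have := mul_pos (hP x.2).tp (omb x.1).1
    nlinarith [(omb x.1).1]
  have blo : ∀ x, |lo x| ≤ 5 := fun x => by
    have := dlo x
    rw [abs_of_nonneg (one_div_nonneg.2 (by linarith)), hlo]
    simp only
    rw [div_le_iff₀ (by linarith)]; linarith
  have bhi : ∀ x, |hi x| ≤ 5 := fun x => by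
    have := dhi x
    rw [abs_of_nonneg (one_div_nonneg.2 (by linarith)), hhi]
    simp only
    rw [div_le_iff₀ (by linarith)]; linarith
  set ph : ℝ × P → ℝ → ℝ := fun x w => max (lo x) (min (hi x) (pzero (Q x.2) + w)) with hph
  have lph : LB ph := LB.clamp blo bhi
  have phlo : ∀ x w, lo x ≤ ph x w := fun x w => le_max_left _ _
  have phhi : ∀ x w, ph x w ≤ hi x := fun x w => max_le (lohi x) (min_le_left _ _)
  have hm : ∀ x w, c ≤ lmf (Q x.2) (Μ x.2) (om x.1) (ph x w) := fun x w => by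
    refine hcl _ ⟨(omb x.1).1.le, (omb x.1).2⟩ _ _ ?_ ?_
    · rw [← div_le_iff₀ (by linarith [dlo x])]; exact phlo x w
    · rw [← le_div_iff₀ (by linarith [dhi x])]; exact phhi x w
  have cpz : Continuous fun i => pzero (Q i) := by
    unfold pzero pA0
    push_cast
    refine Continuous.div (by fun_prop) (by fun_prop) fun i => ?_
    have := (hP i).qp
    positivity
  have cB0 : Continuous fun i => pB0 (Q i) (Μ i) := by unfold pB0; fun_prop
  have cB1 : Continuous fun i => pB1 (Q i) (Μ i) := by unfold pB1; fun_prop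
  have cC1 : Continuous fun i => pC1 (Q i) (Μ i) := by unfold pC1 pA0; fun_prop
  have cC2 : Continuous fun i => pC2 (Q i) (Μ i) := by unfold pC2 pA0; fun_prop
  have cC3 : Continuous fun i => pC3 (Q i) (Μ i) := by unfold pC3; fun_prop
  set F : ℝ × P → ℝ → ℝ := fun x w => lh (Q x.2) (Μ x.2) (om x.1) (ph x w) with hF
  have clo : Continuous lo :=
    continuous_const.div (by fun_prop) fun x => by have := dlo x; intro h; linarith
  have chi : Continuous hi :=
    continuous_const.div (by fun_prop) fun x => by have := dhi x; intro h; linarith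
  have cph : Continuous (Function.uncurry ph) := by
    exact (clo.comp continuous_fst).max ((chi.comp continuous_fst).min
      ((cpz.comp (continuous_snd.comp continuous_fst)).add continuous_snd))
  have cF : Continuous (Function.uncurry F) := by
    simp only [Function.uncurry_def] at cph
    simp only [hF, Function.uncurry_def, lh]
    have ci : Continuous fun a : (ℝ × P) × ℝ => a.1.2 := by fun_prop
    have k0 := cB0.comp ci
    have k1 := cB1.comp ci
    have k2 := cC1.comp ci
    have k3 := cC2.comp ci
    have k4 := cC3.comp ci
    have k5 := cpz.comp ci
    have k6 := cQ.comp ci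
    have k7 : Continuous fun a : (ℝ × P) × ℝ => om a.1.1 := by fun_prop
    simp only [Function.comp_def] at k0 k1 k2 k3 k4 k5 k6
    have hmc : Continuous fun a : (ℝ × P) × ℝ =>
        lmf (Q a.1.2) (Μ a.1.2) (om a.1.1) (ph a.1 a.2) := by
      exact (continuous_const.add k6).sub (((continuous_const.sub k7).mul cph).mul
        (k0.add (k1.mul (k7.mul cph))))
    have hAc : Continuous fun a : (ℝ × P) × ℝ =>
        lA1 (Q a.1.2) (Μ a.1.2) (om a.1.1) (ph a.1 a.2) := by
      exact (k2.sub (k3.mul (k7.mul cph))).add (k4.mul ((k7.mul cph).pow 2))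
    refine k7.mul (cph.add (Continuous.div (cph.mul (hAc.sub ((continuous_const.mul
      (k0.add (k1.mul (k7.mul cph)))).mul (cph.sub k5)))) (continuous_const.mul hmc) ?_))
    intro a
    have := hm a.1 a.2
    intro h; linarith
  have lom : LB fun (x : ℝ × P) (_ : ℝ) => om x.1 := LB.const (c := fun x : ℝ × P => om x.1) (B := 2) fun x => by
    rw [abs_of_pos (omb x.1).1]; exact (omb x.1).2
  have lF : LB F := by
    have b0 := LB.ofP cB0
    have b1 := LB.ofP cB1
    have c1 := LB.ofP cC1
    have c2 := LB.ofP cC2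
    have c3 := LB.ofP cC3
    have lq := LB.ofP cQ
    have pz := LB.ofP cpz
    have one := LB.real (X := ℝ × P) 1
    have two := LB.real (X := ℝ × P) 2
    have three := LB.real (X := ℝ × P) 3
    have lm : LB fun x w => lmf (Q x.2) (Μ x.2) (om x.1) (ph x w) :=
      (one.add lq).sub (((one.sub lom).mul lph).mul (b0.add (b1.mul (lom.mul lph))))
    have lA : LB fun x w => lA1 (Q x.2) (Μ x.2) (om x.1) (ph x w) :=
      (c1.sub (c2.mul (lom.mul lph))).add (c3.mul ((lom.mul lph).pow 2))
    exact lom.mul (lph.add ((lph.mul (lA.sub ((three.mul (b0.add (b1.mul (lom.mul lph)))).mul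
      (lph.sub pz)))).div (two.mul lm) (c := 2 * c) (by linarith) fun x w =>
        mul_le_mul_of_nonneg_left (hm x w) zero_le_two))
  obtain ⟨w, cw, hw⟩ := bb_exists' (μ₀ := 3 / 2) (by norm_num) F cF lF
  refine ⟨fun s i => pzero (Q i) + w s i, ?_, fun i => ?_⟩
  · simp only [Function.uncurry_def] at cw ⊢
    exact (cpz.comp continuous_snd).add cw
  obtain ⟨cH, hwi⟩ := hw i
  have hpar := hP i
  set H : ℝ → ℝ := fun s => F (s, i) (w s i) with hH
  set p : ℝ → ℝ := fun s => pzero (Q i) + w s i with hp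
  have cp : Continuous p := continuous_const.add (cw.comp (by fun_prop : Continuous fun s : ℝ => (s, i)))
  have hw0 : w 0 i = 0 := by rw [hwi, zero_mul]
  have hdw : ∀ s, HasDerivAt p (H s - 3 / 2 * bbV (3 / 2) H s) s := fun s => by
    have h1 := hasDerivAt_mul_bbV (μ := 3 / 2) (by norm_num) cH s
    have h2 : p = fun s => pzero (Q i) + s * bbV (3 / 2) H s := funext fun s => by
      simp only [hp]; rw [← hwi]
    rw [h2]; exact h1.const_add _
  -- inside the barriers the clamped field is the true one
  have hin : ∀ s, ph (s, i) (w s i) = p s → -1 / 2 ≤ s →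
      s * (H s - 3 / 2 * bbV (3 / 2) H s) = (1 - 1 / (1 + s)) * p s
        + lnf (Q i) (Μ i) (1 / (1 + s)) (p s) / (2 * lmf (Q i) (Μ i) (1 / (1 + s)) (p s)) := by
    intro s h1 h2
    have ho : om s = 1 / (1 + s) := by simp only [hom, max_eq_left h2]
    have hs : 1 + s ≠ 0 := by intro h; linarith
    have hmm := hm (s, i) (w s i)
    simp only [h1, ho] at hmm
    rw [← lh_eq (s := s) hpar.qp (by intro h; linarith) (by field_simp; ring)]
    have e1 : H s = lh (Q i) (Μ i) (1 / (1 + s)) (p s) := by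
      simp only [hH, hF, h1, ho]
    have e2 : p s - pzero (Q i) = s * bbV (3 / 2) H s := by
      rw [← hwi]; simp only [hp]; ring
    rw [← e1, e2]; ring
  have homs : ∀ s, -1 / 2 ≤ s → om s = 1 / (1 + s) := fun s hs => by simp only [hom, max_eq_left hs]
  obtain ⟨pz1, pz2⟩ := pzero_bd hpar
  have hom0 : om 0 = 1 := by rw [homs 0 (by norm_num)]; norm_num
  have hlo0 : lo (0, i) < p 0 := by
    simp only [hlo, hp, hw0, hom0]
    rw [div_lt_iff₀ (by linarith [hpar.h1])]
    nlinarith [hpar.h1]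
  have hhi0 : p 0 < hi (0, i) := by
    simp only [hhi, hp, hw0, hom0]
    rw [lt_div_iff₀ (by linarith [hpar.h1])]
    nlinarith [hpar.h1, hpar.h2]
  have dom : ∀ s : ℝ, 0 ≤ s → HasDerivAt (fun s : ℝ => 1 / (1 + s)) (-(1 / (1 + s)) ^ 2) s := by
    intro s hs
    have hs1 : 1 + s ≠ 0 := by positivity
    have := ((hasDerivAt_id s).const_add 1).inv hs1
    simp only [one_div]
    refine this.congr_deriv ?_
    simp only [id]; field_simp
  have hupp : ∀ s, 0 ≤ s → p s ≤ hi (s, i) := by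
    intro b hb
    set hi' : ℝ → ℝ := fun s => 1 / (Θ i * (1 - 1 / (1 + s) / 4)) with hhi'
    have hhe : ∀ s, 0 ≤ s → hi (s, i) = hi' s := fun s hs => by
      simp only [hhi, hhi', homs s (by linarith)]
    have hden : ∀ s, 0 ≤ s → 0 < Θ i * (1 - 1 / (1 + s) / 4) := fun s hs => by
      have := dhi (s, i)
      simp only [homs s (by linarith)] at this
      linarith
    have hBd : ∀ s, 0 ≤ s → HasDerivAt hi' (-(Θ i * (1 / (1 + s)) ^ 2 / 4) / (Θ i * (1 - 1 / (1 + s) / 4)) ^ 2) s := by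
      intro s hs
      have h1 := ((((dom s hs).div_const 4).const_sub 1).const_mul (Θ i)).inv (hden s hs).ne'
      simp only [hhi', one_div] at h1 ⊢
      refine h1.congr_deriv ?_
      ring
    rw [hhe b hb]
    refine image_le_of_deriv_right_lt_deriv_boundary' (a := 0) (b := b) cp.continuousOn
      (fun s _ => (hdw s).hasDerivWithinAt) (by rw [← hhe 0 le_rfl]; exact hhi0.le)
      (fun s hs => (hBd s hs.1).continuousAt.continuousWithinAt)
      (fun s hs => (hBd s hs.1).hasDerivWithinAt) ?_ ⟨hb, le_rfl⟩
    intro s hs heq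
    rcases hs.1.eq_or_lt with h0 | h0
    · rw [← h0, ← hhe 0 le_rfl] at heq
      exact absurd heq hhi0.ne
    have hph1 : ph (s, i) (w s i) = p s := by
      simp only [hph]
      have e : pzero (Q i) + w s i = hi (s, i) := by rw [hhe s hs.1, ← heq]
      rw [e, min_self, max_eq_right (lohi _), hhe s hs.1, heq]
    have hE := hin s hph1 (by linarith)
    have hw1 : 0 < 1 / (1 + s) := by positivity
    have hw2 : 1 / (1 + s) ≤ 1 := by rw [div_le_one (by linarith)]; linarith
    have hbar := hpar.lower hw1 hw2
    have hsw : s * (1 / (1 + s)) = 1 - 1 / (1 + s) := by field_simp; ring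
    set om1 := 1 / (1 + s) with hom1
    set u := Θ i * (1 - om1 / 4) with hu
    have hup : 0 < u := hden s hs.1
    have hpu : p s = u⁻¹ := by rw [heq]; simp only [hhi', one_div, hu, hom1]
    have hDm := hpar.Dm_pos hw1.le hw2 (u := u) le_rfl
    rw [hpu, lnf_eq (inv_ne_zero hup.ne'), lmf_eq (inv_ne_zero hup.ne'), inv_inv] at hE
    refine lt_of_mul_lt_mul_left ?_ h0.le
    rw [hE]
    have e : s * (-(Θ i * om1 ^ 2 / 4) / u ^ 2) = -(Θ i * om1 * (s * om1) / 4) / u ^ 2 := by ring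
    rw [e, hsw, ← sub_pos]
    have e2 : -(Θ i * om1 * (1 - om1) / 4) / u ^ 2 - ((1 - om1) * u⁻¹ +
        u⁻¹ ^ 3 * Dnf (Q i) (Μ i) om1 u / (2 * (u⁻¹ ^ 2 * Dmf (Q i) (Μ i) om1 u))) =
      -(2 * (1 - om1) * (u + Θ i * om1 / 4) * Dmf (Q i) (Μ i) om1 u + u * Dnf (Q i) (Μ i) om1 u) /
        (2 * u ^ 2 * Dmf (Q i) (Μ i) om1 u) := by
      field_simp; ring
    rw [e2]
    refine div_pos ?_ (by positivity)
    have : u + Θ i * om1 / 4 = Θ i := by rw [hu]; ring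
    rw [this]; linarith
  have hlow : ∀ s, 0 ≤ s → lo (s, i) ≤ p s := by
    intro b hb
    set lo' : ℝ → ℝ := fun s => 1 / (Θ i + 3 * (1 / (1 + s))) with hlo'
    have hhe : ∀ s, 0 ≤ s → lo (s, i) = lo' s := fun s hs => by
      simp only [hlo, hlo', homs s (by linarith)]
    have hden : ∀ s, 0 ≤ s → 0 < Θ i + 3 * (1 / (1 + s)) := fun s hs => by
      have := dlo (s, i)
      simp only [homs s (by linarith)] at this
      linarith
    have hBd : ∀ s, 0 ≤ s → HasDerivAt lo' ((3 * (1 / (1 + s)) ^ 2) / (Θ i + 3 * (1 / (1 + s))) ^ 2) s := by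
      intro s hs
      have h1 := (((dom s hs).const_mul 3).const_add (Θ i)).inv (hden s hs).ne'
      simp only [hlo', one_div] at h1 ⊢
      refine h1.congr_deriv ?_
      ring
    rw [hhe b hb]
    refine image_le_of_deriv_right_lt_deriv_boundary' (a := 0) (b := b)
      (fun s hs => (hBd s hs.1).continuousAt.continuousWithinAt)
      (fun s hs => (hBd s hs.1).hasDerivWithinAt) (by rw [← hhe 0 le_rfl]; exact hlo0.le)
      cp.continuousOn (fun s _ => (hdw s).hasDerivWithinAt) ?_ ⟨hb, le_rfl⟩
    intro s hs heq
    rcases hs.1.eq_or_lt with h0 | h0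
    · rw [← h0, ← hhe 0 le_rfl] at heq
      exact absurd heq hlo0.ne
    have hph1 : ph (s, i) (w s i) = p s := by
      simp only [hph]
      have e : pzero (Q i) + w s i = lo (s, i) := by rw [hhe s hs.1, heq]
      rw [e, min_eq_right (lohi _), max_self, hhe s hs.1, heq]
    have hE := hin s hph1 (by linarith)
    have hw1 : 0 < 1 / (1 + s) := by positivity
    have hw2 : 1 / (1 + s) ≤ 1 := by rw [div_le_one (by linarith)]; linarith
    have hbar := hpar.upper hw1 hw2
    have hsw : s * (1 / (1 + s)) = 1 - 1 / (1 + s) := by field_simp; ring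
    set om1 := 1 / (1 + s) with hom1
    set u := Θ i + 3 * om1 with hu
    have hup : 0 < u := hden s hs.1
    have hpu : p s = u⁻¹ := by rw [← heq]; simp only [hlo', one_div, hu, hom1]
    have hDm := hpar.Dm_pos hw1.le hw2 (u := u) (by
      have := mul_pos hpar.tp hw1
      rw [hu]; nlinarith)
    rw [hpu, lnf_eq (inv_ne_zero hup.ne'), lmf_eq (inv_ne_zero hup.ne'), inv_inv] at hE
    refine lt_of_mul_lt_mul_left ?_ h0.le
    rw [hE]
    have e : s * ((3 * om1 ^ 2) / u ^ 2) = 3 * om1 * (s * om1) / u ^ 2 := by ring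
    rw [e, hsw, ← sub_pos]
    have e2 : ((1 - om1) * u⁻¹ +
        u⁻¹ ^ 3 * Dnf (Q i) (Μ i) om1 u / (2 * (u⁻¹ ^ 2 * Dmf (Q i) (Μ i) om1 u)))
         - 3 * om1 * (1 - om1) / u ^ 2 =
      (2 * (1 - om1) * (u - 3 * om1) * Dmf (Q i) (Μ i) om1 u + u * Dnf (Q i) (Μ i) om1 u) /
        (2 * u ^ 2 * Dmf (Q i) (Μ i) om1 u) := by
      field_simp; ring
    rw [e2]
    refine div_pos ?_ (by positivity)
    have : u - 3 * om1 = Θ i := by rw [hu]; ring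
    rw [this]; linarith
  have hnear : ∀ᶠ s in 𝓝 (0:ℝ), lo (s, i) < p s ∧ p s < hi (s, i) ∧ -1 / 2 < s := by
    have k1 : ContinuousAt (fun s => lo (s, i)) 0 :=
      (clo.comp (by fun_prop : Continuous fun s : ℝ => (s, i))).continuousAt
    have k2 : ContinuousAt (fun s => hi (s, i)) 0 :=
      (chi.comp (by fun_prop : Continuous fun s : ℝ => (s, i))).continuousAt
    exact (k1.eventually_lt cp.continuousAt hlo0).and
      ((cp.continuousAt.eventually_lt k2 hhi0).and (lt_mem_nhds (by norm_num)))
  obtain ⟨ε, hε, hεb⟩ := Metric.eventually_nhds_iff.1 hnear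
  have hall : ∀ s ∈ Ioi (-(min ε (1 / 2))), lo (s, i) ≤ p s ∧ p s ≤ hi (s, i) ∧ -1 / 2 < s := by
    intro s hs
    simp only [mem_Ioi] at hs
    have h1 : -ε < s := by linarith [min_le_left ε (1 / 2)]
    have h2 : -1 / 2 < s := by linarith [min_le_right ε (1 / 2)]
    rcases le_or_gt 0 s with h0 | h0
    · exact ⟨hlow s h0, hupp s h0, h2⟩
    · have := hεb (y := s) (by rw [Real.dist_eq, sub_zero, abs_of_neg h0]; linarith)
      exact ⟨this.1.le, this.2.1.le, h2⟩
  have hphp : ∀ s ∈ Ioi (-(min ε (1 / 2))), ph (s, i) (w s i) = p s := fun s hs => by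
    obtain ⟨h1, h2, h3⟩ := hall s hs
    simp only [hph]
    change max _ (min _ (p s)) = _
    rw [min_eq_right h2, max_eq_right h1]
  have hm' : ∀ s ∈ Ioi (-(min ε (1 / 2))), lmf (Q i) (Μ i) (1 / (1 + s)) (p s) ≠ 0 := fun s hs => by
    have := hm (s, i) (w s i)
    rw [hphp s hs, homs s (hall s hs).2.2.le] at this
    intro h; linarith
  refine ⟨min ε (1 / 2), lt_min hε (by norm_num), min_le_right _ _, by simp [hp, hw0], ?_, fun s hs =>
    ⟨_, hdw s, hin s (hphp s hs) (hall s hs).2.2.le⟩, fun s hs => ?_, fun s hs => ?_⟩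
  · refine contDiffOn_const.add (contDiffOn_of_bb (μ := 3 / 2) (by norm_num) cH hwi isOpen_Ioi ?_ ?_)
    · intro x hx s hs
      simp only [mem_Ioi] at hx ⊢
      have : 0 < min ε (1 / 2) := lt_min hε (by norm_num)
      rcases le_or_gt 0 x with h0 | h0
      · have := mul_nonneg h0 hs.1; linarith
      · nlinarith [hs.2]
    · intro n hn
      have hHe : ∀ s ∈ Ioi (-(min ε (1 / 2))), H s = lh (Q i) (Μ i) (1 / (1 + s)) (p s) := fun s hs => by
        simp only [hH, hF, hphp s hs, homs s (hall s hs).2.2.le]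
      refine ContDiffOn.congr ?_ hHe
      have hpn : ContDiffOn ℝ n p (Ioi (-(min ε (1 / 2)))) := contDiffOn_const.add hn
      have hon : ContDiffOn ℝ n (fun s : ℝ => 1 / (1 + s)) (Ioi (-(min ε (1 / 2)))) :=
        contDiffOn_const.div (by fun_prop) fun s hs => by
          have := (hall s hs).2.2
          intro h; linarith
      unfold lh
      refine hon.mul (hpn.add (ContDiffOn.div ?_ ?_ fun s hs => mul_ne_zero two_ne_zero (hm' s hs)))
      · unfold lA1; fun_prop
      · unfold lmf; fun_prop
  · have := (hall s hs).1
    simp only [hlo, homs s (hall s hs).2.2.le] at this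
    have h2 := dlo (s, i)
    simp only [homs s (hall s hs).2.2.le] at h2
    rwa [div_le_iff₀ (by linarith)] at this
  · have := (hall s hs).2.1
    simp only [hhi, homs s (hall s hs).2.2.le] at this
    have h2 := dhi (s, i)
    simp only [homs s (hall s hs).2.2.le] at h2
    rwa [le_div_iff₀ (by linarith)] at this

end

/-! ### Normal form at the sonic point -/

section

/-- The exponent `κ = k - 1`. -/
def kap (q t m : ℝ) : ℝ := pK q t / pL q t m - 1
/-! The coefficients of the normal form `z dy/dz = κ y + a₂ z² + a₁₁ z y + a₃ z³ + R`. -/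
def sB1 (q t m : ℝ) : ℝ := 4 * pB0 q m - 4 * t * (1 + q) - t * pC1 q m - 2 * bT q t m * pA0 q
  + pN2 q t m (bT q t m)
def sa2 (q t m : ℝ) : ℝ := -pR3 q t m (bT q t m) / pL q t m
def sa11 (q t m : ℝ) : ℝ := (sB1 q t m + kap q t m * pN2 q t m (bT q t m)) / pL q t m
def sa3 (q t m : ℝ) : ℝ :=
  (h40 q t m (bT q t m) + sa2 q t m * pN2 q t m (bT q t m)) / pL q t m

/-- `A(-z)`. -/
def sA (q m z : ℝ) : ℝ := pA0 q - pC1 q m * z + pC2 q m * z ^ 2 - pC3 q m * z ^ 3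
/-- `T` in terms of `z = -x` and `y`. -/
def sT (q t m z y : ℝ) : ℝ := 1 - t * z + bT q t m * z ^ 2 - z * y
/-! The remainder `R` is `(y² sG1 + y z² sG2 + z⁴ sG3)` divided by `-N/z`. -/
def sDr (q t m z : ℝ) : ℝ := -(pC3 q m + t * pC2 q m + bT q t m * pC1 q m)
  + (t * pC3 q m + bT q t m * pC2 q m) * z - bT q t m * pC3 q m * z ^ 2
/-- `-N/z`. -/
def sDen (q t m z y : ℝ) : ℝ :=
  pL q t m - pN2 q t m (bT q t m) * z + sDr q t m z * z ^ 2 - sA q m z * y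
def sBr (q t m z : ℝ) : ℝ :=
  (-4 * pM2 q t m (bT q t m) + t * pC2 q m + 2 * bT q t m * pC1 q m
    + (pC3 q m + t * pC2 q m + bT q t m * pC1 q m))
  - (4 * (t * pB1 q m - bT q t m * pB0 q m) + t * pC3 q m + 2 * bT q t m * pC2 q m
    + (t * pC3 q m + bT q t m * pC2 q m)) * z
  + (4 * bT q t m * pB1 q m + 3 * bT q t m * pC3 q m) * z ^ 2
def sG1 (q t m z : ℝ) : ℝ := sA q m z - 2 * z * ((1 + q) + pB0 q m * z + pB1 q m * z ^ 2)
  + sA q m z * (kap q t m + sa11 q t m * z)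
def sG2 (q t m z : ℝ) : ℝ := sBr q t m z - kap q t m * sDr q t m z
  - sa11 q t m * (-pN2 q t m (bT q t m) + z * sDr q t m z) + sA q m z * (sa2 q t m + sa3 q t m * z)
def sG3 (q t m z : ℝ) : ℝ := -h50 q t m (bT q t m) + h60 q m (bT q t m) * z
  - sDr q t m z * sa2 q t m - sa3 q t m * (-pN2 q t m (bT q t m) + z * sDr q t m z)

section
variable {q t m z y w p : ℝ}

theorem sDen_eq : Nf q m (sT q t m z y) (-z) = -z * sDen q t m z y := by
  unfold Nf sT sDen sDr sA pL pN2 pC1 pA0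
  push_cast
  ring

theorem E0_eq : 2 * (pB0 q m - t * (1 + q)) + t * pL q t m = pDen q t * m - pNum q t := by
  unfold pB0 pL pDen pNum pA0
  push_cast
  ring

theorem Par.e0 (h : Par q t m) : 2 * (pB0 q m - t * (1 + q)) + t * pL q t m = 0 := by
  rw [E0_eq, h.dom.num]; ring

/-- The identity behind the normal form: `2 T M` minus the contribution of the principal terms is of the
order of the remainder. -/
theorem sMN (h : Par q t m) :
    2 * sT q t m z y * Mf q m (sT q t m z y) (-z) - z * sDen q t m z y *
      (y + t - 2 * bT q t m * z + (kap q t m * y + sa2 q t m * z ^ 2 + sa11 q t m * z * y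
        + sa3 q t m * z ^ 3)) =
    z * (y ^ 2 * sG1 q t m z + y * z ^ 2 * sG2 q t m z + z ^ 4 * sG3 q t m z) := by
  have hl := h.lam.ne'
  have e0 := h.e0
  have e1 : pR2 q t m - pS2 q t m * bT q t m = 0 := by
    rw [bT, mul_div_cancel₀ _ h.S2p.ne', sub_self]
  have e2 : kap q t m * pL q t m = pK q t - pL q t m := by unfold kap; field_simp
  have e3 : sa2 q t m * pL q t m = - pR3 q t m (bT q t m) := by unfold sa2; field_simp
  have e4 : sa11 q t m * pL q t m = sB1 q t m + kap q t m * pN2 q t m (bT q t m) := by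
    unfold sa11; field_simp
  have e5 : sa3 q t m * pL q t m = h40 q t m (bT q t m) + sa2 q t m * pN2 q t m (bT q t m) := by
    unfold sa3; field_simp
  have hid := h_identity q t m 0 (bT q t m) (-z)
  rw [← E0_eq, e0, e1] at hid
  unfold sG1 sG2 sG3 
  generalize kap q t m = k at *
  generalize sa2 q t m = a2 at *
  generalize sa11 q t m = a11 at *
  generalize sa3 q t m = a3 at *
  unfold sB1 at e4
  unfold sDen sT Mf sBr sDr sA
  generalize bT q t m = b at *
  have hL : pL q t m = 3 * (1 + q) - pC1 q m - t * pA0 q := by unfold pL pC1 pA0; push_cast; ring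
  have hN2 : pN2 q t m b = - b * pA0 q - t * pC1 q m - pC2 q m := by unfold pN2; push_cast; ring
  have hM2 : pM2 q t m b = t * pB0 q m - b * (1 + q) - pB1 q m := by unfold pM2; push_cast; ring
  have hK : pK q t = 2 * (1 + q) + t * pA0 q := by unfold pK; push_cast; ring
  rw [hK] at e2
  generalize pR3 q t m b = r3 at *
  generalize h40 q t m b = r4 at *
  generalize h50 q t m b = r5 at *
  generalize h60 q m b = r6 at *
  rw [hM2]
  rw [hN2] at e4 e5 ⊢
  rw [hL] at e0 e2 e3 e4 e5 ⊢
  clear hN2 hL hK hM2 e1 hl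
  generalize pC1 q m = c1 at *
  generalize pC2 q m = c2 at *
  generalize pC3 q m = c3 at *
  generalize pB0 q m = b0 at *
  generalize pB1 q m = b1 at *
  generalize pA0 q = a0 at *
  linear_combination hid - z * y * e2 - z ^ 3 * e3 - z ^ 2 * y * e4 - z ^ 4 * e5
end

end

/-! ### The left trajectory near the sonic point -/

section

/-- `z = -x` along the left trajectory, as a function of `s = ω = 1 - T`. -/
def zt (p : ℝ → ℝ) (s : ℝ) : ℝ := s * p (1 / s - 1)
/-- `y` along the left trajectory, defined by `T = 1 - t z + b z² - z y`. -/
def yt (q t m : ℝ) (p : ℝ → ℝ) (s : ℝ) : ℝ := 1 / p (1 / s - 1) - t + bT q t m * zt p s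
/-- The derivative `dz/ds` along the left trajectory. -/
def ρt (q m : ℝ) (p : ℝ → ℝ) (s : ℝ) : ℝ :=
  -lnf q m s (p (1 / s - 1)) / (2 * (1 - s) * lmf q m s (p (1 / s - 1)))
/-- The remainder of the normal form. -/
def Rt (q t m : ℝ) (z y : ℝ) : ℝ :=
  (y ^ 2 * sG1 q t m z + y * z ^ 2 * sG2 q t m z + z ^ 4 * sG3 q t m z) / sDen q t m z y

section
variable {q t m s ε : ℝ} {p : ℝ → ℝ}

theorem LeftSol.pos (h : Par q t m) (hp : LeftSol q t m p ε) {σ : ℝ} (hσ : -ε < σ) : 0 < p σ := by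
  have h1 := hp.lo σ hσ
  have := hp.ε1
  have h2 : 0 < t + 3 * (1 / (1 + σ)) := by
    have : 0 < 1 / (1 + σ) := one_div_pos.2 (by linarith)
    linarith [h.tp]
  by_contra! hc
  have := mul_nonneg_of_nonpos_of_nonpos hc (neg_nonpos.2 h2.le)
  linarith

theorem LeftSol.at (h : Par q t m) (hp : LeftSol q t m p ε) (hs : s ∈ Ioc (0:ℝ) (1 / 2)) :
    0 < p (1 / s - 1) ∧ 1 ≤ p (1 / s - 1) * (t + 3 * s) ∧ p (1 / s - 1) * (t * (1 - s / 4)) ≤ 1 ∧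
    HasDerivAt (zt p) (ρt q m p s) s ∧ HasDerivAt (fun s => p (1 / s - 1))
      ((ρt q m p s - p (1 / s - 1)) / s) s := by
  have hs0 := hs.1
  have h1 : -ε < 1 / s - 1 := by
    have : 2 ≤ 1 / s := by rw [le_div_iff₀ hs0]; linarith [hs.2]
    linarith [hp.ε0]
  have e : 1 / (1 + (1 / s - 1)) = s := by field_simp; ring
  have a1 := hp.lo _ h1
  have a2 := hp.hi _ h1
  obtain ⟨d, hd, hode⟩ := hp.ode _ h1
  rw [e] at a1 a2 hode
  have hpos := LeftSol.pos h hp h1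
  have hm := h.lmf_pos hs0.le hpos (fun _ => a2)
  have hT : 0 < 1 - s := by linarith [hs.2]
  have hin : HasDerivAt (fun s : ℝ => 1 / s - 1) (-(1 / s ^ 2)) s := by
    have := (hasDerivAt_inv hs0.ne').sub_const 1
    simp only [one_div]
    exact this
  have hc : HasDerivAt (fun s => p (1 / s - 1)) (d * (-(1 / s ^ 2))) s := hd.comp s hin
  have hdd : d = ((1 - s) * p (1 / s - 1) + lnf q m s (p (1 / s - 1)) /
      (2 * lmf q m s (p (1 / s - 1)))) * s / (1 - s) := by
    rw [← hode]; field_simp; try ring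
  have hc' : HasDerivAt (fun s => p (1 / s - 1)) ((ρt q m p s - p (1 / s - 1)) / s) s := by
    refine hc.congr_deriv ?_
    rw [hdd, ρt]
    field_simp; ring
  refine ⟨hpos, a1, a2, ?_, hc'⟩
  refine ((hasDerivAt_id s).mul hc').congr_deriv ?_
  simp only [id]
  field_simp; ring

/-- The algebra turning the equation in `(s, p)` into the normal form in `(z, y)`. -/
theorem dy_alg {s p t b z y T lm ln ρ Den E G : ℝ} (hs : s ≠ 0) (hp : p ≠ 0) (hT : T ≠ 0)
    (hlm : lm ≠ 0) (hDen : Den ≠ 0) (hz : z = s * p) (hy : y = 1 / p - t + b * z)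
    (hln : ln = -p * Den) (hρ : ρ = -ln / (2 * T * lm))
    (hE : 2 * T * (s * lm) - z * Den * (y + t - 2 * b * z + E) = z * G) :
    -((ρ - p) / s) / p ^ 2 + b * ρ = ρ / z * (E + G / Den) := by
  have hz0 : z ≠ 0 := by rw [hz]; exact mul_ne_zero hs hp
  have hG : G = (2 * T * (s * lm) - z * Den * (y + t - 2 * b * z + E)) / z := by
    rw [hE]; field_simp
  rw [hG, hρ, hln, hy, hz]
  field_simp
  ring

/-- Uniform constants for the trajectories near the sonic point. -/
structure SBd (q t m B l c : ℝ) : Prop where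
  B1 : 1 ≤ B
  l0 : 0 < l
  c0 : 0 < c
  lam : l ≤ pL q t m
  lamB : pL q t m ≤ B
  lm : ∀ w ∈ Icc (0:ℝ) 2, ∀ p, 1 ≤ p * (t + 3 * w) → p * (t * (1 - w / 4)) ≤ 1 → c ≤ lmf q m w p
  b : |bT q t m| ≤ B
  n2 : |pN2 q t m (bT q t m)| ≤ B
  a2 : |sa2 q t m| ≤ B
  a11 : |sa11 q t m| ≤ B
  a3 : |sa3 q t m| ≤ B
  A : ∀ z ∈ Icc (0:ℝ) 5, |sA q m z| ≤ B
  Dr : ∀ z ∈ Icc (0:ℝ) 5, |sDr q t m z| ≤ B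
  G1 : ∀ z ∈ Icc (0:ℝ) 5, |sG1 q t m z| ≤ B
  G2 : ∀ z ∈ Icc (0:ℝ) 5, |sG2 q t m z| ≤ B
  G3 : ∀ z ∈ Icc (0:ℝ) 5, |sG3 q t m z| ≤ B

/-- A positive time below which the trajectories are controlled. -/
def s0f (B l : ℝ) : ℝ := min (1 / 2) (l / (5 * (B * (15 + B))))

theorem LeftSol.bds {B l c : ℝ} (h : Par q t m) (hp : LeftSol q t m p ε) (hb : SBd q t m B l c)
    (hs : s ∈ Ioc 0 (s0f B l)) : s ∈ Ioc (0:ℝ) (1 / 2) ∧ 1 / 4 ≤ p (1 / s - 1) ∧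
      p (1 / s - 1) ≤ 5 / 2 ∧ zt p s ∈ Icc (0:ℝ) (5 / 4) ∧ |yt q t m p s| ≤ (12 + B) * zt p s ∧
      l / 2 ≤ sDen q t m (zt p s) (yt q t m p s) ∧ sDen q t m (zt p s) (yt q t m p s) ≤ 2 * B := by
  have hB := hb.B1
  have hs1 : s ∈ Ioc (0:ℝ) (1 / 2) := ⟨hs.1, hs.2.trans (min_le_left _ _)⟩
  have hs2 : s ≤ l / (5 * (B * (15 + B))) := hs.2.trans (min_le_right _ _)
  obtain ⟨hp0, lo, hi, -, -⟩ := LeftSol.at h hp hs1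
  have ht := h.h1; have ht2 := h.h2
  have s0 := hs1.1
  have s12 := hs1.2
  have p1 : 1 / 4 ≤ p (1 / s - 1) := by
    by_contra! hc
    have := mul_lt_mul_of_pos_right hc (by linarith : 0 < t + 3 * s)
    linarith
  have p2 : p (1 / s - 1) ≤ 5 / 2 := by
    by_contra! hc
    have h1 : 2 / 5 ≤ t * (1 - s / 4) := by
      calc (2 / 5 : ℝ) ≤ 46875 / 100000 * (7 / 8) := by norm_num
        _ ≤ _ := mul_le_mul ht (by linarith) (by norm_num) (by linarith)
    have h2 := mul_le_mul_of_nonneg_left h1 hp0.le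
    linarith
  have z0 : 0 ≤ zt p s := mul_nonneg s0.le hp0.le
  have z1 : zt p s ≤ s * (5 / 2) := mul_le_mul_of_nonneg_left p2 s0.le
  have z2 : s * (1 / 4) ≤ zt p s := mul_le_mul_of_nonneg_left p1 s0.le
  have hz : zt p s ∈ Icc (0:ℝ) (5 / 4) := ⟨z0, by linarith⟩
  have hz5 : zt p s ∈ Icc (0:ℝ) 5 := ⟨z0, by linarith⟩
  have u1 : |1 / p (1 / s - 1) - t| ≤ 3 * s := by
    rw [abs_le]
    have k1 : 1 / p (1 / s - 1) ≤ t + 3 * s := by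
      rw [div_le_iff₀ hp0]; linarith
    have k2 : t * (1 - s / 4) ≤ 1 / p (1 / s - 1) := by
      rw [le_div_iff₀ hp0]; linarith
    have k3 : t * s ≤ 203125 / 100000 * s := mul_le_mul_of_nonneg_right ht2 s0.le
    constructor <;> linarith
  have hy : |yt q t m p s| ≤ (12 + B) * zt p s := by
    unfold yt
    refine (abs_add_le _ _).trans ?_
    rw [abs_mul, abs_of_nonneg z0]
    have := mul_le_mul_of_nonneg_right hb.b z0
    linarith
  have hd : |sDen q t m (zt p s) (yt q t m p s) - pL q t m| ≤ l / 2 := by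
    have e : sDen q t m (zt p s) (yt q t m p s) - pL q t m =
      -pN2 q t m (bT q t m) * zt p s + sDr q t m (zt p s) * zt p s ^ 2
        - sA q m (zt p s) * yt q t m p s := by unfold sDen; ring
    rw [e]
    refine (abs_sub _ _).trans ((add_le_add_left (abs_add_le _ _) _).trans ?_)
    rw [abs_mul, abs_mul, abs_mul, abs_neg, abs_of_nonneg z0, abs_of_nonneg (sq_nonneg (zt p s))]
    have k1 := mul_le_mul_of_nonneg_right hb.n2 z0
    have k2 := mul_le_mul_of_nonneg_right (hb.Dr _ hz5) (sq_nonneg (zt p s))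
    have k3 : zt p s ^ 2 ≤ 5 / 4 * zt p s := by rw [sq]; exact mul_le_mul_of_nonneg_right hz.2 z0
    have k4 := mul_le_mul_of_nonneg_left k3 (by linarith : 0 ≤ B)
    have k5 := mul_le_mul (hb.A _ hz5) hy (abs_nonneg _) (by linarith : 0 ≤ B)
    have k6 : B * (15 + B) * zt p s ≤ l / 2 := by
      calc B * (15 + B) * zt p s ≤ B * (15 + B) * (l / (5 * (B * (15 + B))) * (5 / 2)) :=
            mul_le_mul_of_nonneg_left (z1.trans (by linarith)) (by positivity)
        _ = l / 2 := by field_simp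
    have k7 : 0 ≤ B * zt p s := mul_nonneg (by linarith) z0
    nlinarith
  rw [abs_le] at hd
  have := hb.lam; have := hb.lamB; have := hb.l0
  exact ⟨hs1, p1, p2, hz, hy, by linarith, by linarith⟩

/-- The left trajectory satisfies the hypotheses of the shooting argument with uniform constants. -/
theorem LeftSol.traj {B l c : ℝ} (h : Par q t m) (hp : LeftSol q t m p ε) (hb : SBd q t m B l c) :
    Traj (13 + B + 5 * B / c + 2 * B / l) (min (1 / 4) (l / 32)) (s0f B l) (kap q t m) (sa2 q t m)
      (sa11 q t m) (sa3 q t m) (zt p) (yt q t m p) (ρt q m p)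
      (fun s => Rt q t m (zt p s) (yt q t m p s)) := by
  have hB := hb.B1; have hl := hb.l0; have hc := hb.c0
  have x1 : 0 ≤ 5 * B / c := by positivity
  have x2 : 0 ≤ 2 * B / l := by positivity
  have hlam := h.lam
  have hCl : B ≤ 13 + B + 5 * B / c + 2 * B / l := by linarith
  have key : ∀ s ∈ Ioc 0 (s0f B l), ρt q m p s = p (1 / s - 1) * sDen q t m (zt p s) (yt q t m p s) /
      (2 * (1 - s) * lmf q m s (p (1 / s - 1))) ∧ 0 < c ∧ c ≤ lmf q m s (p (1 / s - 1)) ∧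
      sT q t m (zt p s) (yt q t m p s) = 1 - s ∧
      lnf q m s (p (1 / s - 1)) = - p (1 / s - 1) * sDen q t m (zt p s) (yt q t m p s) := by
    intro s hs
    obtain ⟨hs1, p1, p2, hz, hy, d1, d2⟩ := LeftSol.bds h hp hb hs
    obtain ⟨hp0, lo, hi, -, -⟩ := LeftSol.at h hp hs1
    have hT : sT q t m (zt p s) (yt q t m p s) = 1 - s := by
      unfold sT yt
      have : zt p s * (1 / p (1 / s - 1)) = s := by unfold zt; field_simp
      linear_combination -this
    have hN := sDen_eq (q := q) (t := t) (m := m) (z := zt p s) (y := yt q t m p s)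
    have hln : lnf q m s (p (1 / s - 1)) = - p (1 / s - 1) * sDen q t m (zt p s) (yt q t m p s) := by
      have hs0 := hs1.1.ne'
      have e : Nf q m (1 - s) (-zt p s) = s * lnf q m s (p (1 / s - 1)) := by
        unfold Nf lnf lA1 zt; ring
      rw [hT, e] at hN
      apply mul_left_cancel₀ hs0
      rw [hN, zt]; ring
    refine ⟨?_, hc, hb.lm s ⟨hs1.1.le, by linarith [hs1.2]⟩ _ lo hi, hT, hln⟩
    rw [ρt, hln]; ring
  refine ⟨?_, ?_, hb.a2.trans hCl, hb.a11.trans hCl, hb.a3.trans hCl, ?_, ?_, ?_, ?_, ?_, ?_, ?_, ?_⟩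
  · have := h.dom.k3
    rw [kap, le_sub_iff_add_le, le_div_iff₀ hlam]; linarith
  · have := h.dom.k4
    rw [kap, sub_le_iff_le_add, div_le_iff₀ hlam]; linarith
  · intro s hs
    obtain ⟨hs1, -⟩ := LeftSol.bds h hp hb hs
    exact (LeftSol.at h hp hs1).2.2.2.1
  · intro s hs
    obtain ⟨hs1, p1, p2, hz, hy, d1, d2⟩ := LeftSol.bds h hp hb hs
    obtain ⟨hp0, lo, hi, hdz, hdp⟩ := LeftSol.at h hp hs1
    obtain ⟨kρ, -, km, kT, kn⟩ := key s hs
    have hT : 0 < 1 - s := by linarith [hs1.2]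
    have hd := ((hdp.inv hp0.ne').sub_const t).add (hdz.const_mul (bT q t m))
    have hd' : HasDerivAt (yt q t m p) (-((ρt q m p s - p (1 / s - 1)) / s) / p (1 / s - 1) ^ 2
        + bT q t m * ρt q m p s) s := by
      refine hd.congr_of_eventuallyEq (Eventually.of_forall fun x => ?_)
      simp [yt]
    refine hd'.congr_deriv ?_
    refine dy_alg (t := t) (b := bT q t m) (T := 1 - s) (lm := lmf q m s (p (1 / s - 1))) (ln := lnf q m s (p (1 / s - 1))) (y := yt q t m p s)
      hs1.1.ne' hp0.ne' hT.ne' (by linarith) (by linarith) rfl rfl kn rfl ?_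
    rw [← sMN h, kT]
    have e : Mf q m (1 - s) (-zt p s) = s * lmf q m s (p (1 / s - 1)) := by
      unfold Mf lmf zt; ring
    rw [e]
  · intro s hs
    obtain ⟨hs1, p1, p2, hz, hy, d1, d2⟩ := LeftSol.bds h hp hb hs
    have hz5 : zt p s ∈ Icc (0:ℝ) 5 := ⟨hz.1, by linarith [hz.2]⟩
    simp only [Rt]
    have hd0 : 0 < sDen q t m (zt p s) (yt q t m p s) := by linarith
    rw [abs_div, abs_of_pos hd0, div_le_iff₀ hd0]
    set z := zt p s
    set y := yt q t m p s
    have k1 : |y ^ 2 * sG1 q t m z + y * z ^ 2 * sG2 q t m z + z ^ 4 * sG3 q t m z| ≤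
        B * (y ^ 2 + z ^ 2 * |y| + z ^ 4) := by
      refine (abs_add_le _ _).trans ((add_le_add_left (abs_add_le _ _) _).trans ?_)
      rw [abs_mul, abs_mul, abs_mul, abs_mul, abs_of_nonneg (sq_nonneg y),
        abs_of_nonneg (sq_nonneg z), abs_of_nonneg (by positivity : 0 ≤ z ^ 4)]
      have j1 := mul_le_mul_of_nonneg_left (hb.G1 z hz5) (sq_nonneg y)
      have j2 := mul_le_mul_of_nonneg_left (hb.G2 z hz5) (by positivity : 0 ≤ |y| * z ^ 2)
      have j3 := mul_le_mul_of_nonneg_left (hb.G3 z hz5) (by positivity : 0 ≤ z ^ 4)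
      linarith
    refine k1.trans ?_
    have h0 : 0 ≤ y ^ 2 + z ^ 2 * |y| + z ^ 4 := by positivity
    have h1 : B ≤ (13 + B + 5 * B / c + 2 * B / l) * sDen q t m z y := by
      calc B = 2 * B / l * (l / 2) := by field_simp
        _ ≤ _ := mul_le_mul (by linarith) d1 (by linarith) (by linarith)
    calc _ ≤ _ := mul_le_mul_of_nonneg_right h1 h0
      _ = _ := by ring
  · intro s hs
    obtain ⟨hs1, p1, p2, hz, hy, d1, d2⟩ := LeftSol.bds h hp hb hs
    rw [zt, mul_comm]
    exact mul_le_mul_of_nonneg_left ((min_le_left _ _).trans p1) hs1.1.le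
  · intro s hs
    obtain ⟨hs1, p1, p2, hz, hy, d1, d2⟩ := LeftSol.bds h hp hb hs
    rw [zt, mul_comm]
    exact mul_le_mul_of_nonneg_right (by linarith) hs1.1.le
  · intro s hs
    obtain ⟨hs1, p1, p2, hz, hy, d1, d2⟩ := LeftSol.bds h hp hb hs
    obtain ⟨hp0, lo, hi, -, -⟩ := LeftSol.at h hp hs1
    obtain ⟨kρ, -, km, -, -⟩ := key s hs
    rw [kρ]
    have hT : 0 < 1 - s := by linarith [hs1.2]
    have hm2 : lmf q m s (p (1 / s - 1)) ≤ 2 := by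
      have := h.B0; have := h.B1; have := h.hq
      have : 0 ≤ (1 - s) * p (1 / s - 1) * (pB0 q m + pB1 q m * (s * p (1 / s - 1))) := by
        have := hs1.1
        positivity
      unfold lmf; linarith
    refine (min_le_right _ _).trans ?_
    rw [le_div_iff₀ (by have : 0 < lmf q m s (p (1 / s - 1)) := by linarith
                        positivity)]
    have j1 : (1 - s) * lmf q m s (p (1 / s - 1)) ≤ 1 * 2 :=
      mul_le_mul (by linarith [hs1.1]) hm2 (by linarith) zero_le_one
    have j2 := mul_le_mul_of_nonneg_left j1 (by linarith : 0 ≤ l)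
    have j3 := mul_le_mul p1 d1 (by linarith) (by linarith)
    linarith
  · intro s hs
    obtain ⟨hs1, p1, p2, hz, hy, d1, d2⟩ := LeftSol.bds h hp hb hs
    obtain ⟨hp0, lo, hi, -, -⟩ := LeftSol.at h hp hs1
    obtain ⟨kρ, -, km, -, -⟩ := key s hs
    rw [kρ]
    have hT : 1 / 2 ≤ 1 - s := by linarith [hs1.2]
    have : 5 / 2 * (2 * B) / c ≤ 13 + B + 5 * B / c + 2 * B / l := by
      have : 5 / 2 * (2 * B) / c = 5 * B / c := by ring
      linarith
    refine le_trans ?_ this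
    refine div_le_div₀ (by positivity) (mul_le_mul p2 d2 (by linarith) (by norm_num)) hc ?_
    calc c = 2 * (1 / 2) * c := by ring
      _ ≤ _ := mul_le_mul (by linarith) km hc.le (by linarith)
  · intro s hs
    obtain ⟨hs1, p1, p2, hz, hy, d1, d2⟩ := LeftSol.bds h hp hb hs
    exact hy.trans (mul_le_mul_of_nonneg_right (by linarith) hz.1)
end

end

/-! ### Choice of the parameter -/

section

/-- A uniform bound over a compact parameter space and `0 ≤ z ≤ 5`. -/
theorem bd_on {P : Type} [TopologicalSpace P] [CompactSpace P] {f : P × ℝ → ℝ} (hf : Continuous f) :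
    ∃ B, ∀ i, ∀ z ∈ Icc (0:ℝ) 5, |f (i, z)| ≤ B := by
  obtain ⟨B, hB⟩ := ((isCompact_univ (X := P)).prod (isCompact_Icc (a := (0:ℝ)) (b := 5))).exists_bound_of_continuousOn
    hf.continuousOn
  exact ⟨B, fun i z hz => hB (i, z) ⟨mem_univ _, hz⟩⟩

theorem bd_P {P : Type} [TopologicalSpace P] [CompactSpace P] {f : P → ℝ} (hf : Continuous f) :
    ∃ B, ∀ i, |f i| ≤ B := by
  obtain ⟨B, hB⟩ := bd_on (hf.comp continuous_fst)
  exact ⟨B, fun i => hB i 0 ⟨le_rfl, by norm_num⟩⟩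

section
variable {P : Type} [PseudoMetricSpace P] {Q Θ Μ : P → ℝ}

theorem cont_bT (cQ : Continuous Q) (cΘ : Continuous Θ) (cM : Continuous Μ)
    (hP : ∀ i, Par (Q i) (Θ i) (Μ i)) : Continuous fun i => bT (Q i) (Θ i) (Μ i) := by
  unfold bT
  refine Continuous.div ?_ ?_ fun i => (hP i).S2p.ne'
  · unfold pR2 pL pC1 pC2 pB0 pB1 pA0; fun_prop
  · unfold pS2 pK pL pA0; fun_prop

theorem cont_coef (cQ : Continuous Q) (cΘ : Continuous Θ) (cM : Continuous Μ)
    (hP : ∀ i, Par (Q i) (Θ i) (Μ i)) : (Continuous fun i => kap (Q i) (Θ i) (Μ i)) ∧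
    (Continuous fun i => sa2 (Q i) (Θ i) (Μ i)) ∧ (Continuous fun i => sa11 (Q i) (Θ i) (Μ i)) ∧
    (Continuous fun i => sa3 (Q i) (Θ i) (Μ i)) := by
  obtain ⟨b, eb, cb⟩ : ∃ b : P → ℝ, (∀ i, bT (Q i) (Θ i) (Μ i) = b i) ∧ Continuous b :=
    ⟨_, fun _ => rfl, cont_bT cQ cΘ cM hP⟩
  have ck : Continuous fun i => kap (Q i) (Θ i) (Μ i) := by
    unfold kap
    refine (Continuous.div ?_ ?_ fun i => (hP i).lam.ne').sub continuous_const
    · unfold pK pA0; fun_prop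
    · unfold pL pA0; fun_prop
  have c2 : Continuous fun i => sa2 (Q i) (Θ i) (Μ i) := by
    simp only [sa2, eb]
    refine Continuous.div ?_ ?_ fun i => (hP i).lam.ne'
    · unfold pR3 pM2 pN2 pL pC1 pC2 pC3 pB0 pB1 pA0; fun_prop
    · unfold pL pA0; fun_prop
  obtain ⟨k, ek, ck'⟩ : ∃ b : P → ℝ, (∀ i, kap (Q i) (Θ i) (Μ i) = b i) ∧ Continuous b :=
    ⟨_, fun _ => rfl, ck⟩
  obtain ⟨a, ea, ca'⟩ : ∃ b : P → ℝ, (∀ i, sa2 (Q i) (Θ i) (Μ i) = b i) ∧ Continuous b :=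
    ⟨_, fun _ => rfl, c2⟩
  refine ⟨ck, c2, ?_, ?_⟩
  · simp only [sa11, sB1, eb, ek]
    refine Continuous.div ?_ ?_ fun i => (hP i).lam.ne'
    · unfold pN2 pC1 pC2 pB0 pA0; fun_prop
    · unfold pL pA0; fun_prop
  · simp only [sa3, eb, ea]
    refine Continuous.div ?_ ?_ fun i => (hP i).lam.ne'
    · unfold h40 pM2 pN2 pC1 pC2 pC3 pB0 pB1 pA0; fun_prop
    · unfold pL pA0; fun_prop

/-- The constants can be chosen uniformly over a compact family of parameters. -/
theorem exists_SBd [CompactSpace P] [Nonempty P] (cQ : Continuous Q) (cΘ : Continuous Θ) (cM : Continuous Μ)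
    (hP : ∀ i, Par (Q i) (Θ i) (Μ i)) : ∃ B l c, ∀ i, SBd (Q i) (Θ i) (Μ i) B l c := by
  obtain ⟨c, hc, hcl⟩ := lmf_lower cQ cΘ cM hP
  obtain ⟨ck, c2, c11, c3⟩ := cont_coef cQ cΘ cM hP
  have cb := cont_bT cQ cΘ cM hP
  have cL : Continuous fun i => pL (Q i) (Θ i) (Μ i) := by unfold pL pA0; fun_prop
  obtain ⟨b, eb, cb'⟩ : ∃ b : P → ℝ, (∀ i, bT (Q i) (Θ i) (Μ i) = b i) ∧ Continuous b :=
    ⟨_, fun _ => rfl, cb⟩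
  obtain ⟨k, ek, ck'⟩ : ∃ b : P → ℝ, (∀ i, kap (Q i) (Θ i) (Μ i) = b i) ∧ Continuous b :=
    ⟨_, fun _ => rfl, ck⟩
  obtain ⟨a, ea, ca'⟩ : ∃ b : P → ℝ, (∀ i, sa2 (Q i) (Θ i) (Μ i) = b i) ∧ Continuous b :=
    ⟨_, fun _ => rfl, c2⟩
  obtain ⟨a1, ea1, ca1⟩ : ∃ b : P → ℝ, (∀ i, sa11 (Q i) (Θ i) (Μ i) = b i) ∧ Continuous b :=
    ⟨_, fun _ => rfl, c11⟩
  obtain ⟨a3, ea3, ca3⟩ : ∃ b : P → ℝ, (∀ i, sa3 (Q i) (Θ i) (Μ i) = b i) ∧ Continuous b :=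
    ⟨_, fun _ => rfl, c3⟩
  have cn : Continuous fun i => pN2 (Q i) (Θ i) (Μ i) (bT (Q i) (Θ i) (Μ i)) := by
    simp only [eb]; unfold pN2 pC1 pC2 pA0; fun_prop
  have cA : Continuous fun a : P × ℝ => sA (Q a.1) (Μ a.1) a.2 := by
    unfold sA pC1 pC2 pC3 pA0; fun_prop
  have cD : Continuous fun a : P × ℝ => sDr (Q a.1) (Θ a.1) (Μ a.1) a.2 := by
    simp only [sDr, eb]; unfold pC1 pC2 pC3 pA0; fun_prop
  have cG1 : Continuous fun a : P × ℝ => sG1 (Q a.1) (Θ a.1) (Μ a.1) a.2 := by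
    simp only [sG1, sA, ek, ea1]; unfold pB0 pB1 pC1 pC2 pC3 pA0; fun_prop
  have cG2 : Continuous fun a : P × ℝ => sG2 (Q a.1) (Θ a.1) (Μ a.1) a.2 := by
    simp only [sG2, sBr, sDr, sA, eb, ek, ea, ea1, ea3]
    unfold pM2 pN2 pB0 pB1 pC1 pC2 pC3 pA0; fun_prop
  have cG3 : Continuous fun a : P × ℝ => sG3 (Q a.1) (Θ a.1) (Μ a.1) a.2 := by
    simp only [sG3, sDr, eb, ea, ea3]
    unfold h50 h60 pN2 pB0 pB1 pC1 pC2 pC3 pA0; fun_prop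
  obtain ⟨x1, h1⟩ := bd_P cL
  obtain ⟨x2, h2⟩ := bd_P cb
  obtain ⟨x3, h3⟩ := bd_P cn
  obtain ⟨x4, h4⟩ := bd_P c2
  obtain ⟨x5, h5⟩ := bd_P c11
  obtain ⟨x6, h6⟩ := bd_P c3
  obtain ⟨x7, h7⟩ := bd_on cA
  obtain ⟨x8, h8⟩ := bd_on cD
  obtain ⟨x9, h9⟩ := bd_on cG1
  obtain ⟨x10, h10⟩ := bd_on cG2
  obtain ⟨x11, h11⟩ := bd_on cG3
  obtain ⟨i0⟩ := ‹Nonempty P›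
  have hz : (0:ℝ) ∈ Icc (0:ℝ) 5 := ⟨le_rfl, by norm_num⟩
  have n1 := (abs_nonneg _).trans (h1 i0)
  have n2 := (abs_nonneg _).trans (h2 i0)
  have n3 := (abs_nonneg _).trans (h3 i0)
  have n4 := (abs_nonneg _).trans (h4 i0)
  have n5 := (abs_nonneg _).trans (h5 i0)
  have n6 := (abs_nonneg _).trans (h6 i0)
  have n7 := (abs_nonneg _).trans (h7 i0 0 hz)
  have n8 := (abs_nonneg _).trans (h8 i0 0 hz)
  have n9 := (abs_nonneg _).trans (h9 i0 0 hz)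
  have n10 := (abs_nonneg _).trans (h10 i0 0 hz)
  have n11 := (abs_nonneg _).trans (h11 i0 0 hz)
  obtain ⟨l, hl, hll⟩ := (isCompact_univ (X := P)).exists_forall_le' (a := 0) cL.continuousOn
    (fun i _ => (hP i).lam)
  refine ⟨1 + x1 + x2 + x3 + x4 + x5 + x6 + x7 + x8 + x9 + x10 + x11, l, c, fun i => ?_⟩
  exact ⟨by linarith, hl, hc, hll i (mem_univ _), by linarith [(le_abs_self _).trans (h1 i)],
    fun w hw p => hcl w hw i p, by linarith [h2 i], by linarith [h3 i], by linarith [h4 i],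
    by linarith [h5 i], by linarith [h6 i], fun z hz => by linarith [h7 i z hz],
    fun z hz => by linarith [h8 i z hz], fun z hz => by linarith [h9 i z hz],
    fun z hz => by linarith [h10 i z hz], fun z hz => by linarith [h11 i z hz]⟩
end

/-- The sign of the shooting function at `k = 4`. -/
theorem sa3_end {q t m : ℝ} (h : Par q t m) (hS : pK q t = 4 * pL q t m) :
    sa3 q t m - sa11 q t m * sa2 q t m < 0 := by
  have hw := h.w4
  have hl := h.lam
  have e0 := h.e0
  have hk : kap q t m = 3 := by rw [kap, hS]; field_simp; norm_num
  have e3 : pS3 q t m = pL q t m := by unfold pS3; push_cast; rw [hS]; ring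
  rw [e3] at hw
  have e1 : sB1 q t m + 2 * pN2 q t m (bT q t m) = h41 q t m (bT q t m) := by
    unfold sB1 h41; push_cast
    linear_combination 2 * e0
  have e : sa3 q t m - sa11 q t m * sa2 q t m = (h40 q t m (bT q t m) * pL q t m +
      h41 q t m (bT q t m) * pR3 q t m (bT q t m)) / pL q t m ^ 2 := by
    rw [sa3, sa11, sa2, hk, ← e1]; field_simp; ring
  rw [e]
  exact div_neg_of_neg_of_pos hw (by positivity)

/-- The parameter for which the trajectory through `P₀` is smooth at the sonic point. -/
theorem shooting {α : ℝ} (hα : 0 < α) : ∃ q, Good α q ∧ 3 * lamQ α q < kapQ α q ∧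
    kapQ α q < 4 * lamQ α q ∧ ∃ p ε, LeftSol q (thQ α q) (q / α) p ε ∧ ∃ s₁ K, 0 < s₁ ∧ s₁ ≤ 1 / 2 ∧
      ∀ s ∈ Ioc 0 s₁, |yt q (thQ α q) (q / α) p s - aT q (thQ α q) (q / α) * zt p s ^ 2|
        ≤ K * zt p s ^ 3 ∧ 0 < sDen q (thQ α q) (q / α) (zt p s) (yt q (thQ α q) (q / α) p s) := by
  obtain ⟨q3, q4, h0, h34, k3, k4, hG, hk⟩ := exists_window hα
  set P := Icc q3 q4 with hPdef
  have hne : Nonempty P := ⟨⟨q3, left_mem_Icc.2 h34.le⟩⟩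
  set Q : P → ℝ := fun i => i.1
  set Θ : P → ℝ := fun i => thQ α i.1
  set Μ : P → ℝ := fun i => i.1 / α
  have cQ : Continuous Q := continuous_subtype_val
  have cM : Continuous Μ := cQ.div_const α
  have cΘ : Continuous Θ := by
    have : ContinuousOn (thQ α) P := (continuousOn_thQ hα).mono fun x hx => h0.le.trans hx.1
    exact continuousOn_iff_continuous_domRestrict.1 this
  have hP : ∀ i : P, Par (Q i) (Θ i) (Μ i) := fun i => (hG i.1 i.2).par
  obtain ⟨p, cp, hp⟩ := left_exists cQ cΘ cM hP
  obtain ⟨B, l, c, hb⟩ := exists_SBd cQ cΘ cM hP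
  choose ε hε using hp
  have hb0 := hb ⟨q3, left_mem_Icc.2 h34.le⟩
  have hs0 : 0 < s0f B l := by
    have := hb0.B1; have := hb0.l0
    exact lt_min (by norm_num) (by positivity)
  obtain ⟨ck, c2, c11, c3⟩ := cont_coef cQ cΘ cM hP
  have cb := cont_bT cQ cΘ cM hP
  set pr : ℝ → P := projIcc q3 q4 h34.le with hpr
  have cpr : Continuous pr := continuous_projIcc
  have prv : ∀ q (hq : q ∈ Icc q3 q4), pr q = ⟨q, hq⟩ := fun q hq => projIcc_of_mem h34.le hq
  have p3 := prv q3 (left_mem_Icc.2 h34.le)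
  have p4 := prv q4 (right_mem_Icc.2 h34.le)
  have kape : ∀ q (hq : q ∈ Icc q3 q4), kap (Q (pr q)) (Θ (pr q)) (Μ (pr q)) = kapQ α q / lamQ α q - 1 :=
    fun q hq => by rw [prv q hq]; rfl
  have l0 : ∀ q ∈ Icc q3 q4, 0 < lamQ α q := fun q hq => (hG q hq).lam_pos
  have cpp : ∀ s, Continuous fun q => p (1 / s - 1) (pr q) := fun s =>
    cp.comp (by fun_prop : Continuous fun q => (1 / s - 1, pr q))
  have ppos : ∀ s ∈ Ioc 0 (s0f B l), ∀ i, p (1 / s - 1) i ≠ 0 := fun s hs i => by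
    have := (LeftSol.bds (hP i) (hε i) (hb i) hs).2.1
    intro h; linarith
  have hC1 : 1 ≤ 13 + B + 5 * B / c + 2 * B / l := by
    have := hb0.B1; have := hb0.l0; have := hb0.c0
    have : 0 ≤ 5 * B / c := by positivity
    have : 0 ≤ 2 * B / l := by positivity
    linarith
  obtain ⟨q, hq, s₁, K, hs1, hs10, hy⟩ := shoot (C := 13 + B + 5 * B / c + 2 * B / l)
    (c := min (1 / 4) (l / 32)) (s₀ := s0f B l) hC1
    (lt_min (by norm_num) (by have := hb0.l0; positivity)) hs0 h34
    (κ := fun q => kap (Q (pr q)) (Θ (pr q)) (Μ (pr q)))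
    (a₂ := fun q => sa2 (Q (pr q)) (Θ (pr q)) (Μ (pr q)))
    (a₁₁ := fun q => sa11 (Q (pr q)) (Θ (pr q)) (Μ (pr q)))
    (a₃ := fun q => sa3 (Q (pr q)) (Θ (pr q)) (Μ (pr q)))
    (ck.comp cpr).continuousOn (c2.comp cpr).continuousOn (c11.comp cpr).continuousOn
    (c3.comp cpr).continuousOn
    (z := fun q => zt fun s => p s (pr q))
    (y := fun q => yt (Q (pr q)) (Θ (pr q)) (Μ (pr q)) fun s => p s (pr q))
    (ρ := fun q => ρt (Q (pr q)) (Μ (pr q)) fun s => p s (pr q))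
    (R := fun q s => Rt (Q (pr q)) (Θ (pr q)) (Μ (pr q)) (zt (fun s => p s (pr q)) s)
      (yt (Q (pr q)) (Θ (pr q)) (Μ (pr q)) (fun s => p s (pr q)) s))
    (fun q _ => LeftSol.traj (hP (pr q)) (hε (pr q)) (hb (pr q)))
    (fun s _ => (continuous_const.mul (cpp s)).continuousOn)
    (fun s hs => (((continuous_const.div (cpp s) fun q => ppos s hs _).sub (cΘ.comp cpr)).add
      ((cb.comp cpr).mul (continuous_const.mul (cpp s)))).continuousOn)
    (by
      rw [kape q3 (left_mem_Icc.2 h34.le), k3, mul_div_cancel_right₀ _ (l0 q3 (left_mem_Icc.2 h34.le)).ne']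
      norm_num)
    (by
      rw [kape q4 (right_mem_Icc.2 h34.le), k4, mul_div_cancel_right₀ _ (l0 q4 (right_mem_Icc.2 h34.le)).ne']
      norm_num)
    (fun q hq => by
      have hq' : q ∈ Icc q3 q4 := Ioo_subset_Icc_self hq
      rw [kape q hq', lt_sub_iff_add_lt, sub_lt_iff_lt_add, lt_div_iff₀ (l0 q hq'), div_lt_iff₀ (l0 q hq')]
      have := hk q hq
      constructor <;> linarith)
    (by
      have hpar := hP (pr q3)
      have hS : pS3 (Q (pr q3)) (Θ (pr q3)) (Μ (pr q3)) = 0 := by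
        rw [p3]
        have : pS3 q3 (thQ α q3) (q3 / α) = kapQ α q3 - 3 * lamQ α q3 := by
          unfold pS3 kapQ lamQ; push_cast; ring
        exact this.trans (by rw [k3, sub_self])
      have hr := hpar.r3
      rw [hS] at hr
      exact div_neg_of_neg_of_pos (by linarith) hpar.lam)
    (by
      refine sa3_end (hP (pr q4)) ?_
      rw [p4]; exact k4)
  have hq' : q ∈ Icc q3 q4 := Ioo_subset_Icc_self hq
  obtain ⟨j3, j4⟩ := hk q hq
  rw [prv q hq'] at hy
  refine ⟨q, hG q hq', j3, j4, _, _, hε ⟨q, hq'⟩, min s₁ 1,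
    K + |(sa3 q (thQ α q) (q / α) + sa11 q (thQ α q) (q / α) * aT q (thQ α q) (q / α)) / (3 - kap q (thQ α q) (q / α))|,
    lt_min hs1 one_pos, (min_le_left _ _).trans (hs10.trans (min_le_left _ _)), fun s hs => ?_⟩
  have hs' : s ∈ Ioc 0 s₁ := ⟨hs.1, hs.2.trans (min_le_left _ _)⟩
  have hbd := LeftSol.bds (hP ⟨q, hq'⟩) (hε ⟨q, hq'⟩) (hb ⟨q, hq'⟩) ⟨hs'.1, hs'.2.trans hs10⟩
  have h := hy s hs'
  have ea : sa2 q (thQ α q) (q / α) / (2 - kap q (thQ α q) (q / α)) = aT q (thQ α q) (q / α) := by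
    have hl := l0 q hq'
    have e : pS3 q (thQ α q) (q / α) = -(2 - kap q (thQ α q) (q / α)) * pL q (thQ α q) (q / α) := by
      have : pL q (thQ α q) (q / α) ≠ 0 := hl.ne'
      unfold pS3 kap; push_cast; field_simp; ring
    rw [aT, sa2, e, div_div, neg_mul, div_neg, neg_div, mul_comm]
  change |yt q (thQ α q) (q / α) (fun s => p s ⟨q, hq'⟩) s - sa2 q (thQ α q) (q / α) / (2 - kap q (thQ α q) (q / α))
    * zt (fun s => p s ⟨q, hq'⟩) s ^ 2 - (sa3 q (thQ α q) (q / α) + sa11 q (thQ α q) (q / α) *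
      (sa2 q (thQ α q) (q / α) / (2 - kap q (thQ α q) (q / α)))) / (3 - kap q (thQ α q) (q / α)) *
      zt (fun s => p s ⟨q, hq'⟩) s ^ 3| ≤ K * zt (fun s => p s ⟨q, hq'⟩) s ^ 3 at h
  rw [ea] at h
  refine ⟨?_, lt_of_lt_of_le (by have := hb0.l0; positivity) hbd.2.2.2.2.2.1⟩
  have hz0 : 0 ≤ zt (fun s => p s ⟨q, hq'⟩) s ^ 3 := pow_nonneg hbd.2.2.2.1.1 3
  set E := (sa3 q (thQ α q) (q / α) + sa11 q (thQ α q) (q / α) * aT q (thQ α q) (q / α)) / (3 - kap q (thQ α q) (q / α))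
  have h2 : |E * zt (fun s => p s ⟨q, hq'⟩) s ^ 3| = |E| * zt (fun s => p s ⟨q, hq'⟩) s ^ 3 := by
    rw [abs_mul, abs_of_nonneg hz0]
  have h3 := abs_add_le (yt q (thQ α q) (q / α) (fun s => p s ⟨q, hq'⟩) s
    - aT q (thQ α q) (q / α) * zt (fun s => p s ⟨q, hq'⟩) s ^ 2 - E * zt (fun s => p s ⟨q, hq'⟩) s ^ 3)
    (E * zt (fun s => p s ⟨q, hq'⟩) s ^ 3)
  rw [sub_add_cancel, h2] at h3
  linarith

end

/-! ### The smooth branch through the sonic point -/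

section

/-- Truncation to `[lo, hi]`. -/
def clp (lo hi w : ℝ) : ℝ := max lo (min hi w)

theorem clp_mem {lo hi : ℝ} (h : lo ≤ hi) (w : ℝ) : clp lo hi w ∈ Icc lo hi :=
  ⟨le_max_left _ _, max_le h (min_le_left _ _)⟩

theorem clp_of_mem {lo hi w : ℝ} (h : w ∈ Icc lo hi) : clp lo hi w = w := by
  rw [clp, min_eq_right h.2, max_eq_right h.1]

theorem clp_lip {lo hi w w' : ℝ} : |clp lo hi w - clp lo hi w'| ≤ |w - w'| := by
  unfold clp
  refine (abs_max_sub_max_le_max _ _ _ _).trans ?_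
  rw [sub_self, abs_zero, max_eq_right (abs_nonneg _)]
  refine (abs_min_sub_min_le_max hi w hi w').trans ?_
  rw [sub_self, abs_zero, max_eq_right (abs_nonneg _)]

theorem continuous_clp {lo hi : ℝ} : Continuous (clp lo hi) := by unfold clp; fun_prop

/-- The Briot–Bouquet fixed point for a field which is `C¹` on a compact rectangle, truncated outside. -/
theorem bb_rect {μ₀ a b lo hi : ℝ} (hμ : 0 ≤ μ₀) (hlh : lo ≤ hi) {φ : ℝ → ℝ}
    (cφ : Continuous φ) (hφ : ∀ z, φ z ∈ Icc a b) {h : ℝ × ℝ → ℝ}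
    (hh : ContDiffOn ℝ 1 h (Icc a b ×ˢ Icc lo hi)) :
    ∃ w : ℝ → ℝ, Continuous w ∧ Continuous (fun x => h (φ x, clp lo hi (w x))) ∧
      ∀ x, w x = x * bbV μ₀ (fun y => h (φ y, clp lo hi (w y))) x := by
  have hK : IsCompact (Icc a b ×ˢ Icc lo hi) := isCompact_Icc.prod isCompact_Icc
  obtain ⟨K, hK1⟩ := hh.exists_lipschitzOnWith one_ne_zero ((convex_Icc a b).prod (convex_Icc lo hi)) hK
  obtain ⟨B, hB⟩ := hK.exists_bound_of_continuousOn hh.continuousOn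
  have mem : ∀ z w, (φ z, clp lo hi w) ∈ Icc a b ×ˢ Icc lo hi := fun z w => ⟨hφ z, clp_mem hlh w⟩
  have hc : Continuous fun a : ℝ × ℝ => h (φ a.1, clp lo hi a.2) :=
    hh.continuousOn.comp_continuous
      ((cφ.comp continuous_fst).prodMk (continuous_clp.comp continuous_snd)) fun a => mem _ _
  have hLB : LB fun (x : ℝ × Unit) (w : ℝ) => h (φ x.1, clp lo hi w) := by
    refine ⟨|B|, K, abs_nonneg _, K.2, fun x w w' => ⟨(hB _ (mem _ _)).trans (le_abs_self _), ?_⟩⟩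
    have h1 := hK1.dist_le_mul _ (mem x.1 w) _ (mem x.1 w')
    rw [Real.dist_eq] at h1
    refine h1.trans (mul_le_mul_of_nonneg_left ?_ K.2)
    rw [Prod.dist_eq, dist_self, max_eq_right dist_nonneg, Real.dist_eq]
    exact clp_lip
  obtain ⟨w, cw, h12⟩ := bb_exists' hμ (fun (x : ℝ × Unit) (w : ℝ) => h (φ x.1, clp lo hi w))
    (hc.comp (by fun_prop : Continuous fun a : (ℝ × Unit) × ℝ => (a.1.1, a.2))) hLB
  exact ⟨fun x => w x (), cw.comp (by fun_prop : Continuous fun x : ℝ => (x, ())), (h12 ()).1, fun x => (h12 ()).2 x⟩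

/-- The coefficient of `z³` in `y` along the smooth branch. -/
def nEn (q t m : ℝ) : ℝ := (sa3 q t m + sa11 q t m * aT q t m) / (3 - kap q t m)
/-- `y` on the node, in terms of the remainder `v`. -/
def nY (q t m z v : ℝ) : ℝ := z ^ 2 * (aT q t m + nEn q t m * z + z * v)
/-- The field in the equation `z v′ = (κ - 3) v + z nH(z, v)` for the remainder `v`. -/
def nH (q t m : ℝ) (a : ℝ × ℝ) : ℝ := sa11 q t m * (nEn q t m + a.2) +
  ((aT q t m + nEn q t m * a.1 + a.1 * a.2) ^ 2 * sG1 q t m a.1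
    + (aT q t m + nEn q t m * a.1 + a.1 * a.2) * sG2 q t m a.1 + sG3 q t m a.1)
    / sDen q t m a.1 (nY q t m a.1 a.2)

/-- The smooth solution branch through the sonic point. -/
structure NodeSol (q t m δ : ℝ) (v : ℝ → ℝ) : Prop where
  δ0 : 0 < δ
  zero : v 0 = 0
  smooth : ContDiffOn ℝ (⊤ : ℕ∞) v (Ioo (-δ) δ)
  bd : ∀ z ∈ Ioo (-δ) δ, |v z| ≤ 1
  den : ∀ z ∈ Ioo (-δ) δ, 0 < sDen q t m z (nY q t m z (v z))
  den' : ∀ z ∈ Ioo (-δ) δ, ∀ w ∈ Icc (-1:ℝ) 1, pL q t m / 2 < sDen q t m z (nY q t m z w)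
  ode : ∀ z ∈ Ioo (-δ) δ, ∃ d, HasDerivAt v d z ∧ z * d = (kap q t m - 3) * v z + z * nH q t m (z, v z)

section
variable {q t m : ℝ}

theorem contDiff_den : ContDiff ℝ (⊤ : ℕ∞) fun a : ℝ × ℝ => sDen q t m a.1 (nY q t m a.1 a.2) := by
  unfold sDen nY sDr sA; fun_prop

theorem contDiffOn_nH {n : WithTop ℕ∞} (hn : n ≤ (⊤ : ℕ∞)) {s : Set (ℝ × ℝ)}
    (h : ∀ a ∈ s, 0 < sDen q t m a.1 (nY q t m a.1 a.2)) :
    ContDiffOn ℝ n (nH q t m) s := by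
  refine ContDiffOn.of_le ?_ hn
  unfold nH
  refine ContDiffOn.add (by fun_prop) (ContDiffOn.div ?_ contDiff_den.contDiffOn fun a ha => (h a ha).ne')
  unfold sG1 sG2 sG3 sBr sDr sA
  fun_prop

/-- For `κ < 3` the remainder equation is of Briot–Bouquet type with nonnegative index `3 - κ`. -/
theorem node_exists (h : Par q t m) (k4 : pK q t < 4 * pL q t m) : ∃ δ v, NodeSol q t m δ v := by
  have hl := h.lam
  have hν : 0 ≤ 3 - kap q t m := by
    rw [kap]; have : pK q t / pL q t m < 4 := (div_lt_iff₀ hl).2 k4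
    linarith
  obtain ⟨δ, hδ, hden⟩ : ∃ δ > 0, ∀ z, |z| ≤ δ → ∀ w ∈ Icc (-1:ℝ) 1,
      pL q t m / 2 < sDen q t m z (nY q t m z w) := by
    have : ∀ᶠ z in 𝓝 (0:ℝ), ∀ w ∈ Icc (-1:ℝ) 1, pL q t m / 2 < sDen q t m z (nY q t m z w) := by
      refine isCompact_Icc.eventually_forall_of_forall_eventually fun w _ => ?_
      refine (contDiff_den (q := q) (t := t) (m := m)).continuous.continuousAt.eventually
        (lt_mem_nhds (a := pL q t m / 2) ?_)
      simp only [sDen, nY]; ring_nf; linarith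
    obtain ⟨δ, hδ, hd⟩ := Metric.eventually_nhds_iff.1 this
    refine ⟨δ / 2, by positivity, fun z hz => hd ?_⟩
    rw [Real.dist_eq, sub_zero]; linarith
  have hsub : ∀ a ∈ Icc (-δ) δ ×ˢ Icc (-1:ℝ) 1, 0 < sDen q t m a.1 (nY q t m a.1 a.2) := fun a ha =>
    lt_trans (by positivity) (hden a.1 (abs_le.2 ha.1) a.2 ha.2)
  obtain ⟨v, cv, cH, hv⟩ := bb_rect hν (by norm_num : (-1:ℝ) ≤ 1) (φ := clp (-δ) δ) continuous_clp
    (clp_mem (by linarith)) (contDiffOn_nH (by exact_mod_cast le_top) hsub)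
  have v0 : v 0 = 0 := by rw [hv]; simp
  obtain ⟨η, hη, hv1⟩ : ∃ η > 0, ∀ z, |z| < η → |v z| ≤ 1 := by
    obtain ⟨η, hη, hd⟩ := Metric.continuousAt_iff.1 (cv.continuousAt (x := 0)) 1 one_pos
    refine ⟨η, hη, fun z hz => ?_⟩
    have := hd (x := z) (by simpa using hz)
    rw [v0, Real.dist_eq, sub_zero] at this
    exact this.le
  set ε := min δ η with hε
  have e0 : 0 < ε := lt_min hδ hη
  have hz1 : ∀ z ∈ Ioo (-ε) ε, |z| ≤ δ := fun z hz => (abs_lt.2 hz).le.trans (min_le_left _ _)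
  have hz2 : ∀ z ∈ Ioo (-ε) ε, |v z| ≤ 1 := fun z hz => hv1 z ((abs_lt.2 hz).trans_le (min_le_right _ _))
  have hH : ∀ z ∈ Ioo (-ε) ε, nH q t m (clp (-δ) δ z, clp (-1) 1 (v z)) = nH q t m (z, v z) := fun z hz => by
    rw [clp_of_mem (abs_le.1 (hz1 z hz)), clp_of_mem (abs_le.1 (hz2 z hz))]
  refine ⟨ε, v, e0, v0, ?_, hz2, fun z hz => ?_, fun z hz => hden z (hz1 z hz), fun z hz => ?_⟩
  · refine contDiffOn_of_bb hν cH hv isOpen_Ioo ?_ fun n hn => ?_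
    · intro x hx s hs
      rw [mem_Ioo, ← abs_lt, abs_mul, abs_of_nonneg hs.1]
      have := abs_lt.2 hx
      have := mul_le_mul_of_nonneg_left hs.2 (abs_nonneg x)
      linarith
    · have h1 : ContDiffOn ℝ n (fun z => nH q t m (z, v z)) (Ioo (-ε) ε) := by
        refine ContDiffOn.comp (t := Icc (-δ) δ ×ˢ Icc (-1:ℝ) 1) (contDiffOn_nH (by exact_mod_cast le_top) hsub) (contDiffOn_id.prodMk hn) ?_
        exact fun z hz => ⟨abs_le.1 (hz1 z hz), abs_le.1 (hz2 z hz)⟩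
      exact h1.congr hH
  · exact hsub (z, v z) ⟨abs_le.1 (hz1 z hz), abs_le.1 (hz2 z hz)⟩
  · have hd := hasDerivAt_mul_bbV hν cH z
    simp only [← hv] at hd
    set Hc : ℝ → ℝ := fun y => nH q t m (clp (-δ) δ y, clp (-1) 1 (v y)) with hHc
    refine ⟨_, hd, ?_⟩
    rw [mul_sub, show z * ((3 - kap q t m) * bbV (3 - kap q t m) Hc z) = (3 - kap q t m) * (z * bbV (3 - kap q t m) Hc z) by ring,
      ← hv z, hH z hz]
    ring
end

end

/-! ### The smooth branch as a function of T -/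

section

/-- The inverse function theorem in one variable, in the smooth class. -/
theorem exists_local_inverse {f : ℝ → ℝ} {a d : ℝ} (hf : ContDiffAt ℝ (⊤ : ℕ∞) f a)
    (hd : HasDerivAt f d a) (d0 : d ≠ 0) : ∃ g : ℝ → ℝ, ContDiffAt ℝ (⊤ : ℕ∞) g (f a) ∧ g (f a) = a ∧
      (∀ᶠ x in 𝓝 a, g (f x) = x) ∧ ∀ᶠ y in 𝓝 (f a), f (g y) = y := by
  have hd' : HasFDerivAt f (ContinuousLinearEquiv.unitsEquivAut ℝ (Units.mk0 d d0) : ℝ →L[ℝ] ℝ) a := by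
    refine hd.hasFDerivAt.congr_fderiv ?_
    ext; simp
  have hn : ((⊤ : ℕ∞) : WithTop ℕ∞) ≠ 0 := by simp
  have hs := hf.hasStrictFDerivAt' hd' hn
  exact ⟨hf.localInverse hd' hn, hf.to_localInverse hd' hn, hf.localInverse_apply_image hd' hn,
    hs.eventually_left_inverse, hs.eventually_right_inverse⟩

/-- `T` along the node, as a function of `z`. -/
def nT (q t m : ℝ) (v : ℝ → ℝ) (z : ℝ) : ℝ := sT q t m z (nY q t m z (v z))

section
variable {q t m δ : ℝ} {v : ℝ → ℝ}

theorem Par.kap_lt (h : Par q t m) (k4 : pK q t < 4 * pL q t m) : kap q t m < 3 := by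
  rw [kap]; have : pK q t / pL q t m < 4 := (div_lt_iff₀ h.lam).2 k4
  linarith

theorem sa2_eq (h : Par q t m) (hS : 0 < pS3 q t m) : sa2 q t m = (2 - kap q t m) * aT q t m := by
  have hl := h.lam.ne'
  have e : pS3 q t m = -(2 - kap q t m) * pL q t m := by
    unfold pS3 kap; push_cast; field_simp; ring
  rw [aT, sa2]
  field_simp
  rw [e]; ring

theorem nEn_neg (h : Par q t m) (hS : 0 < pS3 q t m) (k4 : pK q t < 4 * pL q t m) : nEn q t m < 0 := by
  have hl := h.lam
  have hk := h.kap_lt k4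
  have e0 := h.e0
  have e1 : sB1 q t m + 2 * pN2 q t m (bT q t m) = h41 q t m (bT q t m) := by
    unfold sB1 h41; push_cast
    linear_combination 2 * e0
  refine div_neg_of_neg_of_pos ?_ (by linarith)
  have e : sa3 q t m + sa11 q t m * aT q t m = (h40 q t m (bT q t m) + h41 q t m (bT q t m) * aT q t m) / pL q t m := by
    rw [sa3, sa11, sa2_eq h hS, ← e1]; field_simp; ring
  rw [e]
  exact div_neg_of_neg_of_pos (h.h4a hS) hl

theorem nT_tay (z : ℝ) : nT q t m v z = tay q t m (-z) - z ^ 4 * (nEn q t m + v z) := by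
  unfold nT sT nY tay; ring

theorem NodeSol.cd (hN : NodeSol q t m δ v) : ContDiffOn ℝ (⊤ : ℕ∞) (nT q t m v) (Ioo (-δ) δ) := by
  have := hN.smooth
  unfold nT sT nY
  fun_prop

/-- The smooth branch as a trajectory of the planar system, with `z` as the variable. -/
theorem NodeSol.nT_ode (h : Par q t m) (hS : 0 < pS3 q t m) (k4 : pK q t < 4 * pL q t m)
    (hN : NodeSol q t m δ v) {z : ℝ} (hz : z ∈ Ioo (-δ) δ) : ∃ d, HasDerivAt (nT q t m v) d z ∧
      2 * nT q t m v z * Mf q m (nT q t m v z) (-z) = -z * sDen q t m z (nY q t m z (v z)) * d := by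
  obtain ⟨d, hd, hode⟩ := hN.ode z hz
  have hk := h.kap_lt k4
  have hden := (hN.den z hz).ne'
  have hen : (3 - kap q t m) * nEn q t m = sa3 q t m + sa11 q t m * aT q t m := by
    rw [nEn, mul_div_cancel₀ _ (by linarith : 3 - kap q t m ≠ 0)]
  have e2 := sa2_eq h hS
  have hnT : nT q t m v = fun z => 1 - t * z + bT q t m * z ^ 2 - aT q t m * z ^ 3 - nEn q t m * z ^ 4 - z ^ 4 * v z := by
    funext z; unfold nT sT nY; ring
  have hd' : HasDerivAt (nT q t m v) (-t + 2 * bT q t m * z - 3 * aT q t m * z ^ 2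
      - 4 * nEn q t m * z ^ 3 - (4 * z ^ 3 * v z + z ^ 4 * d)) z := by
    rw [hnT]
    refine ((((((hasDerivAt_const z (1:ℝ)).sub ((hasDerivAt_id z).const_mul t)).add
      ((hasDerivAt_pow 2 z).const_mul (bT q t m))).sub ((hasDerivAt_pow 3 z).const_mul (aT q t m))).sub
      ((hasDerivAt_pow 4 z).const_mul (nEn q t m))).sub ((hasDerivAt_pow 4 z).mul hd)).congr_deriv ?_
    push_cast; ring
  refine ⟨_, hd', ?_⟩
  have hid := sMN (z := z) (y := nY q t m z (v z)) h
  have hfr : sDen q t m z (nY q t m z (v z)) * nH q t m (z, v z) = sDen q t m z (nY q t m z (v z)) *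
      (sa11 q t m * (nEn q t m + v z)) + ((aT q t m + nEn q t m * z + z * v z) ^ 2 * sG1 q t m z
    + (aT q t m + nEn q t m * z + z * v z) * sG2 q t m z + sG3 q t m z) := by
    rw [nH]; simp only; field_simp
  have hy : nY q t m z (v z) = z ^ 2 * (aT q t m + nEn q t m * z + z * v z) := rfl
  change 2 * sT q t m z (nY q t m z (v z)) * Mf q m (sT q t m z (nY q t m z (v z))) (-z) = _
  generalize sDen q t m z (nY q t m z (v z)) = Den at *
  generalize nH q t m (z, v z) = H at *
  generalize Mf q m (sT q t m z (nY q t m z (v z))) (-z) = M at *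
  generalize sT q t m z (nY q t m z (v z)) = T at *
  rw [hy] at hid
  rw [e2] at hid
  linear_combination hid - z ^ 4 * Den * hode - z ^ 4 * Den * hen - z ^ 5 * hfr

/-- The smooth branch as a function of `T`. To the right of `T = 1` it starts inside the barrier region
because the fourth-order coefficient `nEn` is negative. -/
theorem NodeSol.X (h : Par q t m) (hS : 0 < pS3 q t m) (k4 : pK q t < 4 * pL q t m)
    (hN : NodeSol q t m δ v) : ∃ X : ℝ → ℝ, X 1 = 0 ∧ ContDiffAt ℝ (⊤ : ℕ∞) X 1 ∧
      HasDerivAt X (1 / t) 1 ∧ (∀ᶠ z in 𝓝 0, X (nT q t m v z) = -z) ∧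
      (∀ᶠ T in 𝓝 1, ∃ d, HasDerivAt X d T ∧ 2 * T * Mf q m T (X T) * d = -Nf q m T (X T)) ∧
      ∀ᶠ T in 𝓝[>] 1, 0 < X T ∧ tay q t m (X T) < T := by
  have h0 : (0:ℝ) ∈ Ioo (-δ) δ := ⟨by linarith [hN.δ0], hN.δ0⟩
  have hnb : ∀ᶠ z in 𝓝 (0:ℝ), z ∈ Ioo (-δ) δ := isOpen_Ioo.mem_nhds h0
  have hT0 : nT q t m v 0 = 1 := by unfold nT sT; ring
  have htp := h.tp
  have hc := hN.cd.contDiffAt (isOpen_Ioo.mem_nhds h0)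
  have hv0 : ContinuousAt v 0 := (hN.smooth.contDiffAt (isOpen_Ioo.mem_nhds h0)).continuousAt
  have hd0 : HasDerivAt (nT q t m v) (-t) 0 := by
    obtain ⟨d, hd, -⟩ := hN.ode 0 h0
    have hnT : nT q t m v = fun z => 1 - t * z + bT q t m * z ^ 2 - aT q t m * z ^ 3 - nEn q t m * z ^ 4 - z ^ 4 * v z := by
      funext z; unfold nT sT nY; ring
    rw [hnT]
    refine ((((((hasDerivAt_const 0 (1:ℝ)).sub ((hasDerivAt_id 0).const_mul t)).add
      ((hasDerivAt_pow 2 0).const_mul (bT q t m))).sub ((hasDerivAt_pow 3 0).const_mul (aT q t m))).sub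
      ((hasDerivAt_pow 4 0).const_mul (nEn q t m))).sub ((hasDerivAt_pow 4 0).mul hd)).congr_deriv ?_
    simp
  obtain ⟨Z, cZ, Z1, hl, hr⟩ := exists_local_inverse hc hd0 (by linarith)
  rw [hT0] at cZ Z1 hr
  have cZ1 : Tendsto Z (𝓝 1) (𝓝 0) := by simpa [ContinuousAt, Z1] using cZ.continuousAt
  have hdZ : ∀ᶠ T in 𝓝 1, DifferentiableAt ℝ Z T := by
    have := (cZ.of_le (m := 1) (by exact_mod_cast le_top)).eventually (by simp)
    exact this.mono fun T hT => hT.differentiableAt one_ne_zero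
  have hrr := eventually_eventually_nhds.2 hr
  -- the derivative of the inverse, by the chain rule
  have key : ∀ᶠ T in 𝓝 1, ∀ d, HasDerivAt (nT q t m v) d (Z T) → ∃ e, HasDerivAt Z e T ∧ d * e = 1 := by
    filter_upwards [hdZ, hrr] with T h1 h2 d hd
    refine ⟨_, h1.hasDerivAt, ?_⟩
    have h3 := hd.comp T h1.hasDerivAt
    exact h3.unique ((hasDerivAt_id T).congr_of_eventuallyEq h2)
  have hX1 : HasDerivAt (fun T => -Z T) (1 / t) 1 := by
    obtain ⟨e, he, he'⟩ := key.self_of_nhds (-t) (by rw [Z1]; exact hd0)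
    refine he.neg.congr_deriv ?_
    field_simp; linarith
  have hpos : ∀ᶠ T in 𝓝[>] (1:ℝ), 0 < -Z T := by
    have h1 : Tendsto (slope (fun T => -Z T) 1) (𝓝[>] 1) (𝓝 (1 / t)) :=
      (hasDerivAt_iff_tendsto_slope.1 hX1).mono_left (nhdsWithin_mono _ fun x hx => ne_of_gt hx)
    filter_upwards [h1.eventually (lt_mem_nhds (one_div_pos.2 htp)), self_mem_nhdsWithin] with T h2 h3
    rw [slope_def_field, Z1, neg_zero, sub_zero] at h2
    have h4 : 0 < T - 1 := sub_pos.2 h3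
    have := mul_pos h2 h4
    rwa [div_mul_cancel₀ _ h4.ne'] at this
  refine ⟨fun T => -Z T, by simp [Z1], cZ.neg, hX1, hl.mono fun z hz => congrArg Neg.neg hz, ?_, ?_⟩
  · filter_upwards [cZ1.eventually hnb, key, hr] with T h1 h2 h3
    obtain ⟨d, hd, hM⟩ := hN.nT_ode h hS k4 h1
    obtain ⟨e, he, he'⟩ := h2 d hd
    refine ⟨_, he.neg, ?_⟩
    rw [h3] at hM
    have hNf : Nf q m T (-Z T) = -Z T * sDen q t m (Z T) (nY q t m (Z T) (v (Z T))) := by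
      rw [← sDen_eq]; congr 1; exact h3.symm
    rw [hNf]
    linear_combination (-e) * hM + (Z T * sDen q t m (Z T) (nY q t m (Z T) (v (Z T)))) * he'
  · have hen := nEn_neg h hS k4
    have hsm : ∀ᶠ z in 𝓝 (0:ℝ), nEn q t m + v z < 0 := by
      have : ContinuousAt (fun z => nEn q t m + v z) 0 := by fun_prop
      exact this.eventually (gt_mem_nhds (by simp only; rw [hN.zero]; linarith))
    filter_upwards [hpos, (cZ1.eventually hsm).filter_mono nhdsWithin_le_nhds, hr.filter_mono nhdsWithin_le_nhds] with T h1 h2 h3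
    refine ⟨h1, ?_⟩
    have := nT_tay (q := q) (t := t) (m := m) (v := v) (Z T)
    rw [h3] at this
    have h4 : 0 < Z T ^ 4 := by
      have : Z T ≠ 0 := by intro h; rw [h] at h1; simp at h1
      positivity
    have := mul_neg_of_pos_of_neg h4 h2
    linarith
end

end

/-! ### Uniqueness of flat trajectories -/

section

section
variable {q t m δ ε : ℝ} {v p : ℝ → ℝ}

/-- `-N/z` is bounded below on a thin rectangle of arbitrary height. -/
theorem den_rect (h : Par q t m) (R : ℝ) : ∃ η > 0, ∀ z, |z| ≤ η → ∀ w ∈ Icc (-R) R,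
      pL q t m / 2 < sDen q t m z (nY q t m z w) := by
  have hl := h.lam
  have : ∀ᶠ z in 𝓝 (0:ℝ), ∀ w ∈ Icc (-R) R, pL q t m / 2 < sDen q t m z (nY q t m z w) := by
    refine isCompact_Icc.eventually_forall_of_forall_eventually fun w _ => ?_
    refine (contDiff_den (q := q) (t := t) (m := m)).continuous.continuousAt.eventually
      (lt_mem_nhds (a := pL q t m / 2) ?_)
    simp only [sDen, nY]; ring_nf; linarith
  obtain ⟨δ, hδ, hd⟩ := Metric.eventually_nhds_iff.1 this
  refine ⟨δ / 2, by positivity, fun z hz => hd ?_⟩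
  rw [Real.dist_eq, sub_zero]; linarith

theorem nH_lip (h : Par q t m) (R : ℝ) : ∃ η > 0, ∃ L, 0 ≤ L ∧ ∀ z, |z| ≤ η → ∀ w ∈ Icc (-R) R,
    ∀ w' ∈ Icc (-R) R, |nH q t m (z, w) - nH q t m (z, w')| ≤ L * |w - w'| := by
  obtain ⟨η, hη, hd⟩ := den_rect h R
  have hl := h.lam
  have hc : ContDiffOn ℝ 1 (nH q t m) (Icc (-η) η ×ˢ Icc (-R) R) :=
    contDiffOn_nH (by exact_mod_cast le_top) fun a ha =>
      lt_trans (by positivity) (hd a.1 (abs_le.2 ha.1) a.2 ha.2)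
  obtain ⟨K, hK⟩ := hc.exists_lipschitzOnWith one_ne_zero ((convex_Icc _ _).prod (convex_Icc _ _))
    (isCompact_Icc.prod isCompact_Icc)
  refine ⟨η, hη, K, K.2, fun z hz w hw w' hw' => ?_⟩
  have h1 := hK.dist_le_mul (z, w) ⟨abs_le.1 hz, hw⟩ (z, w') ⟨abs_le.1 hz, hw'⟩
  rw [Real.dist_eq, Prod.dist_eq, dist_self, max_eq_right dist_nonneg, Real.dist_eq] at h1
  exact h1

/-- A trajectory flat to second order at the sonic point lies on the smooth branch. -/
theorem node_left (h : Par q t m) (hS : 0 < pS3 q t m) (k4 : pK q t < 4 * pL q t m)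
    (hN : NodeSol q t m δ v) (hp : LeftSol q t m p ε) {s₁ K : ℝ} (hs1 : 0 < s₁)
    (hy : ∀ s ∈ Ioc 0 s₁, |yt q t m p s - aT q t m * zt p s ^ 2| ≤ K * zt p s ^ 3 ∧
      0 < sDen q t m (zt p s) (yt q t m p s)) :
    ∃ η > 0, η ≤ 1 / 2 ∧ (∀ s ∈ Ioo 0 η, zt p s ≤ 5 / 2 * s) ∧ (∀ s ∈ Ioo 0 η, 0 < zt p s) ∧
      ∀ s ∈ Ioo 0 η, nT q t m v (zt p s) = 1 - s := by
  have hk := h.kap_lt k4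
  obtain ⟨B, l, c, hb⟩ := exists_SBd (P := Unit) (Q := fun _ => q) (Θ := fun _ => t) (Μ := fun _ => m)
    continuous_const continuous_const continuous_const fun _ => h
  replace hb := hb ()
  have htr := LeftSol.traj h hp hb
  set C := 13 + B + 5 * B / c + 2 * B / l
  set c1 := min (1 / 4) (l / 32) with hc1
  have c10 : 0 < c1 := lt_min (by norm_num) (by have := hb.l0; positivity)
  have hs0 : 0 < s0f B l := by
    have := hb.B1; have := hb.l0
    exact lt_min (by norm_num) (by positivity)
  set R := |K| + |nEn q t m| + 1 with hR
  obtain ⟨η, hη, L, hL, hlip⟩ := nH_lip h R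
  set ν := 3 - kap q t m with hν
  have ν0 : 0 < ν := by linarith
  set ζ := min (min δ η) (ν / (2 * (L + 1))) with hζ
  have ζ0 : 0 < ζ := lt_min (lt_min hN.δ0 hη) (by positivity)
  set σ := min (min s₁ (s0f B l)) (ζ / 5) with hσ
  have σ0 : 0 < σ := lt_min (lt_min hs1 hs0) (by positivity)
  have hC0 : 0 < C := by
    have := hb.B1; have := hb.c0; have := hb.l0
    positivity
  have hmem : ∀ s ∈ Ioo 0 σ, s ∈ Ioc 0 s₁ ∧ s ∈ Ioc 0 (s0f B l) ∧ 0 < zt p s ∧ zt p s ≤ 5 / 2 * s ∧ zt p s < ζ := by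
    intro s hs
    have a1 : s < s₁ := hs.2.trans_le ((min_le_left _ _).trans (min_le_left _ _))
    have a2 : s < s0f B l := hs.2.trans_le ((min_le_left _ _).trans (min_le_right _ _))
    have a3 : s < ζ / 5 := hs.2.trans_le (min_le_right _ _)
    have hbd := LeftSol.bds h hp hb ⟨hs.1, a2.le⟩
    have z1 : 0 < zt p s := lt_of_lt_of_le (mul_pos c10 hs.1) (htr.zl s ⟨hs.1, a2.le⟩)
    have z2 : zt p s ≤ s * (5 / 2) := mul_le_mul_of_nonneg_left hbd.2.2.1 hs.1.le
    exact ⟨⟨hs.1, a1.le⟩, ⟨hs.1, a2.le⟩, z1, by linarith, by linarith⟩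
  set w : ℝ → ℝ := fun s => (yt q t m p s - aT q t m * zt p s ^ 2 - nEn q t m * zt p s ^ 3) / zt p s ^ 3 with hw
  have hyw : ∀ s ∈ Ioo 0 σ, yt q t m p s = nY q t m (zt p s) (w s) := by
    intro s hs
    have hz := (hmem s hs).2.2.1.ne'
    simp only [hw, nY]; field_simp; ring
  have hwR : ∀ s ∈ Ioo 0 σ, |w s| ≤ R := by
    intro s hs
    obtain ⟨a1, -, z0, -⟩ := hmem s hs
    have hz3 : 0 < zt p s ^ 3 := by positivity
    simp only [hw]
    rw [abs_div, abs_of_pos hz3, div_le_iff₀ hz3]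
    refine (abs_sub _ _).trans ?_
    rw [abs_mul, abs_of_pos hz3, hR]
    have b1 := (hy s a1).1
    have b2 := mul_le_mul_of_nonneg_right (le_abs_self K) hz3.le
    linarith
  have hvR : ∀ s ∈ Ioo 0 σ, zt p s ∈ Ioo (-δ) δ ∧ v (zt p s) ∈ Icc (-R) R ∧ |zt p s| ≤ η := by
    intro s hs
    obtain ⟨-, -, z0, -, z1⟩ := hmem s hs
    have zδ : zt p s < δ := z1.trans_le ((min_le_left _ _).trans (min_le_left _ _))
    have zη : zt p s < η := z1.trans_le ((min_le_left _ _).trans (min_le_right _ _))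
    have hzm : zt p s ∈ Ioo (-δ) δ := ⟨by linarith [hN.δ0], zδ⟩
    refine ⟨hzm, abs_le.1 ((hN.bd _ hzm).trans ?_), by rw [abs_of_pos z0]; exact zη.le⟩
    linarith [abs_nonneg K, abs_nonneg (nEn q t m)]
  have e2 := sa2_eq h hS
  have hen : ν * nEn q t m = sa3 q t m + sa11 q t m * aT q t m := by
    rw [nEn, mul_div_cancel₀ _ ν0.ne']
  have hdw : ∀ s ∈ Ioo 0 σ, HasDerivAt w (ρt q m p s / zt p s * (-ν * w s + zt p s * nH q t m (zt p s, w s))) s := by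
    intro s hs
    obtain ⟨a1, a2, z0, -, z1⟩ := hmem s hs
    have dz := htr.dz s a2
    have dy := htr.dy s a2
    have hz3 : zt p s ^ 3 ≠ 0 := by positivity
    refine (((dy.sub ((dz.pow 2).const_mul _)).sub ((dz.pow 3).const_mul _)).div (dz.pow 3) hz3).congr_deriv ?_
    have hden := (hy s a1).2.ne'
    rw [nH]
    simp only [Pi.pow_apply, Pi.sub_apply]
    rw [← hyw s hs]
    have ey : yt q t m p s = zt p s ^ 2 * (aT q t m + nEn q t m * zt p s + zt p s * w s) := hyw s hs
    rw [Rt]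
    generalize sDen q t m (zt p s) (yt q t m p s) = Den at *
    rw [ey, e2]
    have hsa3 : sa3 q t m = ν * nEn q t m - sa11 q t m * aT q t m := by linarith
    rw [hsa3]
    generalize sG1 q t m (zt p s) = g1 at *
    generalize sG2 q t m (zt p s) = g2 at *
    generalize sG3 q t m (zt p s) = g3 at *
    generalize w s = W at *
    generalize zt p s = z at *
    have hkk : kap q t m = 3 - ν := by rw [hν]; ring
    rw [hkk]
    field_simp
    push_cast
    ring
  have hdv : ∀ s ∈ Ioo 0 σ, HasDerivAt (fun s => v (zt p s))
      (ρt q m p s / zt p s * (-ν * v (zt p s) + zt p s * nH q t m (zt p s, v (zt p s)))) s := by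
    intro s hs
    obtain ⟨a1, a2, z0, -, z1⟩ := hmem s hs
    obtain ⟨d, hd, hode⟩ := hN.ode _ (hvR s hs).1
    refine (hd.comp s (htr.dz s a2)).congr_deriv ?_
    have : -ν = kap q t m - 3 := by rw [hν]; ring
    rw [this, ← hode]
    field_simp
  have huniq := unique_of_damped (D := fun s => w s - v (zt p s)) (δ := σ) (c := c1 / C * (ν / 2)) (B := 2 * R)
    (by positivity) (fun s hs => (hdw s hs).sub (hdv s hs)) ?_ ?_
  · refine ⟨min σ (1 / 2), lt_min σ0 (by norm_num), min_le_right _ _, ?_, ?_, ?_⟩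
    · exact fun s hs => (hmem s ⟨hs.1, hs.2.trans_le (min_le_left _ _)⟩).2.2.2.1
    · exact fun s hs => (hmem s ⟨hs.1, hs.2.trans_le (min_le_left _ _)⟩).2.2.1
    intro s hs'
    have hs : s ∈ Ioo 0 σ := ⟨hs'.1, hs'.2.trans_le (min_le_left _ _)⟩
    have e : w s = v (zt p s) := sub_eq_zero.1 (huniq s hs)
    obtain ⟨a1, a2, z0, -, z1⟩ := hmem s hs
    rw [nT, ← e, ← hyw s hs]
    obtain ⟨hs1', p1, -⟩ := LeftSol.bds h hp hb a2
    have hp0 : p (1 / s - 1) ≠ 0 := by intro h; rw [h] at p1; norm_num at p1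
    unfold sT yt
    have : zt p s * (1 / p (1 / s - 1)) = s := by unfold zt; field_simp
    linear_combination -this
  · intro s hs
    obtain ⟨a1, a2, z0, -, z1⟩ := hmem s hs
    obtain ⟨-, hv1, hz1⟩ := hvR s hs
    have hl := hlip (zt p s) hz1 (w s) (abs_le.1 (hwR s hs)) (v (zt p s)) hv1
    set D := w s - v (zt p s) with hD
    set A := nH q t m (zt p s, w s) - nH q t m (zt p s, v (zt p s)) with hA
    have hr : c1 / C ≤ s * (ρt q m p s / zt p s) := by
      rw [← mul_div_assoc, div_le_div_iff₀ hC0 z0]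
      have r1 := htr.ρl s a2
      have r2 := htr.zu s a2
      have := mul_le_mul r2 r1 c10.le (mul_nonneg hC0.le hs.1.le)
      linarith
    have hAD : D * A ≤ L * D ^ 2 := by
      calc D * A ≤ |D| * |A| := by rw [← abs_mul]; exact le_abs_self _
        _ ≤ |D| * (L * |D|) := mul_le_mul_of_nonneg_left hl (abs_nonneg _)
        _ = L * |D| ^ 2 := by ring
        _ = L * D ^ 2 := by rw [sq_abs]
    have hzL : zt p s * L ≤ ν / 2 := by
      have hz : zt p s ≤ ν / (2 * (L + 1)) := z1.le.trans (min_le_right _ _)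
      rw [le_div_iff₀ (by positivity)] at hz
      linarith
    have k1 : ν / 2 * D ^ 2 ≤ ν * D ^ 2 - zt p s * (D * A) := by
      have j1 := mul_le_mul_of_nonneg_left hAD z0.le
      have j2 := mul_le_mul_of_nonneg_right hzL (sq_nonneg D)
      linarith
    have k2 := mul_le_mul hr k1 (by positivity) (le_trans (by positivity) hr)
    have e : s * (D * (ρt q m p s / zt p s * (-ν * w s + zt p s * nH q t m (zt p s, w s)) -
        ρt q m p s / zt p s * (-ν * v (zt p s) + zt p s * nH q t m (zt p s, v (zt p s))))) =
        -(s * (ρt q m p s / zt p s) * (ν * D ^ 2 - zt p s * (D * A))) := by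
      rw [hA]
      have : w s = D + v (zt p s) := by rw [hD]; ring
      rw [this]; ring
    rw [e]
    linarith
  · intro s hs
    have a := hwR s hs
    have b := abs_le.2 (hvR s hs).2.1
    exact (abs_sub _ _).trans (by linarith)
end

end

/-! ### Signs to the right of the sonic point -/

section

/-- The polynomial `D(T, x)`. -/
def Df (q m T x : ℝ) : ℝ := (1 + q) * (1 - T * (1 - m * x) ^ 2)
/-- `M` in the variable `τ = 1/T`. -/
def Mt (q m τ x : ℝ) : ℝ := (1 + q) * τ - ((1 + q) - pB0 q m * x + pB1 q m * x ^ 2)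
/-- `N` in the variable `τ = 1/T`. -/
def Nt (q m τ x : ℝ) : ℝ := τ * (pA0 q + 3 * (1 + q) * x)
  - (1 + x) * ((1 - m * x) * (pA0 q - (1 + q) * m * x))
/-- The region to the right of the sonic point, bounded by the barrier and by `x = 3/5`. -/
def Om (q t m T x : ℝ) : Prop := x ≤ 3 / 5 ∧ (x ≤ 0 ∨ tay q t m x ≤ T)

section
variable {q t m T τ x : ℝ}

theorem Mf_eq_Mt (hT : T ≠ 0) : Mf q m T x = T * Mt q m T⁻¹ x := by
  unfold Mf Mt; field_simp
theorem Nf_eq_Nt (hT : T ≠ 0) : Nf q m T x = T * Nt q m T⁻¹ x := by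
  unfold Nf Nt pC1 pC2 pC3; push_cast; field_simp; ring

theorem Par.tay_pos (h : Par q t m) (hS : 0 < pS3 q t m) (hx : 0 < x) (hx1 : x ≤ 3 / 5) :
    0 < tay q t m x := by
  obtain ⟨h1, h2⟩ := h.bpos hS hx hx1
  by_contra! hc
  have hq := h.qp
  have := mul_nonpos_of_nonpos_of_nonneg hc h1.le
  unfold Mf at h2
  linarith

/-- `M < 0` in the region to the right of the sonic point. -/
theorem Par.Om_M (h : Par q t m) (hS : 0 < pS3 q t m) (hT : 1 < T) (hO : Om q t m T x) :
    Mf q m T x < 0 := by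
  have hq := h.qp
  obtain ⟨hx1, hx⟩ := hO
  rcases le_or_gt x 0 with hx0 | hx0
  · have h1 : 0 ≤ -pB0 q m * x + pB1 q m * x ^ 2 := by
      have := mul_nonneg h.B0.le (neg_nonneg.2 hx0)
      have := mul_nonneg h.B1.le (sq_nonneg x)
      linarith
    have h2 := mul_nonneg (by linarith : 0 ≤ T) h1
    have h3 := mul_pos (by linarith : 0 < 1 + q) (sub_pos.2 hT)
    unfold Mf
    linarith
  · have hx := hx.resolve_left (not_le.2 hx0)
    obtain ⟨h1, h2⟩ := h.bpos hS hx0 hx1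
    have := mul_le_mul_of_nonneg_right hx h1.le
    unfold Mf at h2 ⊢
    linarith

theorem Par.Om_D (h : Par q t m) (hS : 0 < pS3 q t m) (hT : 1 < T) (hO : Om q t m T x) :
    Df q m T x < 0 := by
  have hM := h.Om_M hS hT hO
  have hq := h.qp
  have hm := h.mp
  obtain ⟨hx1, hx⟩ := hO
  rcases le_or_gt x 0 with hx0 | hx0
  · have h1 : 0 ≤ -(m * x) := by
      have := mul_nonneg hm.le (neg_nonneg.2 hx0)
      linarith
    have h2 : 1 < T * (1 - m * x) ^ 2 := by
      have : 1 ≤ (1 - m * x) ^ 2 := by nlinarith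
      nlinarith
    unfold Df
    nlinarith
  · have e : Df q m T x = Mf q m T x - T * (2 * q * x * ((1 - q * m) - (1 + q) * m * x)) := by
      unfold Df Mf pB0 pB1; push_cast; ring
    have h1 : 0 ≤ (1 - q * m) - (1 + q) * m * x := by
      have h3 := h.qm1
      have h4 := h.m1
      have : (m + q * m) * x ≤ 9 / 10 * (3 / 5) := by
        apply mul_le_mul (by linarith) hx1 hx0.le (by norm_num)
      linarith
    have : 0 ≤ T * (2 * q * x * ((1 - q * m) - (1 + q) * m * x)) := by positivity
    linarith

theorem Par.a_low (h : Par q t m) (hx : x ≤ 3 / 5) :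
    1 / 4 ≤ (1 - m * x) * (pA0 q - (1 + q) * m * x) := by
  have h1 : m * x ≤ 1 / 2 := by nlinarith [h.mp, h.m1]
  have h2 : (1 + q) * m * x ≤ (1 + q) * (1 / 2) := by
    have := mul_le_mul_of_nonneg_left h1 (by linarith [h.qp] : 0 ≤ 1 + q)
    linarith
  have h3 : 1 / 2 ≤ pA0 q - (1 + q) * m * x := by
    unfold pA0; push_cast; linarith [h.qp]
  nlinarith

/-- `M` stays negative at `T = ∞` as well. -/
theorem Par.Mt_neg (h : Par q t m) (hS : 0 < pS3 q t m) (h0 : 0 ≤ τ) (h1 : τ < 1)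
    (hx1 : x ≤ 3 / 5) (hx : x ≤ 0 ∨ τ * tay q t m x ≤ 1) : Mt q m τ x < 0 := by
  rcases h0.eq_or_lt with rfl | h0
  · unfold Mt
    rcases le_or_gt x 0 with hx0 | hx0
    · have := mul_nonneg h.B0.le (neg_nonneg.2 hx0)
      have := mul_nonneg h.B1.le (sq_nonneg x)
      linarith [h.qp]
    · linarith [(h.bpos hS hx0 hx1).1]
  · have hO : Om q t m τ⁻¹ x := by
      refine ⟨hx1, hx.imp_right fun h => ?_⟩
      rw [← one_div, le_div_iff₀ h0]; linarith
    have := h.Om_M hS (one_lt_inv_iff₀.2 ⟨h0, h1⟩) hO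
    rw [Mf_eq_Mt (inv_ne_zero h0.ne'), inv_inv] at this
    exact neg_of_mul_neg_right this (inv_nonneg.2 h0.le)

theorem Par.Nt_end (h : Par q t m) (hS : 0 < pS3 q t m) (h0 : 0 < τ)
    (hx : τ * tay q t m (3 / 5) ≤ 1) : Nt q m τ (3 / 5) < 0 := by
  have := h.end_neg hS (T := τ⁻¹) (by rw [← one_div, le_div_iff₀ h0]; linarith)
    (h.tay_pos hS (by norm_num) le_rfl)
  rw [Nf_eq_Nt (inv_ne_zero h0.ne'), inv_inv] at this
  exact neg_of_mul_neg_right this (inv_nonneg.2 h0.le)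

/-- The field points into the region on its lower edge. -/
theorem Par.Nt_low (h : Par q t m) (h1 : τ ≤ 1) :
    0 < Nt q m τ (-1 - (1 + 3 / m)) := by
  have hq := h.qp
  have hm := h.mp
  obtain ⟨L, hL⟩ : ∃ L, L = 1 + 3 / m := ⟨_, rfl⟩
  have hmL : m * L = m + 3 := by rw [hL]; field_simp
  have hL1 : 1 ≤ L := by rw [hL]; have : 0 < 3 / m := by positivity
                         linarith
  rw [← hL]
  have e : Nt q m τ (-1 - L) = τ * (pA0 q + 3 * (1 + q) * (-1 - L)) +
      L * ((1 + m + m * L) * (pA0 q + (1 + q) * (m + m * L))) := by unfold Nt; ring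
  rw [e, hmL]
  unfold pA0; push_cast
  have h2 : τ * (2 + 3 * (1 + q) * L) ≤ 1 * (2 + 3 * (1 + q) * L) :=
    mul_le_mul_of_nonneg_right h1 (by positivity)
  have h3 : 4 * (1 + 3 * q + (1 + q) * 3) ≤ (1 + m + (m + 3)) * (1 + 3 * q + (1 + q) * (m + (m + 3))) := by
    apply mul_le_mul (by linarith) _ (by positivity) (by positivity)
    nlinarith
  have h4 := mul_le_mul_of_nonneg_left h3 (by linarith : 0 ≤ L)
  nlinarith

/-- A one-sided barrier step: `f ≤ 0` persists if `f` decreases strictly wherever it vanishes. -/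
theorem ev_right {f : ℝ → ℝ} {f' s : ℝ} (hf : HasDerivAt f f' s) (h0 : f s ≤ 0)
    (h1 : f s = 0 → f' < 0) : ∀ᶠ y in 𝓝[>] s, f y ≤ 0 := by
  rcases h0.lt_or_eq with h | h
  · exact (hf.continuousAt.eventually_lt_const h).filter_mono nhdsWithin_le_nhds |>.mono fun _ => le_of_lt
  · have h2 := (hasDerivAt_iff_tendsto_slope.1 hf).eventually_lt_const (h1 h)
    have h3 : ∀ᶠ y in 𝓝[>] s, slope f s y < 0 :=
      h2.filter_mono (nhdsWithin_mono _ fun y (hy : s < y) => hy.ne')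
    filter_upwards [h3, self_mem_nhdsWithin] with y hy (hy1 : s < y)
    rw [slope_def_field, h, sub_zero] at hy
    by_contra! hc
    exact absurd hy (not_lt.2 (div_nonneg hc.le (sub_pos.2 hy1).le))

/-- A smooth negative modification of `M`, equal to it where `M ≤ -c`. -/
theorem neg_mod {B c y : ℝ} (hc : 0 < c) (hy : |y| ≤ B) :
    y - (1 + B) * Real.smoothTransition ((y + c) / (c / 2)) < 0 ∧
      (y ≤ -c → y - (1 + B) * Real.smoothTransition ((y + c) / (c / 2)) = y) := by
  have hB : 0 ≤ B := (abs_nonneg y).trans hy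
  constructor
  · rcases le_or_gt (-(c / 2)) y with h | h
    · rw [Real.smoothTransition.one_of_one_le]
      · linarith [le_abs_self y]
      · rw [one_le_div (by positivity)]; linarith
    · have := mul_nonneg (by linarith : 0 ≤ 1 + B)
        (Real.smoothTransition.nonneg ((y + c) / (c / 2)))
      linarith
  · intro h
    rw [Real.smoothTransition.zero_of_nonpos]
    · ring
    · exact div_nonpos_of_nonpos_of_nonneg (by linarith) (by positivity)

end

end

/-! ### The invariant region -/

section

section
variable {q t m : ℝ}

/-- The invariant region of the flow in the compactified variables `(τ, x)`, `τ = 1/T`. -/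
def Kt (q t m τ x : ℝ) : Prop :=
  -1 - (1 + 3 / m) ≤ x ∧ x ≤ 3 / 5 ∧ (x ≤ 0 ∨ τ * tay q t m x ≤ 1)

theorem continuous_Mt : Continuous fun z : ℝ × ℝ => Mt q m z.1 z.2 := by
  unfold Mt; fun_prop
theorem contDiff_Mt : ContDiff ℝ 1 fun z : ℝ × ℝ => Mt q m z.1 z.2 := by
  unfold Mt; fun_prop
theorem contDiff_Nt : ContDiff ℝ 1 fun z : ℝ × ℝ => Nt q m z.1 z.2 := by
  unfold Nt; fun_prop
theorem continuous_tay : Continuous (tay q t m) := by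
  unfold tay; fun_prop

theorem isClosed_Kt : IsClosed {z : ℝ × ℝ | Kt q t m z.1 z.2} := by
  have c := continuous_tay (q := q) (t := t) (m := m)
  refine (isClosed_le continuous_const continuous_snd).inter
    ((isClosed_le continuous_snd continuous_const).inter
    ((isClosed_le continuous_snd continuous_const).union
    (isClosed_le (continuous_fst.mul (c.comp continuous_snd)) continuous_const)))

/-- By compactness `M` stays away from `0` on the invariant region. -/
theorem Par.Mt_bound (h : Par q t m) (hS : 0 < pS3 q t m) {τ₁ : ℝ} (h1 : τ₁ < 1) :
    ∃ c B, 0 < c ∧ (∀ τ ∈ Icc 0 τ₁, ∀ x, Kt q t m τ x → Mt q m τ x ≤ -c) ∧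
      ∀ τ ∈ Icc 0 τ₁, ∀ x ∈ Icc (-1 - (1 + 3 / m)) (3 / 5), |Mt q m τ x| ≤ B := by
  have hR : IsCompact (Icc 0 τ₁ ×ˢ Icc (-1 - (1 + 3 / m)) (3 / 5)) := isCompact_Icc.prod isCompact_Icc
  obtain ⟨B, hB⟩ := hR.exists_bound_of_continuousOn (continuous_Mt (q := q) (m := m)).continuousOn
  have hK := hR.inter_right (isClosed_Kt (q := q) (t := t) (m := m))
  obtain ⟨c, hc, hc'⟩ : ∃ c, 0 < c ∧ ∀ z ∈ (Icc 0 τ₁ ×ˢ Icc (-1 - (1 + 3 / m)) (3 / 5)) ∩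
      {z : ℝ × ℝ | Kt q t m z.1 z.2}, Mt q m z.1 z.2 ≤ -c := by
    rcases ((Icc 0 τ₁ ×ˢ Icc (-1 - (1 + 3 / m)) (3 / 5)) ∩
      {z : ℝ × ℝ | Kt q t m z.1 z.2}).eq_empty_or_nonempty with he | hne
    · exact ⟨1, one_pos, fun z hz => absurd (he ▸ hz) (notMem_empty z)⟩
    · obtain ⟨z, hz, hz'⟩ := hK.exists_isMaxOn hne (continuous_Mt (q := q) (m := m)).continuousOn
      refine ⟨-Mt q m z.1 z.2, ?_, fun y hy => ?_⟩
      · have := h.Mt_neg hS hz.1.1.1 (hz.1.1.2.trans_lt h1) hz.2.2.1 hz.2.2.2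
        linarith
      · rw [neg_neg]; exact hz' hy
  refine ⟨c, B, hc, fun τ hτ x hx => hc' (τ, x) ⟨⟨hτ, hx.1, hx.2.1⟩, hx⟩, fun τ hτ x hx => ?_⟩
  exact hB (τ, x) ⟨hτ, hx⟩

/-- The global trajectory in the logarithmic variable `s`, `τ = τ₁ exp (-s)`: it solves a modified ODE with
a global Lipschitz field, and invariance of the region makes the modification inactive. -/
theorem Par.right_traj (h : Par q t m) (hS : 0 < pS3 q t m) {τ₁ x₁ : ℝ} (h0 : 0 < τ₁) (h1 : τ₁ < 1)
    (hx0 : 0 < x₁) (hx1 : x₁ ≤ 3 / 5) (hx : τ₁ * tay q t m x₁ ≤ 1) :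
    ∃ x : ℝ → ℝ, x 0 = x₁ ∧ ∀ s, 0 ≤ s → Kt q t m (τ₁ * exp (-s)) (x s) ∧
      HasDerivAt x (-Nt q m (τ₁ * exp (-s)) (x s) / (2 * Mt q m (τ₁ * exp (-s)) (x s))) s := by
  have hm := h.mp
  have hq := h.qp
  obtain ⟨c, B, hc, hcK, hB⟩ := h.Mt_bound hS h1
  obtain ⟨lo, hlo⟩ : ∃ lo, lo = -1 - (1 + 3 / m) - x₁ := ⟨_, rfl⟩
  obtain ⟨hi, hhi⟩ : ∃ hi, hi = 3 / 5 - x₁ := ⟨_, rfl⟩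
  have h3m : 0 < 3 / m := by positivity
  let g : ℝ × ℝ → ℝ := fun z => Mt q m z.1 (x₁ + z.2) -
    (1 + B) * Real.smoothTransition ((Mt q m z.1 (x₁ + z.2) + c) / (c / 2))
  let F : ℝ × ℝ → ℝ := fun z => -Nt q m z.1 (x₁ + z.2) / (2 * g z)
  have cdM : ContDiff ℝ 1 fun z : ℝ × ℝ => Mt q m z.1 (x₁ + z.2) :=
    contDiff_Mt.comp (contDiff_fst.prodMk (contDiff_const.add contDiff_snd))
  have cdN : ContDiff ℝ 1 fun z : ℝ × ℝ => Nt q m z.1 (x₁ + z.2) :=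
    contDiff_Nt.comp (contDiff_fst.prodMk (contDiff_const.add contDiff_snd))
  have cdg : ContDiff ℝ 1 g := cdM.sub (contDiff_const.mul
    ((Real.smoothTransition.contDiff (n := 1)).comp ((cdM.add contDiff_const).div_const _)))
  have hmem : ∀ z ∈ Icc 0 τ₁ ×ˢ Icc lo hi, |Mt q m z.1 (x₁ + z.2)| ≤ B := fun z hz =>
    hB z.1 hz.1 _ ⟨by linarith [hz.2.1], by linarith [hz.2.2]⟩
  have hF : ContDiffOn ℝ 1 F (Icc 0 τ₁ ×ˢ Icc lo hi) := by
    refine cdN.neg.contDiffOn.div (contDiff_const.mul cdg).contDiffOn fun z hz => ?_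
    have := (neg_mod hc (hmem z hz)).1
    exact mul_ne_zero two_ne_zero this.ne
  obtain ⟨φ, hφd⟩ : ∃ φ : ℝ → ℝ, φ = fun s => clp 0 τ₁ (τ₁ * exp (-s)) := ⟨_, rfl⟩
  have cφ : Continuous φ := by
    rw [hφd]; exact (continuous_clp (lo := 0) (hi := τ₁)).comp (by fun_prop)
  have hφ : ∀ s, φ s ∈ Icc 0 τ₁ := fun s => by rw [hφd]; exact clp_mem h0.le _
  have hφe : ∀ s, 0 ≤ s → φ s = τ₁ * exp (-s) := fun s hs => by
    rw [hφd]
    refine clp_of_mem ⟨by positivity, ?_⟩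
    have : exp (-s) ≤ 1 := exp_le_one_iff.2 (by linarith)
    nlinarith
  obtain ⟨w, cw, cH, hw⟩ := bb_rect (μ₀ := 0) le_rfl (by linarith : lo ≤ hi) cφ hφ hF
  have hwd : ∀ s, HasDerivAt w (F (φ s, clp lo hi (w s))) s := fun s => by
    have hd : HasDerivAt (fun s => s * bbV 0 (fun y => F (φ y, clp lo hi (w y))) s)
      (F (φ s, clp lo hi (w s)) - 0 * bbV 0 (fun y => F (φ y, clp lo hi (w y))) s) s :=
      hasDerivAt_mul_bbV le_rfl cH s
    rw [← funext hw] at hd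
    simpa using hd
  have hw0 : w 0 = 0 := by rw [hw 0, zero_mul]
  -- inside the region the truncations are inactive
  have hder : ∀ s, 0 ≤ s → Kt q t m (τ₁ * exp (-s)) (x₁ + w s) → HasDerivAt (fun s => x₁ + w s)
      (-Nt q m (τ₁ * exp (-s)) (x₁ + w s) / (2 * Mt q m (τ₁ * exp (-s)) (x₁ + w s))) s := by
    intro s hs hK
    refine ((hwd s).const_add x₁).congr_deriv ?_
    have hwm : w s ∈ Icc lo hi := ⟨by linarith [hK.1], by linarith [hK.2.1]⟩
    rw [clp_of_mem hwm]
    have hz := hmem (φ s, w s) ⟨hφ s, hwm⟩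
    rw [← hφe s hs] at hK
    have e := (neg_mod hc hz).2 (hcK _ (hφ s) _ hK)
    simp only [F, g]
    simp only at e
    rw [e, hφe s hs]
  refine ⟨fun s => x₁ + w s, by simp [hw0], ?_⟩
  suffices hall : ∀ b, 0 ≤ b → Icc 0 b ⊆ {s | Kt q t m (τ₁ * exp (-s)) (x₁ + w s)} from
    fun s hs => ⟨hall s hs ⟨hs, le_rfl⟩, hder s hs (hall s hs ⟨hs, le_rfl⟩)⟩
  intro b hb
  refine IsClosed.Icc_subset_of_forall_exists_gt ?_ ?_ ?_
  · refine IsClosed.inter ?_ isClosed_Icc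
    have cc : Continuous fun s : ℝ => (τ₁ * exp (-s), x₁ + w s) := by fun_prop
    exact isClosed_Kt.preimage cc
  · simp only [mem_ofPred_eq, hw0, neg_zero, exp_zero, mul_one, add_zero]
    exact ⟨by linarith, hx1, Or.inr hx⟩
  rintro s ⟨hK, hs0, hsb⟩ y hy
  have hK : Kt q t m (τ₁ * exp (-s)) (x₁ + w s) := hK
  have hd := hder s hs0 hK
  obtain ⟨τ, hτ⟩ : ∃ τ, τ = τ₁ * exp (-s) := ⟨_, rfl⟩
  have hτd : HasDerivAt (fun s => τ₁ * exp (-s)) (-τ) s := by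
    refine (((hasDerivAt_neg s).exp).const_mul τ₁).congr_deriv ?_
    rw [hτ]; ring
  rw [← hτ] at hK hd
  have hτ0 : 0 < τ := by rw [hτ]; positivity
  have hτ1 : τ < 1 := by rw [hτ, ← hφe s hs0]; exact (hφ s).2.trans_lt h1
  obtain ⟨X, hX⟩ : ∃ X, X = x₁ + w s := ⟨_, rfl⟩
  rw [← hX] at hK hd
  have hM := h.Mt_neg hS hτ0.le hτ1 hK.2.1 hK.2.2
  have e1 : ∀ᶠ y in 𝓝[>] s, (-1 - (1 + 3 / m)) - (x₁ + w y) ≤ 0 := by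
    refine ev_right (hd.const_sub _) (by linarith [hK.1]) fun e => ?_
    rw [← hX] at e
    have e' : X = -1 - (1 + 3 / m) := by linarith
    have := h.Nt_low hτ1.le
    rw [← e'] at this
    have := div_pos_of_neg_of_neg (neg_neg_of_pos this) (by linarith : 2 * Mt q m τ X < 0)
    linarith
  have e2 : ∀ᶠ y in 𝓝[>] s, (x₁ + w y) - 3 / 5 ≤ 0 := by
    refine ev_right (hd.sub_const _) (by linarith [hK.2.1]) fun e => ?_
    rw [← hX] at e
    have e' : X = 3 / 5 := by linarith
    have h3 : τ * tay q t m (3 / 5) ≤ 1 := by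
      rw [← e']; exact hK.2.2.resolve_left (by rw [e']; norm_num)
    have := h.Nt_end hS hτ0 h3
    rw [← e'] at this
    exact div_neg_of_pos_of_neg (neg_pos.2 this) (by linarith)
  have e3 : ∀ᶠ y in 𝓝[>] s, x₁ + w y ≤ 0 ∨ τ₁ * exp (-y) * tay q t m (x₁ + w y) ≤ 1 := by
    have cx : ContinuousAt (fun s => x₁ + w s) s := hd.continuousAt
    have ct : ContinuousAt (fun y => τ₁ * exp (-y) * tay q t m (x₁ + w y)) s := by
      have ct' := (continuous_tay (q := q) (t := t) (m := m)).comp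
        (by fun_prop : Continuous fun s => x₁ + w s)
      have : Continuous fun y : ℝ => τ₁ * exp (-y) := by fun_prop
      exact (this.mul ct').continuousAt
    rcases lt_trichotomy X 0 with h0 | h0 | h0
    · have := cx.eventually_lt (g := fun _ => (0:ℝ)) continuousAt_const (by show x₁ + w s < 0; rw [← hX]; exact h0)
      exact (this.filter_mono nhdsWithin_le_nhds).mono fun y hy => Or.inl hy.le
    · have := ct.eventually_lt (g := fun _ => (1:ℝ)) continuousAt_const (by
        show τ₁ * exp (-s) * tay q t m (x₁ + w s) < 1
        rw [← hX, ← hτ, h0]; unfold tay; norm_num; exact hτ1)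
      exact (this.filter_mono nhdsWithin_le_nhds).mono fun y hy => Or.inr hy.le
    · have hle := hK.2.2.resolve_left (not_le.2 h0)
      have htd : HasDerivAt (tay q t m) (t + 2 * bT q t m * X + 3 * aT q t m * X ^ 2) X := by
        have h1 := ((hasDerivAt_id X).const_mul t).const_add 1
        have h2 := ((hasDerivAt_pow 2 X).const_mul (bT q t m))
        have h3 := ((hasDerivAt_pow 3 X).const_mul (aT q t m))
        refine ((h1.add h2).add h3).congr_deriv ?_
        norm_num; ring
      have htd' : HasDerivAt (tay q t m) (t + 2 * bT q t m * X + 3 * aT q t m * X ^ 2)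
          ((fun s => x₁ + w s) s) := by
        show HasDerivAt _ _ (x₁ + w s)
        rw [← hX]; exact htd
      have hcd : HasDerivAt (fun y => τ₁ * exp (-y) * tay q t m (x₁ + w y) - 1)
          (-τ * tay q t m X + τ * ((t + 2 * bT q t m * X + 3 * aT q t m * X ^ 2) *
            (-Nt q m τ X / (2 * Mt q m τ X)))) s := by
        refine ((hτd.mul (htd'.comp s hd)).sub_const 1).congr_deriv ?_
        simp only [Function.comp]
        rw [← hX, ← hτ]
      have := ev_right hcd (by
        rw [← hX, ← hτ]; linarith) (by
        rw [← hX, ← hτ]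
        intro e
        have hT : tay q t m X = τ⁻¹ := by field_simp; linarith
        have hb := h.barrier hS h0 hK.2.1
        rw [hT, Mf_eq_Mt (inv_ne_zero hτ0.ne'), Nf_eq_Nt (inv_ne_zero hτ0.ne'), inv_inv] at hb
        rw [hT]
        have e4 : -τ * τ⁻¹ + τ * ((t + 2 * bT q t m * X + 3 * aT q t m * X ^ 2) *
          (-Nt q m τ X / (2 * Mt q m τ X))) =
          (2 * τ⁻¹ * (τ⁻¹ * Mt q m τ X) + (t + 2 * bT q t m * X + 3 * aT q t m * X ^ 2) *
            (τ⁻¹ * Nt q m τ X)) * (-τ ^ 2 / (2 * Mt q m τ X)) := by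
          have := hM.ne
          have := hτ0.ne'
          field_simp
          ring
        rw [e4]
        exact mul_neg_of_neg_of_pos hb (div_pos_of_neg_of_neg (by nlinarith) (by linarith)))
      refine this.mono fun y hy => Or.inr ?_
      linarith
  have e5 : ∀ᶠ z in 𝓝[>] s, z ∈ Ioc s y := Ioc_mem_nhdsGT hy
  obtain ⟨z, ⟨⟨z1, z2⟩, z3⟩, z4⟩ := (((e1.and e2).and e3).and e5).exists
  exact ⟨z, ⟨by linarith, by linarith, z3⟩, z4⟩

end

end

/-! ### The limit at infinity -/

section

section
variable {q t m : ℝ}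

/-- A Lyapunov function `exp (k s) (x + 1)² + C exp ((k - 1) s)` with a small `k > 0` is nonincreasing. -/
theorem Par.right_lim (h : Par q t m) (hS : 0 < pS3 q t m) {τ₁ : ℝ} (h0 : 0 < τ₁) (h1 : τ₁ < 1)
    {x : ℝ → ℝ} (hx : ∀ s, 0 ≤ s → Kt q t m (τ₁ * exp (-s)) (x s) ∧
      HasDerivAt x (-Nt q m (τ₁ * exp (-s)) (x s) / (2 * Mt q m (τ₁ * exp (-s)) (x s))) s) :
    Tendsto x atTop (𝓝 (-1)) := by
  have hm := h.mp
  have hq := h.qp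
  obtain ⟨c, B, hc, hcK, hB⟩ := h.Mt_bound hS h1
  obtain ⟨R, hR⟩ : ∃ R, R = 2 + 3 / m := ⟨_, rfl⟩
  have hR0 : 2 ≤ R := by have : 0 < 3 / m := by positivity
                         linarith
  have hτ : ∀ s, 0 ≤ s → τ₁ * exp (-s) ∈ Icc 0 τ₁ := fun s hs => by
    refine ⟨by positivity, ?_⟩
    have : exp (-s) ≤ 1 := exp_le_one_iff.2 (by linarith)
    nlinarith
  have hMB : ∀ s, 0 ≤ s → -B ≤ Mt q m (τ₁ * exp (-s)) (x s) ∧ Mt q m (τ₁ * exp (-s)) (x s) ≤ -c :=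
    fun s hs => ⟨(abs_le.1 (hB _ (hτ s hs) _ ⟨(hx s hs).1.1, (hx s hs).1.2.1⟩)).1,
      hcK _ (hτ s hs) _ (hx s hs).1⟩
  have hB0 : 0 < B := by have := hMB 0 le_rfl; linarith
  obtain ⟨C, hC⟩ : ∃ C, C = (pA0 q + 3 * (1 + q) * R) * (R + 1) / c := ⟨_, rfl⟩
  have hA0 : 0 < pA0 q := pA0_pos hq.le
  have hC0 : 0 ≤ C := by rw [hC]; positivity
  obtain ⟨k, hk⟩ : ∃ k, k = min (1 / (4 * B)) (1 / 2) := ⟨_, rfl⟩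
  have hk0 : 0 < k := by rw [hk]; positivity
  have hk1 : k ≤ 1 / 2 := by rw [hk]; exact min_le_right _ _
  have hkB : k ≤ 1 / (4 * B) := by rw [hk]; exact min_le_left _ _
  let f : ℝ → ℝ := fun s => exp (k * s) * (x s + 1) ^ 2 + C * τ₁ / (1 - k) * exp ((k - 1) * s)
  have hfd : ∀ s, 0 ≤ s → HasDerivAt f (exp (k * s) * k * (x s + 1) ^ 2 + exp (k * s) *
      (2 * (x s + 1) * (-Nt q m (τ₁ * exp (-s)) (x s) / (2 * Mt q m (τ₁ * exp (-s)) (x s))))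
      - C * τ₁ * exp ((k - 1) * s)) s := by
    intro s hs
    have e1 := ((hasDerivAt_id s).const_mul k).exp
    have e2 := ((hx s hs).2.add_const 1).pow 2
    have e3 := (((hasDerivAt_id s).const_mul (k - 1)).exp).const_mul (C * τ₁ / (1 - k))
    refine ((e1.mul e2).add e3).congr_deriv ?_
    have : 1 - k ≠ 0 := by linarith
    simp only [Pi.pow_apply, id, Nat.cast_ofNat, Nat.add_one_sub_one, pow_one, mul_one]
    field_simp
    ring
  have hneg : ∀ s, 0 ≤ s → exp (k * s) * k * (x s + 1) ^ 2 + exp (k * s) *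
      (2 * (x s + 1) * (-Nt q m (τ₁ * exp (-s)) (x s) / (2 * Mt q m (τ₁ * exp (-s)) (x s))))
      - C * τ₁ * exp ((k - 1) * s) ≤ 0 := by
    intro s hs
    obtain ⟨hK, -⟩ := hx s hs
    obtain ⟨b1, b2⟩ := hMB s hs
    have e : exp ((k - 1) * s) = exp (k * s) * exp (-s) := by rw [← exp_add]; ring_nf
    rw [e]
    have hτs := (hτ s hs).1
    generalize x s = X at *
    have hX : |X| ≤ R := by rw [abs_le, hR]; constructor <;> linarith [hK.1, hK.2.1]
    obtain ⟨τ, hτe⟩ : ∃ τ, τ = τ₁ * exp (-s) := ⟨_, rfl⟩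
    rw [← hτe] at b1 b2 hτs ⊢
    obtain ⟨M, hM⟩ : ∃ M, M = -Mt q m τ X := ⟨_, rfl⟩
    have hMM : Mt q m τ X = -M := by linarith
    rw [hMM] at b1 b2 ⊢
    have hM0 : 0 < M := by linarith
    have ha := h.a_low hK.2.1
    have key : 2 * (X + 1) * (-Nt q m τ X / (2 * -M)) =
        -((X + 1) ^ 2 * (((1 - m * X) * (pA0 q - (1 + q) * m * X)) / M)) +
          τ * ((pA0 q + 3 * (1 + q) * X) * (X + 1) / M) := by
      unfold Nt
      field_simp
      ring
    have k1 : 1 / (4 * B) ≤ ((1 - m * X) * (pA0 q - (1 + q) * m * X)) / M := by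
      rw [← div_div]
      exact div_le_div₀ (by linarith) ha hM0 (by linarith)
    have k2 : (pA0 q + 3 * (1 + q) * X) * (X + 1) / M ≤ C := by
      rw [hC]
      refine div_le_div₀ (by positivity) ?_ hc (by linarith)
      refine (le_abs_self _).trans ?_
      rw [abs_mul]
      refine mul_le_mul ?_ ?_ (abs_nonneg _) (by positivity)
      · refine (abs_add_le _ _).trans ?_
        rw [abs_of_pos hA0, abs_mul, abs_of_pos (by positivity : 0 < 3 * (1 + q))]
        have := mul_le_mul_of_nonneg_left hX (by positivity : 0 ≤ 3 * (1 + q))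
        linarith
      · refine (abs_add_le _ _).trans ?_
        rw [abs_one]; linarith
    rw [key]
    have k3 := mul_le_mul_of_nonneg_left (hkB.trans k1) (sq_nonneg (X + 1))
    have k4 := mul_le_mul_of_nonneg_left k2 hτs
    have hfin : k * (X + 1) ^ 2 + (-((X + 1) ^ 2 * (((1 - m * X) * (pA0 q - (1 + q) * m * X)) / M)) +
          τ * ((pA0 q + 3 * (1 + q) * X) * (X + 1) / M)) - C * τ ≤ 0 := by linarith
    have := mul_nonpos_of_nonneg_of_nonpos (exp_pos (k * s)).le hfin
    rw [hτe] at this ⊢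
    linarith
  have hanti : AntitoneOn f (Ici 0) := by
    refine antitoneOn_of_deriv_nonpos (convex_Ici 0)
      (fun s hs => (hfd s hs).continuousAt.continuousWithinAt) ?_ ?_
    · rw [interior_Ici]
      exact fun s hs => (hfd s (le_of_lt hs)).differentiableAt.differentiableWithinAt
    · rw [interior_Ici]
      intro s hs
      rw [(hfd s (le_of_lt hs)).deriv]
      exact hneg s (le_of_lt hs)
  have hle : ∀ s, 0 ≤ s → (x s + 1) ^ 2 ≤ f 0 * exp (-(k * s)) := by
    intro s hs
    have h2 := hanti (mem_Ici.2 le_rfl) (mem_Ici.2 hs) hs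
    have h3 : 0 ≤ C * τ₁ / (1 - k) * exp ((k - 1) * s) := by
      have : 0 < 1 - k := by linarith
      positivity
    have h4 : exp (k * s) * (x s + 1) ^ 2 ≤ f 0 := by
      simp only [f] at h2 ⊢; linarith
    have h5 := mul_le_mul_of_nonneg_right h4 (exp_pos (-(k * s))).le
    have h6 : exp (k * s) * exp (-(k * s)) = 1 := by rw [← exp_add, add_neg_cancel, exp_zero]
    calc (x s + 1) ^ 2 = (exp (k * s) * exp (-(k * s))) * (x s + 1) ^ 2 := by rw [h6, one_mul]
      _ ≤ _ := by linarith
  have hlim : Tendsto (fun s => f 0 * exp (-(k * s))) atTop (𝓝 0) := by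
    have : Tendsto (fun s => exp (-(k * s))) atTop (𝓝 0) :=
      tendsto_exp_neg_atTop_nhds_zero.comp (tendsto_id.const_mul_atTop hk0)
    simpa using this.const_mul (f 0)
  have hsq : Tendsto (fun s => (x s + 1) ^ 2) atTop (𝓝 0) := by
    refine tendsto_of_tendsto_of_tendsto_of_le_of_le' tendsto_const_nhds hlim
      (Eventually.of_forall fun s => sq_nonneg _) ?_
    filter_upwards [eventually_ge_atTop 0] with s hs using hle s hs
  have habs : Tendsto (fun s => |x s + 1|) atTop (𝓝 0) := by
    have := hsq.sqrt
    simpa [Real.sqrt_sq_eq_abs] using this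
  have := (tendsto_zero_iff_abs_tendsto_zero _).2 habs
  have := this.sub_const 1
  simpa using this

/-- Global solution to the right of a point inside the barrier region. -/
theorem Par.right_exists (h : Par q t m) (hS : 0 < pS3 q t m) {T₁ x₁ : ℝ} (hT : 1 < T₁)
    (hx0 : 0 < x₁) (hx1 : x₁ ≤ 3 / 5) (hx : tay q t m x₁ ≤ T₁) :
    ∃ X : ℝ → ℝ, X T₁ = x₁ ∧ (∀ T, T₁ ≤ T → Om q t m T (X T) ∧
      HasDerivAt X (-Nf q m T (X T) / (2 * T * Mf q m T (X T))) T) ∧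
      Tendsto X atTop (𝓝 (-1)) := by
  have hT0 : 0 < T₁ := by linarith
  have hi0 : 0 < T₁⁻¹ := inv_pos.2 hT0
  have hi1 : T₁⁻¹ < 1 := inv_lt_one_of_one_lt₀ hT
  obtain ⟨x, hx00, hxs⟩ := h.right_traj hS hi0 hi1 hx0 hx1
    (by rw [inv_mul_le_iff₀ hT0]; linarith)
  have hlim := h.right_lim hS hi0 hi1 hxs
  have hτ : ∀ T, T₁ ≤ T → T₁⁻¹ * exp (-log (T / T₁)) = T⁻¹ := fun T hT' => by
    have : 0 < T := by linarith
    rw [exp_neg, exp_log (by positivity)]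
    field_simp
  refine ⟨fun T => x (log (T / T₁)), by simp [div_self hT0.ne', hx00], fun T hT' => ?_, ?_⟩
  · have hTp : 0 < T := by linarith
    obtain ⟨h1, h2⟩ := hxs (log (T / T₁)) (log_nonneg (by rw [one_le_div hT0]; exact hT'))
    rw [hτ T hT'] at h1 h2
    refine ⟨⟨h1.2.1, h1.2.2.imp_right fun e => ?_⟩, ?_⟩
    · rwa [inv_mul_le_iff₀ hTp, mul_one] at e
    · have hl : HasDerivAt (fun T => log (T / T₁)) (1 / T₁ / (T / T₁)) T :=
        ((hasDerivAt_id T).div_const T₁).log (by positivity)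
      refine (h2.comp T hl).congr_deriv ?_
      simp only
      rw [Mf_eq_Mt hTp.ne', Nf_eq_Nt hTp.ne']
      have hM : Mt q m T⁻¹ (x (log (T / T₁))) ≠ 0 := by
        have := h.Om_M hS (by linarith : 1 < T) ⟨h1.2.1, h1.2.2.imp_right fun e => by
          rwa [inv_mul_le_iff₀ hTp, mul_one] at e⟩
        rw [Mf_eq_Mt hTp.ne'] at this
        exact fun e => by rw [e] at this; simp at this
      generalize Mt q m T⁻¹ (x (log (T / T₁))) = M at *
      generalize Nt q m T⁻¹ (x (log (T / T₁))) = N at *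
      field_simp
  · have : Tendsto (fun T => log (T / T₁)) atTop atTop :=
      tendsto_log_atTop.comp (tendsto_id.atTop_div_const hT0)
    exact hlim.comp this

end

end

/-! ### The global trajectory -/

section

/-- A smooth global trajectory `x = X(T)` through the sonic point `(T, x) = (1, 0)`, defined for
`T > -ε`, along which `M` and `D` change sign at `T = 1` only. -/
structure Glob (q t m ε : ℝ) (X : ℝ → ℝ) : Prop where
  ε0 : 0 < ε
  one : X 1 = 0
  d1 : HasDerivAt X (1 / t) 1
  smooth : ContDiffOn ℝ (⊤ : ℕ∞) X (Ioi (-ε))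
  ode : ∀ T ∈ Ioi (-ε), ∃ d, HasDerivAt X d T ∧ 2 * T * Mf q m T (X T) * d = -Nf q m T (X T)
  left : ∀ T ∈ Ioo (-ε) 1, 0 < Mf q m T (X T) ∧ 0 < Df q m T (X T)
  right : ∀ T ∈ Ioi (1:ℝ), Mf q m T (X T) < 0 ∧ Df q m T (X T) < 0
  lim : Tendsto X atTop (𝓝 (-1))

/-- The solution to the left of the sonic point in the variables `(T, x)`. -/
def leftX (p : ℝ → ℝ) (T : ℝ) : ℝ := -((1 - T) * p (T / (1 - T)))

section
variable {q t m ε : ℝ} {p : ℝ → ℝ}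

theorem LeftSol.dom (hp : LeftSol q t m p ε) {T : ℝ} (hT : T ∈ Ioo (-ε) 1) :
    0 < 1 - T ∧ T / (1 - T) ∈ Ioi (-ε) ∧ 1 / (1 + T / (1 - T)) = 1 - T := by
  have h1 : 0 < 1 - T := by linarith [hT.2]
  refine ⟨h1, ?_, ?_⟩
  · rw [mem_Ioi, lt_div_iff₀ h1]
    nlinarith [hp.ε0, hp.ε1, hT.1, mul_pos hp.ε0 (by linarith [hp.ε0, hp.ε1, hT.1] : 0 < T + ε)]
  · field_simp
    ring

theorem Mf_leftX (T : ℝ) : Mf q m T (leftX p T) = (1 - T) * lmf q m (1 - T) (p (T / (1 - T))) := by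
  unfold Mf leftX lmf; ring
theorem Nf_leftX (T : ℝ) : Nf q m T (leftX p T) = (1 - T) * lnf q m (1 - T) (p (T / (1 - T))) := by
  unfold Nf leftX lnf lA1; ring

theorem LeftSol.lmf_pos (h : Par q t m) (hp : LeftSol q t m p ε) {T : ℝ} (hT : T ∈ Ioo (-ε) 1) :
    0 < lmf q m (1 - T) (p (T / (1 - T))) := by
  obtain ⟨h1, h2, h3⟩ := hp.dom hT
  refine h.lmf_pos h1.le (LeftSol.pos h hp h2) fun _ => ?_
  have := hp.hi _ h2
  rwa [h3] at this

theorem LeftSol.signs (h : Par q t m) (hp : LeftSol q t m p ε) {T : ℝ} (hT : T ∈ Ioo (-ε) 1) :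
    0 < Mf q m T (leftX p T) ∧ 0 < Df q m T (leftX p T) := by
  obtain ⟨h1, h2, h3⟩ := hp.dom hT
  refine ⟨by rw [Mf_leftX]; exact mul_pos h1 (hp.lmf_pos h hT), ?_⟩
  have hq := h.qp
  refine mul_pos (by linarith) ?_
  have hp0 := LeftSol.pos h hp h2
  have hpi := hp.hi _ h2
  rw [h3] at hpi
  unfold leftX
  generalize p (T / (1 - T)) = P at *
  rcases le_or_gt T 0 with h0 | h0
  · have := mul_nonneg (neg_nonneg.2 h0) (sq_nonneg (1 - m * -((1 - T) * P)))
    linarith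
  · have ha : m * P ≤ 4 / 9 := by
      have e1 : P * (t * (3 / 4)) ≤ P * (t * (1 - (1 - T) / 4)) := by
        refine mul_le_mul_of_nonneg_left (mul_le_mul_of_nonneg_left ?_ h.tp.le) hp0.le
        linarith
      have e2 := mul_le_mul_of_nonneg_right h.qm.le hp0.le
      linarith
    have ha0 : 0 ≤ m * P := mul_nonneg h.mp.le hp0.le
    have e : 1 - m * -((1 - T) * P) = 1 + (1 - T) * (m * P) := by ring
    rw [e]
    have hle : (1 + (1 - T) * (m * P)) ^ 2 ≤ (1 + (1 - T) * (4 / 9)) ^ 2 := by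
      have := mul_le_mul_of_nonneg_left ha h1.le
      exact pow_le_pow_left₀ (by positivity) (by linarith) 2
    have := mul_le_mul_of_nonneg_left hle h0.le
    obtain ⟨w, hw⟩ : ∃ w, w = 1 - T := ⟨_, rfl⟩
    have hT' : T = 1 - w := by linarith
    rw [← hw] at h1 this ⊢
    rw [hT'] at this h0 ⊢
    nlinarith [mul_pos h1 h1, mul_pos (mul_pos h1 h1) h1]

theorem LeftSol.leftX_deriv (hp : LeftSol q t m p ε) {T d : ℝ} (hT : T ∈ Ioo (-ε) 1)
    (hd : HasDerivAt p d (T / (1 - T))) :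
    HasDerivAt (leftX p) (p (T / (1 - T)) - d / (1 - T)) T := by
  obtain ⟨h1, h2, h3⟩ := hp.dom hT
  have e1 : HasDerivAt (fun T : ℝ => 1 - T) (-1) T := (hasDerivAt_id T).const_sub 1
  have e2 : HasDerivAt (fun T : ℝ => T / (1 - T)) (1 / (1 - T) ^ 2) T := by
    refine ((hasDerivAt_id T).div e1 h1.ne').congr_deriv ?_
    simp only [id]
    field_simp
    ring
  refine (e1.mul (hd.comp T e2)).neg.congr_deriv ?_
  simp only [Function.comp]
  field_simp
  ring

theorem LeftSol.leftX_ode (h : Par q t m) (hp : LeftSol q t m p ε) {T : ℝ} (hT : T ∈ Ioo (-ε) 1) :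
    ∃ d, HasDerivAt (leftX p) d T ∧
      2 * T * Mf q m T (leftX p T) * d = -Nf q m T (leftX p T) := by
  obtain ⟨h1, h2, h3⟩ := hp.dom hT
  obtain ⟨d, hd, ho⟩ := hp.ode _ h2
  refine ⟨_, hp.leftX_deriv hT hd, ?_⟩
  rw [Mf_leftX, Nf_leftX]
  rw [h3] at ho
  have hm := (hp.lmf_pos h hT).ne'
  generalize lmf q m (1 - T) (p (T / (1 - T))) = M at *
  generalize lnf q m (1 - T) (p (T / (1 - T))) = N at *
  generalize p (T / (1 - T)) = P at *
  have e : 2 * T * ((1 - T) * M) * (P - d / (1 - T)) =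
    2 * (1 - T) * M * (T * P - T / (1 - T) * d) := by field_simp
  rw [e, ho]
  field_simp
  ring

theorem LeftSol.leftX_smooth (hp : LeftSol q t m p ε) :
    ContDiffOn ℝ (⊤ : ℕ∞) (leftX p) (Ioo (-ε) 1) := by
  have e1 : ContDiffOn ℝ (⊤ : ℕ∞) (fun T : ℝ => T / (1 - T)) (Ioo (-ε) 1) :=
    contDiffOn_id.div (contDiff_const.sub contDiff_id).contDiffOn fun T hT => (hp.dom hT).1.ne'
  exact ((contDiff_const.sub contDiff_id).contDiffOn.mul
    (hp.smooth.comp e1 fun T hT => (hp.dom hT).2.1)).neg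

theorem contDiff_Mf : ContDiff ℝ (⊤ : ℕ∞) fun z : ℝ × ℝ => Mf q m z.1 z.2 := by
  unfold Mf; fun_prop
theorem contDiff_Nf : ContDiff ℝ (⊤ : ℕ∞) fun z : ℝ × ℝ => Nf q m z.1 z.2 := by
  unfold Nf; fun_prop
theorem contDiff_Df : ContDiff ℝ (⊤ : ℕ∞) fun z : ℝ × ℝ => Df q m z.1 z.2 := by
  unfold Df; fun_prop

/-- Gluing two functions with the same value and the same derivative. -/
theorem hasDerivAt_glue {f g : ℝ → ℝ} {d a : ℝ} (hf : HasDerivAt f d a) (hg : HasDerivAt g d a)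
    (e : f a = g a) : HasDerivAt (fun x => if x ≤ a then f x else g x) d a := by
  have h1 : HasDerivWithinAt (fun x => if x ≤ a then f x else g x) d (Iic a) a :=
    hf.hasDerivWithinAt.congr (fun x hx => if_pos hx) (if_pos le_rfl)
  have h2 : HasDerivWithinAt (fun x => if x ≤ a then f x else g x) d (Ici a) a := by
    refine hg.hasDerivWithinAt.congr (fun x hx => ?_) (by rw [if_pos le_rfl, e])
    rcases (mem_Ici.1 hx).eq_or_lt with rfl | hx
    · rw [if_pos le_rfl, e]
    · rw [if_neg (not_le.2 hx)]
  have := h1.union h2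
  rwa [Iic_union_Ici, hasDerivWithinAt_univ] at this

/-- To the right of `T = 1`: the node solution continued by the barrier argument. -/
theorem Par.right_glue (h : Par q t m) (hS : 0 < pS3 q t m) {Xn : ℝ → ℝ} (hX1 : Xn 1 = 0)
    (hXd : HasDerivAt Xn (1 / t) 1)
    (hode : ∀ᶠ T in 𝓝 1, ∃ d, HasDerivAt Xn d T ∧ 2 * T * Mf q m T (Xn T) * d = -Nf q m T (Xn T))
    (hpos : ∀ᶠ T in 𝓝[>] 1, 0 < Xn T ∧ tay q t m (Xn T) < T) :
    ∃ Y : ℝ → ℝ, (∀ᶠ T in 𝓝 1, Y T = Xn T) ∧ (∀ T, 1 < T → Om q t m T (Y T) ∧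
      HasDerivAt Y (-Nf q m T (Y T) / (2 * T * Mf q m T (Y T))) T) ∧
      Tendsto Y atTop (𝓝 (-1)) := by
  have h35 : ∀ᶠ T in 𝓝 1, Xn T < 3 / 5 :=
    hXd.continuousAt.eventually_lt (g := fun _ => (3 / 5 : ℝ)) continuousAt_const
      (by rw [hX1]; norm_num)
  have hall := (((hode.and h35).filter_mono nhdsWithin_le_nhds).and hpos)
  obtain ⟨u, hu, hu'⟩ := mem_nhdsGT_iff_exists_Ioo_subset.1 hall
  have hu : 1 < u := hu
  obtain ⟨T₁, h1, h1u⟩ := exists_between hu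
  have hn : ∀ T ∈ Ioo 1 u, Om q t m T (Xn T) ∧
      HasDerivAt Xn (-Nf q m T (Xn T) / (2 * T * Mf q m T (Xn T))) T := by
    intro T hT
    obtain ⟨⟨⟨d, hd, ho⟩, h3⟩, h4, h5⟩ := hu' hT
    have hO : Om q t m T (Xn T) := ⟨h3.le, Or.inr h5.le⟩
    refine ⟨hO, hd.congr_deriv ?_⟩
    have hM := (h.Om_M hS hT.1 hO).ne
    have hT0 : T ≠ 0 := by linarith [hT.1]
    rw [eq_div_iff (mul_ne_zero (mul_ne_zero two_ne_zero hT0) hM)]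
    linarith
  obtain ⟨⟨-, h3⟩, h4, h5⟩ := hu' ⟨h1, h1u⟩
  obtain ⟨Xr, r1, r2, r3⟩ := h.right_exists hS h1 h4 (le_of_lt h3) h5.le
  let Y : ℝ → ℝ := fun T => if T ≤ T₁ then Xn T else Xr T
  have Yl : ∀ T, T ≤ T₁ → Y T = Xn T := fun T hT => if_pos hT
  have Yr : ∀ T, T₁ < T → Y T = Xr T := fun T hT => if_neg (not_le.2 hT)
  refine ⟨Y, ?_, fun T hT => ?_, ?_⟩
  · filter_upwards [gt_mem_nhds h1] with T hT using Yl T hT.le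
  · rcases lt_trichotomy T T₁ with hT1 | rfl | hT1
    · rw [Yl T hT1.le]
      obtain ⟨a1, a2⟩ := hn T ⟨hT, hT1.trans h1u⟩
      refine ⟨a1, a2.congr_of_eventuallyEq ?_⟩
      filter_upwards [gt_mem_nhds hT1] with y hy using Yl y hy.le
    · rw [Yl T le_rfl]
      obtain ⟨a1, a2⟩ := hn T ⟨hT, h1u⟩
      obtain ⟨b1, b2⟩ := r2 T le_rfl
      rw [r1] at b2
      exact ⟨a1, hasDerivAt_glue a2 b2 r1.symm⟩
    · rw [Yr T hT1]
      obtain ⟨a1, a2⟩ := r2 T hT1.le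
      refine ⟨a1, a2.congr_of_eventuallyEq ?_⟩
      filter_upwards [lt_mem_nhds hT1] with y hy using Yr y hy
  · refine r3.congr' ?_
    filter_upwards [eventually_gt_atTop T₁] with y hy using (Yr y hy).symm

/-- The left trajectory, the smooth branch and the right trajectory glued together. -/
theorem glob_exists (h : Par q t m) (hS : 0 < pS3 q t m) (k4 : pK q t < 4 * pL q t m)
    (hp : LeftSol q t m p ε) {s₁ K : ℝ} (hs1 : 0 < s₁)
    (hy : ∀ s ∈ Ioc 0 s₁, |yt q t m p s - aT q t m * zt p s ^ 2| ≤ K * zt p s ^ 3 ∧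
      0 < sDen q t m (zt p s) (yt q t m p s)) :
    ∃ X : ℝ → ℝ, Glob q t m ε X ∧ ∀ T ∈ Ioo (-ε) 1, X T = leftX p T := by
  obtain ⟨δ, v, hN⟩ := node_exists h k4
  obtain ⟨Xn, hX1, hXc, hXd, hXn, hode, hpos⟩ := hN.X h hS k4
  obtain ⟨η, hη, hη2, z1, z2, z3⟩ := node_left h hS k4 hN hp hs1 hy
  obtain ⟨Y, y1, y2, y3⟩ := h.right_glue hS hX1 hXd hode hpos
  let X : ℝ → ℝ := fun T => if T < 1 then leftX p T else Y T
  have Xl : ∀ T, T < 1 → X T = leftX p T := fun T hT => if_pos hT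
  have Xr : ∀ T, 1 ≤ T → X T = Y T := fun T hT => if_neg (not_lt.2 hT)
  -- the left solution agrees with the node solution near `T = 1`
  have hzt : Tendsto (zt p) (𝓝[>] 0) (𝓝 0) := by
    have h5 : Tendsto (fun s : ℝ => 5 / 2 * s) (𝓝[>] 0) (𝓝 0) := by
      have : Tendsto (fun s : ℝ => 5 / 2 * s) (𝓝 0) (𝓝 (5 / 2 * 0)) :=
        (continuous_const.mul continuous_id).tendsto 0
      rw [mul_zero] at this
      exact this.mono_left nhdsWithin_le_nhds
    refine tendsto_of_tendsto_of_tendsto_of_le_of_le' tendsto_const_nhds h5 ?_ ?_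
    · filter_upwards [Ioo_mem_nhdsGT hη] with s hs using (z2 s hs).le
    · filter_upwards [Ioo_mem_nhdsGT hη] with s hs using z1 s hs
  have hl0 : ∀ᶠ s in 𝓝[>] (0:ℝ), leftX p (1 - s) = Xn (1 - s) := by
    filter_upwards [hzt.eventually hXn, Ioo_mem_nhdsGT hη] with s e1 hs
    rw [z3 s hs] at e1
    rw [e1]
    unfold leftX zt
    have := hs.1.ne'
    have e : (1 - s) / (1 - (1 - s)) = 1 / s - 1 := by
      rw [sub_sub_cancel]; field_simp
    rw [e]; ring
  have hl1 : ∀ᶠ T in 𝓝[<] (1:ℝ), leftX p T = Xn T := by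
    have ht : Tendsto (fun T : ℝ => 1 - T) (𝓝[<] 1) (𝓝[>] 0) := by
      refine tendsto_nhdsWithin_iff.2 ⟨?_, ?_⟩
      · have : Tendsto (fun T : ℝ => 1 - T) (𝓝 1) (𝓝 (1 - 1)) :=
          (continuous_const.sub continuous_id).tendsto 1
        rw [sub_self] at this
        exact this.mono_left nhdsWithin_le_nhds
      · filter_upwards [self_mem_nhdsWithin] with T (hT : T < 1)
        exact sub_pos.2 hT
    filter_upwards [ht.eventually hl0] with T hT
    simpa using hT
  have hXeq : X =ᶠ[𝓝 1] Xn := by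
    obtain ⟨l, hl, hl'⟩ := mem_nhdsLT_iff_exists_Ioo_subset.1 hl1
    filter_upwards [y1, lt_mem_nhds hl] with T hT (hlT : l < T)
    rcases lt_or_ge T 1 with hT1 | hT1
    · rw [Xl T hT1]; exact hl' ⟨hlT, hT1⟩
    · rw [Xr T hT1, hT]
  have hEl : ∀ T, T < 1 → X =ᶠ[𝓝 T] leftX p := fun T hT => by
    filter_upwards [gt_mem_nhds hT] with y hy using Xl y hy
  have hEr : ∀ T, 1 < T → X =ᶠ[𝓝 T] Y := fun T hT => by
    filter_upwards [lt_mem_nhds hT] with y hy using Xr y hy.le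
  have hεp := hp.ε0
  have hYs : ContDiffOn ℝ (⊤ : ℕ∞) Y (Ioi 1) := by
    refine contDiffOn_of_ode isOpen_Ioi (fun T hT => (y2 T hT).2) fun n hn => ?_
    have hpair := (contDiffOn_id (𝕜 := ℝ) (n := n) (s := Ioi (1:ℝ))).prodMk hn
    have cM := (contDiff_Mf (q := q) (m := m)).of_le (m := n) (by exact_mod_cast le_top)
    have cN := (contDiff_Nf (q := q) (m := m)).of_le (m := n) (by exact_mod_cast le_top)
    refine (cN.comp_contDiffOn hpair).neg.div
      ((contDiffOn_const.mul contDiffOn_id).mul (cM.comp_contDiffOn hpair)) fun T hT => ?_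
    have hT : 1 < T := hT
    have hM := (h.Om_M hS hT (y2 T hT).1).ne
    exact mul_ne_zero (mul_ne_zero two_ne_zero (by show T ≠ 0; linarith)) hM
  refine ⟨X, ⟨hεp, ?_, ?_, ?_, ?_, ?_, ?_, ?_⟩, fun T hT => Xl T hT.2⟩
  · rw [hXeq.eq_of_nhds, hX1]
  · exact hXd.congr_of_eventuallyEq hXeq
  · intro T hT
    refine ContDiffAt.contDiffWithinAt ?_
    rcases lt_trichotomy T 1 with h1 | rfl | h1
    · exact (hp.leftX_smooth.contDiffAt (isOpen_Ioo.mem_nhds ⟨hT, h1⟩)).congr_of_eventuallyEq (hEl T h1)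
    · exact hXc.congr_of_eventuallyEq hXeq
    · exact (hYs.contDiffAt (isOpen_Ioi.mem_nhds h1)).congr_of_eventuallyEq (hEr T h1)
  · intro T hT
    rcases lt_trichotomy T 1 with h1 | rfl | h1
    · obtain ⟨d, hd, ho⟩ := hp.leftX_ode h ⟨hT, h1⟩
      exact ⟨d, hd.congr_of_eventuallyEq (hEl T h1), by rw [Xl T h1]; exact ho⟩
    · refine ⟨1 / t, hXd.congr_of_eventuallyEq hXeq, ?_⟩
      rw [hXeq.eq_of_nhds, hX1]
      unfold Mf Nf; ring
    · obtain ⟨hO, hd⟩ := y2 T h1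
      refine ⟨_, hd.congr_of_eventuallyEq (hEr T h1), ?_⟩
      rw [Xr T h1.le]
      have hM := (h.Om_M hS h1 hO).ne
      have hT0 : T ≠ 0 := by linarith
      field_simp
  · intro T hT
    rw [Xl T hT.2]; exact hp.signs h hT
  · intro T hT
    rw [Xr T (le_of_lt hT)]
    exact ⟨h.Om_M hS hT (y2 T hT).1, h.Om_D hS hT (y2 T hT).1⟩
  · refine y3.congr' ?_
    filter_upwards [eventually_ge_atTop 1] with y hy using (Xr y hy).symm

end

end

/-! ### The profile equation along the trajectory -/

section

section
variable {q t m ε : ℝ} {X : ℝ → ℝ}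

/-- The component along the even part of the profile: a polynomial identity between `M`, `N`, `D`. -/
theorem even_poly (hq : 0 < q) (T x : ℝ) :
    2 * q / (1 + q) * Df q m T x + (1 - m * x) * (Df q m T x - Mf q m T x)
      - 3 * q * (1 + x) * Df q m T x + q * Nf q m T x = 0 := by
  have : (1 + q) ≠ 0 := by positivity
  unfold Df Mf Nf pB0 pB1 pA0 pC1 pC2 pC3 pA0; push_cast
  field_simp
  ring

/-- The component along the odd part of the profile: a polynomial identity between `M`, `N`, `D`. -/
theorem odd_poly (hq : 0 < q) (T x : ℝ) :
    T * (-(2 * q ^ 2 * (1 + x) / (1 + q)) * Df q m T x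
      - q * (1 - m * x) * ((1 + x) * Df q m T x - Nf q m T x)) + (Df q m T x - Mf q m T x) = 0 := by
  have : (1 + q) ≠ 0 := by positivity
  unfold Df Mf Nf pB0 pB1 pA0 pC1 pC2 pC3 pA0; push_cast
  field_simp
  ring

/-- A smooth function vanishing at `T = 1` is divisible by `T - 1`. -/
theorem exists_hadamard_one {f : ℝ → ℝ} (hε : 0 < ε) (hf : ContDiffOn ℝ (⊤ : ℕ∞) f (Ioi (-ε)))
    (h1 : f 1 = 0) : ∃ g : ℝ → ℝ, ContDiffOn ℝ (⊤ : ℕ∞) g (Ioi (-ε)) ∧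
      ∀ T ∈ Ioi (-ε), f T = (T - 1) * g T := by
  have hst : Star (Ioi (-ε - 1)) := by
    intro x hx s hs
    simp only [mem_Ioi] at hx ⊢
    obtain ⟨a, b⟩ := hs
    rcases le_total 0 x with h0 | h0
    · nlinarith [mul_nonneg h0 a]
    · nlinarith [mul_nonneg (neg_nonneg.2 h0) (sub_nonneg.2 b)]
  have hc : ContDiffOn ℝ (⊤ : ℕ∞) (fun x => f (x + 1)) (Ioi (-ε - 1)) := by
    refine hf.comp (f := fun x => x + 1) (by fun_prop) ?_
    intro x hx
    simp only [mem_Ioi] at hx ⊢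
    linarith
  obtain ⟨g, hg, hfg⟩ := exists_hadamard isOpen_Ioi hst hc
  refine ⟨fun T => g (T - 1), hg.comp (f := fun x => x - 1) (by fun_prop) ?_, ?_⟩
  · intro x hx
    simp only [mem_Ioi] at hx ⊢
    linarith
  · intro T hT
    have := hfg (T - 1) (by simp only [mem_Ioi] at hT ⊢; linarith)
    simp only [zero_add, h1, sub_add_cancel] at this
    exact this

/-- The quotient by `T - 1` takes the value of the derivative at `T = 1`. -/
theorem hadamard_value {f g : ℝ → ℝ} {d : ℝ} (hε : 0 < ε)
    (hg : ContDiffOn ℝ (⊤ : ℕ∞) g (Ioi (-ε))) (hfg : ∀ T ∈ Ioi (-ε), f T = (T - 1) * g T)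
    (hd : HasDerivAt f d 1) : g 1 = d := by
  have h1 : Ioi (-ε) ∈ 𝓝 (1:ℝ) := Ioi_mem_nhds (by linarith)
  have hg1 : HasDerivAt g (deriv g 1) 1 :=
    ((hg.contDiffAt h1).differentiableAt (by simp)).hasDerivAt
  have h2 : HasDerivAt (fun T => (T - 1) * g T) (1 * g 1 + (1 - 1) * deriv g 1) 1 :=
    ((hasDerivAt_id (1:ℝ)).sub_const 1).mul hg1
  have h3 : HasDerivAt f (1 * g 1 + (1 - 1) * deriv g 1) 1 :=
    h2.congr_of_eventuallyEq (by filter_upwards [h1] with T hT using hfg T hT)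
  have := h3.unique hd
  linarith

theorem Glob.smoothM (G : Glob q t m ε X) :
    ContDiffOn ℝ (⊤ : ℕ∞) (fun T => Mf q m T (X T)) (Ioi (-ε)) :=
  contDiff_Mf.comp_contDiffOn (f := fun T => (T, X T)) (contDiffOn_id.prodMk G.smooth)

theorem Glob.smoothD (G : Glob q t m ε X) :
    ContDiffOn ℝ (⊤ : ℕ∞) (fun T => Df q m T (X T)) (Ioi (-ε)) :=
  contDiff_Df.comp_contDiffOn (f := fun T => (T, X T)) (contDiffOn_id.prodMk G.smooth)

/-- `M / D` extends smoothly and positively through the sonic point. -/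
theorem Glob.exists_g (h : Par q t m) (G : Glob q t m ε X) : ∃ g : ℝ → ℝ,
    ContDiffOn ℝ (⊤ : ℕ∞) g (Ioi (-ε)) ∧ (∀ T ∈ Ioi (-ε), 0 < g T) ∧
    (∀ T ∈ Ioi (-ε), g T * Df q m T (X T) = Mf q m T (X T)) ∧ g 0 = 1 := by
  have hq := h.qp
  have ht := h.tp
  obtain ⟨M', hM', eM⟩ := exists_hadamard_one G.ε0 G.smoothM (by simp [G.one, Mf])
  obtain ⟨D', hD', eD⟩ := exists_hadamard_one G.ε0 G.smoothD (by simp [G.one, Df])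
  have dM : HasDerivAt (fun T => Mf q m T (X T)) (-(1 + q) + pB0 q m / t) 1 := by
    unfold Mf
    have hd := G.d1
    refine (((hasDerivAt_id' (1:ℝ)).mul (((hd.const_mul (pB0 q m)).const_sub (1 + q)).add
      ((hd.pow 2).const_mul (pB1 q m)))).const_sub (1 + q)).congr_deriv ?_
    simp only [Pi.add_apply, Pi.pow_apply, G.one]
    ring
  have dD : HasDerivAt (fun T => Df q m T (X T)) ((1 + q) * (-1 + 2 * m / t)) 1 := by
    unfold Df
    have hd := G.d1
    refine ((((hasDerivAt_id' (1:ℝ)).mul (((hd.const_mul m).const_sub 1).pow 2)).const_sub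
      1).const_mul (1 + q)).congr_deriv ?_
    simp only [Pi.pow_apply, G.one]
    ring
  have vM := hadamard_value G.ε0 hM' eM dM
  have vD := hadamard_value G.ε0 hD' eD dD
  have nM : M' 1 < 0 := by
    rw [vM]
    have := h.Dm_pos (w := 0) (u := t) le_rfl zero_le_one (by linarith)
    unfold Dmf at this
    have e : -(1 + q) + pB0 q m / t = -((1 + q) * t - pB0 q m) / t := by field_simp; ring
    rw [e]
    exact div_neg_of_neg_of_pos (by nlinarith) ht
  have nD : D' 1 < 0 := by
    rw [vD]
    have := h.qm
    have hm := h.mp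
    have e : 2 * m / t < 1 := by rw [div_lt_one ht]; linarith
    nlinarith
  have sM : ∀ T ∈ Ioi (-ε), M' T < 0 := by
    intro T hT
    rcases lt_trichotomy T 1 with h1 | h1 | h1
    · have := (G.left T ⟨hT, h1⟩).1
      have e := eM T hT
      by_contra hc
      nlinarith
    · rw [h1]; exact nM
    · have := (G.right T h1).1
      have e := eM T hT
      by_contra hc
      nlinarith
  have sD : ∀ T ∈ Ioi (-ε), D' T < 0 := by
    intro T hT
    rcases lt_trichotomy T 1 with h1 | h1 | h1
    · have := (G.left T ⟨hT, h1⟩).2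
      have e := eD T hT
      by_contra hc
      nlinarith
    · rw [h1]; exact nD
    · have := (G.right T h1).2
      have e := eD T hT
      by_contra hc
      nlinarith
  refine ⟨fun T => M' T / D' T, hM'.div hD' fun T hT => (sD T hT).ne,
    fun T hT => div_pos_of_neg_of_neg (sM T hT) (sD T hT), fun T hT => ?_, ?_⟩
  · have := (sD T hT).ne
    rw [eM T hT, eD T hT]
    field_simp
  · have h0 : (0:ℝ) ∈ Ioi (-ε) := by simp [G.ε0]
    have e1 := eM 0 h0
    have e2 := eD 0 h0
    have := (sD 0 h0).ne
    simp only [Mf, Df, zero_mul, sub_zero, mul_one] at e1 e2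
    show M' 0 / D' 0 = 1
    rw [div_eq_one_iff_eq this]
    linarith

/-- The two components of the profile equation along the trajectory, with `v = 2 T g X'`. -/
theorem Glob.identities (h : Par q t m) (G : Glob q t m ε X) {g : ℝ → ℝ}
    (hg : ContDiffOn ℝ (⊤ : ℕ∞) g (Ioi (-ε)))
    (hgD : ∀ T ∈ Ioi (-ε), g T * Df q m T (X T) = Mf q m T (X T)) :
    ∀ T ∈ Ioi (-ε),
      2 * q / (1 + q) + (1 - m * X T) * (1 - g T) - 3 * q * (1 + X T)
        - q * (2 * T * g T * deriv X T) = 0 ∧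
      T * (-(2 * q ^ 2 * (1 + X T) / (1 + q)) - q * (1 - m * X T) * (1 + X T
        + 2 * T * g T * deriv X T)) + (1 - g T) = 0 := by
  have hne : ∀ T ∈ Ioi (-ε), T ≠ 1 →
      2 * q / (1 + q) + (1 - m * X T) * (1 - g T) - 3 * q * (1 + X T)
        - q * (2 * T * g T * deriv X T) = 0 ∧
      T * (-(2 * q ^ 2 * (1 + X T) / (1 + q)) - q * (1 - m * X T) * (1 + X T
        + 2 * T * g T * deriv X T)) + (1 - g T) = 0 := by
    intro T hT h1
    have hD : Df q m T (X T) ≠ 0 := by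
      rcases lt_or_gt_of_ne h1 with h1 | h1
      · exact (G.left T ⟨hT, h1⟩).2.ne'
      · exact (G.right T h1).2.ne
    obtain ⟨d, hd, ho⟩ := G.ode T hT
    have eg := hgD T hT
    rw [hd.deriv]
    have e1 := even_poly (m := m) h.qp T (X T)
    have e2 := odd_poly (m := m) h.qp T (X T)
    rw [← eg] at e1 e2 ho
    have eN : Nf q m T (X T) = -(2 * T * (g T * Df q m T (X T)) * d) := by linarith
    rw [eN] at e1 e2
    constructor
    · refine (mul_eq_zero.1 (?_ : Df q m T (X T) * _ = 0)).resolve_left hD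
      rw [← e1]; ring
    · refine (mul_eq_zero.1 (?_ : Df q m T (X T) * _ = 0)).resolve_left hD
      rw [← e2]; ring
  intro T hT
  by_cases h1 : T = 1
  swap
  · exact hne T hT h1
  subst h1
  have hn : Ioi (-ε) ∈ 𝓝 (1:ℝ) := Ioi_mem_nhds hT
  have cX : ContinuousAt X 1 := G.d1.continuousAt
  have cg : ContinuousAt g 1 := hg.continuousOn.continuousAt hn
  have cd : ContinuousAt (deriv X) 1 :=
    (((contDiffOn_infty_iff_deriv_of_isOpen isOpen_Ioi).1 G.smooth).2).continuousOn.continuousAt hn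
  have hev : ∀ᶠ T in 𝓝[≠] (1:ℝ), T ∈ Ioi (-ε) ∧ T ≠ 1 :=
    (eventually_nhdsWithin_of_eventually_nhds hn).and self_mem_nhdsWithin
  constructor
  · refine tendsto_nhds_unique (f := fun T => 2 * q / (1 + q) + (1 - m * X T) * (1 - g T)
      - 3 * q * (1 + X T) - q * (2 * T * g T * deriv X T)) (l := 𝓝[≠] (1:ℝ)) ?_
      (tendsto_const_nhds.congr' (by filter_upwards [hev] with T hT using (hne T hT.1 hT.2).1.symm))
    have : ContinuousAt (fun T => 2 * q / (1 + q) + (1 - m * X T) * (1 - g T)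
      - 3 * q * (1 + X T) - q * (2 * T * g T * deriv X T)) 1 := by fun_prop
    exact this.tendsto.mono_left nhdsWithin_le_nhds
  · refine tendsto_nhds_unique (f := fun T => T * (-(2 * q ^ 2 * (1 + X T) / (1 + q))
      - q * (1 - m * X T) * (1 + X T + 2 * T * g T * deriv X T)) + (1 - g T)) (l := 𝓝[≠] (1:ℝ)) ?_
      (tendsto_const_nhds.congr' (by filter_upwards [hev] with T hT using (hne T hT.1 hT.2).2.symm))
    have : ContinuousAt (fun T => T * (-(2 * q ^ 2 * (1 + X T) / (1 + q))
      - q * (1 - m * X T) * (1 + X T + 2 * T * g T * deriv X T)) + (1 - g T)) 1 := by fun_prop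
    exact this.tendsto.mono_left nhdsWithin_le_nhds

end

end

/-! ### Return to the self-similar variable -/

section

section
variable {q t m ε : ℝ} {X g : ℝ → ℝ}

/-- `g = M/D` is bounded near `T = ∞`, since `x → -1`. -/
theorem Glob.g_bounded (h : Par q t m) (G : Glob q t m ε X)
    (hgD : ∀ T ∈ Ioi (-ε), g T * Df q m T (X T) = Mf q m T (X T)) :
    ∃ C : ℝ, 0 < C ∧ ∀ᶠ T in atTop, g T ≤ C := by
  have hq := h.qp
  have hm := h.mp
  have iT : Tendsto (fun T : ℝ => T⁻¹) atTop (𝓝 0) := tendsto_inv_atTop_zero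
  have lM : Tendsto (fun T => (1 + q) * T⁻¹ - ((1 + q) - pB0 q m * X T + pB1 q m * X T ^ 2)) atTop
      (𝓝 ((1 + q) * 0 - ((1 + q) - pB0 q m * (-1) + pB1 q m * (-1) ^ 2))) :=
    (iT.const_mul _).sub (((G.lim.const_mul _).const_sub _).add ((G.lim.pow 2).const_mul _))
  have lD : Tendsto (fun T => (1 + q) * (T⁻¹ - (1 - m * X T) ^ 2)) atTop
      (𝓝 ((1 + q) * (0 - (1 - m * (-1)) ^ 2))) :=
    (iT.sub (((G.lim.const_mul _).const_sub _).pow 2)).const_mul _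
  have hne : (1 + q) * (0 - (1 - m * (-1)) ^ 2) ≠ 0 := by
    have : 0 < (1 + q) * (1 + m) ^ 2 := by positivity
    intro h0
    nlinarith
  have lg := lM.div lD hne
  set L := ((1 + q) * 0 - ((1 + q) - pB0 q m * (-1) + pB1 q m * (-1) ^ 2)) /
    ((1 + q) * (0 - (1 - m * (-1)) ^ 2))
  refine ⟨|L| + 1, by positivity, ?_⟩
  filter_upwards [lg.eventually_lt_const (show L < |L| + 1 by linarith [le_abs_self L]),
    eventually_gt_atTop 1] with T h1 h2
  have hT : T ∈ Ioi (-ε) := by have := G.ε0; simp only [mem_Ioi]; linarith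
  have hD := (G.right T h2).2.ne
  have hT0 : T ≠ 0 := by linarith
  have e : g T = Mf q m T (X T) / Df q m T (X T) := by
    rw [eq_div_iff hD]; exact hgD T hT
  rw [e]
  refine le_trans (le_of_eq ?_) h1.le
  simp only [Pi.div_apply]
  have e1 : (1 + q) * T⁻¹ - ((1 + q) - pB0 q m * X T + pB1 q m * X T ^ 2) = Mf q m T (X T) / T := by
    unfold Mf; field_simp
  have e2 : (1 + q) * (T⁻¹ - (1 - m * X T) ^ 2) = Df q m T (X T) / T := by
    unfold Df; field_simp
  rw [e1, e2, div_div_div_cancel_right₀ hT0]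

/-- The smooth solution of `T E' = 1 / g - 1`, `E(1) = 0`. -/
theorem exists_E (hε : 0 < ε) (hg : ContDiffOn ℝ (⊤ : ℕ∞) g (Ioi (-ε)))
    (gp : ∀ T ∈ Ioi (-ε), 0 < g T) (g0 : g 0 = 1) :
    ∃ E k : ℝ → ℝ, ContDiffOn ℝ (⊤ : ℕ∞) E (Ioi (-ε)) ∧ E 1 = 0 ∧
      (∀ T ∈ Ioi (-ε), HasDerivAt E (k T) T) ∧ ∀ T ∈ Ioi (-ε), g T * (1 + T * k T) = 1 := by
  have hst : Star (Ioi (-ε)) := by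
    intro x hx s hs
    simp only [mem_Ioi] at hx ⊢
    obtain ⟨a, b⟩ := hs
    rcases le_total 0 x with h0 | h0
    · nlinarith [mul_nonneg h0 a]
    · nlinarith [mul_nonneg (neg_nonneg.2 h0) (sub_nonneg.2 b)]
  obtain ⟨k, hk, ek⟩ := exists_hadamard isOpen_Ioi hst
    (f := fun T => (g T)⁻¹) (hg.inv fun T hT => (gp T hT).ne')
  have hd : ∀ T ∈ Ioi (-ε), HasDerivAt (fun T => ∫ s in (1:ℝ)..T, k s) (k T) T := by
    intro T hT
    have hsub : uIcc 1 T ⊆ Ioi (-ε) := by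
      intro s hs
      simp only [mem_Ioi] at hT ⊢
      have := hs.1
      rcases le_total 1 T with h1 | h1
      · rw [min_eq_left h1] at this; linarith
      · rw [min_eq_right h1] at this; linarith
    exact intervalIntegral.integral_hasDerivAt_right
      ((hk.continuousOn.mono hsub).intervalIntegrable)
      (hk.continuousOn.stronglyMeasurableAtFilter isOpen_Ioi T hT)
      (hk.continuousOn.continuousAt (Ioi_mem_nhds hT))
  refine ⟨fun T => ∫ s in (1:ℝ)..T, k s, k, ?_, by simp, hd, ?_⟩
  · exact contDiffOn_of_ode isOpen_Ioi hd fun n _ => hk.of_le (by exact_mod_cast le_top)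
  · intro T hT
    have := ek T hT
    simp only [g0, inv_one] at this
    rw [← this, mul_inv_cancel₀ (gp T hT).ne']

/-- Change of the independent variable: `y = ζ²` as a function of `T` is inverted, with
`T = B(y)` and `y / T = e(y)`. -/
theorem exists_time (hε : 0 < ε) (hg : ContDiffOn ℝ (⊤ : ℕ∞) g (Ioi (-ε)))
    (gp : ∀ T ∈ Ioi (-ε), 0 < g T) (g0 : g 0 = 1) {C : ℝ} (hC : 0 < C)
    (gC : ∀ᶠ T in atTop, g T ≤ C) :
    ∃ B e : ℝ → ℝ, B 1 = 1 ∧ e 1 = 1 ∧ Tendsto B atTop atTop ∧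
      ∀ y, 0 ≤ y → 0 ≤ B y ∧ 0 < e y ∧ y = B y * e y ∧ ContDiffAt ℝ (⊤ : ℕ∞) B y ∧
        ContDiffAt ℝ (⊤ : ℕ∞) e y ∧ HasDerivAt B (g (B y) / e y) y ∧
        (0 < y → HasDerivAt e (e y * (1 - g (B y)) / y) y) := by
  obtain ⟨E, k, hE, E1, dE, ek⟩ := exists_E hε hg gp g0
  set I := Ioi (-ε)
  have pI : ∀ T, 0 ≤ T → T ∈ I := fun T hT => by simp only [I, mem_Ioi]; linarith
  let τ : ℝ → ℝ := fun T => T * exp (E T)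
  have dτ : ∀ T ∈ I, HasDerivAt τ (exp (E T) / g T) T := by
    intro T hT
    refine ((hasDerivAt_id' T).mul (dE T hT).exp).congr_deriv ?_
    have := (gp T hT).ne'
    rw [eq_div_iff this]
    have e1 := ek T hT
    linear_combination exp (E T) * e1
  have sτ : ContDiffOn ℝ (⊤ : ℕ∞) τ I := contDiffOn_id.mul hE.exp
  have mτ : StrictMonoOn τ I := by
    refine strictMonoOn_of_deriv_pos (convex_Ioi _)
      (fun T hT => (dτ T hT).continuousAt.continuousWithinAt) fun T hT => ?_
    rw [interior_Ioi] at hT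
    rw [(dτ T hT).deriv]
    exact div_pos (exp_pos _) (gp T hT)
  have τ0 : τ 0 = 0 := by simp [τ]
  have τ1 : τ 1 = 1 := by simp [τ, E1]
  have lτ : Tendsto τ atTop atTop := by
    obtain ⟨T2, hT2⟩ := eventually_atTop.1 gC
    set T3 := max T2 1
    have hm : MonotoneOn (fun T => E T + Real.log T - C⁻¹ * Real.log T) (Ici T3) := by
      have hdd : ∀ T ∈ Ici T3, HasDerivAt (fun T => E T + Real.log T - C⁻¹ * Real.log T)
          (k T + T⁻¹ - C⁻¹ * T⁻¹) T := by
        intro T hT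
        have h1 : 1 ≤ T := le_trans (le_max_right _ _) hT
        exact ((dE T (pI T (by linarith))).add (Real.hasDerivAt_log (by linarith))).sub
          ((Real.hasDerivAt_log (by linarith)).const_mul _)
      refine monotoneOn_of_deriv_nonneg (convex_Ici _)
        (fun T hT => (hdd T hT).continuousAt.continuousWithinAt)
        (fun T hT => ?_) (fun T hT => ?_)
      · exact (hdd T (interior_subset hT)).differentiableAt.differentiableWithinAt
      · have hT := interior_subset hT
        rw [(hdd T hT).deriv]
        have h1 : 1 ≤ T := le_trans (le_max_right _ _) hT
        have h2 : T2 ≤ T := le_trans (le_max_left _ _) hT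
        have e1 := ek T (pI T (by linarith))
        have e2 := gp T (pI T (by linarith))
        have e3 := hT2 T h2
        have e4 : k T + T⁻¹ = (g T)⁻¹ * T⁻¹ := by
          have : T ≠ 0 := by linarith
          field_simp
          linarith
        rw [e4, ← sub_mul]
        refine mul_nonneg (sub_nonneg.2 ?_) (by positivity)
        exact inv_anti₀ e2 e3
    have hl : Tendsto (fun T => (E T3 + Real.log T3 - C⁻¹ * Real.log T3) + C⁻¹ * Real.log T)
        atTop atTop :=
      tendsto_atTop_add_const_left _ _ (Real.tendsto_log_atTop.const_mul_atTop (by positivity))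
    refine tendsto_atTop_mono' _ ?_ (Real.tendsto_exp_atTop.comp hl)
    filter_upwards [eventually_ge_atTop T3] with T hT
    have h1 : 1 ≤ T := le_trans (le_max_right _ _) hT
    have := hm (mem_Ici.2 le_rfl) hT hT
    simp only at this
    have e5 : τ T = exp (Real.log T + E T) := by
      rw [exp_add, exp_log (by linarith)]
    rw [e5]
    exact exp_le_exp.2 (by linarith)
  have surj : ∀ y, 0 ≤ y → ∃ T, 0 ≤ T ∧ τ T = y := by
    intro y hy
    obtain ⟨T4, h4, h5⟩ := ((lτ.eventually_ge_atTop y).and (eventually_ge_atTop 0)).exists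
    have hc : ContinuousOn τ (Icc 0 T4) := fun T hT =>
      (dτ T (pI T hT.1)).continuousAt.continuousWithinAt
    obtain ⟨T, hT, e⟩ := intermediate_value_Icc h5 hc (show y ∈ Icc (τ 0) (τ T4) from ⟨by rw [τ0]; exact hy, h4⟩)
    exact ⟨T, hT.1, e⟩
  let B : ℝ → ℝ := Function.invFunOn τ I
  have Bl : ∀ T ∈ I, B (τ T) = T := fun T hT =>
    mτ.injOn.leftInvOn_invFunOn hT
  have Bs : ∀ y, 0 ≤ y → 0 ≤ B y ∧ τ (B y) = y := by
    intro y hy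
    obtain ⟨T, h1, h2⟩ := surj y hy
    have := Bl T (pI T h1)
    rw [h2] at this
    rw [this]
    exact ⟨h1, h2⟩
  have key : ∀ y, 0 ≤ y → ContDiffAt ℝ (⊤ : ℕ∞) B y ∧ HasDerivAt B (g (B y) / exp (E (B y))) y := by
    intro y hy
    obtain ⟨h1, h2⟩ := Bs y hy
    set T := B y with hTd
    have hT := pI T h1
    have hn : I ∈ 𝓝 T := Ioi_mem_nhds hT
    have hp := div_pos (exp_pos (E T)) (gp T hT)
    obtain ⟨β, b1, b2, -, b4⟩ := exists_local_inverse (sτ.contDiffAt hn) (dτ T hT) hp.ne'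
    rw [h2] at b1 b2 b4
    have hev : B =ᶠ[𝓝 y] β := by
      have : ∀ᶠ z in 𝓝 y, β z ∈ I := b1.continuousAt.eventually_mem (by rw [b2]; exact hn)
      filter_upwards [this, b4] with z z1 z2
      have := Bl _ z1
      rw [z2] at this
      exact this
    have hB := b1.congr_of_eventuallyEq hev
    refine ⟨hB, ?_⟩
    have hBd : HasDerivAt B (deriv B y) y := (hB.differentiableAt (by simp)).hasDerivAt
    have hτB : ∀ᶠ z in 𝓝 y, τ (B z) = z := by
      filter_upwards [hev, b4] with z z1 z2
      rw [z1, z2]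
    have hcomp : HasDerivAt (fun z => τ (B z)) (exp (E T) / g T * deriv B y) y :=
      HasDerivAt.comp (h₂ := τ) y (show HasDerivAt τ _ (B y) from dτ T hT) hBd
    have := hcomp.unique ((hasDerivAt_id' y).congr_of_eventuallyEq hτB)
    refine hBd.congr_deriv ?_
    have h5 := (gp T hT).ne'
    have h6 := (exp_pos (E T)).ne'
    field_simp at this ⊢
    linarith
  refine ⟨B, fun y => exp (E (B y)), ?_, ?_, ?_, ?_⟩
  · have := Bl 1 (pI 1 zero_le_one)
    rwa [τ1] at this
  · have := Bl 1 (pI 1 zero_le_one)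
    rw [τ1] at this
    simp only [this, E1, exp_zero]
  · refine tendsto_atTop.2 fun K => ?_
    filter_upwards [eventually_ge_atTop (τ (max K 0)), eventually_ge_atTop 0] with y h1 h2
    obtain ⟨h3, h4⟩ := Bs y h2
    by_contra hc
    push Not at hc
    have := mτ (pI _ h3) (pI _ (le_max_right K 0)) (lt_of_lt_of_le hc (le_max_left _ _))
    rw [h4] at this
    linarith
  · intro y hy
    obtain ⟨h1, h2⟩ := Bs y hy
    obtain ⟨k1, k2⟩ := key y hy
    have hT := pI _ h1
    refine ⟨h1, exp_pos _, h2.symm, k1, ?_, k2, ?_⟩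
    · exact ((hE.contDiffAt (Ioi_mem_nhds hT)).comp y k1).exp
    · intro y0
      have hc : HasDerivAt (fun y => E (B y)) (k (B y) * (g (B y) / exp (E (B y)))) y :=
        (dE _ hT).comp y k2
      refine hc.exp.congr_deriv ?_
      have e1 := ek _ hT
      have h2' : B y * exp (E (B y)) = y := h2
      have h6 := (exp_pos (E (B y))).ne'
      beta_reduce
      generalize exp (E (B y)) = e at *
      rw [eq_div_iff y0.ne']
      have : e * (k (B y) * (g (B y) / e)) = k (B y) * g (B y) := by field_simp
      rw [this]
      linear_combination e * e1 - k (B y) * g (B y) * h2'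

end

end

/-! ### The profile -/

section

section
variable {α q t m ε : ℝ} {X : ℝ → ℝ}

/-- The profile with even part `S(ζ²)` and odd part `ζ U(ζ²)`. -/
def prof (U S : ℝ → ℝ) (ζ : ℝ) : ℝ := ζ * U (ζ ^ 2) + S (ζ ^ 2)

theorem prof_neg (U S : ℝ → ℝ) (ζ : ℝ) : prof U S (-ζ) = -ζ * U (ζ ^ 2) + S (ζ ^ 2) := by
  unfold prof; rw [neg_sq]

theorem prof_contDiff {U S : ℝ → ℝ} (hU : ∀ y, 0 ≤ y → ContDiffAt ℝ (⊤ : ℕ∞) U y)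
    (hS : ∀ y, 0 ≤ y → ContDiffAt ℝ (⊤ : ℕ∞) S y) : ContDiff ℝ (⊤ : ℕ∞) (prof U S) := by
  rw [contDiff_iff_contDiffAt]
  intro ζ
  have h2 : ContDiffAt ℝ (⊤ : ℕ∞) (fun ζ : ℝ => ζ ^ 2) ζ := contDiffAt_id.pow 2
  exact (contDiffAt_id.mul ((hU (ζ ^ 2) (sq_nonneg _)).comp (f := fun ζ : ℝ => ζ ^ 2) ζ h2)).add
    ((hS (ζ ^ 2) (sq_nonneg _)).comp (f := fun ζ : ℝ => ζ ^ 2) ζ h2)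

theorem prof_hasDerivAt {U S : ℝ → ℝ} {ζ a b : ℝ} (h0 : ζ ≠ 0) (hU : HasDerivAt U (a / (2 * ζ ^ 2)) (ζ ^ 2))
    (hS : HasDerivAt S (b / (2 * ζ ^ 2)) (ζ ^ 2)) :
    HasDerivAt (prof U S) (U (ζ ^ 2) + a + b / ζ) ζ := by
  have h2 : HasDerivAt (fun ζ : ℝ => ζ ^ 2) (2 * ζ) ζ := by
    simpa using hasDerivAt_pow 2 ζ
  have hU' : HasDerivAt (fun ζ : ℝ => U (ζ ^ 2)) (a / (2 * ζ ^ 2) * (2 * ζ)) ζ :=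
    HasDerivAt.comp (h₂ := U) (h := fun ζ : ℝ => ζ ^ 2) ζ hU h2
  have hS' : HasDerivAt (fun ζ : ℝ => S (ζ ^ 2)) (b / (2 * ζ ^ 2) * (2 * ζ)) ζ :=
    HasDerivAt.comp (h₂ := S) (h := fun ζ : ℝ => ζ ^ 2) ζ hS h2
  refine (((hasDerivAt_id' ζ).mul hU').add hS').congr_deriv ?_
  field_simp

/-- A global trajectory unfolds into a smooth profile on the whole line. -/
theorem Glob.profile (hα : 0 < α) (hq : 0 < q) (h : Par q t (q / α)) (G : Glob q t (q / α) ε X) :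
    ∃ Wc : ℝ → ℝ, ContDiff ℝ (⊤ : ℕ∞) Wc ∧
      (∀ ζ : ℝ, ζ ≠ 0 → ProfileEqn (1 + 2 * α) (rQ α q) Wc ζ) ∧
      Wc 1 = (1 - q) / (α + q) ∧ Wc (-1) = (1 + q) / (α + q) ∧
      Tendsto (fun ζ => Wc ζ / ζ) atTop (𝓝 0) ∧ Tendsto (fun ζ => Wc (-ζ) / ζ) atTop (𝓝 0) := by
  obtain ⟨g, hg, gp, hgD, g0⟩ := G.exists_g h
  have hid := G.identities h hg hgD
  obtain ⟨C, hC, gC⟩ := G.g_bounded h hgD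
  obtain ⟨B, e, B1, e1, lB, hB⟩ := exists_time G.ε0 hg gp g0 hC gC
  have hαq : 0 < α + q := by positivity
  have h1q : 0 < 1 + q := by positivity
  let U : ℝ → ℝ := fun y => -(q / (α + q)) * (1 + X (B y))
  let S : ℝ → ℝ := fun y => √(e y) / (α + q)
  have mem : ∀ y, 0 ≤ y → B y ∈ Ioi (-ε) := fun y hy => by
    have := (hB y hy).1
    have := G.ε0
    simp only [mem_Ioi]; linarith
  have hU : ∀ y, 0 ≤ y → ContDiffAt ℝ (⊤ : ℕ∞) U y := by
    intro y hy
    obtain ⟨b1, b2, b3, b4, b5, b6, b7⟩ := hB y hy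
    exact contDiffAt_const.mul (contDiffAt_const.add
      ((G.smooth.contDiffAt (Ioi_mem_nhds (mem y hy))).comp y b4))
  have hS : ∀ y, 0 ≤ y → ContDiffAt ℝ (⊤ : ℕ∞) S y := by
    intro y hy
    obtain ⟨b1, b2, b3, b4, b5, b6, b7⟩ := hB y hy
    exact (b5.sqrt b2.ne').div_const _
  have lB2 : Tendsto (fun ζ : ℝ => B (ζ ^ 2)) atTop atTop :=
    lB.comp (tendsto_pow_atTop two_ne_zero)
  have lU : Tendsto (fun ζ : ℝ => U (ζ ^ 2)) atTop (𝓝 0) := by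
    have := ((G.lim.comp lB2).const_add 1).const_mul (-(q / (α + q)))
    rw [add_neg_cancel, mul_zero] at this
    exact this
  have lS : Tendsto (fun ζ : ℝ => S (ζ ^ 2) / ζ) atTop (𝓝 0) := by
    have h1 : Tendsto (fun ζ : ℝ => (√(B (ζ ^ 2)))⁻¹ / (α + q)) atTop (𝓝 (0 / (α + q))) :=
      (tendsto_inv_atTop_zero.comp (Real.tendsto_sqrt_atTop.comp lB2)).div_const _
    rw [zero_div] at h1
    refine h1.congr' ?_
    filter_upwards [eventually_gt_atTop 0, lB2.eventually_gt_atTop 0] with ζ h0 hb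
    obtain ⟨-, b2, b3, -⟩ := hB (ζ ^ 2) (by positivity)
    have e2 : √(B (ζ ^ 2)) * √(e (ζ ^ 2)) = ζ := by
      rw [← Real.sqrt_mul hb.le, ← b3, Real.sqrt_sq h0.le]
    have p1 := Real.sqrt_pos.2 hb
    simp only [S]
    generalize √(B (ζ ^ 2)) = b at *
    generalize √(e (ζ ^ 2)) = s at *
    field_simp
    linarith
  refine ⟨prof U S, prof_contDiff hU hS, ?_, ?_, ?_, ?_, ?_⟩
  · intro ζ h0
    have hy : 0 < ζ ^ 2 := by positivity
    obtain ⟨b1, b2, b3, b4, b5, b6, b7⟩ := hB _ hy.le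
    have b7 := b7 hy
    have hT := mem _ hy.le
    obtain ⟨i1, i2⟩ := hid _ hT
    have hT0 : B (ζ ^ 2) ≠ 0 := by
      intro hz
      rw [hz, zero_mul] at b3
      exact hy.ne' b3
    have dX : HasDerivAt X (deriv X (B (ζ ^ 2))) (B (ζ ^ 2)) :=
      ((G.smooth.contDiffAt (Ioi_mem_nhds hT)).differentiableAt (by simp)).hasDerivAt
    set T := B (ζ ^ 2) with hTd
    set v := 2 * T * g T * deriv X T with hv
    have dU : HasDerivAt U ((-(q / (α + q)) * v) / (2 * ζ ^ 2)) (ζ ^ 2) := by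
      have hc : HasDerivAt (fun y => X (B y)) (deriv X T * (g T / e (ζ ^ 2))) (ζ ^ 2) :=
        HasDerivAt.comp (h₂ := X) (h := B) (ζ ^ 2) dX b6
      refine ((hc.const_add 1).const_mul _).congr_deriv ?_
      have := b2.ne'
      generalize e (ζ ^ 2) = e' at *
      rw [hv, b3]
      field_simp
    have dS : HasDerivAt S ((S (ζ ^ 2) * (1 - g T)) / (2 * ζ ^ 2)) (ζ ^ 2) := by
      refine ((b7.sqrt b2.ne').div_const _).congr_deriv ?_
      have hs := Real.sqrt_pos.2 b2
      have hss := Real.sq_sqrt b2.le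
      simp only [S]
      generalize √(e (ζ ^ 2)) = s' at *
      rw [← hss]
      field_simp
    have hd := prof_hasDerivAt h0 dU dS
    have hS2 : S (ζ ^ 2) ^ 2 * T * (α + q) ^ 2 = ζ ^ 2 := by
      simp only [S]
      rw [div_pow, Real.sq_sqrt b2.le]
      conv_rhs => rw [b3]
      field_simp
    have hUx : U (ζ ^ 2) = -(q / (α + q)) * (1 + X T) := rfl
    unfold ProfileEqn
    have ha : alphaF (1 + 2 * α) = α := by unfold alphaF; ring
    rw [hd.deriv, prof_neg, ha, rQ, hUx]
    unfold prof
    rw [hUx]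
    clear_value v
    clear hv hid gC lB e1 B1 hd dS dU dX b7 b6 b5 b4 b3 hUx
    generalize S (ζ ^ 2) = s at *
    generalize X T = x at *
    generalize g T = G' at *
    clear_value T
    have key1 : (1 + q) * (α * (1 - G')) = T * q ^ 2 * (2 * α * (1 + x)
        + (α - q * x) * (1 + q) * (1 + x + v) / q) := by
      field_simp at i2 ⊢
      linear_combination i2
    have key2 : 2 * q * α + (α - q * x) * (1 - G') * (1 + q) - 3 * q * α * (1 + x) * (1 + q)
        - q * α * v * (1 + q) = 0 := by
      field_simp at i1
      linear_combination i1
    have keyS : 2 * α * q / ((α + q) * (1 + q)) + (1 + -(q / (α + q)) * (1 + x)) * (1 - G')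
        + α * (-(q / (α + q)) * (1 + x) + -(q / (α + q)) * v)
        + 2 * α * (-(q / (α + q)) * (1 + x)) = 0 := by
      field_simp
      linear_combination key2
    have hs2 : s ^ 2 / ζ ^ 2 = 1 / (T * (α + q) ^ 2) := by
      rw [div_eq_div_iff hy.ne' (by positivity), one_mul, ← hS2]; ring
    have keyO : 2 * α * q / ((α + q) * (1 + q)) * (-(q / (α + q)) * (1 + x))
        + (1 + -(q / (α + q)) * (1 + x)) * (-(q / (α + q)) * (1 + x) + -(q / (α + q)) * v)
        + α * (1 - G') * (s ^ 2 / ζ ^ 2) = 0 := by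
      rw [hs2]
      field_simp
      field_simp at key1
      linear_combination key1
    have e3 : ∀ r' u a : ℝ, (1 + r' - 1) * (ζ * u + s) + (ζ + 1 / 2 * (ζ * u + s - (-ζ * u + s)
        + α * (ζ * u + s + (-ζ * u + s)))) * (u + a + s * (1 - G') / ζ)
        + α / (2 * ζ) * ((ζ * u + s) ^ 2 - (-ζ * u + s) ^ 2)
        = ζ * (r' * u + (1 + u) * (u + a) + α * (1 - G') * (s ^ 2 / ζ ^ 2))
          + s * (r' + (1 + u) * (1 - G') + α * (u + a) + 2 * α * u) := by
      intro r' u a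
      field_simp
      ring
    rw [e3, keyO, keyS, mul_zero, mul_zero, add_zero]
  · show prof U S 1 = _
    simp only [prof, U, S, one_pow, B1, e1, G.one, Real.sqrt_one]
    ring
  · show prof U S (-1) = _
    rw [prof_neg]
    simp only [U, S, one_pow, B1, e1, G.one, Real.sqrt_one]
    ring
  · refine (lU.add lS).congr' ?_ |>.trans (by simp)
    filter_upwards [eventually_gt_atTop 0] with ζ h0
    have := h0.ne'
    unfold prof
    field_simp
  · refine (lU.neg.add lS).congr' ?_ |>.trans (by simp)
    filter_upwards [eventually_gt_atTop 0] with ζ h0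
    have := h0.ne'
    rw [prof_neg]
    field_simp

/-- The profile equation at `± exp ξ` is the autonomous system in the logarithmic variable. -/
theorem ode_of_profile {γ r : ℝ} {Wc : ℝ → ℝ} (hW : ContDiff ℝ (⊤ : ℕ∞) Wc)
    (hP : ∀ ζ : ℝ, ζ ≠ 0 → ProfileEqn γ r Wc ζ) :
    IsOdeSolutionOn γ r (fun ξ => Real.exp (-ξ) * Wc (Real.exp ξ))
      (fun ξ => -(Real.exp (-ξ) * Wc (-Real.exp ξ))) univ := by
  intro ξ _
  have hζ := Real.exp_pos ξ
  have p1 := hP (exp ξ) hζ.ne'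
  have p2 := hP (-exp ξ) (neg_ne_zero.2 hζ.ne')
  have hd : ∀ z, HasDerivAt Wc (deriv Wc z) z := fun z =>
    (hW.differentiable (by simp) z).hasDerivAt
  have dn : HasDerivAt (fun ξ : ℝ => exp (-ξ)) (exp (-ξ) * (-1)) ξ := (hasDerivAt_id' ξ).neg.exp
  have c1 : HasDerivAt (fun ξ : ℝ => Wc (exp ξ)) (deriv Wc (exp ξ) * exp ξ) ξ :=
    HasDerivAt.comp (h₂ := Wc) (h := fun ξ => exp ξ) ξ (hd _) (Real.hasDerivAt_exp ξ)
  have c2 : HasDerivAt (fun ξ : ℝ => Wc (-exp ξ)) (deriv Wc (-exp ξ) * -exp ξ) ξ :=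
    HasDerivAt.comp (h₂ := Wc) (h := fun ξ => -exp ξ) ξ (hd _) (Real.hasDerivAt_exp ξ).neg
  have d1 : HasDerivAt (fun ξ => Real.exp (-ξ) * Wc (Real.exp ξ))
      (-(exp (-ξ) * Wc (exp ξ)) + deriv Wc (exp ξ)) ξ := by
    refine (dn.mul c1).congr_deriv ?_
    rw [Real.exp_neg]
    field_simp
  have d2 : HasDerivAt (fun ξ => -(Real.exp (-ξ) * Wc (-Real.exp ξ)))
      (exp (-ξ) * Wc (-exp ξ) + deriv Wc (-exp ξ)) ξ := by
    refine (dn.mul c2).neg.congr_deriv ?_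
    rw [Real.exp_neg]
    field_simp
    ring
  rw [d1.deriv, d2.deriv]
  unfold ProfileEqn at p1 p2
  rw [neg_neg] at p2
  beta_reduce
  rw [Real.exp_neg]
  unfold DW DZ NW NZ
  generalize alphaF γ = a at *
  generalize deriv Wc (exp ξ) = w1 at *
  generalize deriv Wc (-exp ξ) = w2 at *
  generalize Wc (exp ξ) = w at *
  generalize Wc (-exp ξ) = z at *
  generalize exp ξ = ζ at *
  field_simp at p1 p2 ⊢
  constructor
  · linear_combination p1
  · linear_combination -p2

end

end

/-- Theorem 1.1 of Buckmaster–Cao-Labora–Gómez-Serrano: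
existence of a smooth self-similar imploding profile for every `γ > 1`,
with self-similar exponent `r` satisfying `3 < k(r) < 4`. -/
theorem statement0 (γ : ℝ) (hγ : 1 < γ) :
    ∃ r : ℝ, 1 < r ∧ r < rStar γ ∧ 3 < kFun γ r ∧ kFun γ r < 4 ∧
      ∃ Wc : ℝ → ℝ, ContDiff ℝ (⊤ : ℕ∞) Wc ∧
        (∀ ζ : ℝ, ζ ≠ 0 → ProfileEqn γ r Wc ζ) ∧
        Wc 1 = W₀ γ r ∧ Wc (-1) = -Z₀ γ r ∧
        Tendsto (fun ζ : ℝ => Wc ζ / ζ) atTop (nhds 0) ∧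
        Tendsto (fun ζ : ℝ => Wc (-ζ) / ζ) atTop (nhds 0) ∧
        ContDiff ℝ (⊤ : ℕ∞) (fun ξ : ℝ => Real.exp (-ξ) * Wc (Real.exp ξ)) ∧
        ContDiff ℝ (⊤ : ℕ∞) (fun ξ : ℝ => -(Real.exp (-ξ) * Wc (-Real.exp ξ))) ∧
        IsOdeSolutionOn γ r (fun ξ : ℝ => Real.exp (-ξ) * Wc (Real.exp ξ))
          (fun ξ : ℝ => -(Real.exp (-ξ) * Wc (-Real.exp ξ))) Set.univ ∧
        Real.exp (-(0 : ℝ)) * Wc (Real.exp 0) = W₀ γ r ∧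
        -(Real.exp (-(0 : ℝ)) * Wc (-Real.exp 0)) = Z₀ γ r ∧
        Tendsto
          (fun ξ : ℝ =>
            (Real.exp (-ξ) * Wc (Real.exp ξ), -(Real.exp (-ξ) * Wc (-Real.exp ξ))))
          atTop (nhds ((0 : ℝ), (0 : ℝ))) := by
  obtain ⟨α, hα, rfl⟩ : ∃ α : ℝ, 0 < α ∧ γ = 1 + 2 * α := ⟨(γ - 1) / 2, by linarith, by ring⟩
  obtain ⟨q, hG, k3, k4, p, ε, hp, s₁, K, hs1, -, hy⟩ := shooting hα
  have hq := hG.q0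
  have hP := hG.par
  have hS : 0 < pS3 q (thQ α q) (q / α) := by
    have e : pS3 q (thQ α q) (q / α) = kapQ α q - 3 * lamQ α q := by
      unfold pS3 kapQ lamQ; push_cast; ring
    rw [e]; linarith
  obtain ⟨X, hX, -⟩ := glob_exists hP hS k4 hp hs1 hy
  obtain ⟨Wc, hW, hE, w1, w2, l1, l2⟩ := hX.profile hα hq hP
  have v0 := W0_eq hα hq hG.qα.le
  have v1 := Z0_eq hα hq hG.qα.le
  have hl := hG.lam_pos
  have cx : ContDiff ℝ (⊤ : ℕ∞) fun ξ : ℝ => Real.exp (-ξ) := Real.contDiff_exp.comp contDiff_neg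
  have z2 : Wc (-1) = -Z₀ (1 + 2 * α) (rQ α q) := by rw [w2, v1]; ring
  refine ⟨rQ α q, ?_, rQ_lt_rStar hα hq hG.qα hG.q3, ?_, ?_, Wc, hW, hE, w1.trans v0.symm, z2,
    l1, l2, cx.mul (hW.comp Real.contDiff_exp), (cx.mul (hW.comp Real.contDiff_exp.neg)).neg,
    ode_of_profile hW hE, ?_, ?_, ?_⟩
  · have : 0 < 2 * α * q / ((α + q) * (1 + q)) := by positivity
    unfold rQ
    linarith
  · rw [hG.k, lt_div_iff₀ hl]; exact k3
  · rw [hG.k, div_lt_iff₀ hl]; exact k4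
  · simp only [neg_zero, Real.exp_zero, one_mul]
    exact w1.trans v0.symm
  · simp only [neg_zero, Real.exp_zero, one_mul]
    rw [z2, neg_neg]
  · have m1 := l1.comp Real.tendsto_exp_atTop
    have m2 := (l2.comp Real.tendsto_exp_atTop).neg
    rw [neg_zero] at m2
    refine (m1.congr fun ξ => ?_).prodMk_nhds (m2.congr fun ξ => ?_)
    · simp only [Function.comp_apply, Real.exp_neg]; ring
    · simp only [Function.comp_apply, Real.exp_neg]; ring

end SelfSimilarImplosion
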